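/- There exist two positive constants C and M such that for every R > CM and every t ≥ M, the (n−1)-dimensional Hausdorff measure of the level set satisfies H^{n−1}(B_R ∩ {u = t}) ≤ C R^{n−1}. -/

import Mathlib

/-!
The level sets of `u` at high levels `t` are, at distances comparable to `t`, Lipschitz graphs over
hyperplanes; counting the balls of radius comparable to `t` needed to cover the level set in `B_R`
by an energy estimate gives the measure bound.

All integral quantities are averages against the standard Gaussian: around a base point `x` at scale
`R`, `H = E[u² + v²]`, the energy `D = R² E[|∇u|² + |∇v|² + u²v²]` and the frequency `N = D / H` are
evaluated at `x + R Z`. Gaussian integration by parts makes `N` nondecreasing in `R` (`Sol.NN_mono`),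
and linear growth forces `N ≤ 1` (`Sol.NN_le_one`). Its derivative controls the defect `de` of scale
invariance.

*Flatness.* Where `κ = R² H` is large, `u` and `v` are quantitatively segregated (`Sol.Nice.sep`).
After truncation their supports are disjoint, and the mean-zero combination of the truncations is
tested in the Gaussian Poincaré inequality with a spectral gap (`poincare_gap`). This bounds the
growth exponent from below, an almost monotonicity in the style of Alt, Caffarelli and Friedman
(`Sol.Nice.acf`), and shows that a small defect makes the difference of the components close to a
linear function. A barrier argument shows that `v` is tiny where `u` dominates (`Sol.barrier`), hence
that both components carry a fixed share of the mass around each interface point `u = v`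
(`Sol.balanced`) and that `H` is bounded below by a multiple of `R²` (`Sol.Nice.lower`). The frequency
is then close to one at large scales around interface points, so every dyadic range of large scales
contains one with small defect, uniformly over the interface
(`Sol.Glob.flat`).

*Gradient.* If `u x` is large, the distance `d` from `x` to the interface is comparable to `u x`; at
scale `d` around the nearest interface point `u` is close to a linear function of definite slope, and
`Δu` is negligible. Interior estimates give a vector `P`, bounded and bounded away from zero, with
`|∇u - P| ≤ |P| / 4` on a ball of radius `ρ u x` around `x` (`Sol.Glob.grad`).

*Counting.* On such a ball the level set is a Lipschitz graph of measure `O(t ^ (n - 1))`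
(`graph_measure`). Testing `Δu ≥ 0` with `t arctan (u / t)` bounds the energy of `u` on
`B_R ∩ {u ≤ 2 t}` by `O(t R ^ (n - 1))` (`Sol.Nice.energy`); since each ball of radius comparable to
`t` centred on the level set carries energy of order `t ^ n`, at most `O((R / t) ^ (n - 1))` disjoint
ones exist, and the total measure is `O(R ^ (n - 1))`.
-/

open MeasureTheory Metric Set
open scoped RealInnerProductSpace ENNReal

/-- Euclidean space `ℝⁿ`. -/
abbrev Euc (n : ℕ) := EuclideanSpace ℝ (Fin n)

/-- The Laplacian `Δu` of a function `u : ℝⁿ → ℝ`. -/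
noncomputable def lap {n : ℕ} (u : Euc n → ℝ) (x : Euc n) : ℝ :=
  ∑ i : Fin n,
    fderiv ℝ (fun y => fderiv ℝ u y (EuclideanSpace.single i 1)) x (EuclideanSpace.single i 1)

/-- The divergence `div Y = Σ_α ∂Y^α/∂x_α` of a vector field `Y`. -/
noncomputable def vdiv {n : ℕ} (Y : Euc n → Euc n) (x : Euc n) : ℝ :=
  ∑ i : Fin n, fderiv ℝ Y x (EuclideanSpace.single i 1) i

/-- `DY(p,q)(x) = Σ_{α,β} (∂Y^α/∂x_β)(x) p_α q_β`. -/
noncomputable def DYbil {n : ℕ} (Y : Euc n → Euc n) (p q x : Euc n) : ℝ :=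
  ∑ α : Fin n, ∑ β : Fin n,
    fderiv ℝ Y x (EuclideanSpace.single β 1) α * p α * q β

/-- The rescaled function `u_κ(x) = R⁻¹ u(x₀ + R x)` (with `κ = R⁴`). -/
noncomputable def resc {n : ℕ} (u : Euc n → ℝ) (x₀ : Euc n) (R : ℝ) (x : Euc n) : ℝ :=
  R⁻¹ * u (x₀ + R • x)

/-! ### The standard Gaussian measure -/

/-- The unnormalised Gaussian weight `exp (-|x|²/2)`. -/
noncomputable def gw {n : ℕ} (x : Euc n) : ℝ := Real.exp (-(1 / 2) * ‖x‖ ^ 2)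

/-- The total mass of `gw`. -/
noncomputable def gZ (n : ℕ) : ℝ := ∫ x : Euc n, gw x

/-- The standard Gaussian probability measure on `ℝⁿ`, given by its density. -/
noncomputable def gam (n : ℕ) : Measure (Euc n) :=
  volume.withDensity (fun x => ENNReal.ofReal (gw x / gZ n))

lemma gw_pos {n : ℕ} (x : Euc n) : 0 < gw x := Real.exp_pos _

lemma gw_cont {n : ℕ} : Continuous (gw : Euc n → ℝ) := by unfold gw; fun_prop

lemma gZ_eq (n : ℕ) : gZ n = (Real.pi / (1 / 2)) ^ ((n : ℝ) / 2) := by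
  have := GaussianFourier.integral_rexp_neg_mul_sq_norm (V := Euc n) (b := 1 / 2) (by norm_num)
  simpa [gZ, gw] using this

lemma gZ_pos (n : ℕ) : 0 < gZ n := by
  rw [gZ_eq]; positivity

lemma gam_density_meas {n : ℕ} :
    Measurable (fun x : Euc n => ENNReal.ofReal (gw x / gZ n)) :=
  (ENNReal.measurable_ofReal.comp (gw_cont.measurable.div_const _))

lemma integral_gam_smul {n : ℕ} {E : Type*} [NormedAddCommGroup E] [NormedSpace ℝ E]
    (f : Euc n → E) :
    ∫ x, f x ∂(gam n) = ∫ x, (gw x / gZ n) • f x := by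
  unfold gam
  rw [integral_withDensity_eq_integral_toReal_smul gam_density_meas (by simp)]
  congr 1; ext x
  rw [ENNReal.toReal_ofReal (div_nonneg (gw_pos x).le (gZ_pos n).le)]

lemma integrable_gam_iff {n : ℕ} {f : Euc n → ℝ} :
    Integrable f (gam n) ↔ Integrable (fun x => (gw x / gZ n) * f x) := by
  unfold gam
  rw [integrable_withDensity_iff_integrable_smul' gam_density_meas (by simp)]
  have : ∀ x : Euc n, (ENNReal.ofReal (gw x / gZ n)).toReal • f x = (gw x / gZ n) * f x := by
    intro x
    rw [ENNReal.toReal_ofReal (div_nonneg (gw_pos x).le (gZ_pos n).le), smul_eq_mul]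
  simp only [this]

lemma gw_integrable {n : ℕ} : Integrable (gw : Euc n → ℝ) := by
  by_contra h
  have := integral_undef h
  have h2 := gZ_pos n
  unfold gZ at h2
  linarith

instance gam_prob (n : ℕ) : IsProbabilityMeasure (gam n) := by
  constructor
  unfold gam
  rw [withDensity_apply _ MeasurableSet.univ, Measure.restrict_univ,
    ← ofReal_integral_eq_lintegral_ofReal (gw_integrable.div_const _)
      (Filter.Eventually.of_forall fun x => div_nonneg (gw_pos x).le (gZ_pos n).le),
    integral_div]
  change ENNReal.ofReal (gZ n / gZ n) = 1
  rw [div_self (gZ_pos n).ne', ENNReal.ofReal_one]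

lemma gam_charFun {n : ℕ} (t : Euc n) :
    charFun (gam n) t = Complex.exp (-(‖t‖ ^ 2 : ℝ) / 2) := by
  rw [charFun_apply, integral_gam_smul]
  have h := GaussianFourier.integral_cexp_neg_mul_sq_norm_add (V := Euc n) (b := 1 / 2)
    (by norm_num) Complex.I t
  have h0 := gZ_eq n
  have e1 : ∀ x : Euc n, (gw x / gZ n) • Complex.exp (⟪x, t⟫ * Complex.I)
      = (gZ n : ℂ)⁻¹ * Complex.exp (-(1 / 2 : ℂ) * (‖x‖ : ℂ) ^ 2 + Complex.I * ⟪t, x⟫) := by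
    intro x
    rw [Complex.exp_add, Complex.real_smul, real_inner_comm x t, mul_comm Complex.I]
    unfold gw
    push_cast
    ring
  simp_rw [e1]
  rw [integral_const_mul, h, h0, ← mul_assoc]
  have e2 : (((Real.pi / (1 / 2)) ^ ((n : ℝ) / 2) : ℝ) : ℂ)
      = (Real.pi / (1 / 2) : ℂ) ^ ((Module.finrank ℝ (Euc n) : ℂ) / 2) := by
    rw [Complex.ofReal_cpow (by positivity)]
    simp
  rw [← e2, inv_mul_cancel₀ (by
    rw [Ne, Complex.ofReal_eq_zero]; positivity), one_mul]
  congr 1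
  rw [Complex.I_sq]
  push_cast
  ring

lemma gam_eq_std (n : ℕ) : gam n = ProbabilityTheory.stdGaussian (Euc n) := by
  apply Measure.ext_of_charFun
  ext t
  rw [gam_charFun, ProbabilityTheory.charFun_stdGaussian]
  push_cast
  rfl

instance gam_gaussian (n : ℕ) : ProbabilityTheory.IsGaussian (gam n) := by
  rw [gam_eq_std]; infer_instance

lemma gam_moment (n k : ℕ) : Integrable (fun x : Euc n => (1 + ‖x‖) ^ k) (gam n) := by
  have h1 : MemLp (fun x : Euc n => 1 + ‖x‖) k (gam n) :=
    (memLp_const (1 : ℝ)).add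
      (ProbabilityTheory.IsGaussian.memLp_id (gam n) k (by simp)).norm
  have := h1.integrable_norm_pow'
  refine this.congr (Filter.Eventually.of_forall fun x => ?_)
  simp only [Real.norm_eq_abs]
  rw [abs_of_nonneg (by positivity)]

/-- The law of a pair of independent standard Gaussian vectors is rotation invariant. -/
lemma gam_rot {n : ℕ} (θ : ℝ) :
    MeasurePreserving (fun z : Euc n × Euc n =>
      (Real.cos θ • z.1 + Real.sin θ • z.2, -Real.sin θ • z.1 + Real.cos θ • z.2))
      ((gam n).prod (gam n)) ((gam n).prod (gam n)) := by
  refine ⟨by fun_prop, ?_⟩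
  have := ProbabilityTheory.IsGaussian.map_rotation_eq_self_of_forall_strongDual_eq_zero
    (μ := gam n) (fun L => by
      rw [gam_eq_std]; exact ProbabilityTheory.integral_strongDual_stdGaussian L) θ
  rw [← this]
  congr 1

/-! ### Functions of polynomial growth and Gaussian integration by parts -/

/-- Continuous functions of polynomial growth. -/
def PG {n : ℕ} (f : Euc n → ℝ) : Prop :=
  Continuous f ∧ ∃ C : ℝ, ∃ k : ℕ, 0 ≤ C ∧ ∀ x, |f x| ≤ C * (1 + ‖x‖) ^ k

namespace PG

variable {n : ℕ} {f g : Euc n → ℝ}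

lemma cont (hf : PG f) : Continuous f := hf.1

lemma mono_bound {h : Euc n → ℝ} (hf : PG f) (hc : Continuous h) (hb : ∀ x, |h x| ≤ |f x|) :
    PG h := by
  obtain ⟨_, C, k, hC, hk⟩ := hf
  exact ⟨hc, C, k, hC, fun x => (hb x).trans (hk x)⟩

lemma const (c : ℝ) : PG (fun _ : Euc n => c) :=
  ⟨continuous_const, |c|, 0, abs_nonneg _, fun x => by simp⟩

lemma norm_id : PG (fun x : Euc n => ‖x‖) :=
  ⟨continuous_norm, 1, 1, zero_le_one, fun x => by
    rw [abs_of_nonneg (norm_nonneg _)]; linarith [norm_nonneg x]⟩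

lemma coord (i : Fin n) : PG (fun x : Euc n => x i) :=
  ⟨by fun_prop, 1, 1, zero_le_one, fun x => by
    have : ‖x i‖ ≤ ‖x‖ := PiLp.norm_apply_le x i
    rw [Real.norm_eq_abs] at this; linarith⟩

lemma add (hf : PG f) (hg : PG g) : PG (fun x => f x + g x) := by
  obtain ⟨hfc, C, k, hC, hk⟩ := hf
  obtain ⟨hgc, D, l, hD, hl⟩ := hg
  refine ⟨hfc.add hgc, C + D, k + l, by positivity, fun x => ?_⟩
  have h1 : (1 : ℝ) ≤ 1 + ‖x‖ := by linarith [norm_nonneg x]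
  have h2 : (1 + ‖x‖) ^ k ≤ (1 + ‖x‖) ^ (k + l) := pow_le_pow_right₀ h1 (by omega)
  have h3 : (1 + ‖x‖) ^ l ≤ (1 + ‖x‖) ^ (k + l) := pow_le_pow_right₀ h1 (by omega)
  calc |f x + g x| ≤ |f x| + |g x| := abs_add_le _ _
    _ ≤ C * (1 + ‖x‖) ^ k + D * (1 + ‖x‖) ^ l := add_le_add (hk x) (hl x)
    _ ≤ C * (1 + ‖x‖) ^ (k + l) + D * (1 + ‖x‖) ^ (k + l) := by gcongr
    _ = _ := by ring

lemma mul (hf : PG f) (hg : PG g) : PG (fun x => f x * g x) := by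
  obtain ⟨hfc, C, k, hC, hk⟩ := hf
  obtain ⟨hgc, D, l, hD, hl⟩ := hg
  refine ⟨hfc.mul hgc, C * D, k + l, by positivity, fun x => ?_⟩
  rw [abs_mul]
  calc |f x| * |g x| ≤ (C * (1 + ‖x‖) ^ k) * (D * (1 + ‖x‖) ^ l) :=
        mul_le_mul (hk x) (hl x) (abs_nonneg _) ((abs_nonneg _).trans (hk x))
    _ = _ := by ring

lemma neg (hf : PG f) : PG (fun x => -f x) :=
  hf.mono_bound hf.1.neg fun x => by rw [abs_neg]

lemma sub (hf : PG f) (hg : PG g) : PG (fun x => f x - g x) := by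
  simpa only [sub_eq_add_neg] using hf.add hg.neg

lemma const_mul (c : ℝ) (hf : PG f) : PG (fun x => c * f x) := (const c).mul hf

lemma pow (hf : PG f) (m : ℕ) : PG (fun x => f x ^ m) := by
  induction m with
  | zero => simpa using const 1
  | succ m ih => simpa only [pow_succ] using ih.mul hf

lemma abs (hf : PG f) : PG (fun x => |f x|) :=
  hf.mono_bound hf.1.abs fun x => by rw [abs_abs]

lemma max_zero (hf : PG f) : PG (fun x => max (f x) 0) :=
  hf.mono_bound (hf.1.max continuous_const) fun x => by
    rw [abs_of_nonneg (le_max_right _ _)]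
    exact max_le (le_abs_self _) (abs_nonneg _)

lemma sum {ι : Type*} (s : Finset ι) {F : ι → Euc n → ℝ} (h : ∀ i ∈ s, PG (F i)) :
    PG (fun x => ∑ i ∈ s, F i x) := by
  classical
  induction s using Finset.induction_on with
  | empty => simpa using const 0
  | insert a s ha ih =>
    simp only [Finset.sum_insert ha]
    exact (h a (Finset.mem_insert_self _ _)).add
      (ih fun i hi => h i (Finset.mem_insert_of_mem hi))

lemma affine (hf : PG f) (x : Euc n) (R : ℝ) : PG (fun y => f (x + R • y)) := by
  obtain ⟨hfc, C, k, hC, hk⟩ := hf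
  refine ⟨hfc.comp (by fun_prop), C * (1 + ‖x‖ + |R|) ^ k, k, by positivity, fun y => ?_⟩
  refine (hk _).trans ?_
  rw [mul_assoc, ← mul_pow]
  gcongr
  have : ‖x + R • y‖ ≤ ‖x‖ + |R| * ‖y‖ := (norm_add_le _ _).trans (by rw [norm_smul]; rfl)
  nlinarith [norm_nonneg x, norm_nonneg y, abs_nonneg R, mul_nonneg (norm_nonneg x) (norm_nonneg y)]

lemma integrable (hf : PG f) : Integrable f (gam n) := by
  obtain ⟨hfc, C, k, hC, hk⟩ := hf
  refine ((gam_moment n k).const_mul C).mono' hfc.aestronglyMeasurable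
    (Filter.Eventually.of_forall fun x => ?_)
  simpa [Real.norm_eq_abs] using hk x

lemma integrable_prod {F : Euc n × Euc n → ℝ} (hc : Continuous F) {C : ℝ} {k l : ℕ}
    (hb : ∀ z, |F z| ≤ C * ((1 + ‖z.1‖) ^ k * (1 + ‖z.2‖) ^ l)) :
    Integrable F ((gam n).prod (gam n)) := by
  have := ((gam_moment n k).mul_prod (gam_moment n l)).const_mul C
  refine this.mono' hc.aestronglyMeasurable (Filter.Eventually.of_forall fun z => ?_)
  simpa [Real.norm_eq_abs] using hb z

end PG

/-- A vector field all of whose components have polynomial growth. -/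
def PGV {n : ℕ} (G : Euc n → Euc n) : Prop := ∀ i, PG (fun x => G x i)

namespace PGV

variable {n : ℕ} {F G : Euc n → Euc n} {f : Euc n → ℝ}

lemma cont (hG : PGV G) : Continuous G := by
  have h : Continuous fun x => (WithLp.ofLp (G x) : Fin n → ℝ) :=
    continuous_pi fun i => (hG i).cont
  exact (PiLp.continuous_toLp 2 _).comp h

lemma inner (hF : PGV F) (hG : PGV G) : PG (fun x => ⟪F x, G x⟫) := by
  have : (fun x => ⟪F x, G x⟫) = fun x => ∑ i, G x i * F x i := by
    ext x; simp [PiLp.inner_apply]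
  rw [this]
  exact PG.sum _ fun i _ => (hG i).mul (hF i)

lemma norm_sq (hG : PGV G) : PG (fun x => ‖G x‖ ^ 2) := by
  simpa only [real_inner_self_eq_norm_sq] using hG.inner hG

lemma norm (hG : PGV G) : PG (fun x => ‖G x‖) := by
  refine (((PG.const 1).add hG.norm_sq)).mono_bound hG.cont.norm fun x => ?_
  rw [abs_of_nonneg (norm_nonneg _), abs_of_nonneg (by positivity)]
  nlinarith [sq_nonneg (‖G x‖ - 1)]

lemma const (p : Euc n) : PGV (fun _ : Euc n => p) := fun _ => PG.const _

lemma id : PGV (fun x : Euc n => x) := fun i => PG.coord i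

lemma add (hF : PGV F) (hG : PGV G) : PGV (fun x => F x + G x) := fun i => (hF i).add (hG i)

lemma sub (hF : PGV F) (hG : PGV G) : PGV (fun x => F x - G x) := fun i => (hF i).sub (hG i)

lemma smul (hf : PG f) (hG : PGV G) : PGV (fun x => f x • G x) := fun i => hf.mul (hG i)

lemma affine (hG : PGV G) (x : Euc n) (R : ℝ) : PGV (fun y => G (x + R • y)) :=
  fun i => (hG i).affine x R

end PGV

/-- `f` is `C¹` with gradient `G`, and both have polynomial growth. -/
structure G1 {n : ℕ} (f : Euc n → ℝ) (G : Euc n → Euc n) : Prop where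
  pg : PG f
  pgv : PGV G
  deriv : ∀ x, HasFDerivAt f (innerSL ℝ (G x)) x

namespace G1

variable {n : ℕ} {f g : Euc n → ℝ} {F G : Euc n → Euc n}

lemma const (c : ℝ) : G1 (fun _ : Euc n => c) (fun _ => 0) :=
  ⟨PG.const c, PGV.const 0, fun x => by simpa using hasFDerivAt_const c x⟩

lemma coord (i : Fin n) : G1 (fun x : Euc n => x i) (fun _ => EuclideanSpace.single i 1) :=
  ⟨PG.coord i, PGV.const _, fun x => by
    have h := (EuclideanSpace.proj (𝕜 := ℝ) i : Euc n →L[ℝ] ℝ).hasFDerivAt (x := x)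
    refine h.congr_fderiv ?_
    ext y
    simp [EuclideanSpace.inner_single_left]⟩

lemma add (hf : G1 f F) (hg : G1 g G) : G1 (fun x => f x + g x) (fun x => F x + G x) :=
  ⟨hf.pg.add hg.pg, hf.pgv.add hg.pgv, fun x => by
    refine ((hf.deriv x).add (hg.deriv x)).congr_fderiv ?_
    simp⟩

lemma mul (hf : G1 f F) (hg : G1 g G) :
    G1 (fun x => f x * g x) (fun x => f x • G x + g x • F x) :=
  ⟨hf.pg.mul hg.pg, (hg.pgv.smul hf.pg).add (hf.pgv.smul hg.pg), fun x => by
    refine ((hf.deriv x).mul (hg.deriv x)).congr_fderiv ?_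
    simp⟩

lemma sub (hf : G1 f F) (hg : G1 g G) : G1 (fun x => f x - g x) (fun x => F x - G x) :=
  ⟨hf.pg.sub hg.pg, hf.pgv.sub hg.pgv, fun x => by
    refine ((hf.deriv x).sub (hg.deriv x)).congr_fderiv ?_
    simp⟩

lemma const_mul (c : ℝ) (hf : G1 f F) : G1 (fun x => c * f x) (fun x => c • F x) := by
  simpa using (const c).mul hf

lemma congr_grad (hf : G1 f F) (h : ∀ x, F x = G x) : G1 f G := by
  have : F = G := funext h
  rwa [← this]

lemma sq (hf : G1 f F) : G1 (fun x => f x ^ 2) (fun x => (2 * f x) • F x) := by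
  have := hf.mul hf
  simp only [← pow_two] at this
  exact this.congr_grad fun x => by rw [← add_smul]; ring_nf

lemma sum {ι : Type*} (s : Finset ι) {f : ι → Euc n → ℝ} {F : ι → Euc n → Euc n}
    (h : ∀ i ∈ s, G1 (f i) (F i)) : G1 (fun x => ∑ i ∈ s, f i x) (fun x => ∑ i ∈ s, F i x) := by
  classical
  induction s using Finset.induction_on with
  | empty => simpa using const 0
  | insert a s ha ih =>
    simp only [Finset.sum_insert ha]
    exact (h a (Finset.mem_insert_self _ _)).add
      (ih fun i hi => h i (Finset.mem_insert_of_mem hi))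

lemma affine (hf : G1 f F) (x : Euc n) (R : ℝ) :
    G1 (fun y => f (x + R • y)) (fun y => R • F (x + R • y)) :=
  ⟨hf.pg.affine x R, (hf.pgv.affine x R).smul (PG.const R), fun y => by
    have h1 : HasFDerivAt (fun y : Euc n => x + R • y) (R • ContinuousLinearMap.id ℝ (Euc n)) y :=
      ((hasFDerivAt_id y).const_smul R).const_add x
    have h2 := (hf.deriv (x + R • y)).comp y h1
    refine h2.congr_fderiv ?_
    ext z
    simp⟩

lemma lin (p : Euc n) : G1 (fun x : Euc n => ⟪p, x⟫) (fun _ => p) :=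
  ⟨(PGV.const p).inner PGV.id, PGV.const p, fun _ => (innerSL ℝ p).hasFDerivAt⟩

/-- Post-composition with a scalar function that is `C¹` with bounded derivative. -/
lemma comp {φ φ' : ℝ → ℝ} (hf : G1 f F) (hφ : ∀ s, HasDerivAt φ (φ' s) s)
    (hc : Continuous φ') {K : ℝ} (hK : ∀ s, |φ' s| ≤ K) :
    G1 (fun x => φ (f x)) (fun x => φ' (f x) • F x) := by
  have hφc : Continuous φ := continuous_iff_continuousAt.2 fun s => (hφ s).continuousAt
  have hlip : ∀ s, |φ s| ≤ |φ 0| + K * |s| := by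
    intro s
    have := Convex.norm_image_sub_le_of_norm_hasDerivWithin_le (f := φ) (f' := φ') (C := K)
      (s := Set.univ) (fun x _ => (hφ x).hasDerivWithinAt) (fun x _ => hK x) convex_univ
      (Set.mem_univ 0) (Set.mem_univ s)
    simp only [Real.norm_eq_abs, sub_zero] at this
    have h2 := abs_sub_abs_le_abs_sub (φ s) (φ 0)
    linarith
  have hK0 : 0 ≤ K := (abs_nonneg _).trans (hK 0)
  refine ⟨?_, ?_, fun x => ?_⟩
  · refine ((PG.const |φ 0|).add (hf.pg.abs.const_mul K)).mono_bound (hφc.comp hf.pg.1) fun x => ?_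
    rw [abs_of_nonneg (a := |φ 0| + _) (by positivity)]
    exact hlip _
  · refine PGV.smul ((PG.const K).mono_bound (hc.comp hf.pg.1) fun x => ?_) hf.pgv
    exact (hK _).trans (le_abs_self _)
  · refine ((hφ (f x)).comp_hasFDerivAt x (hf.deriv x)).congr_fderiv ?_
    simp

/-- Gaussian integration by parts. -/
lemma ibp (hf : G1 f F) (i : Fin n) : ∫ x, x i * f x ∂(gam n) = ∫ x, F x i ∂(gam n) := by
  have hgd : ∀ x : Euc n, HasFDerivAt (gw : Euc n → ℝ) (innerSL ℝ (-(gw x) • x)) x := by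
    intro x
    have h1 := ((hasStrictFDerivAt_norm_sq x).hasFDerivAt.const_mul (-(1 / 2) : ℝ)).exp
    refine h1.congr_fderiv ?_
    ext y
    simp [gw]
  have hintg : ∀ {h : Euc n → ℝ}, PG h → Integrable (fun x => gw x * h x) := by
    intro h hh
    have := (integrable_gam_iff.1 hh.integrable).const_mul (gZ n)
    refine this.congr (Filter.Eventually.of_forall fun x => ?_)
    have := (gZ_pos n).ne'
    simp only []
    field_simp
  set e : Euc n := EuclideanSpace.single i 1
  have hfe : ∀ x, fderiv ℝ f x e = F x i := by
    intro x
    rw [(hf.deriv x).fderiv]; simp [e, EuclideanSpace.inner_single_right]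
  have hge : ∀ x, fderiv ℝ (gw : Euc n → ℝ) x e = -(gw x * x i) := by
    intro x
    rw [(hgd x).fderiv]; simp [e, EuclideanSpace.inner_single_right]
  have key := integral_mul_fderiv_eq_neg_fderiv_mul_of_integrable (μ := (volume : Measure (Euc n)))
    (f := (gw : Euc n → ℝ)) (g := f) (v := e) ?_ ?_ ?_ ?_ ?_
  · simp only [hfe, hge] at key
    rw [integral_gam_smul, integral_gam_smul]
    have l : ∀ x : Euc n, (gw x / gZ n) • (x i * f x) = (gZ n)⁻¹ * (gw x * x i * f x) := by
      intro x; rw [smul_eq_mul]; ring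
    have r : ∀ x : Euc n, (gw x / gZ n) • F x i = (gZ n)⁻¹ * (gw x * F x i) := by
      intro x; rw [smul_eq_mul]; ring
    simp_rw [l, r]
    rw [integral_const_mul, integral_const_mul, key, ← integral_neg]
    simp
  · simp only [hge]
    have := (hintg ((PG.coord i).mul hf.pg)).neg
    refine this.congr (Filter.Eventually.of_forall fun x => ?_)
    simp only [Pi.neg_apply]; ring
  · simp only [hfe]; exact hintg (hf.pgv i)
  · exact hintg hf.pg
  · exact fun x _ => (hgd x).differentiableAt
  · exact fun x _ => (hf.deriv x).differentiableAt

end G1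

/-! ### Gaussian expectations -/

/-- Expectation of `f` against the standard Gaussian measure. -/
noncomputable def Eg {n : ℕ} (f : Euc n → ℝ) : ℝ := ∫ x, f x ∂(gam n)

/-- Expectation of a vector field, computed componentwise. -/
noncomputable def EgV {n : ℕ} (G : Euc n → Euc n) : Euc n :=
  WithLp.toLp 2 (fun i => Eg fun x => G x i)

section Eg

variable {n : ℕ} {f g : Euc n → ℝ} {F G : Euc n → Euc n}

lemma Eg_add (hf : PG f) (hg : PG g) : Eg (fun x => f x + g x) = Eg f + Eg g :=
  integral_add hf.integrable hg.integrable

lemma Eg_sub (hf : PG f) (hg : PG g) : Eg (fun x => f x - g x) = Eg f - Eg g :=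
  integral_sub hf.integrable hg.integrable

lemma Eg_neg : Eg (fun x => -f x) = -Eg f := integral_neg _

lemma Eg_const_mul (c : ℝ) : Eg (fun x => c * f x) = c * Eg f := integral_const_mul _ _

lemma Eg_mul_const (c : ℝ) : Eg (fun x => f x * c) = Eg f * c := integral_mul_const _ _

lemma Eg_div_const (c : ℝ) : Eg (fun x => f x / c) = Eg f / c := integral_div _ _

lemma Eg_const (c : ℝ) : Eg (fun _ : Euc n => c) = c := by simp [Eg]

lemma Eg_mono (hf : PG f) (hg : PG g) (h : ∀ x, f x ≤ g x) : Eg f ≤ Eg g :=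
  integral_mono hf.integrable hg.integrable h

lemma Eg_nonneg (h : ∀ x, 0 ≤ f x) : 0 ≤ Eg f := integral_nonneg h

lemma Eg_congr (h : ∀ x, f x = g x) : Eg f = Eg g := by
  rw [show f = g from funext h]

lemma Eg_sum {ι : Type*} (s : Finset ι) {F : ι → Euc n → ℝ} (h : ∀ i ∈ s, PG (F i)) :
    Eg (fun x => ∑ i ∈ s, F i x) = ∑ i ∈ s, Eg (F i) :=
  integral_finsetSum _ fun i hi => (h i hi).integrable

lemma abs_Eg_le (f : Euc n → ℝ) : |Eg f| ≤ Eg (fun x => |f x|) := abs_integral_le_integral_abs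

lemma Eg_cs (hf : PG f) (hg : PG g) :
    (Eg fun x => f x * g x) ^ 2 ≤ (Eg fun x => f x ^ 2) * Eg fun x => g x ^ 2 := by
  have key : ∀ t : ℝ, 0 ≤ (Eg fun x => g x ^ 2) * (t * t) + (-2 * Eg fun x => f x * g x) * t
      + Eg fun x => f x ^ 2 := by
    intro t
    have h0 : 0 ≤ Eg (fun x => (f x - t * g x) ^ 2) := Eg_nonneg fun x => sq_nonneg _
    have h1 : Eg (fun x => (f x - t * g x) ^ 2)
        = Eg (fun x => (f x ^ 2 - (2 * t) * (f x * g x)) + (t * t) * g x ^ 2) :=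
      Eg_congr fun x => by ring
    rw [h1, Eg_add ((hf.pow 2).sub ((hf.mul hg).const_mul _)) ((hg.pow 2).const_mul _),
      Eg_sub (hf.pow 2) ((hf.mul hg).const_mul _), Eg_const_mul, Eg_const_mul] at h0
    linarith
  have := discrim_le_zero key
  unfold discrim at this
  nlinarith

lemma Eg_cs_sqrt (hf : PG f) (hg : PG g) :
    Eg (fun x => f x * g x) ≤ √(Eg fun x => f x ^ 2) * √(Eg fun x => g x ^ 2) := by
  rw [← Real.sqrt_mul (Eg_nonneg fun x => sq_nonneg _)]
  exact Real.le_sqrt_of_sq_le (Eg_cs hf hg)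

lemma Eg_sq_le (hf : PG f) : (Eg f) ^ 2 ≤ Eg fun x => f x ^ 2 := by
  have := Eg_cs hf (PG.const 1)
  simpa [Eg_const] using this

lemma inner_EgV (p : Euc n) (hG : PGV G) : ⟪p, EgV G⟫ = Eg fun x => ⟪p, G x⟫ := by
  simp only [PiLp.inner_apply, EgV, RCLike.inner_apply, conj_trivial]
  rw [Eg_sum _ fun i _ => (hG i).mul (PG.const _)]
  simp [Eg_mul_const]

lemma EgV_apply (i : Fin n) : EgV G i = Eg fun x => G x i := rfl

lemma Eg_sub_const_sq (hf : PG f) : Eg (fun x => (f x - Eg f) ^ 2)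
    = Eg (fun x => f x ^ 2) - (Eg f) ^ 2 := by
  have : Eg (fun x => (f x - Eg f) ^ 2)
      = Eg (fun x => (f x ^ 2 - (2 * Eg f) * f x) + Eg f ^ 2) := Eg_congr fun x => by ring
  rw [this, Eg_add ((hf.pow 2).sub (hf.const_mul _)) (PG.const _), Eg_sub (hf.pow 2)
    (hf.const_mul _), Eg_const_mul, Eg_const]
  ring

lemma G1.ibp' {f : Euc n → ℝ} {F : Euc n → Euc n} (hf : G1 f F) (i : Fin n) :
    Eg (fun x => x i * f x) = Eg fun x => F x i := hf.ibp i

lemma Eg_coord (i : Fin n) : Eg (fun x : Euc n => x i) = 0 := by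
  have := (G1.const (n := n) 1).ibp' i
  simpa [Eg_const] using this

lemma Eg_coord_mul (i j : Fin n) :
    Eg (fun x : Euc n => x i * x j) = if i = j then 1 else 0 := by
  have := (G1.coord j).ibp' i
  rw [this]
  simp only [Eg_const, PiLp.single_apply]

/-- Bessel's inequality for the functions `1, x₁, …, xₙ`. -/
lemma Eg_bessel (hf : PG f) :
    (Eg f) ^ 2 + ∑ i, (Eg fun x => x i * f x) ^ 2 ≤ Eg fun x => f x ^ 2 := by
  set m := Eg f
  set b : Fin n → ℝ := fun i => Eg fun x => x i * f x with hb
  have hL : PG (fun x : Euc n => ∑ i, b i * x i) :=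
    PG.sum _ fun i _ => (PG.coord i).const_mul _
  have h0 : 0 ≤ Eg (fun x => (f x - m - ∑ i, b i * x i) ^ 2) := Eg_nonneg fun x => sq_nonneg _
  have h1 : Eg (fun x => (f x - m - ∑ i, b i * x i) ^ 2) = Eg (fun x => f x ^ 2 - (2 * m) * f x
      + m ^ 2 - (2 * ∑ i, b i * (x i * f x)) + (2 * m) * (∑ i, b i * x i)
      + ∑ i, ∑ j, (b i * b j) * (x i * x j)) := by
    apply Eg_congr; intro x
    have e1 : ∑ i, b i * (x i * f x) = f x * ∑ i, b i * x i := by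
      rw [Finset.mul_sum]; exact Finset.sum_congr rfl fun i _ => by ring
    have e2 : ∑ i, ∑ j, (b i * b j) * (x i * x j) = (∑ i, b i * x i) ^ 2 := by
      rw [pow_two, Finset.sum_mul_sum]
      exact Finset.sum_congr rfl fun i _ => Finset.sum_congr rfl fun j _ => by ring
    rw [e1, e2]; ring
  have hx : ∀ i, PG (fun x : Euc n => b i * (x i * f x)) :=
    fun i => ((PG.coord i).mul hf).const_mul _
  have hxx : ∀ i j, PG (fun x : Euc n => (b i * b j) * (x i * x j)) :=
    fun i j => ((PG.coord i).mul (PG.coord j)).const_mul _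
  have p1 := (hf.pow 2).sub (hf.const_mul (2 * m))
  have p2 := p1.add (PG.const (m ^ 2))
  have p3 := p2.sub ((PG.sum Finset.univ fun i _ => hx i).const_mul 2)
  have p4 := p3.add (hL.const_mul (2 * m))
  have p5 : PG (fun x : Euc n => ∑ i, ∑ j, (b i * b j) * (x i * x j)) :=
    PG.sum _ fun i _ => PG.sum _ fun j _ => hxx i j
  rw [h1, Eg_add p4 p5, Eg_add p3 (hL.const_mul (2 * m)),
    Eg_sub p2 ((PG.sum Finset.univ fun i _ => hx i).const_mul 2), Eg_add p1 (PG.const _),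
    Eg_sub (hf.pow 2) (hf.const_mul _), Eg_const, Eg_const_mul, Eg_const_mul, Eg_const_mul,
    Eg_sum _ fun i _ => hx i, Eg_sum _ fun i _ => (PG.coord i).const_mul _,
    Eg_sum _ fun i _ => PG.sum _ fun j _ => hxx i j] at h0
  have e3 : ∀ i, Eg (fun x : Euc n => ∑ j, (b i * b j) * (x i * x j)) = b i ^ 2 := by
    intro i
    rw [Eg_sum _ fun j _ => hxx i j]
    simp only [Eg_const_mul, Eg_coord_mul]
    simp [pow_two]
  simp only [e3, Eg_const_mul, Eg_coord] at h0
  have e4 : ∑ i, b i * Eg (fun x => x i * f x) = ∑ i, b i ^ 2 :=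
    Finset.sum_congr rfl fun i _ => by rw [pow_two]
  rw [e4] at h0
  change m ^ 2 + ∑ i, b i ^ 2 ≤ _
  simp at h0
  change 0 ≤ _ - 2 * m * m + _ - _ + _ at h0
  linarith

lemma PG.two (hf : PG f) : ∃ C : ℝ, ∃ k : ℕ, 0 ≤ C ∧ ∀ (c s : ℝ) (x y : Euc n),
    |f (c • x + s • y)| ≤ C * (1 + |c| + |s|) ^ k * ((1 + ‖x‖) ^ k * (1 + ‖y‖) ^ k) := by
  obtain ⟨_, C, k, hC, hk⟩ := hf
  refine ⟨C, k, hC, fun c s x y => (hk _).trans ?_⟩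
  rw [mul_assoc, ← mul_pow, ← mul_pow]
  gcongr
  have h1 : ‖c • x + s • y‖ ≤ |c| * ‖x‖ + |s| * ‖y‖ :=
    (norm_add_le _ _).trans (by rw [norm_smul, norm_smul]; rfl)
  have hx := norm_nonneg x
  have hy := norm_nonneg y
  have hc := abs_nonneg c
  have hs := abs_nonneg s
  have hxy := mul_nonneg hx hy
  nlinarith [mul_nonneg hc hx, mul_nonneg hc hy, mul_nonneg hs hx, mul_nonneg hs hy,
    mul_nonneg hc hxy, mul_nonneg hs hxy]

/-- The derivative of `R ↦ E f(x + R Y)`. -/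
lemma G1.hasDerivAt_av (hf : G1 f F) (x : Euc n) (R : ℝ) :
    HasDerivAt (fun r => Eg fun y => f (x + r • y)) (Eg fun y => ⟪F (x + R • y), y⟫) R := by
  obtain ⟨C, k, hC, hk⟩ := hf.pgv.norm.two
  have hb : ∀ y : Euc n, ∀ r ∈ ball R 1, ‖⟪F (x + r • y), y⟫‖
      ≤ (C * (1 + 1 + (|R| + 1)) ^ k * (1 + ‖x‖) ^ k) * (1 + ‖y‖) ^ (k + 1) := by
    intro y r hr
    have hr' : |r| ≤ |R| + 1 := by
      rw [mem_ball, Real.dist_eq] at hr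
      have := abs_sub_abs_le_abs_sub r R
      linarith
    have h1 := hk 1 r x y
    rw [one_smul, abs_of_nonneg (norm_nonneg _), abs_one] at h1
    refine (norm_inner_le_norm _ _).trans ?_
    calc ‖F (x + r • y)‖ * ‖y‖
        ≤ (C * (1 + 1 + (|R| + 1)) ^ k * ((1 + ‖x‖) ^ k * (1 + ‖y‖) ^ k)) * (1 + ‖y‖) := by
          apply mul_le_mul (h1.trans _) (by linarith) (norm_nonneg _) (by positivity)
          gcongr
      _ = _ := by ring
  have := hasDerivAt_integral_of_dominated_loc_of_deriv_le (μ := gam n) (𝕜 := ℝ)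
    (F := fun r y => f (x + r • y)) (F' := fun r y => ⟪F (x + r • y), y⟫) (x₀ := R)
    (s := ball R 1)
    (bound := fun y => (C * (1 + 1 + (|R| + 1)) ^ k * (1 + ‖x‖) ^ k) * (1 + ‖y‖) ^ (k + 1))
    (ball_mem_nhds R one_pos) ?_ (hf.pg.affine x R).integrable ?_
    (Filter.Eventually.of_forall hb) ((gam_moment n (k + 1)).const_mul _) ?_
  · exact this.2
  · exact Filter.Eventually.of_forall fun r => (hf.pg.affine x r).1.aestronglyMeasurable
  · exact ((hf.pgv.affine x R).inner PGV.id).1.aestronglyMeasurable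
  · refine Filter.Eventually.of_forall fun y r _ => ?_
    have h1 : HasDerivAt (fun r : ℝ => x + r • y) y r := by
      simpa using ((hasDerivAt_id r).smul_const y).const_add x
    have h2 := (hf.deriv (x + r • y)).comp_hasDerivAt r h1
    exact h2

end Eg

/-! ### The Gaussian Poincaré inequality with a spectral gap -/

/-- The Mehler-type operator `K f (x) = E f(c x + s Y)`. -/
noncomputable def Kop {n : ℕ} (c s : ℝ) (f : Euc n → ℝ) (x : Euc n) : ℝ :=
  Eg fun y => f (c • x + s • y)

section Mehler

variable {n : ℕ} {f g : Euc n → ℝ} {F G : Euc n → Euc n}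

lemma Kop_pg (hf : PG f) (c s : ℝ) : PG (Kop c s f) := by
  obtain ⟨C, k, hC, hk⟩ := hf.two
  have hb : ∀ x y : Euc n, ‖f (c • x + s • y)‖
      ≤ (C * (1 + |c| + |s|) ^ k * (1 + ‖x‖) ^ k) * (1 + ‖y‖) ^ k := by
    intro x y
    have := hk c s x y
    rw [Real.norm_eq_abs]; linarith
  refine ⟨?_, C * (1 + |c| + |s|) ^ k * Eg (fun y : Euc n => (1 + ‖y‖) ^ k), k, ?_, ?_⟩
  · rw [continuous_iff_continuousAt]
    intro x₀
    refine continuousAt_of_dominated (bound := fun y : Euc n =>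
      (C * (1 + |c| + |s|) ^ k * (1 + (‖x₀‖ + 1)) ^ k) * (1 + ‖y‖) ^ k) ?_ ?_
      ((gam_moment n k).const_mul _) ?_
    · refine Filter.Eventually.of_forall fun x => Continuous.aestronglyMeasurable ?_
      exact hf.1.comp (by fun_prop)
    · filter_upwards [ball_mem_nhds x₀ one_pos] with x hx
      refine Filter.Eventually.of_forall fun y => (hb x y).trans ?_
      have : ‖x‖ ≤ ‖x₀‖ + 1 := by
        rw [mem_ball, dist_eq_norm] at hx
        linarith [norm_sub_norm_le x x₀]
      gcongr
    · refine Filter.Eventually.of_forall fun y => Continuous.continuousAt ?_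
      exact hf.1.comp (by fun_prop)
  · exact mul_nonneg (by positivity) (Eg_nonneg fun y => by positivity)
  · intro x
    refine (abs_Eg_le _).trans ?_
    calc Eg (fun y => |f (c • x + s • y)|)
        ≤ Eg (fun y : Euc n => (C * (1 + |c| + |s|) ^ k * (1 + ‖x‖) ^ k) * (1 + ‖y‖) ^ k) := by
          refine Eg_mono ((hf.affine (c • x) s).abs)
            ((((PG.const 1).add PG.norm_id).pow k).const_mul _) fun y => hb x y
      _ = _ := by rw [Eg_const_mul]; ring

lemma Kop_G1 (hf : G1 f F) (c s : ℝ) :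
    G1 (Kop c s f) (fun x => c • EgV fun y => F (c • x + s • y)) := by
  refine ⟨Kop_pg hf.pg c s, ?_, ?_⟩
  · intro i
    exact (Kop_pg (hf.pgv i) c s).const_mul c
  intro x₀
  obtain ⟨C, k, hC, hk⟩ := hf.pgv.norm.two
  have hF : ∀ x : Euc n, Continuous fun y : Euc n => F (c • x + s • y) :=
    fun x => hf.pgv.cont.comp (by fun_prop)
  have hb : ∀ y : Euc n, ∀ x ∈ ball x₀ 1, ‖c • innerSL ℝ (F (c • x + s • y))‖
      ≤ (|c| * (C * (1 + |c| + |s|) ^ k * (1 + (‖x₀‖ + 1)) ^ k)) * (1 + ‖y‖) ^ k := by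
    intro y x hx
    have h1 := hk c s x y
    rw [abs_of_nonneg (norm_nonneg _)] at h1
    have : ‖x‖ ≤ ‖x₀‖ + 1 := by
      rw [mem_ball, dist_eq_norm] at hx
      linarith [norm_sub_norm_le x x₀]
    rw [norm_smul, innerSL_apply_norm, Real.norm_eq_abs, mul_assoc |c|]
    refine mul_le_mul_of_nonneg_left (h1.trans ?_) (abs_nonneg c)
    rw [← mul_assoc]
    gcongr
  have hm : ∀ x, AEStronglyMeasurable (fun y => c • innerSL ℝ (F (c • x + s • y))) (gam n) :=
    fun x => (((innerSL ℝ).continuous.comp (hF x)).const_smul c).aestronglyMeasurable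
  have key := hasFDerivAt_integral_of_dominated_of_fderiv_le (𝕜 := ℝ) (μ := gam n)
    (F := fun x y => f (c • x + s • y)) (F' := fun x y => c • innerSL ℝ (F (c • x + s • y)))
    (x₀ := x₀) (s := ball x₀ 1)
    (bound := fun y => (|c| * (C * (1 + |c| + |s|) ^ k * (1 + (‖x₀‖ + 1)) ^ k)) * (1 + ‖y‖) ^ k)
    (ball_mem_nhds x₀ one_pos) ?_ (hf.pg.affine (c • x₀) s).integrable (hm x₀)
    (Filter.Eventually.of_forall hb) ((gam_moment n k).const_mul _) ?_
  · have hi : Integrable (fun y => c • innerSL ℝ (F (c • x₀ + s • y))) (gam n) :=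
      ((gam_moment n k).const_mul _).mono' (hm x₀)
        (Filter.Eventually.of_forall fun y => hb y x₀ (mem_ball_self one_pos))
    refine key.congr_fderiv ?_
    ext z
    rw [ContinuousLinearMap.integral_apply hi]
    have : ∀ y, (c • innerSL ℝ (F (c • x₀ + s • y))) z = c * ⟪z, F (c • x₀ + s • y)⟫ := by
      intro y; simp [real_inner_comm]
    simp_rw [this]
    rw [innerSL_apply_apply, real_inner_comm, inner_smul_right,
      inner_EgV z (hf.pgv.affine (c • x₀) s), ← Eg_const_mul]
    rfl
  · exact Filter.Eventually.of_forall fun x =>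
      (hf.pg.affine (c • x) s).1.aestronglyMeasurable
  · refine Filter.Eventually.of_forall fun y x _ => ?_
    have h1 : HasFDerivAt (fun x : Euc n => c • x + s • y)
        (c • ContinuousLinearMap.id ℝ (Euc n)) x :=
      ((hasFDerivAt_id x).const_smul c).add_const _
    refine ((hf.deriv (c • x + s • y)).comp x h1).congr_fderiv ?_
    ext z
    simp

lemma rot_integral {Φ : Euc n × Euc n → ℝ} (hΦ : Continuous Φ) (θ : ℝ) :
    ∫ z, Φ (Real.cos θ • z.1 + Real.sin θ • z.2, -Real.sin θ • z.1 + Real.cos θ • z.2)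
      ∂((gam n).prod (gam n)) = ∫ z, Φ z ∂((gam n).prod (gam n)) := by
  have h := gam_rot (n := n) θ
  conv_rhs => rw [← h.map_eq]
  rw [integral_map h.measurable.aemeasurable hΦ.aestronglyMeasurable]

lemma Kop_mean (hf : PG f) (θ : ℝ) : Eg (Kop (Real.cos θ) (Real.sin θ) f) = Eg f := by
  obtain ⟨C, k, hC, hk⟩ := hf.two
  have h := rot_integral (n := n) (Φ := fun z => f z.1) (hf.1.comp continuous_fst) θ
  rw [integral_prod, integral_prod] at h
  · simp only [integral_const, probReal_univ, smul_eq_mul, one_mul] at h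
    exact h
  · refine PG.integrable_prod (hf.1.comp continuous_fst) (C := C * 2 ^ k) (k := k) (l := k) ?_
    intro z
    have := hk 1 0 z.1 z.2
    simp only [one_smul, zero_smul, add_zero, abs_one, abs_zero] at this
    norm_num at this
    exact this
  · exact PG.integrable_prod (hf.1.comp (by fun_prop)) (fun z => hk _ _ z.1 z.2)

lemma Kop_mean' (hf : PG f) (θ : ℝ) : Eg (Kop (Real.cos θ) (-Real.sin θ) f) = Eg f := by
  simpa using Kop_mean hf (-θ)

lemma Kop_sq_le (hf : PG f) (c s : ℝ) (x : Euc n) :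
    Kop c s f x ^ 2 ≤ Kop c s (fun y => f y ^ 2) x := Eg_sq_le (hf.affine (c • x) s)

lemma Kop_sq_mean_le (hf : PG f) (θ : ℝ) :
    Eg (fun x => Kop (Real.cos θ) (-Real.sin θ) f x ^ 2) ≤ Eg fun x => f x ^ 2 := by
  rw [← Kop_mean' (hf.pow 2) θ]
  exact Eg_mono ((Kop_pg hf _ _).pow 2) (Kop_pg (hf.pow 2) _ _) fun x => Kop_sq_le hf _ _ x

/-- The correlation of `f(X)` with `f(cos θ X + sin θ Y)`. -/
noncomputable def corr (f : Euc n → ℝ) (θ : ℝ) : ℝ :=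
  ∫ z, f z.1 * f (Real.cos θ • z.1 + Real.sin θ • z.2) ∂((gam n).prod (gam n))

lemma corr_zero (hf : PG f) : corr f 0 = Eg fun x => f x ^ 2 := by
  obtain ⟨C, k, hC, hk⟩ := (hf.pow 2).two
  unfold corr
  simp only [Real.cos_zero, Real.sin_zero, one_smul, zero_smul, add_zero, ← pow_two]
  rw [integral_prod]
  · simp only [integral_const, probReal_univ, smul_eq_mul, one_mul]; rfl
  · refine PG.integrable_prod ((hf.1.comp continuous_fst).pow 2) (C := C * 2 ^ k)
      (k := k) (l := k) ?_
    intro z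
    have := hk 1 0 z.1 z.2
    simp only [one_smul, zero_smul, add_zero, abs_one, abs_zero] at this
    norm_num at this ⊢
    exact this

lemma corr_pi_div_two (f : Euc n → ℝ) : corr f (Real.pi / 2) = Eg f ^ 2 := by
  unfold corr
  simp only [Real.cos_pi_div_two, Real.sin_pi_div_two, one_smul, zero_smul, zero_add]
  rw [integral_prod_mul, pow_two]; rfl

lemma corr_value (hf : G1 f F) (θ : ℝ) :
    ∫ z, f z.1 * ⟪F (Real.cos θ • z.1 + Real.sin θ • z.2),
        -Real.sin θ • z.1 + Real.cos θ • z.2⟫ ∂((gam n).prod (gam n)) = -Real.sin θ *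
        ∑ i, Eg (fun x => F x i * Kop (Real.cos θ) (-Real.sin θ) (fun y => F y i) x) := by
  obtain ⟨B, m, hB, hm⟩ := hf.pg.two
  have hcs : Real.cos θ * Real.cos θ + Real.sin θ * Real.sin θ = 1 := by
    nlinarith [Real.sin_sq_add_cos_sq θ]
  have h1 := rot_integral (n := n) (Φ := fun z =>
    f (Real.cos θ • z.1 - Real.sin θ • z.2) * ⟪F z.1, z.2⟫) (by
      refine (hf.pg.1.comp (by fun_prop)).mul (Continuous.inner (hf.pgv.cont.comp ?_) ?_) <;>
        fun_prop) θ
  revert hcs h1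
  generalize Real.cos θ = c
  generalize Real.sin θ = s
  intro hcs h1
  have hGc : Continuous fun z : Euc n × Euc n => f (c • z.1 - s • z.2) * ⟪F z.1, z.2⟫ := by
    refine (hf.pg.1.comp (by fun_prop)).mul (Continuous.inner (hf.pgv.cont.comp ?_) ?_) <;>
      fun_prop
  have h2 : ∀ z : Euc n × Euc n,
      f (c • (c • z.1 + s • z.2) - s • (-s • z.1 + c • z.2)) = f z.1 := by
    intro z
    congr 1
    have : c • (c • z.1 + s • z.2) - s • (-s • z.1 + c • z.2) = (c * c + s * s) • z.1 := by
      module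
    rw [this, hcs, one_smul]
  simp only [h2] at h1
  rw [h1, integral_prod]
  · have h3 : ∀ x : Euc n, ∫ y, f (c • x - s • y) * ⟪F x, y⟫ ∂(gam n)
        = -s * ∑ i, F x i * Kop c (-s) (fun y => F y i) x := by
      intro x
      have e1 : ∫ y, f (c • x - s • y) * ⟪F x, y⟫ ∂(gam n)
          = Eg fun y => ∑ i, F x i * (y i * f (c • x + (-s) • y)) := by
        refine Eg_congr fun y => ?_
        rw [PiLp.inner_apply, Finset.mul_sum, neg_smul, ← sub_eq_add_neg]
        refine Finset.sum_congr rfl fun i _ => ?_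
        simp; ring
      rw [e1, Eg_sum _ fun i _ => ((PG.coord i).mul (hf.pg.affine _ _)).const_mul _,
        Finset.mul_sum]
      refine Finset.sum_congr rfl fun i _ => ?_
      rw [Eg_const_mul, (hf.affine (c • x) (-s)).ibp' i]
      simp only [PiLp.smul_apply, smul_eq_mul, Eg_const_mul]
      unfold Kop; ring
    simp_rw [h3]
    rw [← Eg_sum _ fun i _ => (hf.pgv i).mul (Kop_pg (hf.pgv i) _ _)]
    exact integral_const_mul _ _
  · obtain ⟨_, A, j, hA, hj⟩ := hf.pgv.norm
    refine PG.integrable_prod hGc (C := B * (1 + |c| + |-s|) ^ m * A) (k := m + j) (l := m + 1)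
      fun z => ?_
    have q1 := hm c (-s) z.1 z.2
    rw [neg_smul, ← sub_eq_add_neg] at q1
    have q2 := hj z.1
    rw [abs_of_nonneg (norm_nonneg _)] at q2
    rw [abs_mul]
    calc |f (c • z.1 - s • z.2)| * |⟪F z.1, z.2⟫|
        ≤ (B * (1 + |c| + |-s|) ^ m * ((1 + ‖z.1‖) ^ m * (1 + ‖z.2‖) ^ m)) *
          ((A * (1 + ‖z.1‖) ^ j) * (1 + ‖z.2‖)) := by
          refine mul_le_mul q1 ((abs_real_inner_le_norm _ _).trans ?_) (abs_nonneg _)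
            (by positivity)
          exact mul_le_mul q2 (by linarith) (norm_nonneg _) (by positivity)
      _ = _ := by ring

lemma corr_hasDerivAt (hf : G1 f F) (θ : ℝ) :
    HasDerivAt (corr f) (-Real.sin θ *
      ∑ i, Eg (fun x => F x i * Kop (Real.cos θ) (-Real.sin θ) (fun y => F y i) x)) θ := by
  obtain ⟨C, k, hC, hk⟩ := hf.pgv.norm.two
  obtain ⟨_, D, l, hD, hl⟩ := hf.pg
  obtain ⟨B, m, hB, hm⟩ := hf.pg.two
  have hdom : ∀ z : Euc n × Euc n, ∀ t : ℝ,
      ‖f z.1 * ⟪F (Real.cos t • z.1 + Real.sin t • z.2),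
        -Real.sin t • z.1 + Real.cos t • z.2⟫‖
      ≤ D * C * 3 ^ k * ((1 + ‖z.1‖) ^ (l + k + 1) * (1 + ‖z.2‖) ^ (k + 1)) := by
    intro z t
    have hc := Real.abs_cos_le_one t
    have hs := Real.abs_sin_le_one t
    have h1 := hk (Real.cos t) (Real.sin t) z.1 z.2
    rw [abs_of_nonneg (norm_nonneg _)] at h1
    have h1' : ‖F (Real.cos t • z.1 + Real.sin t • z.2)‖
        ≤ C * 3 ^ k * ((1 + ‖z.1‖) ^ k * (1 + ‖z.2‖) ^ k) := by
      refine h1.trans ?_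
      gcongr
      linarith
    have h2 : ‖-Real.sin t • z.1 + Real.cos t • z.2‖ ≤ (1 + ‖z.1‖) * (1 + ‖z.2‖) := by
      refine (norm_add_le _ _).trans ?_
      rw [norm_smul, norm_smul, Real.norm_eq_abs, Real.norm_eq_abs, abs_neg]
      nlinarith [norm_nonneg z.1, norm_nonneg z.2, mul_nonneg (norm_nonneg z.1) (norm_nonneg z.2)]
    rw [norm_mul, Real.norm_eq_abs (f z.1)]
    calc |f z.1| * ‖⟪F (Real.cos t • z.1 + Real.sin t • z.2),
          -Real.sin t • z.1 + Real.cos t • z.2⟫‖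
        ≤ (D * (1 + ‖z.1‖) ^ l) * ((C * 3 ^ k * ((1 + ‖z.1‖) ^ k * (1 + ‖z.2‖) ^ k)) *
          ((1 + ‖z.1‖) * (1 + ‖z.2‖))) := by
          refine mul_le_mul (hl _) ((norm_inner_le_norm _ _).trans ?_) (norm_nonneg _)
            (by positivity)
          exact mul_le_mul h1' h2 (norm_nonneg _) (by positivity)
      _ = _ := by ring
  have hFc : Continuous fun z : Euc n × Euc n => f z.1 *
      ⟪F (Real.cos θ • z.1 + Real.sin θ • z.2), -Real.sin θ • z.1 + Real.cos θ • z.2⟫ := by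
    refine (hf.pg.1.comp continuous_fst).mul (Continuous.inner (hf.pgv.cont.comp ?_) ?_) <;>
      fun_prop
  have hcc : ∀ t : ℝ, Continuous fun z : Euc n × Euc n =>
      f z.1 * f (Real.cos t • z.1 + Real.sin t • z.2) := by
    intro t
    refine (hf.pg.1.comp continuous_fst).mul (hf.pg.1.comp ?_)
    fun_prop
  have key := hasDerivAt_integral_of_dominated_loc_of_deriv_le (μ := (gam n).prod (gam n)) (𝕜 := ℝ)
    (F := fun t z => f z.1 * f (Real.cos t • z.1 + Real.sin t • z.2))
    (F' := fun t z => f z.1 * ⟪F (Real.cos t • z.1 + Real.sin t • z.2),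
        -Real.sin t • z.1 + Real.cos t • z.2⟫) (x₀ := θ) (s := Set.univ)
    (bound := fun z => D * C * 3 ^ k * ((1 + ‖z.1‖) ^ (l + k + 1) * (1 + ‖z.2‖) ^ (k + 1)))
    Filter.univ_mem ?_ ?_ hFc.aestronglyMeasurable
    (Filter.Eventually.of_forall fun z t _ => hdom z t)
    (((gam_moment n (l + k + 1)).mul_prod (gam_moment n (k + 1))).const_mul _) ?_
  · rw [← corr_value hf θ]
    exact key.2
  · exact Filter.Eventually.of_forall fun t => (hcc t).aestronglyMeasurable
  · refine PG.integrable_prod (hcc θ) (C := D * (B * 3 ^ m)) (k := l + m) (l := m) fun z => ?_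
    have hc := Real.abs_cos_le_one θ
    have hs := Real.abs_sin_le_one θ
    have q1 : |f (Real.cos θ • z.1 + Real.sin θ • z.2)|
        ≤ B * 3 ^ m * ((1 + ‖z.1‖) ^ m * (1 + ‖z.2‖) ^ m) := by
      refine (hm (Real.cos θ) (Real.sin θ) z.1 z.2).trans ?_
      gcongr
      linarith
    rw [abs_mul]
    calc |f z.1| * |f (Real.cos θ • z.1 + Real.sin θ • z.2)|
        ≤ (D * (1 + ‖z.1‖) ^ l) * (B * 3 ^ m * ((1 + ‖z.1‖) ^ m * (1 + ‖z.2‖) ^ m)) :=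
          mul_le_mul (hl _) q1 (abs_nonneg _) (by positivity)
      _ = _ := by ring
  · refine Filter.Eventually.of_forall fun z t _ => ?_
    have h1 : HasDerivAt (fun t : ℝ => Real.cos t • z.1 + Real.sin t • z.2)
        (-Real.sin t • z.1 + Real.cos t • z.2) t :=
      ((Real.hasDerivAt_cos t).smul_const z.1).add ((Real.hasDerivAt_sin t).smul_const z.2)
    exact ((hf.deriv _).comp_hasDerivAt t h1).const_mul (f z.1)

lemma norm_sq_eq_sum (x : Euc n) : ‖x‖ ^ 2 = ∑ i, x i ^ 2 := by
  rw [EuclideanSpace.norm_sq_eq]; simp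

lemma Eg_norm_sq (hG : PGV G) : Eg (fun x => ‖G x‖ ^ 2) = ∑ i, Eg fun x => G x i ^ 2 := by
  simp only [norm_sq_eq_sum]
  exact Eg_sum _ fun i _ => (hG i).pow 2

lemma corr_mono_aux (hf : G1 f F) (h : ℝ → ℝ) (h' : ℝ → ℝ) (hh : ∀ t, HasDerivAt h (h' t) t)
    (hle : ∀ t ∈ Set.Icc 0 (Real.pi / 2), Real.sin t *
      ∑ i, Eg (fun x => F x i * Kop (Real.cos t) (-Real.sin t) (fun y => F y i) x) ≤ -h' t) :
    Eg (fun x => f x ^ 2) - h 0 ≤ Eg f ^ 2 - h (Real.pi / 2) := by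
  have hd : ∀ t, HasDerivAt (fun t => corr f t - h t) (-Real.sin t *
      ∑ i, Eg (fun x => F x i * Kop (Real.cos t) (-Real.sin t) (fun y => F y i) x) - h' t) t :=
    fun t => (corr_hasDerivAt hf t).sub (hh t)
  have hpi := Real.pi_pos
  have hm : MonotoneOn (fun t => corr f t - h t) (Set.Icc 0 (Real.pi / 2)) := by
    refine monotoneOn_of_deriv_nonneg (convex_Icc _ _)
      (fun t _ => (hd t).continuousAt.continuousWithinAt)
      (fun t _ => (hd t).differentiableAt.differentiableWithinAt) fun t ht => ?_
    rw [(hd t).deriv]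
    have := hle t (interior_subset ht)
    linarith
  have := hm (Set.left_mem_Icc.2 (by positivity)) (Set.right_mem_Icc.2 (by positivity))
    (by positivity)
  simp only [corr_zero hf.pg, corr_pi_div_two] at this
  exact this

/-- The Gaussian Poincaré inequality. -/
lemma poincare (hf : G1 f F) :
    Eg (fun x => f x ^ 2) ≤ Eg f ^ 2 + Eg fun x => ‖F x‖ ^ 2 := by
  have h := corr_mono_aux hf (fun t => Real.cos t * Eg fun x => ‖F x‖ ^ 2)
    (fun t => -Real.sin t * Eg fun x => ‖F x‖ ^ 2)
    (fun t => (Real.hasDerivAt_cos t).mul_const _) fun t ht => ?_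
  · simp only [Real.cos_zero, Real.cos_pi_div_two] at h
    linarith
  · have hs : 0 ≤ Real.sin t :=
      Real.sin_nonneg_of_nonneg_of_le_pi ht.1 (by linarith [ht.2, Real.pi_pos])
    rw [neg_mul, neg_neg, Eg_norm_sq hf.pgv]
    refine mul_le_mul_of_nonneg_left (Finset.sum_le_sum fun i _ => ?_) hs
    set g : Euc n → ℝ := fun x => F x i
    have hg : PG g := hf.pgv i
    have hK := Kop_pg hg (Real.cos t) (-Real.sin t)
    have h1 : Eg (fun x => g x * Kop (Real.cos t) (-Real.sin t) g x)
        ≤ Eg fun x => (1 / 2) * (g x ^ 2 + Kop (Real.cos t) (-Real.sin t) g x ^ 2) :=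
      Eg_mono (hg.mul hK) (((hg.pow 2).add (hK.pow 2)).const_mul _) fun x => by
        nlinarith [sq_nonneg (g x - Kop (Real.cos t) (-Real.sin t) g x)]
    rw [Eg_const_mul, Eg_add (hg.pow 2) (hK.pow 2)] at h1
    linarith [Kop_sq_mean_le hg t]

/-- Contraction of the Mehler operator on mean-zero functions, from Bessel's inequality and the
Poincaré inequality for the image. -/
lemma Kop_contract (hg : G1 g G) (t : ℝ) :
    Eg (fun x => Kop (Real.cos t) (-Real.sin t) g x ^ 2)
      ≤ Eg g ^ 2 + Real.cos t ^ 2 * (Eg (fun x => g x ^ 2) - Eg g ^ 2) := by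
  set c := Real.cos t
  set s := Real.sin t
  have hcs : s ^ 2 + c ^ 2 = 1 := Real.sin_sq_add_cos_sq t
  have hK := Kop_G1 hg c (-s)
  have hP := poincare hK
  rw [Kop_mean' hg.pg t] at hP
  have hB : ∀ x, Kop c (-s) g x ^ 2 + s ^ 2 * ‖EgV fun y => G (c • x + (-s) • y)‖ ^ 2
      ≤ Kop c (-s) (fun y => g y ^ 2) x := by
    intro x
    have h1 := Eg_bessel (hg.pg.affine (c • x) (-s))
    have h2 : ∀ i, Eg (fun y => y i * g (c • x + (-s) • y))
        = -s * (EgV fun y => G (c • x + (-s) • y)) i := by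
      intro i
      rw [(hg.affine (c • x) (-s)).ibp' i, EgV_apply, ← Eg_const_mul]
      rfl
    simp only [h2, mul_pow, neg_sq] at h1
    rw [norm_sq_eq_sum, Finset.mul_sum]
    exact h1
  have hV : PGV fun x => EgV fun y => G (c • x + (-s) • y) :=
    fun i => Kop_pg (hg.pgv i) c (-s)
  have hI := Eg_mono (((Kop_pg hg.pg c (-s)).pow 2).add (hV.norm_sq.const_mul (s ^ 2)))
    (Kop_pg (hg.pg.pow 2) c (-s)) hB
  rw [Kop_mean' (hg.pg.pow 2) t, Eg_add ((Kop_pg hg.pg c (-s)).pow 2)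
    (hV.norm_sq.const_mul (s ^ 2)), Eg_const_mul] at hI
  simp only [norm_smul, mul_pow, Real.norm_eq_abs, sq_abs, Eg_const_mul] at hP
  set y := Eg fun x => Kop c (-s) g x ^ 2
  set b := Eg fun x => ‖EgV fun y => G (c • x + (-s) • y)‖ ^ 2
  set q := Eg fun x => g x ^ 2
  set m := Eg g
  have h3 : s ^ 2 * y ≤ s ^ 2 * (m ^ 2 + c ^ 2 * b) := mul_le_mul_of_nonneg_left hP (sq_nonneg s)
  have h4 : c ^ 2 * (y + s ^ 2 * b) ≤ c ^ 2 * q := mul_le_mul_of_nonneg_left hI (sq_nonneg c)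
  have hs : s ^ 2 = 1 - c ^ 2 := by linarith
  rw [hs] at h3 h4
  nlinarith

/-- Poincaré inequality with a gap: the deficit controls the oscillation of the gradient. -/
lemma poincare_gap (hf : G1 f F) {D : Fin n → Euc n → Euc n}
    (hF : ∀ i, G1 (fun x => F x i) (D i)) :
    Eg (fun x => f x ^ 2) + (1 / 2) * Eg (fun x => ‖F x - EgV F‖ ^ 2)
      ≤ Eg f ^ 2 + Eg fun x => ‖F x‖ ^ 2 := by
  set p := EgV F
  have hvar : Eg (fun x => ‖F x - p‖ ^ 2) = Eg (fun x => ‖F x‖ ^ 2) - ‖p‖ ^ 2 := by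
    rw [Eg_norm_sq (hf.pgv.sub (PGV.const p)), Eg_norm_sq hf.pgv, norm_sq_eq_sum,
      ← Finset.sum_sub_distrib]
    exact Finset.sum_congr rfl fun i _ => Eg_sub_const_sq (hf.pgv i)
  set W := Eg (fun x => ‖F x - p‖ ^ 2) with hW
  have h := corr_mono_aux hf (fun t => Real.cos t ^ 2 * (W / 2) + Real.cos t * ‖p‖ ^ 2)
    (fun t => (2 * Real.cos t * -Real.sin t) * (W / 2) + -Real.sin t * ‖p‖ ^ 2)
    (fun t => by
      have := ((Real.hasDerivAt_cos t).pow 2).mul_const (W / 2)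
      exact (this.add ((Real.hasDerivAt_cos t).mul_const (‖p‖ ^ 2))).congr_deriv (by simp)) fun t ht => ?_
  · simp only [Real.cos_zero, Real.cos_pi_div_two] at h
    linarith
  · have hs : 0 ≤ Real.sin t :=
      Real.sin_nonneg_of_nonneg_of_le_pi ht.1 (by linarith [ht.2, Real.pi_pos])
    have hc : 0 ≤ Real.cos t :=
      Real.cos_nonneg_of_neg_pi_div_two_le_of_le (by linarith [ht.1, Real.pi_pos]) ht.2
    have hsum : ∑ i, Eg (fun x => F x i * Kop (Real.cos t) (-Real.sin t) (fun y => F y i) x)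
        ≤ ‖p‖ ^ 2 + Real.cos t * W := by
      have hWs : W = ∑ i, (Eg (fun x => F x i ^ 2) - p i ^ 2) := by
        rw [hvar, Eg_norm_sq hf.pgv, norm_sq_eq_sum, Finset.sum_sub_distrib]
      rw [hWs, Finset.mul_sum, norm_sq_eq_sum, ← Finset.sum_add_distrib]
      refine Finset.sum_le_sum fun i _ => ?_
      set g : Euc n → ℝ := fun x => F x i
      have hg : PG g := hf.pgv i
      have hK := Kop_pg hg (Real.cos t) (-Real.sin t)
      have hKm := Kop_mean' hg t
      have hct := Kop_contract (hF i) t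
      change _ ≤ (Eg g) ^ 2 + Real.cos t * (Eg (fun x => g x ^ 2) - (Eg g) ^ 2)
      set k := Kop (Real.cos t) (-Real.sin t) g
      have h1 : Eg (fun x => (g x - Eg g) * (k x - Eg g))
          = Eg (fun x => g x * k x) - (Eg g) ^ 2 := by
        have : Eg (fun x => (g x - Eg g) * (k x - Eg g))
            = Eg (fun x => (g x * k x - Eg g * g x) - (Eg g * k x - Eg g ^ 2)) :=
          Eg_congr fun x => by ring
        rw [this, Eg_sub ((hg.mul hK).sub (hg.const_mul _)) ((hK.const_mul _).sub (PG.const _)),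
          Eg_sub (hg.mul hK) (hg.const_mul _), Eg_sub (hK.const_mul _) (PG.const _), Eg_const_mul,
          Eg_const_mul, Eg_const, hKm]
        ring
      have h2 := Eg_cs (hg.sub (PG.const (Eg g))) (hK.sub (PG.const (Eg g)))
      have h3 := Eg_sub_const_sq hK
      rw [hKm] at h3
      rw [h1, Eg_sub_const_sq hg, h3] at h2
      set vg := Eg (fun x => g x ^ 2) - Eg g ^ 2
      have hvg : 0 ≤ vg := by simp only [vg]; linarith [Eg_sq_le hg]
      have h4 : (Eg (fun x => g x * k x) - Eg g ^ 2) ^ 2 ≤ (Real.cos t * vg) ^ 2 := by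
        refine h2.trans ?_
        have : Eg (fun x => k x ^ 2) - Eg g ^ 2 ≤ Real.cos t ^ 2 * vg := by linarith
        calc vg * (Eg (fun x => k x ^ 2) - Eg g ^ 2) ≤ vg * (Real.cos t ^ 2 * vg) :=
              mul_le_mul_of_nonneg_left this hvg
          _ = _ := by ring
      have h5 := abs_le_of_sq_le_sq' h4 (mul_nonneg hc hvg)
      linarith [h5.2]
    have := mul_le_mul_of_nonneg_left hsum hs
    nlinarith

end Mehler

/-! ### A compactly supported mollifier and interior gradient estimates -/

/-- The partial derivative in the `i`-th coordinate direction. -/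
noncomputable def pd {n : ℕ} (i : Fin n) (w : Euc n → ℝ) (x : Euc n) : ℝ :=
  fderiv ℝ w x (EuclideanSpace.single i 1)

section Mollifier

variable {n : ℕ} {w χ : Euc n → ℝ}

lemma lap_eq_sum (w : Euc n → ℝ) (x : Euc n) : lap w x = ∑ i, pd i (pd i w) x := rfl

lemma contDiff_pd (hw : ContDiff ℝ (⊤ : ℕ∞) w) (i : Fin n) : ContDiff ℝ (⊤ : ℕ∞) (pd i w) :=
  (hw.fderiv_right (m := (⊤ : ℕ∞)) (by norm_cast)).clm_apply contDiff_const

lemma hasFDerivAt_of_contDiff (hw : ContDiff ℝ (⊤ : ℕ∞) w) (x : Euc n) :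
    HasFDerivAt w (fderiv ℝ w x) x :=
  (hw.differentiable (by norm_num)).differentiableAt.hasFDerivAt

lemma fderiv_eq_sum (w : Euc n → ℝ) (x y : Euc n) :
    fderiv ℝ w x y = ∑ i, y i * pd i w x := by
  have h : y = ∑ i, y i • (EuclideanSpace.single i 1 : Euc n) := by
    ext j
    simp [Finset.sum_apply, Pi.single_apply]
  conv_lhs => rw [h]
  rw [map_sum]
  simp [pd]

lemma pd_comm (hw : ContDiff ℝ (⊤ : ℕ∞) w) (i j : Fin n) (x : Euc n) :
    pd i (pd j w) x = pd j (pd i w) x := by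
  have hs : IsSymmSndFDerivAt ℝ w x := by
    refine hw.contDiffAt.isSymmSndFDerivAt ?_
    rw [minSmoothness_of_isRCLikeNormedField]
    exact WithTop.coe_le_coe.2 (le_top : (2 : ℕ∞) ≤ ⊤)
  have hd : DifferentiableAt ℝ (fderiv ℝ w) x :=
    ((hw.fderiv_right (m := (⊤ : ℕ∞)) (by norm_cast)).differentiable (by norm_num)).differentiableAt
  have h : ∀ k l : Fin n, pd k (pd l w) x
      = fderiv ℝ (fderiv ℝ w) x (EuclideanSpace.single k 1) (EuclideanSpace.single l 1) := by
    intro k l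
    unfold pd
    rw [fderiv_clm_apply hd (differentiableAt_const _)]
    simp
  rw [h, h]
  exact hs.eq _ _

lemma pd_affine (hw : ContDiff ℝ (⊤ : ℕ∞) w) (i : Fin n) (z y : Euc n) (s : ℝ) :
    pd i (fun y => w (z + s • y)) y = s * pd i w (z + s • y) := by
  have h1 : HasFDerivAt (fun y : Euc n => z + s • y) (s • ContinuousLinearMap.id ℝ (Euc n)) y :=
    ((hasFDerivAt_id y).const_smul s).const_add z
  have h2 := (hasFDerivAt_of_contDiff hw (z + s • y)).comp y h1
  have h3 : fderiv ℝ (fun y => w (z + s • y)) y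
      = (fderiv ℝ w (z + s • y)).comp (s • ContinuousLinearMap.id ℝ (Euc n)) := h2.fderiv
  unfold pd
  rw [h3]
  simp

lemma contDiff_affine (hw : ContDiff ℝ (⊤ : ℕ∞) w) (z : Euc n) (s : ℝ) :
    ContDiff ℝ (⊤ : ℕ∞) (fun y => w (z + s • y)) :=
  hw.comp (contDiff_const.add (contDiff_id.const_smul s))

lemma pd_compactSupport (hχ : HasCompactSupport χ) (i : Fin n) : HasCompactSupport (pd i χ) := by
  have h := hχ.fderiv (𝕜 := ℝ)
  refine h.mono fun x hx => ?_
  rw [Function.mem_support] at hx ⊢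
  intro h0
  exact hx (by unfold pd; rw [h0]; simp)

lemma ibp_compact (hw : ContDiff ℝ (⊤ : ℕ∞) w) (hχ : ContDiff ℝ (⊤ : ℕ∞) χ)
    (hc : HasCompactSupport χ) (i : Fin n) :
    ∫ y, w y * pd i χ y = -∫ y, pd i w y * χ y := by
  refine integral_mul_fderiv_eq_neg_fderiv_mul_of_integrable ?_ ?_ ?_ ?_ ?_
  · exact ((contDiff_pd hw i).continuous.mul hχ.continuous).integrable_of_hasCompactSupport
      hc.mul_left
  · exact (hw.continuous.mul (contDiff_pd hχ i).continuous).integrable_of_hasCompactSupport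
      (pd_compactSupport hc i).mul_left
  · exact (hw.continuous.mul hχ.continuous).integrable_of_hasCompactSupport hc.mul_left
  · exact fun x _ => (hw.differentiable (by norm_num)).differentiableAt
  · exact fun x _ => (hχ.differentiable (by norm_num)).differentiableAt

/-- A smooth bump supported in the unit ball. -/
noncomputable def moPsi (y : Euc n) : ℝ := expNegInvGlue (1 - ‖y‖ ^ 2)

/-- The radial density `ρ` with `∇ moPsi = -y ρ`. -/
noncomputable def moRho (y : Euc n) : ℝ := 2 * deriv expNegInvGlue (1 - ‖y‖ ^ 2)

lemma expGlue_deriv_contDiff : ContDiff ℝ (⊤ : ℕ∞) (deriv expNegInvGlue) :=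
  (contDiff_infty_iff_deriv.1 expNegInvGlue.contDiff).2

lemma expGlue_hasDerivAt (s : ℝ) : HasDerivAt expNegInvGlue (deriv expNegInvGlue s) s :=
  ((contDiff_infty_iff_deriv.1 expNegInvGlue.contDiff).1 s).hasDerivAt

lemma moPsi_contDiff : ContDiff ℝ (⊤ : ℕ∞) (moPsi : Euc n → ℝ) :=
  expNegInvGlue.contDiff.comp (contDiff_const.sub (contDiff_norm_sq ℝ))

lemma moRho_contDiff : ContDiff ℝ (⊤ : ℕ∞) (moRho : Euc n → ℝ) :=
  contDiff_const.mul (expGlue_deriv_contDiff.comp (contDiff_const.sub (contDiff_norm_sq ℝ)))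

lemma expGlue_deriv_nonneg (s : ℝ) : 0 ≤ deriv expNegInvGlue s := expNegInvGlue.monotone.deriv_nonneg

lemma expGlue_deriv_zero {s : ℝ} (hs : s < 0) : deriv expNegInvGlue s = 0 := by
  have : expNegInvGlue =ᶠ[nhds s] fun _ => 0 := by
    filter_upwards [gt_mem_nhds hs] with t ht using expNegInvGlue.zero_of_nonpos ht.le
  rw [this.deriv_eq]; simp

lemma moRho_nonneg (y : Euc n) : 0 ≤ moRho y := mul_nonneg two_pos.le (expGlue_deriv_nonneg _)

lemma moPsi_support : ∀ y : Euc n, 1 < ‖y‖ → moPsi y = 0 := fun y hy =>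
  expNegInvGlue.zero_of_nonpos (by nlinarith)

lemma moRho_support : ∀ y : Euc n, 1 < ‖y‖ → moRho y = 0 := fun y hy => by
  unfold moRho; rw [expGlue_deriv_zero (by nlinarith), mul_zero]

lemma compact_of_ball {χ : Euc n → ℝ} (h : ∀ y : Euc n, 1 < ‖y‖ → χ y = 0) :
    HasCompactSupport χ :=
  HasCompactSupport.intro (isCompact_closedBall (0 : Euc n) 1) fun y hy => h y (by simpa using hy)

lemma pd_moPsi (i : Fin n) (y : Euc n) : pd i moPsi y = -(y i * moRho y) := by
  have h1 : HasFDerivAt (fun y : Euc n => 1 - ‖y‖ ^ 2) (-(2 • innerSL ℝ y)) y :=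
    (hasStrictFDerivAt_norm_sq y).hasFDerivAt.const_sub 1
  have h2 := (expGlue_hasDerivAt (1 - ‖y‖ ^ 2)).comp_hasFDerivAt y h1
  have h3 : fderiv ℝ (moPsi : Euc n → ℝ) y = deriv expNegInvGlue (1 - ‖y‖ ^ 2) •
    (-(2 • innerSL ℝ y)) := h2.fderiv
  unfold pd
  rw [h3]
  simp [moRho, EuclideanSpace.inner_single_right]
  ring

lemma moRho_integral_pos : 0 < ∫ y : Euc n, moRho y := by
  have hc := moRho_contDiff (n := n) |>.continuous
  have hi : Integrable (moRho : Euc n → ℝ) :=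
    hc.integrable_of_hasCompactSupport (compact_of_ball moRho_support)
  obtain ⟨s, hs, hs'⟩ := exists_deriv_eq_slope expNegInvGlue (a := 0) (b := 1) one_pos
    (fun s _ => (expGlue_hasDerivAt s).continuousAt.continuousWithinAt)
    (fun s _ => (expGlue_hasDerivAt s).differentiableAt.differentiableWithinAt)
  have hpos : 0 < deriv expNegInvGlue s := by
    rw [hs', expNegInvGlue.zero_of_nonpos le_rfl]
    have := expNegInvGlue.pos_of_pos one_pos
    simpa using this
  rcases Nat.eq_zero_or_pos n with hn | hn
  · subst hn
    have h0 : ∀ y : Euc 0, moRho y = 2 * deriv expNegInvGlue 1 := by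
      intro y
      rw [Subsingleton.elim y 0]; simp [moRho]
    -- In dimension zero the space is a point, where the weight is `2 φ'(1)`.
    have hv : deriv expNegInvGlue 1 = Real.exp (-1) := by
      have : expNegInvGlue =ᶠ[nhds 1] fun x => Real.exp (-x⁻¹) := by
        filter_upwards [lt_mem_nhds (one_pos (α := ℝ))] with t ht
        simp [expNegInvGlue, not_le.2 ht]
      rw [this.deriv_eq]
      have h := ((hasDerivAt_inv (one_ne_zero (α := ℝ))).neg).exp
      have := h.deriv
      simpa using this
    simp_rw [h0, hv]
    rw [integral_const, smul_eq_mul]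
    refine mul_pos ?_ (by positivity)
    rw [measureReal_def, ENNReal.toReal_pos_iff]
    exact ⟨isOpen_univ.measure_pos _ univ_nonempty,
      (isCompact_univ (X := Euc 0)).measure_lt_top⟩
  · let e : Euc n := EuclideanSpace.single ⟨0, hn⟩ 1
    refine (integral_pos_iff_support_of_nonneg moRho_nonneg hi).2 ?_
    refine IsOpen.measure_pos _ (hc.isOpen_support) ⟨√(1 - s) • e, ?_⟩
    rw [Function.mem_support]
    unfold moRho
    have : ‖√(1 - s) • e‖ ^ 2 = 1 - s := by
      rw [norm_smul, mul_pow, Real.norm_eq_abs, sq_abs, Real.sq_sqrt (by linarith [hs.2])]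
      simp [e]
    rw [this, sub_sub_cancel]
    positivity

lemma mollifier_deriv (hw : ContDiff ℝ (⊤ : ℕ∞) w) (i : Fin n) (z : Euc n) (s : ℝ) :
    HasDerivAt (fun s => ∫ y, pd i w (z + s • y) * moRho y)
      (∫ y, fderiv ℝ (pd i w) (z + s • y) y * moRho y) s := by
  have hw' := contDiff_pd hw i
  have hfc : Continuous (fderiv ℝ (pd i w)) := hw'.continuous_fderiv (by norm_num)
  have hrc := moRho_contDiff (n := n) |>.continuous
  have hcont : ∀ s : ℝ, Continuous fun y : Euc n => fderiv ℝ (pd i w) (z + s • y) y * moRho y :=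
    fun s => ((hfc.comp (by fun_prop)).clm_apply continuous_id).mul hrc
  have hcont0 : ∀ s : ℝ, Continuous fun y : Euc n => pd i w (z + s • y) * moRho y :=
    fun s => (hw'.continuous.comp (by fun_prop)).mul hrc
  obtain ⟨B, hB⟩ := (isCompact_closedBall z (|s| + 1)).exists_bound_of_continuousOn
    (f := fderiv ℝ (pd i w)) hfc.continuousOn
  have hri : Integrable (moRho : Euc n → ℝ) :=
    hrc.integrable_of_hasCompactSupport (compact_of_ball moRho_support)
  have key := hasDerivAt_integral_of_dominated_loc_of_deriv_le (𝕜 := ℝ)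
    (μ := (volume : Measure (Euc n)))
    (F := fun s y => pd i w (z + s • y) * moRho y)
    (F' := fun s y => fderiv ℝ (pd i w) (z + s • y) y * moRho y) (x₀ := s) (s := ball s 1)
    (bound := fun y => B * moRho y) (ball_mem_nhds s one_pos)
    (Filter.Eventually.of_forall fun t => (hcont0 t).aestronglyMeasurable)
    ((hcont0 s).integrable_of_hasCompactSupport (compact_of_ball moRho_support).mul_left)
    (hcont s).aestronglyMeasurable ?_ (hri.const_mul B) ?_
  · exact key.2
  · refine Filter.Eventually.of_forall fun y t ht => ?_
    rcases lt_or_ge 1 ‖y‖ with hy | hy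
    · rw [moRho_support y hy]; simp
    · rw [norm_mul, Real.norm_eq_abs (moRho y), abs_of_nonneg (moRho_nonneg y)]
      refine mul_le_mul_of_nonneg_right ?_ (moRho_nonneg y)
      have ht' : |t| ≤ |s| + 1 := by
        rw [mem_ball, Real.dist_eq] at ht
        linarith [abs_sub_abs_le_abs_sub t s]
      have hz : z + t • y ∈ closedBall z (|s| + 1) := by
        rw [mem_closedBall, dist_eq_norm, add_sub_cancel_left, norm_smul, Real.norm_eq_abs]
        nlinarith [abs_nonneg t, norm_nonneg y]
      refine (ContinuousLinearMap.le_opNorm _ _).trans ?_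
      have := hB _ hz
      nlinarith [norm_nonneg (fderiv ℝ (pd i w) (z + t • y)), norm_nonneg y]
  · refine Filter.Eventually.of_forall fun y t _ => ?_
    have h1 : HasDerivAt (fun r : ℝ => z + r • y) y t := by
      simpa using ((hasDerivAt_id t).smul_const y).const_add z
    exact ((hasFDerivAt_of_contDiff hw' (z + t • y)).comp_hasDerivAt t h1).mul_const _

lemma mollifier_deriv_eq (hw : ContDiff ℝ (⊤ : ℕ∞) w) (i : Fin n) (z : Euc n) {s : ℝ}
    (hs : s ≠ 0) :
    ∫ y, fderiv ℝ (pd i w) (z + s • y) y * moRho y = -∫ y, lap w (z + s • y) * pd i moPsi y := by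
  have hPc := compact_of_ball (n := n) moPsi_support
  have hP := moPsi_contDiff (n := n)
  have e1 : ∀ y, fderiv ℝ (pd i w) (z + s • y) y * moRho y
      = -∑ j, pd j (pd i w) (z + s • y) * pd j moPsi y := by
    intro y
    rw [fderiv_eq_sum, Finset.sum_mul, ← Finset.sum_neg_distrib]
    refine Finset.sum_congr rfl fun j _ => ?_
    rw [pd_moPsi]; ring
  have e2 : ∀ y, lap w (z + s • y) * pd i moPsi y
      = ∑ j, pd j (pd j w) (z + s • y) * pd i moPsi y := by
    intro y; rw [lap_eq_sum, Finset.sum_mul]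
  simp_rw [e1, e2]
  have hcont : ∀ a b, Continuous fun y : Euc n => pd a (pd b w) (z + s • y) := fun a b =>
    (contDiff_pd (contDiff_pd hw b) a).continuous.comp (by fun_prop)
  rw [integral_neg, integral_finsetSum, integral_finsetSum]
  · congr 1
    refine Finset.sum_congr rfl fun j _ => ?_
    have hh := contDiff_affine (contDiff_pd hw j) z s
    have i1 := ibp_compact hh (contDiff_pd hP j) (pd_compactSupport hPc j) i
    have i2 := ibp_compact hh (contDiff_pd hP i) (pd_compactSupport hPc i) j
    simp only [pd_affine (contDiff_pd hw j), mul_assoc, integral_const_mul] at i1 i2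
    have e3 : ∫ y, pd j w (z + s • y) * pd i (pd j moPsi) y
        = ∫ y, pd j w (z + s • y) * pd j (pd i moPsi) y := by
      simp_rw [pd_comm hP i j]
    have e4 : ∫ y, pd i (pd j w) (z + s • y) * pd j moPsi y
        = ∫ y, pd j (pd i w) (z + s • y) * pd j moPsi y := by
      simp_rw [pd_comm hw i j]
    rw [e3, i2, e4] at i1
    have := neg_injective i1
    exact (mul_left_cancel₀ hs this).symm
  · intro j _
    exact ((hcont j j).mul (contDiff_pd hP i).continuous).integrable_of_hasCompactSupport
      (pd_compactSupport hPc i).mul_left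
  · intro j _
    exact ((hcont j i).mul (contDiff_pd hP j).continuous).integrable_of_hasCompactSupport
      (pd_compactSupport hPc j).mul_left

/-- Representation of a partial derivative by averages of the function, with an error controlled
by the Laplacian. It is exact for affine functions. -/
lemma mollifier_formula (hw : ContDiff ℝ (⊤ : ℕ∞) w) (i : Fin n) (z : Euc n) {r S : ℝ}
    (hr : 0 < r) (hS : ∀ x ∈ closedBall z r, |lap w x| ≤ S) :
    |pd i w z * (∫ y : Euc n, moRho y) + r⁻¹ * ∫ y, w (z + r • y) * pd i moRho y|
      ≤ (∫ y : Euc n, |pd i moPsi y|) * r * S := by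
  have hPc := compact_of_ball (n := n) moPsi_support
  have hP := moPsi_contDiff (n := n)
  set A : ℝ → ℝ := fun s => ∫ y, pd i w (z + s • y) * moRho y with hA
  have hA0 : A 0 = pd i w z * ∫ y : Euc n, moRho y := by
    simp only [hA, zero_smul, add_zero, integral_const_mul]
  have hAr : A r = -(r⁻¹ * ∫ y, w (z + r • y) * pd i moRho y) := by
    have := ibp_compact (contDiff_affine hw z r) (moRho_contDiff (n := n))
      (compact_of_ball moRho_support) i
    simp only [pd_affine hw, mul_assoc, integral_const_mul] at this
    rw [this]
    simp only [hA]
    field_simp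
  have hPi : Integrable (fun y : Euc n => |pd i moPsi y|) :=
    ((contDiff_pd hP i).continuous.abs).integrable_of_hasCompactSupport
      (pd_compactSupport hPc i).norm
  have hd : ∀ s ∈ Set.Ioo 0 r, ‖∫ y, fderiv ℝ (pd i w) (z + s • y) y * moRho y‖
      ≤ (∫ y : Euc n, |pd i moPsi y|) * S := by
    intro s hs
    rw [mollifier_deriv_eq hw i z hs.1.ne', norm_neg, ← integral_mul_const]
    refine norm_integral_le_of_norm_le (hPi.mul_const S) (Filter.Eventually.of_forall fun y => ?_)
    rcases lt_or_ge 1 ‖y‖ with hy | hy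
    · have : pd i moPsi y = 0 := by rw [pd_moPsi, moRho_support y hy]; simp
      simp [this]
    · rw [norm_mul, Real.norm_eq_abs, Real.norm_eq_abs, mul_comm]
      refine mul_le_mul_of_nonneg_left (hS _ ?_) (abs_nonneg _)
      rw [mem_closedBall, dist_eq_norm, add_sub_cancel_left, norm_smul, Real.norm_eq_abs,
        abs_of_pos hs.1]
      nlinarith [hs.1, hs.2, norm_nonneg y]
  have hmv : ‖A r - A 0‖ ≤ (∫ y : Euc n, |pd i moPsi y|) * S * (r - 0) := by
    have hcA : ContinuousOn A (Set.Icc 0 r) := fun s _ =>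
      (mollifier_deriv hw i z s).continuousAt.continuousWithinAt
    obtain ⟨s, hs, he⟩ := exists_hasDerivAt_eq_slope A
      (fun s => ∫ y, fderiv ℝ (pd i w) (z + s • y) y * moRho y) hr hcA
      (fun s _ => mollifier_deriv hw i z s)
    have h1 := hd s hs
    rw [he, norm_div, Real.norm_of_nonneg (by linarith : (0 : ℝ) ≤ r - 0),
      div_le_iff₀ (by linarith)] at h1
    exact h1
  rw [hA0, hAr, Real.norm_eq_abs, ← abs_neg] at hmv
  calc _ = |(-(-(r⁻¹ * ∫ y, w (z + r • y) * pd i moRho y) - pd i w z * ∫ y : Euc n, moRho y))| := by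
        congr 1; ring
    _ ≤ _ := hmv
    _ = _ := by ring

end Mollifier

/-! ### Solutions with derivatives of polynomial growth -/

section Growth

variable {n : ℕ} {w : Euc n → ℝ}

/-- Interior estimate: if `w` and `Δw` have polynomial growth, so do the first derivatives. -/
lemma PG_pd (hw : ContDiff ℝ (⊤ : ℕ∞) w) (hg : PG w) (hl : PG (lap w)) (i : Fin n) :
    PG (pd i w) := by
  obtain ⟨_, C, k, hC, hk⟩ := hg
  obtain ⟨_, D, l, hD, hl⟩ := hl
  have hI := moRho_integral_pos (n := n)
  set I := ∫ y : Euc n, moRho y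
  set J := ∫ y : Euc n, |pd i moRho y|
  set L := ∫ y : Euc n, |pd i moPsi y|
  have hJ : 0 ≤ J := integral_nonneg fun _ => abs_nonneg _
  have hL : 0 ≤ L := integral_nonneg fun _ => abs_nonneg _
  refine ⟨(contDiff_pd hw i).continuous, (C * 2 ^ k * J + L * (D * 2 ^ l)) / I, k + l,
    by positivity, fun z => ?_⟩
  have hz := norm_nonneg z
  have hball : ∀ x ∈ closedBall z 1, 1 + ‖x‖ ≤ 2 * (1 + ‖z‖) := by
    intro x hx
    rw [mem_closedBall, dist_eq_norm] at hx
    have := norm_sub_norm_le x z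
    linarith
  have hS : ∀ x ∈ closedBall z 1, |lap w x| ≤ D * (2 * (1 + ‖z‖)) ^ l := fun x hx =>
    (hl x).trans (by gcongr; exact hball x hx)
  have hmain := mollifier_formula hw i z one_pos hS
  have hri : Integrable (fun y : Euc n => |pd i moRho y|) :=
    ((contDiff_pd moRho_contDiff i).continuous.abs).integrable_of_hasCompactSupport
      (pd_compactSupport (compact_of_ball moRho_support) i).norm
  have hintg : |∫ y, w (z + (1 : ℝ) • y) * pd i moRho y| ≤ C * (2 * (1 + ‖z‖)) ^ k * J := by
    rw [← Real.norm_eq_abs, ← integral_const_mul]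
    refine norm_integral_le_of_norm_le (hri.const_mul _) (Filter.Eventually.of_forall fun y => ?_)
    rcases lt_or_ge 1 ‖y‖ with hy | hy
    · have h0 : pd i moRho y = 0 := by
        have : (moRho : Euc n → ℝ) =ᶠ[nhds y] fun _ => 0 := by
          filter_upwards [(isOpen_lt continuous_const continuous_norm).mem_nhds hy] with x hx
            using moRho_support x hx
        unfold pd; rw [this.fderiv_eq]; simp
      simp [h0]
    · rw [norm_mul, Real.norm_eq_abs, Real.norm_eq_abs]
      refine mul_le_mul_of_nonneg_right ((hk _).trans ?_) (abs_nonneg _)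
      have := hball (z + (1 : ℝ) • y) (by simpa [mem_closedBall, dist_eq_norm] using hy)
      gcongr
  have h1 : (1 : ℝ) ≤ 1 + ‖z‖ := by linarith
  have hk2 : (1 + ‖z‖) ^ k ≤ (1 + ‖z‖) ^ (k + l) := pow_le_pow_right₀ h1 (by omega)
  have hl2 : (1 + ‖z‖) ^ l ≤ (1 + ‖z‖) ^ (k + l) := pow_le_pow_right₀ h1 (by omega)
  rw [inv_one, one_mul] at hmain
  have h3 : |pd i w z| * I ≤ C * (2 * (1 + ‖z‖)) ^ k * J + L * 1 * (D * (2 * (1 + ‖z‖)) ^ l) := by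
    have hab : |pd i w z| * I = |pd i w z * I| := by rw [abs_mul, abs_of_pos hI]
    rw [hab]
    have := abs_sub_abs_le_abs_sub (pd i w z * I) (-(∫ y, w (z + (1 : ℝ) • y) * pd i moRho y))
    rw [abs_neg, sub_neg_eq_add] at this
    linarith
  rw [div_mul_eq_mul_div, le_div_iff₀ hI]
  refine h3.trans ?_
  rw [mul_pow, mul_pow, add_mul]
  have e1 : C * (2 ^ k * (1 + ‖z‖) ^ k) * J ≤ C * 2 ^ k * J * (1 + ‖z‖) ^ (k + l) := by
    have := mul_le_mul_of_nonneg_left hk2 (by positivity : 0 ≤ C * 2 ^ k * J)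
    linarith
  have e2 : L * 1 * (D * (2 ^ l * (1 + ‖z‖) ^ l)) ≤ L * (D * 2 ^ l) * (1 + ‖z‖) ^ (k + l) := by
    have := mul_le_mul_of_nonneg_left hl2 (by positivity : 0 ≤ L * (D * 2 ^ l))
    linarith
  linarith

lemma lap_pd (hw : ContDiff ℝ (⊤ : ℕ∞) w) (j : Fin n) (x : Euc n) :
    lap (pd j w) x = pd j (lap w) x := by
  have h : pd j (lap w) x = ∑ i, pd j (pd i (pd i w)) x := by
    unfold pd
    have : lap w = fun x => ∑ i, pd i (pd i w) x := rfl
    rw [this, fderiv_fun_sum]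
    · simp
      rfl
    · exact fun i _ =>
        ((contDiff_pd (contDiff_pd hw i) i).differentiable (by norm_num)).differentiableAt
  rw [h, lap_eq_sum]
  refine Finset.sum_congr rfl fun i _ => ?_
  rw [pd_comm (contDiff_pd hw i) j i]
  have : pd i (pd j w) = pd j (pd i w) := funext fun y => pd_comm hw i j y
  rw [this]

/-- The gradient as a vector field. -/
noncomputable def gradv (w : Euc n → ℝ) (x : Euc n) : Euc n := WithLp.toLp 2 fun i => pd i w x

lemma G1_gradv (hw : ContDiff ℝ (⊤ : ℕ∞) w) (hg : PG w) (hd : ∀ i, PG (pd i w)) :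
    G1 w (gradv w) := by
  refine ⟨hg, hd, fun x => (hasFDerivAt_of_contDiff hw x).congr_fderiv ?_⟩
  ext y
  rw [fderiv_eq_sum]
  simp [PiLp.inner_apply, gradv]

end Growth

/-- A positive solution of `Δu = k u v²`, `Δv = k v u²` with its gradients `F`, `G` and
Hessians `A`, `B`, all of polynomial growth. -/
structure Sol (n : ℕ) where
  k : ℝ
  u : Euc n → ℝ
  v : Euc n → ℝ
  F : Euc n → Euc n
  G : Euc n → Euc n
  A : Fin n → Euc n → Euc n
  B : Fin n → Euc n → Euc n
  hk : 0 < k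
  upos : ∀ x, 0 < u x
  vpos : ∀ x, 0 < v x
  hu : G1 u F
  hv : G1 v G
  hA : ∀ i, G1 (fun x => F x i) (A i)
  hB : ∀ i, G1 (fun x => G x i) (B i)
  symA : ∀ i j x, A i x j = A j x i
  symB : ∀ i j x, B i x j = B j x i
  trA : ∀ x, ∑ i, A i x i = k * u x * v x ^ 2
  trB : ∀ x, ∑ i, B i x i = k * v x * u x ^ 2

namespace Sol

variable {n : ℕ}

/-- Exchange the two components. -/
def swap (S : Sol n) : Sol n where
  k := S.k
  u := S.v
  v := S.u
  F := S.G
  G := S.F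
  A := S.B
  B := S.A
  hk := S.hk
  upos := S.vpos
  vpos := S.upos
  hu := S.hv
  hv := S.hu
  hA := S.hB
  hB := S.hA
  symA := S.symB
  symB := S.symA
  trA := S.trB
  trB := S.trA

lemma hess_aff {f : Euc n → ℝ} {D : Euc n → Euc n} (h : G1 f D) (x : Euc n) (R c : ℝ) :
    G1 (fun y => c * R * f (x + R • y)) (fun y => (c * R ^ 2) • D (x + R • y)) := by
  refine ((h.affine x R).const_mul (c * R)).congr_grad fun y => ?_
  rw [smul_smul]; ring_nf

/-- The rescaled solution `y ↦ c u(x + R y)`. -/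
noncomputable def aff (S : Sol n) (x : Euc n) {R c : ℝ} (hR : 0 < R) (hc : 0 < c) : Sol n where
  k := S.k * R ^ 2 / c ^ 2
  u := fun y => c * S.u (x + R • y)
  v := fun y => c * S.v (x + R • y)
  F := fun y => (c * R) • S.F (x + R • y)
  G := fun y => (c * R) • S.G (x + R • y)
  A := fun i y => (c * R ^ 2) • S.A i (x + R • y)
  B := fun i y => (c * R ^ 2) • S.B i (x + R • y)
  hk := by have := S.hk; positivity
  upos := fun y => mul_pos hc (S.upos _)
  vpos := fun y => mul_pos hc (S.vpos _)
  hu := ((S.hu.affine x R).const_mul c).congr_grad fun y => by rw [smul_smul]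
  hv := ((S.hv.affine x R).const_mul c).congr_grad fun y => by rw [smul_smul]
  hA := fun i => hess_aff (S.hA i) x R c
  hB := fun i => hess_aff (S.hB i) x R c
  symA := fun i j y => by simp [S.symA i j]
  symB := fun i j y => by simp [S.symB i j]
  trA := fun y => by
    simp only [PiLp.smul_apply, smul_eq_mul, ← Finset.mul_sum, S.trA]
    field_simp
  trB := fun y => by
    simp only [PiLp.smul_apply, smul_eq_mul, ← Finset.mul_sum, S.trB]
    field_simp

end Sol

lemma pd_mul_sq {n : ℕ} {u v : Euc n → ℝ} (hu : ContDiff ℝ (⊤ : ℕ∞) u)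
    (hv : ContDiff ℝ (⊤ : ℕ∞) v) (i : Fin n) (x : Euc n) :
    pd i (fun x => u x * v x ^ 2) x = pd i u x * v x ^ 2 + u x * (2 * v x * pd i v x) := by
  have h := (hasFDerivAt_of_contDiff hu x).mul ((hasFDerivAt_of_contDiff hv x).pow 2)
  have h2 : fderiv ℝ (fun x => u x * v x ^ 2) x = _ := h.fderiv
  unfold pd
  rw [h2]
  simp
  ring

/-- The solutions of the system with linear growth form a `Sol`. -/
lemma exists_sol {n : ℕ} (u v : Euc n → ℝ)
    (hu : ContDiff ℝ (⊤ : ℕ∞) u) (hv : ContDiff ℝ (⊤ : ℕ∞) v)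
    (hupos : ∀ x, 0 < u x) (hvpos : ∀ x, 0 < v x)
    (hequ : ∀ x, lap u x = u x * v x ^ 2)
    (heqv : ∀ x, lap v x = v x * u x ^ 2)
    (C₀ : ℝ) (hC₀ : 0 < C₀)
    (hgrowth : ∀ x, u x + v x ≤ C₀ * (1 + ‖x‖)) :
    ∃ S : Sol n, S.k = 1 ∧ S.u = u ∧ S.v = v ∧ S.F = gradv u ∧ S.G = gradv v := by
  have pu : PG u := ⟨hu.continuous, C₀, 1, hC₀.le, fun x => by
    rw [abs_of_pos (hupos x), pow_one]; linarith [hgrowth x, hvpos x]⟩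
  have pv : PG v := ⟨hv.continuous, C₀, 1, hC₀.le, fun x => by
    rw [abs_of_pos (hvpos x), pow_one]; linarith [hgrowth x, hupos x]⟩
  have step : ∀ {u v : Euc n → ℝ}, ContDiff ℝ (⊤ : ℕ∞) u → PG u → PG v →
      (∀ x, lap u x = u x * v x ^ 2) → ∀ i, PG (pd i u) := by
    intro u v hu pu pv he i
    exact PG_pd hu pu (by rw [funext he]; exact pu.mul (pv.pow 2)) i
  have du := step hu pu pv hequ
  have dv := step hv pv pu heqv
  have step2 : ∀ {u v : Euc n → ℝ}, ContDiff ℝ (⊤ : ℕ∞) u → ContDiff ℝ (⊤ : ℕ∞) v → PG u → PG v →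
      (∀ i, PG (pd i u)) → (∀ i, PG (pd i v)) →
      (∀ x, lap u x = u x * v x ^ 2) → ∀ i j, PG (pd i (pd j u)) := by
    intro u v hu hv pu pv du dv he i j
    refine PG_pd (contDiff_pd hu j) (du j) ?_ i
    rw [funext (lap_pd hu j), funext he]
    rw [funext (pd_mul_sq hu hv j)]
    exact ((du j).mul (pv.pow 2)).add (pu.mul (((pv.const_mul 2)).mul (dv j)))
  refine ⟨{ k := 1, u := u, v := v, F := gradv u, G := gradv v,
            A := fun i => gradv (pd i u), B := fun i => gradv (pd i v)
            hk := one_pos, upos := hupos, vpos := hvpos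
            hu := G1_gradv hu pu du, hv := G1_gradv hv pv dv
            hA := fun i => G1_gradv (contDiff_pd hu i) (du i)
              fun j => step2 hu hv pu pv du dv hequ j i
            hB := fun i => G1_gradv (contDiff_pd hv i) (dv i)
              fun j => step2 hv hu pv pu dv du heqv j i
            symA := fun i j x => pd_comm hu j i x
            symB := fun i j x => pd_comm hv j i x
            trA := fun x => by rw [one_mul, ← hequ, lap_eq_sum]; rfl
            trB := fun x => by rw [one_mul, ← heqv, lap_eq_sum]; rfl }, rfl, rfl, rfl, rfl, rfl⟩

/-! ### Integral identities for solutions -/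

namespace Sol

variable {n : ℕ} (S : Sol n)

/-- Energy density. -/
noncomputable def en (x : Euc n) : ℝ := ‖S.F x‖ ^ 2 + ‖S.G x‖ ^ 2 + S.k * (S.u x ^ 2 * S.v x ^ 2)

/-- Gradient of the energy density. -/
noncomputable def enG (x : Euc n) : Euc n :=
  (∑ i, (2 * S.F x i) • S.A i x) + (∑ i, (2 * S.G x i) • S.B i x)
    + S.k • (S.u x ^ 2 • (2 * S.v x) • S.G x + S.v x ^ 2 • (2 * S.u x) • S.F x)

/-- `E u²`. -/
noncomputable def hU : ℝ := Eg fun x => S.u x ^ 2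
/-- `E v²`. -/
noncomputable def hV : ℝ := Eg fun x => S.v x ^ 2
/-- `E u² + E v²`. -/
noncomputable def hH : ℝ := S.hU + S.hV
/-- `E[u x·∇u]`. -/
noncomputable def pU : ℝ := Eg fun x => S.u x * ⟪S.F x, x⟫
/-- `E[v x·∇v]`. -/
noncomputable def pV : ℝ := Eg fun x => S.v x * ⟪S.G x, x⟫
/-- The interaction energy. -/
noncomputable def q : ℝ := S.k * Eg fun x => S.u x ^ 2 * S.v x ^ 2
/-- The total energy. -/
noncomputable def dD : ℝ := Eg S.en
/-- `E[(x·∇u)² + (x·∇v)²]`. -/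
noncomputable def sR : ℝ := Eg fun x => ⟪S.F x, x⟫ ^ 2 + ⟪S.G x, x⟫ ^ 2

lemma en_G1 : G1 S.en S.enG := by
  have h1 : G1 (fun x => ‖S.F x‖ ^ 2) (fun x => ∑ i, (2 * S.F x i) • S.A i x) := by
    have := G1.sum Finset.univ fun i (_ : i ∈ Finset.univ) => (S.hA i).sq
    simp only [← norm_sq_eq_sum] at this
    exact this
  have h2 : G1 (fun x => ‖S.G x‖ ^ 2) (fun x => ∑ i, (2 * S.G x i) • S.B i x) := by
    have := G1.sum Finset.univ fun i (_ : i ∈ Finset.univ) => (S.hB i).sq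
    simp only [← norm_sq_eq_sum] at this
    exact this
  exact (h1.add h2).add ((S.hu.sq.mul S.hv.sq).const_mul S.k)

lemma Fx_pg : PG (fun x => ⟪S.F x, x⟫) := S.hu.pgv.inner PGV.id
lemma Gx_pg : PG (fun x => ⟪S.G x, x⟫) := S.hv.pgv.inner PGV.id
lemma uv_pg : PG (fun x => S.u x ^ 2 * S.v x ^ 2) := (S.hu.pg.pow 2).mul (S.hv.pg.pow 2)
lemma en_pg : PG S.en := S.en_G1.pg

/-- Weak form of the first equation against the Gaussian weight. -/
lemma weak {g : Euc n → ℝ} {Dg : Euc n → Euc n} (hg : G1 g Dg) :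
    Eg (fun x => g x * ⟪S.F x, x⟫)
      = Eg (fun x => ⟪Dg x, S.F x⟫ + g x * (S.k * S.u x * S.v x ^ 2)) := by
  have h1 : ∀ i, Eg (fun x => x i * (g x * S.F x i))
      = Eg (fun x => g x * S.A i x i + S.F x i * Dg x i) := fun i => (hg.mul (S.hA i)).ibp' i
  have p1 : ∀ i, PG (fun x : Euc n => x i * (g x * S.F x i)) := fun i =>
    (PG.coord i).mul (hg.pg.mul (S.hu.pgv i))
  have p2 : ∀ i, PG (fun x : Euc n => g x * S.A i x i + S.F x i * Dg x i) := fun i =>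
    (hg.pg.mul ((S.hA i).pgv i)).add ((S.hu.pgv i).mul (hg.pgv i))
  have h2 := Finset.sum_congr (rfl : (Finset.univ : Finset (Fin n)) = _) fun i _ => h1 i
  rw [← Eg_sum _ fun i _ => p1 i, ← Eg_sum _ fun i _ => p2 i] at h2
  rw [Eg_congr (g := fun x => ∑ i, x i * (g x * S.F x i)), h2]
  · refine Eg_congr fun x => ?_
    rw [Finset.sum_add_distrib, ← Finset.mul_sum, S.trA, add_comm]
    congr 1
  · intro x
    simp only [PiLp.inner_apply, Finset.mul_sum]
    refine Finset.sum_congr rfl fun i _ => ?_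
    simp [mul_left_comm]

lemma pU_eq : S.pU = (Eg fun x => ‖S.F x‖ ^ 2) + S.q := by
  unfold pU q
  rw [S.weak S.hu, ← Eg_const_mul, ← Eg_add S.hu.pgv.norm_sq (S.uv_pg.const_mul _)]
  refine Eg_congr fun x => ?_
  rw [real_inner_self_eq_norm_sq]; ring

lemma q_swap : S.swap.q = S.q := by
  unfold q; congr 1; exact Eg_congr fun x => mul_comm _ _

lemma en_swap (x : Euc n) : S.swap.en x = S.en x := by
  simp only [en, swap]; ring

lemma dD_swap : S.swap.dD = S.dD := Eg_congr fun x => S.en_swap x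

lemma hH_swap : S.swap.hH = S.hH := add_comm _ _

lemma pV_eq : S.pV = (Eg fun x => ‖S.G x‖ ^ 2) + S.q := by
  rw [← S.q_swap]; exact S.swap.pU_eq

lemma dD_eq : S.dD = (Eg fun x => ‖S.F x‖ ^ 2) + (Eg fun x => ‖S.G x‖ ^ 2) + S.q := by
  unfold dD q
  rw [← Eg_const_mul, ← Eg_add S.hu.pgv.norm_sq S.hv.pgv.norm_sq,
    ← Eg_add (S.hu.pgv.norm_sq.add S.hv.pgv.norm_sq) (S.uv_pg.const_mul _)]
  rfl

lemma pU_add_pV : S.pU + S.pV = S.dD + S.q := by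
  rw [pU_eq, pV_eq, dD_eq]; ring

lemma sR_half : Eg (fun x => ⟪S.F x, x⟫ ^ 2) = Eg (fun x => ‖S.F x‖ ^ 2
      + ∑ i, S.F x i * ⟪S.A i x, x⟫ + ⟪S.F x, x⟫ * (S.k * S.u x * S.v x ^ 2)) := by
  have hg : G1 (fun x => ⟪S.F x, x⟫) (fun x => ∑ i, (S.F x i • EuclideanSpace.single i (1 : ℝ)
      + x i • S.A i x)) := by
    have := G1.sum Finset.univ fun i (_ : i ∈ Finset.univ) => (S.hA i).mul (G1.coord i)
    refine ⟨S.Fx_pg, this.pgv, fun x => ?_⟩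
    have h2 := this.deriv x
    have e : (fun x => ⟪S.F x, x⟫) = fun x => ∑ i, S.F x i * x i := by
      funext x; simp [PiLp.inner_apply, mul_comm]
    rw [e]; exact h2
  have := S.weak hg
  simp only [← pow_two] at this
  rw [this]
  refine Eg_congr fun x => ?_
  congr 1
  rw [sum_inner]
  simp only [inner_add_left, inner_smul_left, EuclideanSpace.inner_single_left, RCLike.conj_to_real,
    Finset.sum_add_distrib, one_mul]
  congr 1
  · rw [norm_sq_eq_sum]; exact Finset.sum_congr rfl fun i _ => by simp; ring
  · simp only [PiLp.inner_apply, Finset.mul_sum]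
    rw [Finset.sum_comm]
    refine Finset.sum_congr rfl fun j _ => Finset.sum_congr rfl fun i _ => ?_
    rw [S.symA i j]; simp; ring

/-- Radial derivative of the energy. -/
lemma en_radial : Eg (fun x => ⟪S.enG x, x⟫) = 2 * S.sR - 2 * S.dD + 2 * S.q := by
  have h1 := S.sR_half
  have h2 := S.swap.sR_half
  simp only [swap] at h2
  have pA : PG (fun x => ∑ i, S.F x i * ⟪S.A i x, x⟫) := PG.sum _ fun i _ =>
    (S.hu.pgv i).mul ((S.hA i).pgv.inner PGV.id)
  have pB : PG (fun x => ∑ i, S.G x i * ⟪S.B i x, x⟫) := PG.sum _ fun i _ =>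
    (S.hv.pgv i).mul ((S.hB i).pgv.inner PGV.id)
  have pu : PG (fun x => ⟪S.F x, x⟫ * (S.k * S.u x * S.v x ^ 2)) :=
    S.Fx_pg.mul ((S.hu.pg.const_mul _).mul (S.hv.pg.pow 2))
  have pv : PG (fun x => ⟪S.G x, x⟫ * (S.k * S.v x * S.u x ^ 2)) :=
    S.Gx_pg.mul ((S.hv.pg.const_mul _).mul (S.hu.pg.pow 2))
  rw [Eg_add (S.hu.pgv.norm_sq.add pA) pu, Eg_add S.hu.pgv.norm_sq pA] at h1
  rw [Eg_add (S.hv.pgv.norm_sq.add pB) pv, Eg_add S.hv.pgv.norm_sq pB] at h2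
  have h3 : Eg (fun x => ⟪S.enG x, x⟫) = Eg (fun x =>
      2 * ((∑ i, S.F x i * ⟪S.A i x, x⟫) + ⟪S.F x, x⟫ * (S.k * S.u x * S.v x ^ 2)) +
      2 * ((∑ i, S.G x i * ⟪S.B i x, x⟫) + ⟪S.G x, x⟫ * (S.k * S.v x * S.u x ^ 2))) := by
    refine Eg_congr fun x => ?_
    simp only [enG, inner_add_left, sum_inner, inner_smul_left, RCLike.conj_to_real]
    simp only [mul_add, Finset.mul_sum]
    have e1 : ∀ i, 2 * S.F x i * ⟪S.A i x, x⟫ = 2 * (S.F x i * ⟪S.A i x, x⟫) := fun i => by ring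
    have e2 : ∀ i, 2 * S.G x i * ⟪S.B i x, x⟫ = 2 * (S.G x i * ⟪S.B i x, x⟫) := fun i => by ring
    simp only [e1, e2]
    ring
  rw [h3, Eg_add ((pA.add pu).const_mul 2) ((pB.add pv).const_mul 2), Eg_const_mul, Eg_const_mul,
    Eg_add pA pu, Eg_add pB pv, dD_eq]
  have h4 : S.sR = Eg (fun x => ⟪S.F x, x⟫ ^ 2) + Eg (fun x => ⟪S.G x, x⟫ ^ 2) :=
    Eg_add (S.Fx_pg.pow 2) (S.Gx_pg.pow 2)
  rw [h4]
  linarith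

/-- Stationarity with respect to translations. -/
lemma stationary (p : Euc n) : Eg (fun x => ⟪S.F x, x⟫ * ⟪p, S.F x⟫ + ⟪S.G x, x⟫ * ⟪p, S.G x⟫)
    = Eg (fun x => ⟪p, x⟫ * S.en x) / 2 := by
  have hj : ∀ j, Eg (fun x => ⟪S.F x, x⟫ * S.F x j + ⟪S.G x, x⟫ * S.G x j)
      = Eg (fun x => x j * S.en x) / 2 := by
    intro j
    have h1 := S.weak (S.hA j)
    have h2 := S.swap.weak (S.swap.hA j)
    simp only [swap] at h2
    have e1 : ∀ x, ⟪S.F x, x⟫ * S.F x j + ⟪S.G x, x⟫ * S.G x j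
      = S.F x j * ⟪S.F x, x⟫ + S.G x j * ⟪S.G x, x⟫ := fun x => by ring
    rw [Eg_congr e1, Eg_add ((S.hu.pgv j).mul S.Fx_pg) ((S.hv.pgv j).mul S.Gx_pg), h1, h2,
      ← Eg_add, S.en_G1.ibp', ← Eg_div_const]
    · refine Eg_congr fun x => ?_
      simp only [enG, PiLp.add_apply, PiLp.smul_apply, smul_eq_mul, PiLp.inner_apply]
      have s1 : (∑ i, (2 * S.F x i) • S.A i x) j = 2 * ∑ i, ⟪S.A j x i, S.F x i⟫ := by
        simp only [WithLp.ofLp_sum, Finset.sum_apply, Finset.mul_sum]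
        refine Finset.sum_congr rfl fun i _ => ?_
        rw [PiLp.smul_apply, S.symA i j]; simp; ring
      have s2 : (∑ i, (2 * S.G x i) • S.B i x) j = 2 * ∑ i, ⟪S.B j x i, S.G x i⟫ := by
        simp only [WithLp.ofLp_sum, Finset.sum_apply, Finset.mul_sum]
        refine Finset.sum_congr rfl fun i _ => ?_
        rw [PiLp.smul_apply, S.symB i j]; simp; ring
      rw [s1, s2]
      ring
    · exact ((S.hA j).pgv.inner S.hu.pgv).add
        ((S.hu.pgv j).mul ((S.hu.pg.const_mul _).mul (S.hv.pg.pow 2)))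
    · exact ((S.hB j).pgv.inner S.hv.pgv).add
        ((S.hv.pgv j).mul ((S.hv.pg.const_mul _).mul (S.hu.pg.pow 2)))
  have e1 : ∀ x, ⟪S.F x, x⟫ * ⟪p, S.F x⟫ + ⟪S.G x, x⟫ * ⟪p, S.G x⟫
      = ∑ j, p j * (⟪S.F x, x⟫ * S.F x j + ⟪S.G x, x⟫ * S.G x j) := by
    intro x
    have i1 : ⟪p, S.F x⟫ = ∑ j, p j * S.F x j := by simp [PiLp.inner_apply, mul_comm]
    have i2 : ⟪p, S.G x⟫ = ∑ j, p j * S.G x j := by simp [PiLp.inner_apply, mul_comm]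
    rw [i1, i2, Finset.mul_sum, Finset.mul_sum, ← Finset.sum_add_distrib]
    exact Finset.sum_congr rfl fun j _ => by ring
  have e2 : ∀ x, ⟪p, x⟫ * S.en x = ∑ j, p j * (x j * S.en x) := by
    intro x
    have i1 : ⟪p, x⟫ = ∑ j, p j * x j := by simp [PiLp.inner_apply, mul_comm]
    rw [i1, Finset.sum_mul]
    exact Finset.sum_congr rfl fun j _ => by ring
  rw [Eg_congr e1, Eg_congr e2, Eg_sum, Eg_sum, Finset.sum_div]
  · refine Finset.sum_congr rfl fun j _ => ?_
    rw [Eg_const_mul, Eg_const_mul, hj]; ring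
  · exact fun j _ => ((PG.coord j).mul S.en_pg).const_mul _
  · exact fun j _ =>
      ((S.Fx_pg.mul (S.hu.pgv j)).add (S.Gx_pg.mul (S.hv.pgv j))).const_mul _

end Sol

/-! ### Dynamics in the scale -/

lemma G1.unique {n : ℕ} {f : Euc n → ℝ} {F G : Euc n → Euc n} (h1 : G1 f F) (h2 : G1 f G)
    (x : Euc n) : F x = G x := by
  have := (h1.deriv x).unique (h2.deriv x)
  exact innerSL_inj.1 this

lemma monoOn_of_hasDerivAt {f f' : ℝ → ℝ} {a : ℝ} (hc : ContinuousOn f (Ici a))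
    (hd : ∀ R, a < R → HasDerivAt f (f' R) R) (h0 : ∀ R, a < R → 0 ≤ f' R) :
    MonotoneOn f (Ici a) := by
  refine monotoneOn_of_deriv_nonneg (convex_Ici a) hc ?_ ?_
  · intro R hR
    rw [interior_Ici] at hR
    exact (hd R hR).differentiableAt.differentiableWithinAt
  · intro R hR
    rw [interior_Ici] at hR
    rw [(hd R hR).deriv]; exact h0 R hR

/-- Monotonicity on `(0, ∞)` from the sign of the derivative. -/
lemma mono_pos {f f' : ℝ → ℝ} {a : ℝ} (ha : 0 < a) (hd : ∀ R, 0 < R → HasDerivAt f (f' R) R)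
    (h0 : ∀ R, a < R → 0 ≤ f' R) : MonotoneOn f (Ici a) :=
  monoOn_of_hasDerivAt
    (fun R hR => (hd R (ha.trans_le hR)).continuousAt.continuousWithinAt)
    (fun R hR => hd R (ha.trans hR)) h0

namespace Sol

variable {n : ℕ} (S : Sol n)

/-- `E u²` at base point `x` and scale `R`. -/
noncomputable def HU (x : Euc n) (R : ℝ) : ℝ := Eg fun y => S.u (x + R • y) ^ 2
/-- `E v²` at base point `x` and scale `R`. -/
noncomputable def HV (x : Euc n) (R : ℝ) : ℝ := Eg fun y => S.v (x + R • y) ^ 2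
/-- `E[u² + v²]` at base point `x` and scale `R`. -/
noncomputable def H (x : Euc n) (R : ℝ) : ℝ := S.HU x R + S.HV x R
/-- Scaled `E[u X·∇u]`. -/
noncomputable def PU (x : Euc n) (R : ℝ) : ℝ :=
  R * Eg fun y => S.u (x + R • y) * ⟪S.F (x + R • y), y⟫
/-- Scaled `E[v X·∇v]`. -/
noncomputable def PV (x : Euc n) (R : ℝ) : ℝ :=
  R * Eg fun y => S.v (x + R • y) * ⟪S.G (x + R • y), y⟫
/-- Scaled `E[u X·∇u + v X·∇v]`. -/
noncomputable def PP (x : Euc n) (R : ℝ) : ℝ := S.PU x R + S.PV x R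
/-- Scaled interaction energy. -/
noncomputable def QQ (x : Euc n) (R : ℝ) : ℝ :=
  S.k * R ^ 2 * Eg fun y => S.u (x + R • y) ^ 2 * S.v (x + R • y) ^ 2
/-- Scaled energy. -/
noncomputable def DD (x : Euc n) (R : ℝ) : ℝ := R ^ 2 * Eg fun y => S.en (x + R • y)
/-- Scaled radial energy. -/
noncomputable def SR (x : Euc n) (R : ℝ) : ℝ :=
  R ^ 2 * Eg fun y => ⟪S.F (x + R • y), y⟫ ^ 2 + ⟪S.G (x + R • y), y⟫ ^ 2
/-- The frequency `E[energy] / E[u² + v²]`. -/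
noncomputable def NN (x : Euc n) (R : ℝ) : ℝ := S.DD x R / S.H x R
/-- Half the logarithmic derivative of `H` in the scale. -/
noncomputable def al (x : Euc n) (R : ℝ) : ℝ := S.PP x R / S.H x R
/-- The defect of scale invariance; it bounds `(R / 2) N'` from below. -/
noncomputable def de (x : Euc n) (R : ℝ) : ℝ :=
  (S.SR x R * S.H x R - S.PP x R ^ 2 + S.QQ x R * S.H x R) / S.H x R ^ 2

section transfer

variable {S} (x : Euc n) {R c : ℝ} (hR : 0 < R) (hc : 0 < c)

lemma aff_hU : (S.aff x hR hc).hU = c ^ 2 * S.HU x R := by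
  unfold hU HU; rw [← Eg_const_mul]; exact Eg_congr fun y => by simp only [aff]; ring

lemma aff_hV : (S.aff x hR hc).hV = c ^ 2 * S.HV x R := by
  unfold hV HV; rw [← Eg_const_mul]; exact Eg_congr fun y => by simp only [aff]; ring

lemma aff_hH : (S.aff x hR hc).hH = c ^ 2 * S.H x R := by
  unfold hH H; rw [aff_hU, aff_hV]; ring

lemma aff_pU : (S.aff x hR hc).pU = c ^ 2 * S.PU x R := by
  unfold pU PU; rw [← Eg_const_mul, ← Eg_const_mul]
  exact Eg_congr fun y => by simp only [aff, inner_smul_left, RCLike.conj_to_real]; ring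

lemma aff_pV : (S.aff x hR hc).pV = c ^ 2 * S.PV x R := by
  unfold pV PV; rw [← Eg_const_mul, ← Eg_const_mul]
  exact Eg_congr fun y => by simp only [aff, inner_smul_left, RCLike.conj_to_real]; ring

lemma aff_q : (S.aff x hR hc).q = c ^ 2 * S.QQ x R := by
  unfold q QQ; rw [← Eg_const_mul, ← Eg_const_mul, ← Eg_const_mul]
  exact Eg_congr fun y => by simp only [aff]; field_simp

lemma aff_en (y : Euc n) : (S.aff x hR hc).en y = (c * R) ^ 2 * S.en (x + R • y) := by
  simp only [en, aff, norm_smul, mul_pow, Real.norm_eq_abs, sq_abs]; field_simp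

lemma aff_dD : (S.aff x hR hc).dD = c ^ 2 * S.DD x R := by
  unfold dD DD; rw [← Eg_const_mul, ← Eg_const_mul]
  exact Eg_congr fun y => by rw [aff_en]; ring

lemma aff_sR : (S.aff x hR hc).sR = c ^ 2 * S.SR x R := by
  unfold sR SR; rw [← Eg_const_mul, ← Eg_const_mul]
  exact Eg_congr fun y => by simp only [aff, inner_smul_left, RCLike.conj_to_real]; ring

lemma aff_enG (y : Euc n) :
    (S.aff x hR hc).enG y = ((c * R) ^ 2 * R) • S.enG (x + R • y) := by
  have h1 := (S.aff x hR hc).en_G1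
  have h2 := (S.en_G1.affine x R).const_mul ((c * R) ^ 2)
  have h3 : (S.aff x hR hc).en = fun y => (c * R) ^ 2 * S.en (x + R • y) :=
    funext fun y => aff_en x hR hc y
  rw [h3] at h1
  rw [h1.unique h2, smul_smul]

end transfer

lemma HU_pos (x : Euc n) (R : ℝ) : 0 < S.HU x R := by
  have hp := (S.hu.pg.affine x R)
  have h1 := Eg_sq_le hp
  have h2 : 0 < Eg fun y => S.u (x + R • y) := by
    refine (integral_pos_iff_support_of_nonneg (fun y => (S.upos _).le) hp.integrable).2 ?_
    rw [show Function.support (fun y => S.u (x + R • y)) = univ from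
      eq_univ_of_forall fun y => (S.upos _).ne']
    simp
  exact (by positivity : 0 < (Eg fun y => S.u (x + R • y)) ^ 2).trans_le h1

lemma HV_pos (x : Euc n) (R : ℝ) : 0 < S.HV x R := S.swap.HU_pos x R

lemma H_pos (x : Euc n) (R : ℝ) : 0 < S.H x R := add_pos (S.HU_pos x R) (S.HV_pos x R)

lemma QQ_nonneg (x : Euc n) (R : ℝ) : 0 ≤ S.QQ x R :=
  mul_nonneg (mul_nonneg S.hk.le (sq_nonneg _)) (Eg_nonneg fun y => by positivity)

lemma static_q_nonneg : 0 ≤ S.q := mul_nonneg S.hk.le (Eg_nonneg fun y => by positivity)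

section Rpos

variable (x : Euc n) {R : ℝ} (hR : 0 < R)
include hR

lemma PP_eq : S.PP x R = S.DD x R + S.QQ x R := by
  have h := (S.aff x hR one_pos).pU_add_pV
  simpa [aff_pU, aff_pV, aff_dD, aff_q, PP] using h

lemma QQ_le_DD : S.QQ x R ≤ S.DD x R := by
  have h := (S.aff x hR one_pos).dD_eq
  rw [aff_dD, aff_q] at h
  have h1 : 0 ≤ Eg fun y => ‖(S.aff x hR one_pos).F y‖ ^ 2 := Eg_nonneg fun y => by positivity
  have h2 : 0 ≤ Eg fun y => ‖(S.aff x hR one_pos).G y‖ ^ 2 := Eg_nonneg fun y => by positivity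
  linarith

lemma QQ_le_PU : S.QQ x R ≤ S.PU x R := by
  have h := (S.aff x hR one_pos).pU_eq
  rw [aff_pU, aff_q] at h
  have h1 : 0 ≤ Eg fun y => ‖(S.aff x hR one_pos).F y‖ ^ 2 := Eg_nonneg fun y => by positivity
  linarith

omit hR in
lemma QQ_swap : S.swap.QQ x R = S.QQ x R := by
  unfold QQ; congr 1; exact Eg_congr fun y => mul_comm _ _

lemma QQ_le_PV : S.QQ x R ≤ S.PV x R := by
  rw [← S.QQ_swap]; exact S.swap.QQ_le_PU x hR

lemma PU_nonneg : 0 ≤ S.PU x R := (S.QQ_nonneg x R).trans (S.QQ_le_PU x hR)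
lemma PV_nonneg : 0 ≤ S.PV x R := (S.QQ_nonneg x R).trans (S.QQ_le_PV x hR)

end Rpos

lemma cs_aux {a b A B x y : ℝ} (ha : 0 ≤ a) (hb : 0 ≤ b) (hA : 0 ≤ A) (hB : 0 ≤ B)
    (hx : x ^ 2 ≤ a * A) (hy : y ^ 2 ≤ b * B) : (x + y) ^ 2 ≤ (A + B) * (a + b) := by
  have h : |x * y| ≤ (a * B + b * A) / 2 := by
    refine abs_le_of_sq_le_sq' ?_ (by positivity) |> abs_le.2
    have : (x * y) ^ 2 ≤ (a * A) * (b * B) := by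
      rw [mul_pow]; exact mul_le_mul hx hy (sq_nonneg _) (by positivity)
    nlinarith [sq_nonneg (a * B - b * A)]
  have := le_abs_self (x * y)
  nlinarith

lemma static_cs : (S.pU + S.pV) ^ 2 ≤ S.sR * S.hH := by
  have h1 := Eg_cs S.hu.pg S.Fx_pg
  have h2 := Eg_cs S.hv.pg S.Gx_pg
  have h4 : S.sR = Eg (fun x => ⟪S.F x, x⟫ ^ 2) + Eg (fun x => ⟪S.G x, x⟫ ^ 2) :=
    Eg_add (S.Fx_pg.pow 2) (S.Gx_pg.pow 2)
  rw [h4]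
  exact cs_aux (Eg_nonneg fun _ => sq_nonneg _) (Eg_nonneg fun _ => sq_nonneg _)
    (Eg_nonneg fun _ => sq_nonneg _) (Eg_nonneg fun _ => sq_nonneg _) h1 h2

lemma PP_sq_le (x : Euc n) {R : ℝ} (hR : 0 < R) : S.PP x R ^ 2 ≤ S.SR x R * S.H x R := by
  have h := (S.aff x hR one_pos).static_cs
  simpa [aff_pU, aff_pV, aff_sR, aff_hH, PP] using h

lemma HU_deriv0 (x : Euc n) (R : ℝ) :
    HasDerivAt (S.HU x) (2 * Eg fun y => S.u (x + R • y) * ⟪S.F (x + R • y), y⟫) R := by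
  refine (S.hu.sq.hasDerivAt_av x R).congr_deriv ?_
  rw [← Eg_const_mul]
  exact Eg_congr fun y => by simp only [inner_smul_left, RCLike.conj_to_real]; ring

lemma HU_deriv (x : Euc n) {R : ℝ} (hR : 0 < R) :
    HasDerivAt (S.HU x) (2 / R * S.PU x R) R := by
  refine (S.HU_deriv0 x R).congr_deriv ?_
  unfold PU; field_simp

lemma HV_deriv (x : Euc n) {R : ℝ} (hR : 0 < R) :
    HasDerivAt (S.HV x) (2 / R * S.PV x R) R := S.swap.HU_deriv x hR

lemma H_deriv (x : Euc n) {R : ℝ} (hR : 0 < R) :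
    HasDerivAt (S.H x) (2 / R * S.PP x R) R :=
  ((S.HU_deriv x hR).add (S.HV_deriv x hR)).congr_deriv (by unfold PP; ring)

lemma DD_deriv (x : Euc n) {R : ℝ} (hR : 0 < R) :
    HasDerivAt (S.DD x) (2 / R * (S.SR x R + S.QQ x R)) R := by
  have h1 := (hasDerivAt_pow 2 R).mul (S.en_G1.hasDerivAt_av x R)
  refine h1.congr_deriv ?_
  have h2 := (S.aff x hR one_pos).en_radial
  rw [aff_sR, aff_dD, aff_q] at h2
  have h3 : Eg (fun y => ⟪(S.aff x hR one_pos).enG y, y⟫)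
      = R ^ 3 * Eg (fun y => ⟪S.enG (x + R • y), y⟫) := by
    rw [← Eg_const_mul]
    refine Eg_congr fun y => ?_
    rw [aff_enG, inner_smul_left, RCLike.conj_to_real]; ring
  rw [h3] at h2
  have h4 : S.DD x R = R ^ 2 * Eg fun y => S.en (x + R • y) := rfl
  rw [h4] at h2
  simp only [Nat.cast_ofNat, Nat.add_one_sub_one, pow_one]
  field_simp
  linarith

lemma NN_deriv (x : Euc n) {R : ℝ} (hR : 0 < R) :
    HasDerivAt (S.NN x) (2 / R * (S.de x R + S.QQ x R * S.PP x R / S.H x R ^ 2)) R := by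
  refine ((S.DD_deriv x hR).div (S.H_deriv x hR) (S.H_pos x R).ne').congr_deriv ?_
  have h1 := S.PP_eq x hR
  have h2 := (S.H_pos x R).ne'
  have h3 : S.DD x R = S.PP x R - S.QQ x R := by linarith
  rw [h3]
  unfold de
  field_simp
  ring

lemma logH_deriv (x : Euc n) {R : ℝ} (hR : 0 < R) :
    HasDerivAt (fun R => Real.log (S.H x R)) (2 / R * S.al x R) R := by
  refine ((S.H_deriv x hR).log (S.H_pos x R).ne').congr_deriv ?_
  unfold al; ring

lemma PP_nonneg (x : Euc n) {R : ℝ} (hR : 0 < R) : 0 ≤ S.PP x R :=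
  add_nonneg (S.PU_nonneg x hR) (S.PV_nonneg x hR)

lemma al_nonneg (x : Euc n) {R : ℝ} (hR : 0 < R) : 0 ≤ S.al x R :=
  div_nonneg (S.PP_nonneg x hR) (S.H_pos x R).le

lemma al_eq (x : Euc n) {R : ℝ} (hR : 0 < R) : S.al x R = S.NN x R + S.QQ x R / S.H x R := by
  unfold al NN; rw [S.PP_eq x hR]; ring

lemma QQ_div_le_de (x : Euc n) {R : ℝ} (hR : 0 < R) : S.QQ x R / S.H x R ≤ S.de x R := by
  have h1 := S.PP_sq_le x hR
  have h2 := S.H_pos x R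
  unfold de
  rw [div_le_div_iff₀ h2 (by positivity)]
  nlinarith [mul_nonneg (sub_nonneg.2 h1) h2.le]

lemma de_nonneg (x : Euc n) {R : ℝ} (hR : 0 < R) : 0 ≤ S.de x R :=
  (div_nonneg (S.QQ_nonneg x R) (S.H_pos x R).le).trans (S.QQ_div_le_de x hR)

lemma NN_mono (x : Euc n) {R1 R2 : ℝ} (h1 : 0 < R1) (h12 : R1 ≤ R2) : S.NN x R1 ≤ S.NN x R2 := by
  refine mono_pos h1 (fun R hR => S.NN_deriv x hR) (fun R hR => ?_)
    (mem_Ici.2 le_rfl) (mem_Ici.2 h12) h12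
  have hR' := h1.trans hR
  have := S.de_nonneg x hR'
  have := S.PP_nonneg x hR'
  have := S.QQ_nonneg x R
  positivity

lemma HU_mono (x : Euc n) {R1 R2 : ℝ} (h1 : 0 ≤ R1) (h12 : R1 ≤ R2) : S.HU x R1 ≤ S.HU x R2 := by
  refine monoOn_of_hasDerivAt (f' := fun R => 2 / R * S.PU x R)
    (fun R _ => (S.HU_deriv0 x R).continuousAt.continuousWithinAt)
    (fun R hR => S.HU_deriv x (h1.trans_lt hR)) (fun R hR => ?_)
    (mem_Ici.2 le_rfl) (mem_Ici.2 h12) h12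
  have hR' := h1.trans_lt hR
  have := S.PU_nonneg x hR'
  positivity

lemma HV_mono (x : Euc n) {R1 R2 : ℝ} (h1 : 0 ≤ R1) (h12 : R1 ≤ R2) : S.HV x R1 ≤ S.HV x R2 :=
  S.swap.HU_mono x h1 h12

lemma H_mono (x : Euc n) {R1 R2 : ℝ} (h1 : 0 ≤ R1) (h12 : R1 ≤ R2) : S.H x R1 ≤ S.H x R2 :=
  add_le_add (S.HU_mono x h1 h12) (S.HV_mono x h1 h12)

lemma sq_le_HU (x : Euc n) {R : ℝ} (hR : 0 ≤ R) : S.u x ^ 2 ≤ S.HU x R := by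
  have := S.HU_mono x le_rfl hR
  simpa [HU, Eg_const] using this

lemma sq_le_HV (x : Euc n) {R : ℝ} (hR : 0 ≤ R) : S.v x ^ 2 ≤ S.HV x R := S.swap.sq_le_HU x hR

end Sol

/-! ### Consequences of linear growth -/

namespace Sol

variable {n : ℕ} (S : Sol n)

lemma H_le_of_growth {C₀ : ℝ} (hC₀ : 0 < C₀) (hg : ∀ x, S.u x + S.v x ≤ C₀ * (1 + ‖x‖))
    (x : Euc n) : ∃ C > 0, ∀ R, 1 ≤ R → S.H x R ≤ C * R ^ 2 := by
  have hm : PG (fun y : Euc n => (1 + ‖x‖ + ‖y‖) ^ 2) :=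
    ((PG.const (1 + ‖x‖)).add PG.norm_id).pow 2
  refine ⟨C₀ ^ 2 * Eg (fun y : Euc n => (1 + ‖x‖ + ‖y‖) ^ 2) + 1, ?_, fun R hR => ?_⟩
  · have : 0 ≤ Eg (fun y : Euc n => (1 + ‖x‖ + ‖y‖) ^ 2) := Eg_nonneg fun y => by positivity
    positivity
  · have hpu := (S.hu.pg.affine x R).pow 2
    have hpv := (S.hv.pg.affine x R).pow 2
    have h1 : S.H x R ≤ (C₀ * R) ^ 2 * Eg (fun y : Euc n => (1 + ‖x‖ + ‖y‖) ^ 2) := by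
      unfold H HU HV
      rw [← Eg_add hpu hpv, ← Eg_const_mul]
      refine Eg_mono (hpu.add hpv) (hm.const_mul _) fun y => ?_
      have hu := S.upos (x + R • y)
      have hv := S.vpos (x + R • y)
      have h2 := hg (x + R • y)
      have h3 : 1 + ‖x + R • y‖ ≤ R * (1 + ‖x‖ + ‖y‖) := by
        have := norm_add_le x (R • y)
        rw [norm_smul, Real.norm_of_nonneg (by linarith)] at this
        nlinarith [norm_nonneg x]
      have h4 : S.u (x + R • y) + S.v (x + R • y) ≤ (C₀ * R) * (1 + ‖x‖ + ‖y‖) := by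
        refine h2.trans ?_
        rw [mul_assoc]; exact mul_le_mul_of_nonneg_left h3 hC₀.le
      calc S.u (x + R • y) ^ 2 + S.v (x + R • y) ^ 2
          ≤ (S.u (x + R • y) + S.v (x + R • y)) ^ 2 := by nlinarith
        _ ≤ ((C₀ * R) * (1 + ‖x‖ + ‖y‖)) ^ 2 := by gcongr
        _ = _ := by ring
    nlinarith [sq_nonneg R]

/-- The frequency never exceeds one, because the growth is at most linear. -/
lemma NN_le_one {C₀ : ℝ} (hC₀ : 0 < C₀) (hg : ∀ x, S.u x + S.v x ≤ C₀ * (1 + ‖x‖))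
    (x : Euc n) {R : ℝ} (hR : 0 < R) : S.NN x R ≤ 1 := by
  by_contra! hN
  obtain ⟨C, hC, hH⟩ := S.H_le_of_growth hC₀ hg x
  set ε := S.NN x R - 1 with hε
  have hε0 : 0 < ε := by linarith
  have hmono : MonotoneOn (fun r => Real.log (S.H x r) - (2 * (1 + ε)) * Real.log r) (Ici R) := by
    refine mono_pos hR (f' := fun r => 2 / r * S.al x r - (2 * (1 + ε)) * r⁻¹)
      (fun r hr => (S.logH_deriv x hr).sub ((Real.hasDerivAt_log hr.ne').const_mul _))
      fun r hr => ?_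
    have hr0 := hR.trans hr
    have h1 : 1 + ε ≤ S.al x r := by
      rw [S.al_eq x hr0]
      have := S.NN_mono x hR hr.le
      have := div_nonneg (S.QQ_nonneg x r) (S.H_pos x r).le
      linarith
    have : 2 / r * S.al x r - (2 * (1 + ε)) * r⁻¹ = 2 / r * (S.al x r - (1 + ε)) := by
      field_simp
    rw [this]
    exact mul_nonneg (by positivity) (by linarith)
  have hbd : ∀ r, max 1 R ≤ r → (2 * ε) * Real.log r ≤ Real.log C -
      (Real.log (S.H x R) - (2 * (1 + ε)) * Real.log R) := by
    intro r hr
    have h1 : 1 ≤ r := (le_max_left _ _).trans hr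
    have h2 : R ≤ r := (le_max_right _ _).trans hr
    have h3 := hmono (mem_Ici.2 le_rfl) (mem_Ici.2 h2) h2
    have h4 : Real.log (S.H x r) ≤ Real.log C + 2 * Real.log r := by
      have h5 := Real.log_le_log (S.H_pos x r) (hH r h1)
      rwa [Real.log_mul hC.ne' (by positivity), Real.log_pow, Nat.cast_ofNat] at h5
    simp only at h3
    linarith
  have ht : Filter.Tendsto (fun r => (2 * ε) * Real.log r) Filter.atTop Filter.atTop :=
    Real.tendsto_log_atTop.const_mul_atTop (by positivity)
  obtain ⟨r, hr1, hr2⟩ := ((Filter.eventually_ge_atTop (max 1 R)).and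
    (ht.eventually_gt_atTop _)).exists
  exact absurd (hbd r hr1) (not_le.2 hr2)

/-- The standing assumptions: coupling one and frequency at most one. -/
structure Nice (S : Sol n) : Prop where
  k1 : S.k = 1
  nb : ∀ x R, 0 < R → S.NN x R ≤ 1

lemma NN_swap (x : Euc n) (R : ℝ) : S.swap.NN x R = S.NN x R := by
  unfold NN DD H
  have h : (fun y => S.swap.en (x + R • y)) = fun y => S.en (x + R • y) :=
    funext fun y => S.en_swap _
  rw [h]; congr 1; exact add_comm _ _

lemma H_swap (x : Euc n) (R : ℝ) : S.swap.H x R = S.H x R := add_comm _ _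

variable {S}

lemma Nice.swap (h : S.Nice) : S.swap.Nice := ⟨h.k1, fun x R hR => by
  rw [S.NN_swap]; exact h.nb x R hR⟩

/-- The effective coupling `κ = R² H`. -/
noncomputable def ka (S : Sol n) (x : Euc n) (R : ℝ) : ℝ := R ^ 2 * S.H x R

lemma ka_swap (x : Euc n) (R : ℝ) : S.swap.ka x R = S.ka x R := by
  unfold ka; rw [H_swap]

lemma ka_pos (x : Euc n) {R : ℝ} (hR : 0 < R) : 0 < S.ka x R :=
  mul_pos (by positivity) (S.H_pos x R)

namespace Nice

variable (h : S.Nice) (x : Euc n)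
include h

lemma NN_nonneg {R : ℝ} : 0 ≤ S.NN x R :=
  div_nonneg (mul_nonneg (sq_nonneg _) (Eg_nonneg fun y => by
    unfold en; have := S.hk; positivity)) (S.H_pos x R).le

lemma al_le {R : ℝ} (hR : 0 < R) : S.al x R ≤ 1 + S.de x R := by
  rw [S.al_eq x hR]
  have := h.nb x R hR
  have := S.QQ_div_le_de x hR
  linarith

lemma DD_le {R : ℝ} (hR : 0 < R) : S.DD x R ≤ S.H x R := by
  have := h.nb x R hR
  unfold NN at this
  rwa [div_le_one (S.H_pos x R)] at this

lemma al_le_two {R : ℝ} (hR : 0 < R) : S.al x R ≤ 2 := by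
  have h1 := h.DD_le x hR
  have h2 := S.QQ_le_DD x hR
  have h3 := S.PP_eq x hR
  unfold al
  rw [div_le_iff₀ (S.H_pos x R)]; linarith

lemma H_le_pow {R1 R2 : ℝ} (h1 : 0 < R1) (h12 : R1 ≤ R2) :
    S.H x R2 ≤ (R2 / R1) ^ 4 * S.H x R1 := by
  have hm : MonotoneOn (fun r => 4 * Real.log r - Real.log (S.H x r)) (Ici R1) := by
    refine mono_pos h1 (f' := fun r => 4 * r⁻¹ - 2 / r * S.al x r)
      (fun r hr => ((Real.hasDerivAt_log hr.ne').const_mul _).sub (S.logH_deriv x hr))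
      fun r hr => ?_
    have hr0 := h1.trans hr
    have : 4 * r⁻¹ - 2 / r * S.al x r = 2 / r * (2 - S.al x r) := by field_simp; ring
    rw [this]
    exact mul_nonneg (by positivity) (by linarith [h.al_le_two x hr0])
  have h3 := hm (mem_Ici.2 le_rfl) (mem_Ici.2 h12) h12
  have h2 : 0 < R2 := h1.trans_le h12
  have hp := S.H_pos x R1
  rw [← Real.log_le_log_iff (S.H_pos x R2) (by positivity), Real.log_mul (by positivity) hp.ne',
    Real.log_pow, Real.log_div h2.ne' h1.ne']
  simp only at h3
  push_cast
  linarith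

/-- `log (H / R²) - N` is nonincreasing. -/
lemma logH_anti {R1 R2 : ℝ} (h1 : 0 < R1) (h12 : R1 ≤ R2) :
    Real.log (S.H x R2) - 2 * Real.log R2 - S.NN x R2
      ≤ Real.log (S.H x R1) - 2 * Real.log R1 - S.NN x R1 := by
  have hm : MonotoneOn (fun r => S.NN x r - (Real.log (S.H x r) - 2 * Real.log r)) (Ici R1) := by
    refine mono_pos h1 (fun r hr => (S.NN_deriv x hr).sub
      ((S.logH_deriv x hr).sub ((Real.hasDerivAt_log hr.ne').const_mul 2))) fun r hr => ?_
    have hr0 := h1.trans hr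
    have e : 2 / r * (S.de x r + S.QQ x r * S.PP x r / S.H x r ^ 2)
        - (2 / r * S.al x r - 2 * r⁻¹)
        = 2 / r * (1 + S.de x r - S.al x r + S.QQ x r * S.PP x r / S.H x r ^ 2) := by
      field_simp; ring
    rw [e]
    refine mul_nonneg (by positivity) (add_nonneg (by linarith [h.al_le x hr0]) ?_)
    have := S.PP_nonneg x hr0
    have := S.QQ_nonneg x r
    positivity
  have h3 := hm (mem_Ici.2 le_rfl) (mem_Ici.2 h12) h12
  simp only at h3
  linarith

lemma H_div_sq_le {R1 R2 : ℝ} (h1 : 0 < R1) (h12 : R1 ≤ R2) :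
    S.H x R2 / R2 ^ 2 ≤ Real.exp 1 * (S.H x R1 / R1 ^ 2) := by
  have h3 := h.logH_anti x h1 h12
  have h2 : 0 < R2 := h1.trans_le h12
  have p1 := S.H_pos x R1
  have p2 := S.H_pos x R2
  rw [← Real.log_le_log_iff (by positivity) (by positivity), Real.log_mul (Real.exp_pos 1).ne'
    (by positivity), Real.log_exp, Real.log_div p1.ne' (by positivity),
    Real.log_div p2.ne' (by positivity), Real.log_pow, Real.log_pow]
  have := h.nb x R2 h2
  have := h.NN_nonneg x (R := R1)
  push_cast
  linarith

lemma ka_mono {R1 R2 : ℝ} (h1 : 0 < R1) (h12 : R1 ≤ R2) :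
    (R2 / R1) ^ 2 * S.ka x R1 ≤ S.ka x R2 := by
  have h3 := S.H_mono x h1.le h12
  unfold ka
  rw [div_pow]
  have : R2 ^ 2 / R1 ^ 2 * (R1 ^ 2 * S.H x R1) = R2 ^ 2 * S.H x R1 := by field_simp
  rw [this]
  gcongr

lemma ka_le_pow {R1 R2 : ℝ} (h1 : 0 < R1) (h12 : R1 ≤ R2) :
    S.ka x R2 ≤ (R2 / R1) ^ 6 * S.ka x R1 := by
  have h3 := h.H_le_pow x h1 h12
  have h2 : 0 < R2 := h1.trans_le h12
  unfold ka
  calc R2 ^ 2 * S.H x R2 ≤ R2 ^ 2 * ((R2 / R1) ^ 4 * S.H x R1) := by gcongr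
    _ = _ := by field_simp

end Nice

lemma ka_cont (x : Euc n) : ContinuousOn (S.ka x) (Ioi 0) := fun R hR =>
  (((hasDerivAt_pow 2 R).continuousAt).mul
    (S.H_deriv x hR).continuousAt).continuousWithinAt

/-- Every value of the coupling is attained at some scale. -/
lemma Nice.exists_ka (h : S.Nice) (x : Euc n) {K : ℝ} (hK : 0 < K) : ∃ R > 0, S.ka x R = K := by
  have hp := S.ka_pos x (R := 1) one_pos
  set a := min 1 (K / S.ka x 1) with ha
  set b := max 1 (K / S.ka x 1) with hb
  have ha0 : 0 < a := lt_min one_pos (by positivity)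
  have hb1 : 1 ≤ b := le_max_left _ _
  have ha1 : a ≤ 1 := min_le_left _ _
  have h1 : S.ka x a ≤ K := by
    have := h.ka_mono x ha0 ha1
    have h2 : S.ka x a ≤ a ^ 2 * S.ka x 1 := by
      rw [div_pow, one_pow, div_mul_eq_mul_div, one_mul, div_le_iff₀ (by positivity)] at this
      linarith
    have h3 : a * S.ka x 1 ≤ K := by
      have : a ≤ K / S.ka x 1 := min_le_right _ _
      rwa [le_div_iff₀ hp] at this
    nlinarith
  have h2 : K ≤ S.ka x b := by
    have := h.ka_mono x one_pos hb1
    have h3 : K ≤ b * S.ka x 1 := by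
      have : K / S.ka x 1 ≤ b := le_max_right _ _
      rwa [div_le_iff₀ hp] at this
    rw [div_one] at this
    nlinarith
  have hab : a ≤ b := ha1.trans hb1
  obtain ⟨R, hR, hRe⟩ := intermediate_value_Icc hab
    ((ka_cont x).mono fun r hr => mem_Ioi.2 (ha0.trans_le hr.1)) ⟨h1, h2⟩
  exact ⟨R, ha0.trans_le hR.1, hRe⟩

end Sol

/-! ### Comparison of Gaussian averages -/

/-- The constant comparing weighted averages at scale `ρ` with averages at scale `2ρ`. -/
noncomputable def kc (n k : ℕ) : ℝ := 2 ^ n * (k.factorial * Real.exp 3)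

lemma kc_pos (n k : ℕ) : 0 < kc n k := by unfold kc; positivity

lemma one_le_kc (n k : ℕ) : 1 ≤ kc n k := by
  unfold kc
  have h1 : (1 : ℝ) ≤ 2 ^ n := one_le_pow₀ (by norm_num)
  have h2 : (1 : ℝ) ≤ k.factorial := by exact_mod_cast Nat.one_le_iff_ne_zero.2 k.factorial_ne_zero
  have h3 : (1 : ℝ) ≤ Real.exp 3 := Real.one_le_exp (by norm_num)
  exact one_le_mul_of_one_le_of_one_le h1 (one_le_mul_of_one_le_of_one_le h2 h3)

section Kernel

variable {n : ℕ} {f : Euc n → ℝ}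

lemma gw_compare (k : ℕ) (w b : Euc n) (hb : ‖b‖ ≤ 1) :
    (1 + ‖w - b‖) ^ k * gw (w - b) ≤ (k.factorial * Real.exp 3) * gw ((2 : ℝ)⁻¹ • w) := by
  set s := ‖w - b‖
  have hs : 0 ≤ s := norm_nonneg _
  have h1 : (1 + s) ^ k ≤ k.factorial * Real.exp (1 + s) := by
    have := Real.pow_div_factorial_le_exp (1 + s) (by linarith) k
    rwa [div_le_iff₀ (by positivity), mul_comm] at this
  have h2 : ‖w‖ ≤ s + 1 := by
    have := norm_sub_norm_le w b
    linarith
  have h3 : ‖w‖ ^ 2 ≤ 2 * s ^ 2 + 2 := by nlinarith [norm_nonneg w, sq_nonneg (s - 1)]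
  unfold gw
  rw [norm_smul, Real.norm_of_nonneg (by norm_num : (0 : ℝ) ≤ 2⁻¹)]
  calc (1 + s) ^ k * Real.exp (-(1 / 2) * s ^ 2)
      ≤ (k.factorial * Real.exp (1 + s)) * Real.exp (-(1 / 2) * s ^ 2) := by gcongr
    _ = k.factorial * Real.exp (1 + s - (1 / 2) * s ^ 2) := by
        rw [mul_assoc, ← Real.exp_add]; ring_nf
    _ ≤ k.factorial * Real.exp (3 + -(1 / 2) * (2⁻¹ * ‖w‖) ^ 2) := by
        gcongr
        nlinarith [sq_nonneg (s - 2)]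
    _ = _ := by rw [Real.exp_add]; ring

lemma Eg_kernel (k : ℕ) (hf : PG f) (h0 : ∀ x, 0 ≤ f x) (b : Euc n) (hb : ‖b‖ ≤ 1) :
    Eg (fun z => (1 + ‖z‖) ^ k * f (b + z)) ≤ kc n k * Eg (fun z => f ((2 : ℝ) • z)) := by
  have hZ := gZ_pos n
  have p1 : PG (fun z => (1 + ‖z‖) ^ k * f (b + z)) := by
    have := hf.affine b 1
    simp only [one_smul] at this
    exact (((PG.const 1).add PG.norm_id).pow k).mul this
  have p2 : PG (fun z => f ((2 : ℝ) • z)) := by simpa using hf.affine 0 2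
  have i1 := integrable_gam_iff.1 p1.integrable
  have i2 := integrable_gam_iff.1 p2.integrable
  unfold Eg
  rw [integral_gam_smul, integral_gam_smul]
  have e1 : ∫ z, (gw z / gZ n) • ((1 + ‖z‖) ^ k * f (b + z))
      = ∫ w, (gw (w - b) / gZ n) • ((1 + ‖w - b‖) ^ k * f (b + (w - b))) :=
    (integral_sub_right_eq_self (μ := (volume : Measure (Euc n))) _ b).symm
  have j1 := i1.comp_sub_right b
  have e2 : ∫ z, (gw z / gZ n) • f ((2 : ℝ) • z)
      = (2 ^ n)⁻¹ * ∫ w, (gw ((2 : ℝ)⁻¹ • w) / gZ n) • f w := by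
    have := Measure.integral_comp_smul (volume : Measure (Euc n))
      (fun w => (gw ((2 : ℝ)⁻¹ • w) / gZ n) • f w) (2 : ℝ)
    simp only [smul_smul, inv_mul_cancel₀ (two_ne_zero (α := ℝ)), one_smul] at this
    rw [this]
    simp
  have j2 : Integrable (fun w : Euc n => (gw ((2 : ℝ)⁻¹ • w) / gZ n) • f w) := by
    have := (i2.comp_smul (R := (2 : ℝ)⁻¹) (by norm_num))
    simpa [smul_smul] using this
  rw [e1, e2]
  have hk : kc n k * ((2 ^ n)⁻¹ * ∫ w, (gw ((2 : ℝ)⁻¹ • w) / gZ n) • f w)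
      = ∫ w, (k.factorial * Real.exp 3) * ((gw ((2 : ℝ)⁻¹ • w) / gZ n) • f w) := by
    rw [integral_const_mul]; unfold kc; field_simp
  rw [hk]
  refine integral_mono j1 (j2.const_mul _) fun w => ?_
  simp only [smul_eq_mul, add_sub_cancel]
  have := mul_le_mul_of_nonneg_right (gw_compare k w b hb) (div_nonneg (h0 w) hZ.le)
  calc gw (w - b) / gZ n * ((1 + ‖w - b‖) ^ k * f w)
      = (1 + ‖w - b‖) ^ k * gw (w - b) * (f w / gZ n) := by ring
    _ ≤ _ := this
    _ = _ := by ring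

/-- Weighted averages at scale `ρ` are controlled by averages at scale `2ρ` around any point at
distance at most `ρ`. -/
lemma Eg_kernel_av (k : ℕ) (hf : PG f) (h0 : ∀ x, 0 ≤ f x) (x y : Euc n) {ρ : ℝ} (hρ : 0 < ρ)
    (hxy : ‖y - x‖ ≤ ρ) :
    Eg (fun z => (1 + ‖z‖) ^ k * f (y + ρ • z)) ≤ kc n k * Eg (fun z => f (x + (2 * ρ) • z)) := by
  have h := Eg_kernel k (hf.affine x ρ) (fun _ => h0 _) (ρ⁻¹ • (y - x)) (by
    rw [norm_smul, norm_inv, Real.norm_of_nonneg hρ.le]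
    rw [inv_mul_le_iff₀ hρ]; linarith)
  have e1 : ∀ z : Euc n, x + ρ • (ρ⁻¹ • (y - x) + z) = y + ρ • z := by
    intro z; rw [smul_add, smul_smul, mul_inv_cancel₀ hρ.ne', one_smul]; abel
  have e2 : ∀ z : Euc n, x + ρ • ((2 : ℝ) • z) = x + (2 * ρ) • z := by
    intro z; rw [smul_smul, mul_comm]
  simpa only [e1, e2] using h

lemma Eg_kernel_av0 (hf : PG f) (h0 : ∀ x, 0 ≤ f x) (x y : Euc n) {ρ : ℝ} (hρ : 0 < ρ)
    (hxy : ‖y - x‖ ≤ ρ) :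
    Eg (fun z => f (y + ρ • z)) ≤ kc n 0 * Eg (fun z => f (x + (2 * ρ) • z)) := by
  simpa using Eg_kernel_av 0 hf h0 x y hρ hxy

end Kernel

namespace Sol

variable {n : ℕ} {S : Sol n}

lemma HU_compare (x y : Euc n) {ρ : ℝ} (hρ : 0 < ρ) (hxy : ‖y - x‖ ≤ ρ) :
    S.HU y ρ ≤ kc n 0 * S.HU x (2 * ρ) :=
  Eg_kernel_av0 (S.hu.pg.pow 2) (fun _ => sq_nonneg _) x y hρ hxy

lemma HV_compare (x y : Euc n) {ρ : ℝ} (hρ : 0 < ρ) (hxy : ‖y - x‖ ≤ ρ) :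
    S.HV y ρ ≤ kc n 0 * S.HV x (2 * ρ) := S.swap.HU_compare x y hρ hxy

lemma H_compare (x y : Euc n) {ρ : ℝ} (hρ : 0 < ρ) (hxy : ‖y - x‖ ≤ ρ) :
    S.H y ρ ≤ kc n 0 * S.H x (2 * ρ) := by
  have h1 := S.HU_compare x y hρ hxy
  have h2 := S.HV_compare x y hρ hxy
  unfold H; linarith

namespace Nice

variable (h : S.Nice)
include h

lemma H_compare' (x y : Euc n) {R : ℝ} (hR : 0 < R) :
    S.H y (R + ‖y - x‖) ≤ 16 * kc n 0 * (1 + ‖y - x‖ / R) ^ 4 * S.H x R := by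
  have hd := norm_nonneg (y - x)
  have h1 := S.H_compare x y (ρ := R + ‖y - x‖) (by positivity) (by linarith)
  have h2 := h.H_le_pow x hR (R2 := 2 * (R + ‖y - x‖)) (by linarith)
  have h3 : (2 * (R + ‖y - x‖) / R) ^ 4 = 16 * (1 + ‖y - x‖ / R) ^ 4 := by
    field_simp; ring
  rw [h3] at h2
  calc _ ≤ kc n 0 * S.H x (2 * (R + ‖y - x‖)) := h1
    _ ≤ kc n 0 * (16 * (1 + ‖y - x‖ / R) ^ 4 * S.H x R) :=
        mul_le_mul_of_nonneg_left h2 (kc_pos n 0).le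
    _ = _ := by ring

/-- Pointwise bound by the average at any scale. -/
lemma sup_bound (x y : Euc n) {R : ℝ} (hR : 0 < R) :
    S.u y ^ 2 + S.v y ^ 2 ≤ 16 * kc n 0 * (1 + ‖y - x‖ / R) ^ 4 * S.H x R := by
  have hd := norm_nonneg (y - x)
  have h1 := S.sq_le_HU y (R := R + ‖y - x‖) (by positivity)
  have h2 := S.sq_le_HV y (R := R + ‖y - x‖) (by positivity)
  have h3 := h.H_compare' x y hR
  unfold H at h3 ⊢
  linarith

lemma sup_bound_z (x z : Euc n) {R : ℝ} (hR : 0 < R) :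
    S.u (x + R • z) ^ 2 + S.v (x + R • z) ^ 2 ≤ 16 * kc n 0 * (1 + ‖z‖) ^ 4 * S.H x R := by
  have h1 := h.sup_bound x (x + R • z) hR
  rw [add_sub_cancel_left, norm_smul, Real.norm_of_nonneg hR.le, mul_div_cancel_left₀ _ hR.ne']
    at h1
  exact h1

/-- Moments of the energy density. -/
lemma en_moment (x : Euc n) {R : ℝ} (hR : 0 < R) (k : ℕ) :
    R ^ 2 * Eg (fun z => (1 + ‖z‖) ^ k * S.en (x + R • z)) ≤ 4 * kc n k * S.H x R := by
  have h1 := Eg_kernel_av k S.en_pg (fun z => by unfold en; have := S.hk; positivity) x x hR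
    (by simp [hR.le])
  have h2 := h.DD_le x (R := 2 * R) (by positivity)
  have h3 := h.H_le_pow x hR (R2 := 2 * R) (by linarith)
  rw [mul_div_assoc, div_self hR.ne', mul_one] at h3
  unfold DD at h2
  have h4 : R ^ 2 * Eg (fun z => S.en (x + (2 * R) • z)) ≤ 4 * S.H x R := by
    nlinarith
  calc R ^ 2 * Eg (fun z => (1 + ‖z‖) ^ k * S.en (x + R • z))
      ≤ R ^ 2 * (kc n k * Eg (fun z => S.en (x + (2 * R) • z))) := by gcongr
    _ = kc n k * (R ^ 2 * Eg (fun z => S.en (x + (2 * R) • z))) := by ring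
    _ ≤ kc n k * (4 * S.H x R) := by have := kc_pos n k; gcongr
    _ = _ := by ring

end Nice

end Sol

/-! ### Growth of the smaller component, and separation -/

/-- A bound for the fourth moment of a normalized solution. -/
noncomputable def cA (n : ℕ) : ℝ := (16 * kc n 0) ^ 2 * Eg (fun z : Euc n => (1 + ‖z‖) ^ 8)

/-- Lower bound for the logarithmic growth of a component that does not dominate. -/
noncomputable def eta (n : ℕ) : ℝ := 1 / (1024 * (cA n + 1))

lemma cA_nonneg (n : ℕ) : 0 ≤ cA n :=
  mul_nonneg (sq_nonneg _) (Eg_nonneg fun z => by positivity)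

lemma eta_pos (n : ℕ) : 0 < eta n := by have := cA_nonneg n; unfold eta; positivity

lemma eta_le (n : ℕ) : eta n ≤ 1 / 1024 := by
  have := cA_nonneg n
  unfold eta
  exact one_div_le_one_div_of_le (by norm_num) (by linarith)

lemma PG.w {n : ℕ} (k : ℕ) : PG (fun z : Euc n => (1 + ‖z‖) ^ k) :=
  ((PG.const 1).add PG.norm_id).pow k

namespace Sol

variable {n : ℕ} {S : Sol n}

/-- A solution normalized at unit scale: `E[u² + v²] = 1`, frequency at most one, and the growth
bounds that hold for all blow-downs. -/
structure Stat (T : Sol n) : Prop where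
  h1 : T.hU + T.hV = 1
  sup : ∀ z, T.u z ^ 2 + T.v z ^ 2 ≤ 16 * kc n 0 * (1 + ‖z‖) ^ 4
  mom : ∀ k, Eg (fun z => (1 + ‖z‖) ^ k * T.en z) ≤ 4 * kc n k
  d1 : T.dD ≤ 1

/-- The solution rescaled around `x` at scale `R` and normalized. -/
noncomputable def nrm (S : Sol n) (x : Euc n) {R : ℝ} (hR : 0 < R) : Sol n :=
  S.aff x hR (c := 1 / √(S.H x R)) (one_div_pos.2 (Real.sqrt_pos.2 (S.H_pos x R)))

section nrm

variable (x : Euc n) {R : ℝ} (hR : 0 < R)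

lemma nrm_c : (1 / √(S.H x R)) ^ 2 = 1 / S.H x R := by
  rw [div_pow, Real.sq_sqrt (S.H_pos x R).le, one_pow]

lemma nrm_u (z : Euc n) : (S.nrm x hR).u z = 1 / √(S.H x R) * S.u (x + R • z) := rfl
lemma nrm_v (z : Euc n) : (S.nrm x hR).v z = 1 / √(S.H x R) * S.v (x + R • z) := rfl

lemma nrm_k (h : S.Nice) : (S.nrm x hR).k = S.ka x R := by
  have : (S.nrm x hR).k = S.k * R ^ 2 / (1 / √(S.H x R)) ^ 2 := rfl
  rw [this, nrm_c, h.k1, ka]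
  have := S.H_pos x R
  field_simp

lemma nrm_hU : (S.nrm x hR).hU = S.HU x R / S.H x R := by
  unfold nrm; rw [aff_hU, nrm_c]; ring
lemma nrm_hV : (S.nrm x hR).hV = S.HV x R / S.H x R := by
  unfold nrm; rw [aff_hV, nrm_c]; ring
lemma nrm_pU : (S.nrm x hR).pU = S.PU x R / S.H x R := by
  unfold nrm; rw [aff_pU, nrm_c]; ring
lemma nrm_pV : (S.nrm x hR).pV = S.PV x R / S.H x R := by
  unfold nrm; rw [aff_pV, nrm_c]; ring
lemma nrm_dD : (S.nrm x hR).dD = S.DD x R / S.H x R := by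
  unfold nrm; rw [aff_dD, nrm_c]; ring
lemma nrm_q : (S.nrm x hR).q = S.QQ x R / S.H x R := by
  unfold nrm; rw [aff_q, nrm_c]; ring
lemma nrm_sR : (S.nrm x hR).sR = S.SR x R / S.H x R := by
  unfold nrm; rw [aff_sR, nrm_c]; ring
lemma nrm_en (z : Euc n) : (S.nrm x hR).en z = R ^ 2 / S.H x R * S.en (x + R • z) := by
  unfold nrm; rw [aff_en, mul_pow, nrm_c]; ring

lemma Nice.stat (h : S.Nice) : (S.nrm x hR).Stat where
  h1 := by
    rw [nrm_hU, nrm_hV, ← add_div]; exact div_self (S.H_pos x R).ne'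
  sup z := by
    have h1 := h.sup_bound_z x z hR
    rw [nrm_u, nrm_v, mul_pow, mul_pow, nrm_c, ← mul_add, one_div, inv_mul_le_iff₀ (S.H_pos x R)]
    linarith
  mom k := by
    have h1 := h.en_moment x hR k
    have : Eg (fun z => (1 + ‖z‖) ^ k * (S.nrm x hR).en z)
        = R ^ 2 / S.H x R * Eg (fun z => (1 + ‖z‖) ^ k * S.en (x + R • z)) := by
      rw [← Eg_const_mul]; exact Eg_congr fun z => by rw [nrm_en]; ring
    rw [this, div_mul_eq_mul_div, div_le_iff₀ (S.H_pos x R)]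
    exact h1
  d1 := by rw [nrm_dD]; exact h.nb x R hR

end nrm

lemma Stat.swap {T : Sol n} (h : T.Stat) : T.swap.Stat where
  h1 := by rw [add_comm]; exact h.h1
  sup z := by rw [add_comm]; exact h.sup z
  mom k := by
    rw [Eg_congr fun z => by rw [T.en_swap z]]; exact h.mom k
  d1 := by rw [T.dD_swap]; exact h.d1

lemma Stat.u4 {T : Sol n} (h : T.Stat) : Eg (fun z => T.u z ^ 4) ≤ cA n := by
  unfold cA
  rw [← Eg_const_mul]
  refine Eg_mono (T.hu.pg.pow 4) ((PG.w 8).const_mul _) fun z => ?_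
  have h1 := h.sup z
  have h2 : T.u z ^ 2 ≤ 16 * kc n 0 * (1 + ‖z‖) ^ 4 := by nlinarith [sq_nonneg (T.v z)]
  calc T.u z ^ 4 = (T.u z ^ 2) ^ 2 := by ring
    _ ≤ (16 * kc n 0 * (1 + ‖z‖) ^ 4) ^ 2 := pow_le_pow_left₀ (sq_nonneg _) h2 2
    _ = _ := by ring

lemma Stat.growth {T : Sol n} (h : T.Stat) (hk : 1 ≤ T.k) (hU : 1 / 4 ≤ T.hU) :
    eta n * T.hV ≤ T.pV := by
  by_contra! hlt
  set m := Eg T.v with hm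
  have hA := cA_nonneg n
  have he := eta_pos n
  have he' := eta_le n
  have hq : T.q ≤ T.pV := by
    rw [T.pV_eq]
    have : 0 ≤ Eg fun x => ‖T.G x‖ ^ 2 := Eg_nonneg fun x => sq_nonneg _
    linarith
  have hG : (Eg fun x => ‖T.G x‖ ^ 2) ≤ T.pV := by
    rw [T.pV_eq]; linarith [T.static_q_nonneg]
  have hp : T.hV ≤ m ^ 2 + Eg fun x => ‖T.G x‖ ^ 2 := poincare T.hv
  have hvar : Eg (fun z => (T.v z - m) ^ 2) = T.hV - m ^ 2 := Eg_sub_const_sq T.hv.pg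
  have hVp : 0 ≤ T.hV := Eg_nonneg fun x => sq_nonneg _
  have he2 := mul_le_mul_of_nonneg_right he' hVp
  have h1 : T.hV ≤ 2 * m ^ 2 := by linarith only [hp, hG, hlt, he2, hVp]
  have he3 := mul_le_mul_of_nonneg_left h1 he.le
  have h2 : Eg (fun z => (T.v z - m) ^ 2) ≤ 2 * eta n * m ^ 2 := by
    rw [hvar]; linarith only [hp, hG, hlt, he3]
  have h3 : Eg (fun x => T.u x ^ 2 * T.v x ^ 2) ≤ 2 * eta n * m ^ 2 := by
    have h0 : 0 ≤ Eg (fun x => T.u x ^ 2 * T.v x ^ 2) := Eg_nonneg fun x => by positivity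
    have : Eg (fun x => T.u x ^ 2 * T.v x ^ 2) ≤ T.q := by
      unfold q; exact le_mul_of_one_le_left h0 hk
    linarith only [this, hq, hlt, he3]
  have hm0 : 0 < m ^ 2 := by
    have : 0 < T.hV := by
      rcases hVp.eq_or_lt with h0 | h0
      · rw [← h0, mul_zero] at hlt
        linarith [T.static_q_nonneg]
      · exact h0
    linarith
  have hm1 : 0 ≤ m := Eg_nonneg fun z => (T.vpos z).le
  set s : ℝ := 1 / (16 * (cA n + 1)) with hs
  have hs0 : 0 < s := by positivity
  have hpt : ∀ z, m ^ 2 * T.u z ^ 2 ≤ 4 * (T.u z ^ 2 * T.v z ^ 2)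
      + s * m ^ 2 * T.u z ^ 4 + 1 / s * (T.v z - m) ^ 2 := by
    intro z
    have hv := T.vpos z
    have hamgm : 2 * (m * T.u z ^ 2 * |T.v z - m|)
        ≤ s * m ^ 2 * T.u z ^ 4 + 1 / s * (T.v z - m) ^ 2 := by
      have h0 := sq_nonneg (s * m * T.u z ^ 2 - |T.v z - m|)
      have : 1 / s * (s * m * T.u z ^ 2 - |T.v z - m|) ^ 2
          = s * m ^ 2 * T.u z ^ 4 + 1 / s * (T.v z - m) ^ 2
            - 2 * (m * T.u z ^ 2 * |T.v z - m|) := by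
        rw [← sq_abs (T.v z - m)]; field_simp; ring
      have := mul_nonneg (one_div_pos.2 hs0).le h0
      linarith
    have hu2 := sq_nonneg (T.u z)
    have habs := abs_nonneg (T.v z - m)
    rcases le_total (m / 2) (T.v z) with hc | hc
    · have : m ^ 2 ≤ 4 * T.v z ^ 2 := by nlinarith
      have h5 : 0 ≤ m * T.u z ^ 2 * |T.v z - m| := by positivity
      nlinarith
    · have h6 : m / 2 ≤ |T.v z - m| := by rw [abs_sub_comm]; exact le_trans (by linarith) (le_abs_self _)
      have h5 : m * T.u z ^ 2 * (m / 2) ≤ m * T.u z ^ 2 * |T.v z - m| := by gcongr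
      have : 0 ≤ T.u z ^ 2 * T.v z ^ 2 := by positivity
      nlinarith
  have hi := Eg_mono ((T.hu.pg.pow 2).const_mul (m ^ 2))
    (((T.uv_pg.const_mul 4).add ((T.hu.pg.pow 4).const_mul (s * m ^ 2))).add
      (((T.hv.pg.sub (PG.const m)).pow 2).const_mul (1 / s))) hpt
  rw [Eg_add ((T.uv_pg.const_mul 4).add ((T.hu.pg.pow 4).const_mul (s * m ^ 2)))
    (((T.hv.pg.sub (PG.const m)).pow 2).const_mul (1 / s)),
    Eg_add (T.uv_pg.const_mul 4) ((T.hu.pg.pow 4).const_mul (s * m ^ 2)),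
    Eg_const_mul, Eg_const_mul, Eg_const_mul, Eg_const_mul] at hi
  have hu4 := h.u4
  have k1 : s * m ^ 2 * Eg (fun z => T.u z ^ 4) ≤ m ^ 2 * (1 / 16) := by
    calc s * m ^ 2 * Eg (fun z => T.u z ^ 4) ≤ s * m ^ 2 * (cA n + 1) := by gcongr; linarith
      _ = _ := by rw [hs]; field_simp
  have k2 : 1 / s * Eg (fun z => (T.v z - m) ^ 2) ≤ m ^ 2 * (1 / 32) := by
    calc 1 / s * Eg (fun z => (T.v z - m) ^ 2) ≤ 1 / s * (2 * eta n * m ^ 2) := by gcongr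
      _ = _ := by rw [hs, eta]; field_simp; ring
  have k3 : m ^ 2 * (1 / 4) ≤ m ^ 2 * Eg (fun z => T.u z ^ 2) := by
    have hU' : 1 / 4 ≤ Eg (fun z => T.u z ^ 2) := hU
    gcongr
  have k4 := mul_le_mul_of_nonneg_right he' hm0.le
  linarith only [hi, k1, k2, k3, h3, k4, hm0]

namespace Nice

variable (h : S.Nice)
include h

lemma growthV (x : Euc n) {R : ℝ} (hR : 0 < R) (hk : 1 ≤ S.ka x R) (hU : S.H x R / 4 ≤ S.HU x R) :
    eta n * S.HV x R ≤ S.PV x R := by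
  have hH := S.H_pos x R
  have := (h.stat x hR).growth (by rw [nrm_k x hR h]; exact hk)
    (by rw [nrm_hU, div_le_div_iff₀ (by norm_num) hH]; linarith)
  rw [nrm_hV, nrm_pV, ← mul_div_assoc] at this
  exact (div_le_div_iff_of_pos_right hH).1 this

lemma growthU (x : Euc n) {R : ℝ} (hR : 0 < R) (hk : 1 ≤ S.ka x R) (hV : S.H x R / 4 ≤ S.HV x R) :
    eta n * S.HU x R ≤ S.PU x R :=
  h.swap.growthV x hR (by rw [ka_swap]; exact hk) (by rw [H_swap]; exact hV)

/-- Points where both components are at least `k` force superlinear growth of `H` relative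
to `k²`. -/
lemma H_lower (y : Euc n) {k R : ℝ} (hk : 0 < k) (hu : k ≤ S.u y) (hv : k ≤ S.v y)
    (hR : 1 ≤ R * k) : 2 * k ^ 2 * (R * k) ^ eta n ≤ S.H y R := by
  have he := eta_pos n
  have hR0 : 0 < 1 / k := by positivity
  have hRR : 1 / k ≤ R := by rw [div_le_iff₀ hk]; exact hR
  have hRp : 0 < R := hR0.trans_le hRR
  have hmono : MonotoneOn (fun r => -(Real.log (1 / S.HU y r + 1 / S.HV y r) + eta n * Real.log r))
      (Ici (1 / k)) := by
    refine mono_pos hR0 (f' := fun r => -((-(2 / r * S.PU y r) / S.HU y r ^ 2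
        + -(2 / r * S.PV y r) / S.HV y r ^ 2) / (1 / S.HU y r + 1 / S.HV y r) + eta n * r⁻¹))
      (fun r hr => ?_) fun r hr => ?_
    · have pU := S.HU_pos y r
      have pV := S.HV_pos y r
      have d1 := ((S.HU_deriv y hr).inv pU.ne').add ((S.HV_deriv y hr).inv pV.ne')
      simp only [one_div]
      exact ((d1.log (by simp only [Pi.add_apply, Pi.inv_apply]; positivity)).add
        ((Real.hasDerivAt_log hr.ne').const_mul _)).neg
    · have hr0 := hR0.trans hr
      have pU := S.HU_pos y r
      have pV := S.HV_pos y r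
      have hka : 1 ≤ S.ka y r := by
        have h1 := S.sq_le_HU y hr0.le
        have h2 : k ^ 2 ≤ S.H y r := by
          unfold H; nlinarith
        have h3 : 1 ≤ r * k := by rw [div_lt_iff₀ hk] at hr; exact hr.le
        unfold ka
        calc (1 : ℝ) ≤ (r * k) ^ 2 := one_le_pow₀ h3
          _ = r ^ 2 * k ^ 2 := by ring
          _ ≤ _ := by gcongr
      have hPU := S.PU_nonneg y hr0
      have hPV := S.PV_nonneg y hr0
      have key : eta n * (1 / S.HU y r + 1 / S.HV y r)
          ≤ 2 * (S.PU y r / S.HU y r ^ 2 + S.PV y r / S.HV y r ^ 2) := by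
        have a1 : eta n * S.HU y r ≤ S.PU y r → eta n * (1 / S.HU y r) ≤ S.PU y r / S.HU y r ^ 2 := by
          intro hh
          rw [le_div_iff₀ (by positivity)]
          calc eta n * (1 / S.HU y r) * S.HU y r ^ 2 = eta n * S.HU y r := by field_simp
            _ ≤ _ := hh
        have a2 : eta n * S.HV y r ≤ S.PV y r → eta n * (1 / S.HV y r) ≤ S.PV y r / S.HV y r ^ 2 := by
          intro hh
          rw [le_div_iff₀ (by positivity)]
          calc eta n * (1 / S.HV y r) * S.HV y r ^ 2 = eta n * S.HV y r := by field_simp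
            _ ≤ _ := hh
        have b1 : 0 ≤ S.PU y r / S.HU y r ^ 2 := by positivity
        have b2 : 0 ≤ S.PV y r / S.HV y r ^ 2 := by positivity
        rcases le_total (S.HU y r) (S.HV y r) with hc | hc
        · have c1 := a1 (h.growthU y hr0 hka (by unfold H; linarith))
          have c2 := one_div_le_one_div_of_le pU hc
          nlinarith
        · have c1 := a2 (h.growthV y hr0 hka (by unfold H; linarith))
          have c2 := one_div_le_one_div_of_le pV hc
          nlinarith
      have hQ : 0 < 1 / S.HU y r + 1 / S.HV y r := by positivity
      have : (-(2 / r * S.PU y r) / S.HU y r ^ 2 + -(2 / r * S.PV y r) / S.HV y r ^ 2)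
          = -(2 * (S.PU y r / S.HU y r ^ 2 + S.PV y r / S.HV y r ^ 2)) * r⁻¹ := by
        field_simp; ring
      rw [this, neg_mul, neg_div, neg_add, neg_neg, ← sub_eq_add_neg, sub_nonneg, le_div_iff₀ hQ]
      have := mul_le_mul_of_nonneg_right key (inv_pos.2 hr0).le
      linarith
  have hh := hmono (mem_Ici.2 le_rfl) (mem_Ici.2 hRR) hRR
  simp only at hh
  have pU := S.HU_pos y R
  have pV := S.HV_pos y R
  have qU := S.HU_pos y (1 / k)
  have qV := S.HV_pos y (1 / k)
  have e1 : 1 / S.HU y (1 / k) + 1 / S.HV y (1 / k) ≤ 2 / k ^ 2 := by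
    have h1 := (pow_le_pow_left₀ hk.le hu 2).trans (S.sq_le_HU y hR0.le)
    have h2 := (pow_le_pow_left₀ hk.le hv 2).trans (S.sq_le_HV y hR0.le)
    have h3 := one_div_le_one_div_of_le (by positivity) h1
    have h4 := one_div_le_one_div_of_le (by positivity) h2
    calc _ ≤ 1 / k ^ 2 + 1 / k ^ 2 := add_le_add h3 h4
      _ = _ := by ring
  have e2 := Real.log_le_log (by positivity) e1
  rw [show Real.log (1 / k) = -Real.log k by rw [one_div, Real.log_inv]] at hh
  rw [Real.log_div (by norm_num) (by positivity), Real.log_pow] at e2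
  have e3 : 4 / S.H y R ≤ 1 / S.HU y R + 1 / S.HV y R := by
    unfold H
    rw [div_add_div _ _ pU.ne' pV.ne', div_le_div_iff₀ (by positivity) (by positivity)]
    nlinarith [sq_nonneg (S.HU y R - S.HV y R)]
  have hH := S.H_pos y R
  have e4 := Real.log_le_log (by positivity) e3
  rw [Real.log_div (by norm_num) hH.ne', show (4 : ℝ) = 2 * 2 by norm_num,
    Real.log_mul (by norm_num) (by norm_num)] at e4
  simp only [one_div] at hh e2 e4
  rw [← Real.log_le_log_iff (by positivity) hH, Real.log_mul (by positivity) (by positivity),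
    Real.log_mul (by norm_num) (by positivity), Real.log_pow, Real.log_rpow (by positivity),
    Real.log_mul hRp.ne' hk.ne']
  push_cast at e2 ⊢
  linarith only [hh, e2, e4]

/-- The two components are nearly segregated at scales with large coupling. -/
lemma sep (x y : Euc n) {k R : ℝ} (hR : 0 < R) (hka : 1 ≤ S.ka x R) (hk : 0 < k) (hu : k ≤ S.u y)
    (hv : k ≤ S.v y) :
    k ≤ 8 * kc n 0 * (1 + ‖y - x‖ / R) ^ 2 * S.ka x R ^ (-(eta n / 8)) * √(S.H x R) := by
  have he := eta_pos n
  have he' := eta_le n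
  have hH := S.H_pos x R
  have hkc := one_le_kc n 0
  have hd := norm_nonneg (y - x)
  set lam := 1 + ‖y - x‖ / R with hlam
  have hl1 : 1 ≤ lam := by have : 0 ≤ ‖y - x‖ / R := by positivity
                           linarith
  set K := S.ka x R with hK
  have hK0 : 0 < K := by linarith
  set s := k / √(S.H x R) with hs
  have hsH : 0 < √(S.H x R) := Real.sqrt_pos.2 hH
  have hs0 : 0 < s := by positivity
  have hks : k = s * √(S.H x R) := by rw [hs]; field_simp
  have hRH : R * √(S.H x R) = √K := by
    rw [hK, ka, Real.sqrt_mul (sq_nonneg R), Real.sqrt_sq hR.le]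
  suffices hgoal : s ≤ 8 * kc n 0 * lam ^ 2 * K ^ (-(eta n / 8)) by
    calc k = s * √(S.H x R) := hks
      _ ≤ _ := by gcongr
  have hl2 : 1 ≤ lam ^ 2 := one_le_pow₀ hl1
  have hB : 1 ≤ 8 * kc n 0 * lam ^ 2 := by nlinarith
  by_contra! hcon
  have hrho : R + ‖y - x‖ = lam * R := by rw [hlam]; field_simp
  have hsK : K ^ ((3 : ℝ) / 8) ≤ R * k := by
    rw [hks, show R * (s * √(S.H x R)) = s * (R * √(S.H x R)) by ring, hRH, Real.sqrt_eq_rpow]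
    calc K ^ ((3 : ℝ) / 8) ≤ K ^ (-(eta n / 8) + 1 / 2) :=
          Real.rpow_le_rpow_of_exponent_le hka (by linarith)
      _ = K ^ (-(eta n / 8)) * K ^ (1 / 2 : ℝ) := Real.rpow_add hK0 _ _
      _ ≤ s * K ^ (1 / 2 : ℝ) := by
        gcongr
        have : 0 < K ^ (-(eta n / 8)) := Real.rpow_pos_of_pos hK0 _
        nlinarith
  have hRk1 : 1 ≤ R * k := le_trans (Real.one_le_rpow hka (by norm_num)) hsK
  have hrk : R * k ≤ (R + ‖y - x‖) * k := by gcongr; linarith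
  have h1 := h.H_lower y hk hu hv (R := R + ‖y - x‖) (hRk1.trans hrk)
  have h2 := h.H_compare' x y hR
  have h3 : K ^ (3 * eta n / 8) ≤ ((R + ‖y - x‖) * k) ^ eta n := by
    calc K ^ (3 * eta n / 8) = (K ^ ((3 : ℝ) / 8)) ^ eta n := by
          rw [← Real.rpow_mul hK0.le]; ring_nf
      _ ≤ _ := Real.rpow_le_rpow (by positivity) (hsK.trans hrk) he.le
  have h4 : (8 * kc n 0 * lam ^ 2) ^ 2 * K ^ (-(eta n / 4)) < s ^ 2 := by
    have h5 := pow_lt_pow_left₀ hcon (by positivity) (two_ne_zero)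
    rw [mul_pow, ← Real.rpow_mul_natCast hK0.le] at h5
    rwa [show -(eta n / 8) * ((2 : ℕ) : ℝ) = -(eta n / 4) by push_cast; ring] at h5
  have h6 : k ^ 2 = s ^ 2 * S.H x R := by rw [hks, mul_pow, Real.sq_sqrt hH.le]
  have h7 : 1 ≤ K ^ (-(eta n / 4)) * K ^ (3 * eta n / 8) := by
    rw [← Real.rpow_add hK0]; exact Real.one_le_rpow hka (by linarith)
  have h8 : 2 * s ^ 2 * K ^ (3 * eta n / 8) * S.H x R ≤ 16 * kc n 0 * lam ^ 4 * S.H x R := by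
    calc 2 * s ^ 2 * K ^ (3 * eta n / 8) * S.H x R = 2 * k ^ 2 * K ^ (3 * eta n / 8) := by
          rw [h6]; ring
      _ ≤ 2 * k ^ 2 * ((R + ‖y - x‖) * k) ^ eta n := by gcongr
      _ ≤ _ := h1.trans h2
  have h9 := le_of_mul_le_mul_right h8 hH
  have h10 : (8 * kc n 0 * lam ^ 2) ^ 2 ≤ s ^ 2 * K ^ (3 * eta n / 8) := by
    have p : 0 < K ^ (3 * eta n / 8) := Real.rpow_pos_of_pos hK0 _
    calc (8 * kc n 0 * lam ^ 2) ^ 2 ≤ (8 * kc n 0 * lam ^ 2) ^ 2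
          * (K ^ (-(eta n / 4)) * K ^ (3 * eta n / 8)) := le_mul_of_one_le_right (sq_nonneg _) h7
      _ = (8 * kc n 0 * lam ^ 2) ^ 2 * K ^ (-(eta n / 4)) * K ^ (3 * eta n / 8) := by ring
      _ ≤ _ := by gcongr
  have h11 : 0 < kc n 0 * lam ^ 4 := by positivity
  have h12 := mul_le_mul_of_nonneg_right hkc h11.le
  linarith only [h9, h10, h11, h12]

end Nice

/-- The segregation parameter at coupling `K`. -/
noncomputable def msep (n : ℕ) (K : ℝ) : ℝ := 16 * kc n 0 * K ^ (-(eta n / 8))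

lemma msep_pos (n : ℕ) {K : ℝ} (hK : 0 < K) : 0 < msep n K := by
  have := kc_pos n 0
  have := Real.rpow_pos_of_pos hK (-(eta n / 8))
  unfold msep; positivity

lemma Nice.nrm_sep (h : S.Nice) (x : Euc n) {R : ℝ} (hR : 0 < R) (hka : 1 ≤ S.ka x R) (z : Euc n) :
    min ((S.nrm x hR).u z) ((S.nrm x hR).v z) ≤ msep n (S.ka x R) * (1 + ‖z‖ ^ 2) := by
  have hH := S.H_pos x R
  have hsH : 0 < √(S.H x R) := Real.sqrt_pos.2 hH
  have h1 := h.sep x (x + R • z) hR hka (lt_min (S.upos _) (S.vpos _)) (min_le_left _ _)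
    (min_le_right _ _)
  rw [add_sub_cancel_left, norm_smul, Real.norm_of_nonneg hR.le, mul_div_cancel_left₀ _ hR.ne'] at h1
  rw [nrm_u, nrm_v, ← mul_min_of_nonneg _ _ (by positivity), one_div, inv_mul_le_iff₀ hsH]
  refine h1.trans ?_
  have hp := Real.rpow_pos_of_pos (S.ka_pos x hR) (-(eta n / 8))
  have := kc_pos n 0
  unfold msep
  calc 8 * kc n 0 * (1 + ‖z‖) ^ 2 * S.ka x R ^ (-(eta n / 8)) * √(S.H x R)
      ≤ 8 * kc n 0 * (2 * (1 + ‖z‖ ^ 2)) * S.ka x R ^ (-(eta n / 8)) * √(S.H x R) := by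
        gcongr; nlinarith [sq_nonneg (1 - ‖z‖)]
    _ = _ := by ring

end Sol

/-! ### Smooth truncation at a quadratic threshold -/

lemma hasDerivAt_max_zero {h h' : ℝ → ℝ} (hd : ∀ p, HasDerivAt h (h' p) p) (h0 : h' 0 = 0) (s : ℝ) :
    HasDerivAt (fun s => h (max s 0)) (h' (max s 0)) s := by
  rcases lt_trichotomy s 0 with hs | hs | hs
  · rw [max_eq_right hs.le, h0]
    refine (hasDerivAt_const s (h 0)).congr_of_eventuallyEq ?_
    filter_upwards [Iio_mem_nhds hs] with t ht
    rw [max_eq_right (le_of_lt ht)]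
  · subst hs
    rw [max_self, h0, ← hasDerivWithinAt_univ, ← Iic_union_Ici (a := (0 : ℝ))]
    refine HasDerivWithinAt.union ?_ ?_
    · refine (hasDerivWithinAt_const (0 : ℝ) (Iic 0) (h 0)).congr (fun t ht => ?_) (by simp)
      rw [max_eq_right ht]
    · have := (hd 0).hasDerivWithinAt (s := Ici 0)
      rw [h0] at this
      refine this.congr (fun t ht => ?_) (by simp)
      rw [max_eq_left ht]
  · rw [max_eq_left hs.le]
    refine (hd s).congr_of_eventuallyEq ?_
    filter_upwards [Ioi_mem_nhds hs] with t ht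
    rw [max_eq_left (le_of_lt ht)]

/-- A `C²` regularization of the positive part, `s₊ - arctan s₊`. -/
noncomputable def tau (s : ℝ) : ℝ := max s 0 - Real.arctan (max s 0)
/-- The derivative of `tau`. -/
noncomputable def tau1 (s : ℝ) : ℝ := max s 0 ^ 2 / (1 + max s 0 ^ 2)
/-- The second derivative of `tau`. -/
noncomputable def tau2 (s : ℝ) : ℝ := 2 * max s 0 / (1 + max s 0 ^ 2) ^ 2

lemma tau_deriv (s : ℝ) : HasDerivAt tau (tau1 s) s := by
  refine hasDerivAt_max_zero (h := fun p => p - Real.arctan p) (h' := fun p => p ^ 2 / (1 + p ^ 2))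
    (fun p => ?_) (by simp) s
  refine ((hasDerivAt_id p).sub (Real.hasDerivAt_arctan p)).congr_deriv ?_
  have : 1 + p ^ 2 ≠ 0 := by positivity
  field_simp; ring

lemma tau1_deriv (s : ℝ) : HasDerivAt tau1 (tau2 s) s := by
  refine hasDerivAt_max_zero (h := fun p => p ^ 2 / (1 + p ^ 2))
    (h' := fun p => 2 * p / (1 + p ^ 2) ^ 2) (fun p => ?_) (by simp) s
  have : 1 + p ^ 2 ≠ 0 := by positivity
  refine ((hasDerivAt_pow 2 p).div ((hasDerivAt_pow 2 p).const_add 1) this).congr_deriv ?_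
  field_simp; ring

lemma tau1_cont : Continuous tau1 :=
  continuous_iff_continuousAt.2 fun s => (tau1_deriv s).continuousAt

lemma tau2_cont : Continuous tau2 := by
  unfold tau2
  exact Continuous.div (by fun_prop) (by fun_prop) fun s => by positivity

lemma tau1_nonneg (s : ℝ) : 0 ≤ tau1 s := by unfold tau1; positivity
lemma tau1_le (s : ℝ) : tau1 s ≤ 1 := by
  unfold tau1; rw [div_le_one (by positivity)]; linarith

lemma tau2_bound (s : ℝ) : |tau2 s| ≤ 1 := by
  unfold tau2
  have h0 : 0 ≤ max s 0 := le_max_right _ _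
  rw [abs_of_nonneg (by positivity), div_le_one (by positivity)]
  nlinarith [sq_nonneg (max s 0 - 1), sq_nonneg (max s 0 ^ 2)]

lemma tau_of_nonpos {s : ℝ} (hs : s ≤ 0) : tau s = 0 := by simp [tau, max_eq_right hs]
lemma tau1_of_nonpos {s : ℝ} (hs : s ≤ 0) : tau1 s = 0 := by simp [tau1, max_eq_right hs]

lemma tau_pos {s : ℝ} (hs : 0 < s) : 0 < tau s := by
  have hm : MonotoneOn tau (Ici 0) := monoOn_of_hasDerivAt
    (fun R _ => (tau_deriv R).continuousAt.continuousWithinAt) (fun R _ => tau_deriv R)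
    (fun R _ => tau1_nonneg R)
  have hsm : StrictMonoOn tau (Ici 0) := by
    refine strictMonoOn_of_deriv_pos (convex_Ici 0)
      (fun R _ => (tau_deriv R).continuousAt.continuousWithinAt) fun R hR => ?_
    rw [interior_Ici, mem_Ioi] at hR
    rw [(tau_deriv R).deriv, tau1, max_eq_left hR.le]; positivity
  have := hsm (mem_Ici.2 le_rfl) (mem_Ici.2 hs.le) hs
  rwa [tau_of_nonpos le_rfl] at this

lemma tau_nonneg (s : ℝ) : 0 ≤ tau s := by
  rcases le_or_gt s 0 with h | h
  · rw [tau_of_nonpos h]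
  · exact (tau_pos h).le

lemma tau_le {s : ℝ} : tau s ≤ max s 0 := by
  unfold tau
  have := Real.arctan_nonneg.2 (le_max_right s 0)
  linarith

lemma le_tau (s : ℝ) : s - 2 ≤ tau s := by
  unfold tau
  have h1 := Real.arctan_lt_pi_div_two (max s 0)
  have h2 := Real.pi_lt_four
  have := le_max_left s 0
  linarith

lemma tau_mixed (s : ℝ) : |tau s - (s + 1) * tau1 s| ≤ 3 := by
  rcases le_or_gt s 0 with h | h
  · rw [tau_of_nonpos h, tau1_of_nonpos h]; norm_num
  · have h1 := Real.arctan_lt_pi_div_two s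
    have h2 := Real.pi_lt_four
    have h3 := Real.arctan_nonneg.2 h.le
    have e : tau s - (s + 1) * tau1 s = s / (1 + s ^ 2) - Real.arctan s - s ^ 2 / (1 + s ^ 2) := by
      unfold tau tau1
      rw [max_eq_left h.le]
      have : 1 + s ^ 2 ≠ 0 := by positivity
      field_simp; ring
    have a1 : s / (1 + s ^ 2) ≤ 1 := by
      rw [div_le_one (by positivity)]; nlinarith [sq_nonneg (s - 1)]
    have a2 : s ^ 2 / (1 + s ^ 2) ≤ 1 := by rw [div_le_one (by positivity)]; linarith
    have a3 : 0 ≤ s / (1 + s ^ 2) := by positivity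
    have a4 : 0 ≤ s ^ 2 / (1 + s ^ 2) := by positivity
    rw [e, abs_le]
    constructor <;> linarith

section trunc

variable {n : ℕ}

lemma G1.normSq : G1 (fun z : Euc n => 1 + ‖z‖ ^ 2) (fun z => (2 : ℝ) • z) :=
  ⟨(PG.const 1).add (PG.norm_id.pow 2), PGV.id.smul (PG.const 2), fun z => by
    refine ((hasStrictFDerivAt_norm_sq z).hasFDerivAt.const_add 1).congr_fderiv ?_
    ext y; simp⟩

/-- `1 / (1 + |z|²)`. -/
noncomputable def jw (z : Euc n) : ℝ := (1 + ‖z‖ ^ 2)⁻¹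

lemma jw_mul (z : Euc n) : (1 + ‖z‖ ^ 2) * jw z = 1 := mul_inv_cancel₀ (by positivity)
lemma jw_pos (z : Euc n) : 0 < jw z := by unfold jw; positivity
lemma jw_le (z : Euc n) : jw z ≤ 1 := inv_le_one_of_one_le₀ (by nlinarith [sq_nonneg ‖z‖])

lemma jw_pg : PG (jw : Euc n → ℝ) := (PG.const 1).mono_bound
  (Continuous.inv₀ (by fun_prop) fun z => by positivity)
  fun z => by rw [abs_of_pos (jw_pos z), abs_one]; exact jw_le z

lemma G1.jw : G1 (jw : Euc n → ℝ) (fun z => (-2 * jw z ^ 2) • z) := by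
  refine ⟨jw_pg, PGV.id.smul ((jw_pg.pow 2).const_mul (-2)), fun z => ?_⟩
  have h := (hasDerivAt_inv (x := 1 + ‖z‖ ^ 2) (by positivity)).comp_hasFDerivAt z
    (G1.normSq.deriv z)
  refine h.congr_fderiv ?_
  ext y
  simp only [_root_.jw, _root_.smul_apply, innerSL_apply_apply, inner_smul_left,
    RCLike.conj_to_real, smul_eq_mul, inv_pow]
  ring

/-- The rescaled excess of `f` over the threshold `m (1 + |z|²)`. -/
noncomputable def trW (f : Euc n → ℝ) (m : ℝ) (z : Euc n) : ℝ := m⁻¹ * (f z * jw z) - 1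

/-- Smooth truncation of `f`: vanishes where `f ≤ m (1 + |z|²)`. -/
noncomputable def tr (f : Euc n → ℝ) (m : ℝ) (z : Euc n) : ℝ :=
  (m * (1 + ‖z‖ ^ 2)) * tau (trW f m z)

/-- Gradient of the truncation. -/
noncomputable def trG (f : Euc n → ℝ) (F : Euc n → Euc n) (m : ℝ) (z : Euc n) : Euc n :=
  tau1 (trW f m z) • F z
    + ((tau (trW f m z) - (trW f m z + 1) * tau1 (trW f m z)) * (2 * m)) • z

variable {f : Euc n → ℝ} {F : Euc n → Euc n} {m : ℝ}

lemma trW_G1 (hf : G1 f F) (m : ℝ) : G1 (trW f m)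
    (fun z => m⁻¹ • (f z • ((-2 * jw z ^ 2) • z) + jw z • F z)) :=
  (((hf.mul G1.jw).const_mul m⁻¹).sub (G1.const 1)).congr_grad fun z => by rw [sub_zero]

lemma tr_G1 (hf : G1 f F) (hm : 0 < m) : G1 (tr f m) (trG f F m) := by
  have h1 := (G1.normSq.const_mul m).mul ((trW_G1 hf m).comp tau_deriv tau1_cont
    (K := 1) fun s => by rw [abs_of_nonneg (tau1_nonneg s)]; exact tau1_le s)
  refine h1.congr_grad fun z => ?_
  unfold trG
  have hj := jw_mul z
  have hW : f z * jw z = m * (trW f m z + 1) := by unfold trW; field_simp; ring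
  simp only [smul_smul, smul_add]
  rw [show m * (1 + ‖z‖ ^ 2) * (tau1 (trW f m z) * (m⁻¹ * (f z * (-2 * jw z ^ 2))))
      = tau1 (trW f m z) * (((1 + ‖z‖ ^ 2) * jw z) * (-2 * (f z * jw z))) by field_simp,
    show m * (1 + ‖z‖ ^ 2) * (tau1 (trW f m z) * (m⁻¹ * jw z))
      = tau1 (trW f m z) * ((1 + ‖z‖ ^ 2) * jw z) by field_simp, hj, hW, mul_one,
    add_comm (_ • z) (_ • F z), add_assoc, ← add_smul]
  congr 2; ring

lemma trG_G1 (hf : G1 f F) {D : Fin n → Euc n → Euc n} (hF : ∀ i, G1 (fun z => F z i) (D i))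
    (m : ℝ) : ∃ D' : Fin n → Euc n → Euc n, ∀ i, G1 (fun z => trG f F m z i) (D' i) := by
  have hW := trW_G1 hf m
  have h0 := hW.comp tau_deriv tau1_cont
    (K := 1) fun s => by rw [abs_of_nonneg (tau1_nonneg s)]; exact tau1_le s
  have h1 := hW.comp tau1_deriv tau2_cont (K := 1) tau2_bound
  have h2 : ∀ i, ∃ D', G1 (fun z => trG f F m z i) D' := fun i =>
    ⟨_, (h1.mul (hF i)).add (((h0.sub ((hW.add (G1.const 1)).mul h1)).mul
      (G1.const (2 * m))).mul (G1.coord i))⟩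
  exact ⟨fun i => (h2 i).choose, fun i => (h2 i).choose_spec⟩

lemma tr_nonneg (hm : 0 < m) (z : Euc n) : 0 ≤ tr f m z :=
  mul_nonneg (by positivity) (tau_nonneg _)

lemma trW_eq (hm : 0 < m) (z : Euc n) : (m * (1 + ‖z‖ ^ 2)) * trW f m z
    = f z - m * (1 + ‖z‖ ^ 2) := by
  unfold trW
  have := jw_mul z
  rw [mul_sub, mul_one]
  congr 1
  calc m * (1 + ‖z‖ ^ 2) * (m⁻¹ * (f z * jw z)) = f z * ((1 + ‖z‖ ^ 2) * jw z) := by field_simp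
    _ = f z := by rw [this, mul_one]

lemma trW_pos_iff (hm : 0 < m) (z : Euc n) : 0 < trW f m z ↔ m * (1 + ‖z‖ ^ 2) < f z := by
  have h := trW_eq (f := f) hm z
  have hM : 0 < m * (1 + ‖z‖ ^ 2) := by positivity
  constructor
  · intro hh; have := mul_pos hM hh; linarith
  · intro hh
    by_contra! h2
    have := mul_nonpos_of_nonneg_of_nonpos hM.le h2
    linarith

lemma tr_le (hm : 0 < m) (z : Euc n) (h0 : 0 ≤ f z) : tr f m z ≤ f z := by
  have h := trW_eq (f := f) hm z
  have hM : 0 < m * (1 + ‖z‖ ^ 2) := by positivity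
  have h1 := mul_le_mul_of_nonneg_left (tau_le (s := trW f m z)) hM.le
  unfold tr
  rcases le_total (trW f m z) 0 with h2 | h2
  · rw [max_eq_right h2] at h1; linarith
  · rw [max_eq_left h2] at h1; linarith

lemma le_tr (hm : 0 < m) (z : Euc n) : f z - 3 * (m * (1 + ‖z‖ ^ 2)) ≤ tr f m z := by
  have h := trW_eq (f := f) hm z
  have hM : 0 < m * (1 + ‖z‖ ^ 2) := by positivity
  have h1 := mul_le_mul_of_nonneg_left (le_tau (trW f m z)) hM.le
  unfold tr
  linarith

lemma tr_zero (hm : 0 < m) {z : Euc n} (h : f z ≤ m * (1 + ‖z‖ ^ 2)) :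
    tr f m z = 0 ∧ trG f F m z = 0 := by
  have h1 : trW f m z ≤ 0 := by
    by_contra! hh; exact absurd ((trW_pos_iff hm z).1 hh) (not_lt.2 h)
  unfold tr trG
  rw [tau_of_nonpos h1, tau1_of_nonpos h1]; simp

lemma tr_pos (hm : 0 < m) {z : Euc n} (h : m * (1 + ‖z‖ ^ 2) < f z) : 0 < tr f m z :=
  mul_pos (by positivity) (tau_pos ((trW_pos_iff hm z).2 h))

lemma trG_bound (hm : 0 < m) (z : Euc n) : ‖trG f F m z‖ ≤ ‖F z‖ + 6 * m * ‖z‖ := by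
  unfold trG
  refine (norm_add_le _ _).trans (add_le_add ?_ ?_)
  · rw [norm_smul, Real.norm_of_nonneg (tau1_nonneg _)]
    exact mul_le_of_le_one_left (norm_nonneg _) (tau1_le _)
  · rw [norm_smul, Real.norm_eq_abs, abs_mul, abs_of_pos (by positivity : 0 < 2 * m)]
    have := tau_mixed (trW f m z)
    calc _ ≤ 3 * (2 * m) * ‖z‖ := by gcongr
      _ = _ := by ring

end trunc

/-! ### Truncated components and the spectral gap inequality -/

/-- Gaussian moments. -/
noncomputable def mo (n k : ℕ) : ℝ := Eg (fun z : Euc n => (1 + ‖z‖) ^ k)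

lemma one_le_mo (n k : ℕ) : 1 ≤ mo n k := by
  have := Eg_mono (PG.const (n := n) 1) (PG.w k) fun z => one_le_pow₀ (by linarith [norm_nonneg z])
  rwa [Eg_const] at this

namespace Sol

variable {n : ℕ} (T : Sol n) (m : ℝ)

/-- Truncation of the first component. -/
noncomputable def u1 : Euc n → ℝ := tr T.u m
/-- Truncation of the second component. -/
noncomputable def v1 : Euc n → ℝ := tr T.v m
/-- Gradient of the first truncation. -/
noncomputable def f1 : Euc n → Euc n := trG T.u T.F m
/-- Gradient of the second truncation. -/
noncomputable def g1 : Euc n → Euc n := trG T.v T.G m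
/-- The combination of the truncations with zero mean. -/
noncomputable def ww (z : Euc n) : ℝ := Eg (T.v1 m) * T.u1 m z - Eg (T.u1 m) * T.v1 m z
/-- The gradient of `ww`. -/
noncomputable def wG (z : Euc n) : Euc n := Eg (T.v1 m) • T.f1 m z - Eg (T.u1 m) • T.g1 m z
/-- The mean gradient. -/
noncomputable def pw : Euc n := EgV (T.wG m)
/-- The variance of the gradient. -/
noncomputable def th : ℝ := Eg fun z => ‖T.wG m z - T.pw m‖ ^ 2
/-- Half the logarithmic derivative of `H` at unit scale (under the normalization `H = 1`). -/
noncomputable def al0 : ℝ := T.pU + T.pV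
/-- The scale-invariance defect at unit scale (under the normalization `H = 1`). -/
noncomputable def de0 : ℝ := T.sR - T.al0 ^ 2 + T.q
/-- Relative growth of the second component. -/
noncomputable def xV : ℝ := T.pV - T.al0 * T.hV

lemma al0_swap : T.swap.al0 = T.al0 := add_comm _ _
lemma sR_swap : T.swap.sR = T.sR := Eg_congr fun _ => add_comm _ _
lemma de0_swap : T.swap.de0 = T.de0 := by unfold de0; rw [sR_swap, al0_swap, q_swap]
lemma ww_swap (z : Euc n) : T.swap.ww m z = - T.ww m z := by
  unfold ww; rw [neg_sub]; rfl
lemma wG_swap (z : Euc n) : T.swap.wG m z = - T.wG m z := by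
  unfold wG; rw [neg_sub]; rfl
lemma pw_swap : T.swap.pw m = - T.pw m := by
  ext i
  rw [pw, EgV_apply, PiLp.neg_apply, pw, EgV_apply, ← Eg_neg]
  exact Eg_congr fun z => by rw [wG_swap]; rfl
lemma th_swap : T.swap.th m = T.th m := by
  unfold th; refine Eg_congr fun z => ?_
  rw [wG_swap, pw_swap, neg_sub_neg, norm_sub_rev]

/-- Hypotheses for the static estimates: normalization, growth bounds, and segregation of the two
components at level `m`. -/
structure Sg : Prop where
  st : T.Stat
  pos : 0 < m
  le : m ≤ 1
  sep : ∀ z, min (T.u z) (T.v z) ≤ m * (1 + ‖z‖ ^ 2)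

variable {T m}

lemma Sg.swap (h : T.Sg m) : T.swap.Sg m :=
  ⟨h.st.swap, h.pos, h.le, fun z => by rw [min_comm]; exact h.sep z⟩

lemma Stat.hU_le (h : T.Stat) : T.hU ≤ 1 := by
  have := h.h1
  have : 0 ≤ T.hV := Eg_nonneg fun x => sq_nonneg _
  linarith

lemma Stat.hV_le (h : T.Stat) : T.hV ≤ 1 := h.swap.hU_le

lemma Stat.EF (h : T.Stat) : (Eg fun x => ‖T.F x‖ ^ 2) ≤ 1 := by
  have h1 := h.d1
  rw [T.dD_eq] at h1
  have : 0 ≤ Eg fun x => ‖T.G x‖ ^ 2 := Eg_nonneg fun x => sq_nonneg _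
  linarith [T.static_q_nonneg]

lemma Stat.EG (h : T.Stat) : (Eg fun x => ‖T.G x‖ ^ 2) ≤ 1 := h.swap.EF

lemma Stat.defect (h : T.Stat) : T.q ≤ T.de0 := by
  have h1 := T.static_cs
  have h2 : T.hH = 1 := h.h1
  rw [h2, mul_one] at h1
  unfold de0 al0; linarith

lemma Stat.de_nonneg (h : T.Stat) : 0 ≤ T.de0 := T.static_q_nonneg.trans h.defect

lemma Stat.al_le (h : T.Stat) : T.al0 - 1 ≤ T.de0 := by
  have h1 := h.defect
  have h2 := h.d1
  have h3 := T.pU_add_pV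
  unfold al0 at *; linarith

lemma Stat.al_le_two (h : T.Stat) : T.al0 ≤ 2 := by
  have h2 := h.d1
  have h3 := T.pU_add_pV
  have h4 := T.dD_eq
  have e1 : 0 ≤ Eg fun x => ‖T.F x‖ ^ 2 := Eg_nonneg fun x => sq_nonneg _
  have e2 : 0 ≤ Eg fun x => ‖T.G x‖ ^ 2 := Eg_nonneg fun x => sq_nonneg _
  unfold al0; linarith

lemma al0_nonneg : 0 ≤ T.al0 := by
  have h3 := T.pU_add_pV
  have h4 := T.dD_eq
  have e1 : 0 ≤ Eg fun x => ‖T.F x‖ ^ 2 := Eg_nonneg fun x => sq_nonneg _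
  have e2 : 0 ≤ Eg fun x => ‖T.G x‖ ^ 2 := Eg_nonneg fun x => sq_nonneg _
  unfold al0; linarith [T.static_q_nonneg]

/-- The radial derivative is close to `α` times the solution. -/
lemma Stat.radial (h : T.Stat) :
    Eg (fun z => (⟪T.F z, z⟫ - T.al0 * T.u z) ^ 2) + Eg (fun z => (⟪T.G z, z⟫ - T.al0 * T.v z) ^ 2)
      ≤ T.de0 := by
  have e1 : Eg (fun z => (⟪T.F z, z⟫ - T.al0 * T.u z) ^ 2) = Eg (fun z => ⟪T.F z, z⟫ ^ 2)
      - 2 * T.al0 * T.pU + T.al0 ^ 2 * T.hU := by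
    unfold pU hU
    rw [← Eg_const_mul, ← Eg_const_mul, ← Eg_sub (T.Fx_pg.pow 2) ((T.hu.pg.mul T.Fx_pg).const_mul _),
      ← Eg_add ((T.Fx_pg.pow 2).sub ((T.hu.pg.mul T.Fx_pg).const_mul _))
        ((T.hu.pg.pow 2).const_mul _)]
    exact Eg_congr fun z => by ring
  have e2 : Eg (fun z => (⟪T.G z, z⟫ - T.al0 * T.v z) ^ 2) = Eg (fun z => ⟪T.G z, z⟫ ^ 2)
      - 2 * T.al0 * T.pV + T.al0 ^ 2 * T.hV := by
    unfold pV hV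
    rw [← Eg_const_mul, ← Eg_const_mul, ← Eg_sub (T.Gx_pg.pow 2) ((T.hv.pg.mul T.Gx_pg).const_mul _),
      ← Eg_add ((T.Gx_pg.pow 2).sub ((T.hv.pg.mul T.Gx_pg).const_mul _))
        ((T.hv.pg.pow 2).const_mul _)]
    exact Eg_congr fun z => by ring
  have h4 : T.sR = Eg (fun x => ⟪T.F x, x⟫ ^ 2) + Eg (fun x => ⟪T.G x, x⟫ ^ 2) :=
    Eg_add (T.Fx_pg.pow 2) (T.Gx_pg.pow 2)
  have h5 : T.hV = 1 - T.hU := by linarith [h.h1]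
  have h6 : T.pV = T.al0 - T.pU := by unfold al0; ring
  rw [e1, e2, de0, h4, h5, h6]
  nlinarith [T.static_q_nonneg]

lemma Stat.xV_sq (h : T.Stat) : T.xV ^ 2 ≤ T.de0 := by
  have e : T.xV = Eg (fun z => T.v z * (⟪T.G z, z⟫ - T.al0 * T.v z)) := by
    unfold xV pV hV
    rw [← Eg_const_mul, ← Eg_sub (T.hv.pg.mul T.Gx_pg) ((T.hv.pg.pow 2).const_mul _)]
    exact Eg_congr fun z => by ring
  have h1 := Eg_cs T.hv.pg (T.Gx_pg.sub (T.hv.pg.const_mul T.al0))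
  rw [← e] at h1
  have h2 := h.radial
  have h3 : 0 ≤ Eg (fun z => (⟪T.F z, z⟫ - T.al0 * T.u z) ^ 2) := Eg_nonneg fun z => sq_nonneg _
  have h4 : 0 ≤ Eg (fun z => (⟪T.G z, z⟫ - T.al0 * T.v z) ^ 2) := Eg_nonneg fun z => sq_nonneg _
  have h5 := mul_le_of_le_one_left h4 h.hV_le
  unfold hV at h5
  linarith

namespace Sg

variable (h : T.Sg m)
include h

lemma u1G : G1 (T.u1 m) (T.f1 m) := tr_G1 T.hu h.pos
lemma v1G : G1 (T.v1 m) (T.g1 m) := tr_G1 T.hv h.pos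
lemma u1_nonneg (z : Euc n) : 0 ≤ T.u1 m z := tr_nonneg h.pos z
lemma v1_nonneg (z : Euc n) : 0 ≤ T.v1 m z := tr_nonneg h.pos z
lemma u1_le (z : Euc n) : T.u1 m z ≤ T.u z := tr_le h.pos z (T.upos z).le
lemma le_u1 (z : Euc n) : T.u z - 3 * (m * (1 + ‖z‖ ^ 2)) ≤ T.u1 m z := le_tr h.pos z
lemma wwG : G1 (T.ww m) (T.wG m) := (h.u1G.const_mul _).sub (h.v1G.const_mul _)

lemma Eu1_nonneg : 0 ≤ Eg (T.u1 m) := Eg_nonneg h.u1_nonneg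

lemma Eww : Eg (T.ww m) = 0 := by
  unfold ww
  rw [Eg_sub (h.u1G.pg.const_mul _) (h.v1G.pg.const_mul _), Eg_const_mul, Eg_const_mul]; ring

/-- The truncated components have disjoint supports. -/
lemma disj (z : Euc n) : (T.u1 m z = 0 ∧ T.f1 m z = 0) ∨ (T.v1 m z = 0 ∧ T.g1 m z = 0) := by
  rcases min_le_iff.1 (h.sep z) with h1 | h1
  · exact Or.inl (tr_zero h.pos h1)
  · exact Or.inr (tr_zero h.pos h1)

lemma ww_sq (z : Euc n) : T.ww m z ^ 2
    = Eg (T.v1 m) ^ 2 * T.u1 m z ^ 2 + Eg (T.u1 m) ^ 2 * T.v1 m z ^ 2 := by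
  unfold ww
  rcases h.disj z with ⟨h1, -⟩ | ⟨h1, -⟩ <;> rw [h1] <;> ring

lemma wG_sq (z : Euc n) : ‖T.wG m z‖ ^ 2
    = Eg (T.v1 m) ^ 2 * ‖T.f1 m z‖ ^ 2 + Eg (T.u1 m) ^ 2 * ‖T.g1 m z‖ ^ 2 := by
  unfold wG
  rcases h.disj z with ⟨-, h1⟩ | ⟨-, h1⟩ <;> rw [h1] <;>
    simp [norm_smul, mul_pow]

lemma gap : Eg (T.v1 m) ^ 2 * Eg (fun z => T.u1 m z ^ 2) + Eg (T.u1 m) ^ 2 * Eg (fun z => T.v1 m z ^ 2)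
      + 1 / 2 * T.th m
    ≤ Eg (T.v1 m) ^ 2 * Eg (fun z => ‖T.f1 m z‖ ^ 2)
      + Eg (T.u1 m) ^ 2 * Eg (fun z => ‖T.g1 m z‖ ^ 2) := by
  obtain ⟨D1, hD1⟩ := trG_G1 T.hu T.hA m
  obtain ⟨D2, hD2⟩ := trG_G1 T.hv T.hB m
  have h1 := poincare_gap h.wwG (D := fun i z => Eg (T.v1 m) • D1 i z - Eg (T.u1 m) • D2 i z)
    (fun i => ((hD1 i).const_mul _).sub ((hD2 i).const_mul _))
  rw [h.Eww, Eg_congr h.ww_sq, Eg_congr h.wG_sq,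
    Eg_add ((h.u1G.pg.pow 2).const_mul _) ((h.v1G.pg.pow 2).const_mul _),
    Eg_add (h.u1G.pgv.norm_sq.const_mul _) (h.v1G.pgv.norm_sq.const_mul _),
    Eg_const_mul, Eg_const_mul, Eg_const_mul, Eg_const_mul] at h1
  unfold th pw
  linarith

/-- Pointwise comparison of the truncated energy with the full one. -/
lemma f1_sq (z : Euc n) : ‖T.f1 m z‖ ^ 2 ≤ ‖T.F z‖ ^ 2 + m * (6 * ‖T.F z‖ ^ 2 + 42 * (1 + ‖z‖) ^ 2) := by
  have h1 : ‖T.f1 m z‖ ≤ ‖T.F z‖ + 6 * m * ‖z‖ := trG_bound h.pos z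
  have hm := h.pos
  have hm1 := h.le
  have hz := norm_nonneg z
  have hF := norm_nonneg (T.F z)
  have h2 := pow_le_pow_left₀ (norm_nonneg _) h1 2
  have h3 : m * m * ‖z‖ ^ 2 ≤ m * ‖z‖ ^ 2 := by
    have := mul_le_mul_of_nonneg_right (mul_le_of_le_one_left hm.le hm1) (sq_nonneg ‖z‖)
    exact this
  have h4 : m * (2 * (‖T.F z‖ * ‖z‖)) ≤ m * (‖T.F z‖ ^ 2 + ‖z‖ ^ 2) := by
    gcongr; nlinarith [sq_nonneg (‖T.F z‖ - ‖z‖)]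
  have h5 : m * ‖z‖ ^ 2 ≤ m * (1 + ‖z‖) ^ 2 := by gcongr; linarith
  nlinarith only [h2, h3, h4, h5]

lemma u1_sq (z : Euc n) : T.u z ^ 2 - m * (3 * (T.u z ^ 2 + (1 + ‖z‖) ^ 4)) ≤ T.u1 m z ^ 2 := by
  have h1 := h.le_u1 z
  have h2 := h.u1_le z
  have h0 := h.u1_nonneg z
  have hm := h.pos
  have hu := (T.upos z).le
  have h3 : 1 + ‖z‖ ^ 2 ≤ (1 + ‖z‖) ^ 2 := by nlinarith [norm_nonneg z]
  have h4 : T.u z * (1 + ‖z‖ ^ 2) ≤ T.u z * (1 + ‖z‖) ^ 2 := by gcongr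
  have h5 : 2 * (T.u z * (1 + ‖z‖) ^ 2) ≤ T.u z ^ 2 + (1 + ‖z‖) ^ 4 := by
    nlinarith [sq_nonneg (T.u z - (1 + ‖z‖) ^ 2)]
  have h6 := mul_le_mul_of_nonneg_left (by linarith : 2 * (T.u z * (1 + ‖z‖ ^ 2)) ≤ T.u z ^ 2 + (1 + ‖z‖) ^ 4) hm.le
  have h7 : (T.u z - T.u1 m z) * (T.u z + T.u1 m z) ≤ 3 * (m * (1 + ‖z‖ ^ 2)) * (2 * T.u z) := by
    apply mul_le_mul <;> linarith
  nlinarith only [h6, h7]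

lemma Ef1_le : Eg (fun z => ‖T.f1 m z‖ ^ 2) ≤ Eg (fun z => ‖T.F z‖ ^ 2) + m * (48 * mo n 4) := by
  have h1 := Eg_mono h.u1G.pgv.norm_sq (T.hu.pgv.norm_sq.add
    (((T.hu.pgv.norm_sq.const_mul 6).add ((PG.w 2).const_mul 42)).const_mul m)) h.f1_sq
  rw [Eg_add T.hu.pgv.norm_sq (((T.hu.pgv.norm_sq.const_mul 6).add ((PG.w 2).const_mul 42)).const_mul m),
    Eg_const_mul, Eg_add (T.hu.pgv.norm_sq.const_mul 6) ((PG.w 2).const_mul 42), Eg_const_mul,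
    Eg_const_mul] at h1
  have h2 : Eg (fun z : Euc n => (1 + ‖z‖) ^ 2) ≤ mo n 4 :=
    Eg_mono (PG.w 2) (PG.w 4) fun z => pow_le_pow_right₀ (by linarith [norm_nonneg z]) (by norm_num)
  have h3 := h.st.EF
  have h4 := one_le_mo n 4
  have hm := h.pos
  have : m * (6 * Eg (fun x => ‖T.F x‖ ^ 2) + 42 * Eg (fun z : Euc n => (1 + ‖z‖) ^ 2))
      ≤ m * (48 * mo n 4) := by gcongr; linarith
  linarith

lemma le_Eu1_sq : T.hU - m * (6 * mo n 4) ≤ Eg (fun z => T.u1 m z ^ 2) := by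
  have h1 := Eg_mono ((T.hu.pg.pow 2).sub
    ((((T.hu.pg.pow 2).add (PG.w 4)).const_mul 3).const_mul m)) (h.u1G.pg.pow 2) h.u1_sq
  rw [Eg_sub (T.hu.pg.pow 2) ((((T.hu.pg.pow 2).add (PG.w 4)).const_mul 3).const_mul m),
    Eg_const_mul, Eg_const_mul, Eg_add (T.hu.pg.pow 2) (PG.w 4)] at h1
  have h3 : Eg (fun z => T.u z ^ 2) ≤ 1 := h.st.hU_le
  have h4 := one_le_mo n 4
  have hm := h.pos
  have : m * (3 * (Eg (fun z => T.u z ^ 2) + Eg (fun z : Euc n => (1 + ‖z‖) ^ 4)))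
      ≤ m * (6 * mo n 4) := by
    have e : Eg (fun z : Euc n => (1 + ‖z‖) ^ 4) = mo n 4 := rfl
    rw [e]
    exact mul_le_mul_of_nonneg_left (by linarith) hm.le
  unfold hU
  linarith

lemma Eu1_sq_le : Eg (T.u1 m) ^ 2 ≤ T.hU :=
  (Eg_sq_le h.u1G.pg).trans (Eg_mono (h.u1G.pg.pow 2) (T.hu.pg.pow 2) fun z =>
    pow_le_pow_left₀ (h.u1_nonneg z) (h.u1_le z) 2)

lemma Eu1_le : Eg (T.u1 m) ≤ 1 := by
  have := h.Eu1_sq_le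
  have := h.st.hU_le
  nlinarith [h.Eu1_nonneg]

end Sg

lemma Stat.Eu_lower (h : T.Stat) {c : ℝ} (hc : 0 < c) (hc1 : c ≤ 1) (hU : c ≤ T.hU) :
    c ^ 2 / (4 * (cA n + 1)) ≤ Eg T.u := by
  have hA := cA_nonneg n
  set l : ℝ := 2 * (cA n + 1) / c with hl
  have hl0 : 0 < l := by positivity
  have hpt : ∀ z, T.u z ^ 2 ≤ l * T.u z + 1 / l ^ 2 * T.u z ^ 4 := by
    intro z
    have hu := T.upos z
    rcases le_total (T.u z) l with h1 | h1
    · have : 0 ≤ 1 / l ^ 2 * T.u z ^ 4 := by positivity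
      nlinarith
    · have h2 : 1 ≤ T.u z ^ 2 / l ^ 2 := by
        rw [one_le_div (by positivity)]; exact pow_le_pow_left₀ hl0.le h1 2
      calc T.u z ^ 2 ≤ T.u z ^ 2 / l ^ 2 * T.u z ^ 2 := le_mul_of_one_le_left (sq_nonneg _) h2
        _ = 1 / l ^ 2 * T.u z ^ 4 := by ring
        _ ≤ _ := by have := mul_pos hl0 hu; linarith
  have h1 := Eg_mono (T.hu.pg.pow 2) ((T.hu.pg.const_mul l).add ((T.hu.pg.pow 4).const_mul _)) hpt
  rw [Eg_add (T.hu.pg.const_mul l) ((T.hu.pg.pow 4).const_mul _), Eg_const_mul, Eg_const_mul] at h1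
  have h2 : 1 / l ^ 2 * Eg (fun z => T.u z ^ 4) ≤ c / 2 := by
    calc 1 / l ^ 2 * Eg (fun z => T.u z ^ 4) ≤ 1 / l ^ 2 * (cA n + 1) := by
          gcongr; linarith [h.u4]
      _ = c * (c / (4 * (cA n + 1))) := by rw [hl]; field_simp; norm_num
      _ ≤ c * (1 / 2) := by
          apply mul_le_mul_of_nonneg_left _ hc.le
          rw [div_le_div_iff₀ (by positivity) (by norm_num)]
          linarith
      _ = c / 2 := by ring
  have h3 : c / 2 ≤ l * Eg T.u := by
    have : T.hU = Eg (fun z => T.u z ^ 2) := rfl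
    have e : Eg (fun x => T.u x) = Eg T.u := rfl
    linarith
  have h4 : c ^ 2 / (4 * (cA n + 1)) = c / 2 / l := by rw [hl]; field_simp; norm_num
  rw [h4, div_le_iff₀ hl0]
  linarith

/-- Lower bound for the mean of a component with `E u² ≥ c`. -/
noncomputable def cE (n : ℕ) (c : ℝ) : ℝ := c ^ 2 / (8 * (cA n + 1))

lemma cE_pos (n : ℕ) {c : ℝ} (hc : 0 < c) : 0 < cE n c := by
  have := cA_nonneg n; unfold cE; positivity

lemma Sg.Eu1_lower (h : T.Sg m) {c : ℝ} (hc : 0 < c) (hc1 : c ≤ 1) (hU : c ≤ T.hU)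
    (hm : m * (3 * mo n 2) ≤ cE n c) : cE n c ≤ Eg (T.u1 m) := by
  have h1 := h.st.Eu_lower hc hc1 hU
  have h2 := Eg_mono (T.hu.pg.sub ((PG.w 2).const_mul (m * 3))) h.u1G.pg fun z => by
    have := h.le_u1 z
    have h3 : 1 + ‖z‖ ^ 2 ≤ (1 + ‖z‖) ^ 2 := by nlinarith [norm_nonneg z]
    have := mul_le_mul_of_nonneg_left h3 h.pos.le
    show T.u z - m * 3 * (1 + ‖z‖) ^ 2 ≤ T.u1 m z
    linarith
  rw [Eg_sub T.hu.pg ((PG.w 2).const_mul (m * 3)), Eg_const_mul] at h2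
  have h3 : c ^ 2 / (4 * (cA n + 1)) = 2 * cE n c := by
    have := cA_nonneg n; unfold cE; field_simp; norm_num
  have e : Eg (fun x => T.u1 m x) = Eg (T.u1 m) := rfl
  unfold mo at hm
  linarith

/-- The spectral gap inequality in terms of the growth quantities `α` and `xV`. -/
lemma Sg.gap' (h : T.Sg m) : 1 / 2 * T.th m
    ≤ (T.al0 - 1) * (Eg (T.v1 m) ^ 2 * T.hU + Eg (T.u1 m) ^ 2 * T.hV)
      + (Eg (T.u1 m) ^ 2 - Eg (T.v1 m) ^ 2) * T.xV
      + m * (54 * mo n 4) * (Eg (T.v1 m) ^ 2 + Eg (T.u1 m) ^ 2) := by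
  have hg := h.gap
  have f1 := h.Ef1_le
  have g1 : Eg (fun z => ‖T.g1 m z‖ ^ 2) ≤ Eg (fun z => ‖T.G z‖ ^ 2) + m * (48 * mo n 4) :=
    h.swap.Ef1_le
  have u1 := h.le_Eu1_sq
  have v1 : T.hV - m * (6 * mo n 4) ≤ Eg (fun z => T.v1 m z ^ 2) := h.swap.le_Eu1_sq
  have pu : Eg (fun z => ‖T.F z‖ ^ 2) ≤ T.pU := by rw [T.pU_eq]; linarith [T.static_q_nonneg]
  have pv : Eg (fun z => ‖T.G z‖ ^ 2) ≤ T.pV := by rw [T.pV_eq]; linarith [T.static_q_nonneg]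
  set a := Eg (T.v1 m)
  set b := Eg (T.u1 m)
  have hxdef : T.pV = T.al0 * T.hV + T.xV := by unfold xV; ring
  have hxdefU : T.pU = T.al0 * T.hU - T.xV := by
    have h1 : T.hU = 1 - T.hV := by linarith [h.st.h1]
    have h6 : T.pU = T.al0 - T.pV := by unfold al0; ring
    rw [h6, hxdef, h1]; ring
  -- multiply the four comparison bounds by the squared weights and sum
  have A1 := mul_le_mul_of_nonneg_left (f1.trans (add_le_add_left pu _)) (sq_nonneg a)
  have A2 := mul_le_mul_of_nonneg_left (g1.trans (add_le_add_left pv _)) (sq_nonneg b)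
  have A3 := mul_le_mul_of_nonneg_left u1 (sq_nonneg a)
  have A4 := mul_le_mul_of_nonneg_left v1 (sq_nonneg b)
  rw [hxdef] at A2
  rw [hxdefU] at A1
  linarith only [A1, A2, A3, A4, hg]

/-- If the second component is small, its relative growth is bounded below by the defect. -/
lemma Sg.lemmaV (h : T.Sg m) (hU : 1 / 2 ≤ T.hU) (hm : m * (3 * mo n 2) ≤ cE n (1 / 2))
    (hV : T.hV ≤ (cE n (1 / 2) / 2) ^ 2) :
    -T.xV ≤ 200 * mo n 4 / cE n (1 / 2) ^ 2 * (T.de0 * T.hV + m) := by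
  have hc := cE_pos n (show (0 : ℝ) < 1 / 2 by norm_num)
  set c := cE n (1 / 2) with hcdef
  have hb := h.Eu1_lower (by norm_num) (by norm_num) hU hm
  rw [← hcdef] at hb
  have hmo := one_le_mo n 4
  have hmp := h.pos
  have hVn : 0 ≤ T.hV := Eg_nonneg fun x => sq_nonneg _
  have hde := h.st.de_nonneg
  have hrhs : 0 ≤ 200 * mo n 4 / c ^ 2 * (T.de0 * T.hV + m) := by positivity
  rcases le_or_gt 0 T.xV with hx | hx
  · linarith
  have ha2 : Eg (T.v1 m) ^ 2 ≤ T.hV := h.swap.Eu1_sq_le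
  have ha0 : 0 ≤ Eg (T.v1 m) := h.swap.Eu1_nonneg
  have hg := h.gap'
  have hth : 0 ≤ T.th m := Eg_nonneg fun z => sq_nonneg _
  have hb1 := h.Eu1_le
  set a := Eg (T.v1 m)
  set b := Eg (T.u1 m)
  have hal := h.st.al_le
  have hac : a ≤ c / 2 := by
    have : a ^ 2 ≤ (c / 2) ^ 2 := ha2.trans hV
    exact le_of_sq_le_sq this (by positivity) 
  have hbb : c ^ 2 ≤ b ^ 2 := pow_le_pow_left₀ hc.le hb 2
  have hab : a ^ 2 ≤ b ^ 2 / 4 := by nlinarith only [hac, hb, ha0, hc]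
  have hb2 : b ^ 2 ≤ 1 := by nlinarith only [hb1, hb, hc]
  have B1 : (b ^ 2 - a ^ 2) * (-T.xV) ≤ (T.al0 - 1) * (a ^ 2 * T.hU + b ^ 2 * T.hV)
      + m * (54 * mo n 4) * (a ^ 2 + b ^ 2) := by
    linarith only [hg, hth]
  have hUn : 0 ≤ T.hU := Eg_nonneg fun x => sq_nonneg _
  have hU1 := h.st.hU_le
  have C1 : a ^ 2 * T.hU + b ^ 2 * T.hV ≤ 2 * T.hV := by
    have := mul_le_of_le_one_right (sq_nonneg a) hU1
    have := mul_le_of_le_one_left hVn hb2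
    linarith
  have C0 : 0 ≤ a ^ 2 * T.hU + b ^ 2 * T.hV := by positivity
  have C2 : (T.al0 - 1) * (a ^ 2 * T.hU + b ^ 2 * T.hV) ≤ T.de0 * (2 * T.hV) :=
    (mul_le_mul_of_nonneg_right hal C0).trans (mul_le_mul_of_nonneg_left C1 hde)
  have C3 : m * (54 * mo n 4) * (a ^ 2 + b ^ 2) ≤ m * (54 * mo n 4) * 2 := by
    gcongr; linarith
  have C4 : c ^ 2 * (3 / 4) * (-T.xV) ≤ (b ^ 2 - a ^ 2) * (-T.xV) := by
    apply mul_le_mul_of_nonneg_right _ (by linarith); linarith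
  have C5 : c ^ 2 * (-T.xV) ≤ 200 * mo n 4 * (T.de0 * T.hV + m) := by
    have : T.de0 * T.hV ≤ mo n 4 * (T.de0 * T.hV) := le_mul_of_one_le_left (by positivity) hmo
    have : 0 ≤ mo n 4 * (T.de0 * T.hV) := by positivity
    have : 0 ≤ m * mo n 4 := by positivity
    linarith
  rw [div_mul_eq_mul_div, le_div_iff₀ (by positivity)]
  linarith

end Sol

/-! ### Flatness and the almost monotonicity of the product of the two components -/

lemma Eg_comp_neg {n : ℕ} (f : Euc n → ℝ) : Eg (fun x => f (-x)) = Eg f := by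
  unfold Eg
  rw [integral_gam_smul, integral_gam_smul,
    ← integral_neg_eq_self (fun x : Euc n => (gw x / gZ n) • f x)]
  simp [gw]

lemma Eg_odd {n : ℕ} {f : Euc n → ℝ} (hf : ∀ x, f (-x) = -f x) : Eg f = 0 := by
  have h1 := Eg_comp_neg f
  rw [Eg_congr hf, Eg_neg] at h1
  linarith

lemma Eg_lin_sq_le {n : ℕ} (p : Euc n) : Eg (fun x => ⟪p, x⟫ ^ 2) ≤ ‖p‖ ^ 2 := by
  have h1 := poincare (G1.lin p)
  rwa [Eg_odd (fun x => inner_neg_right p x), Eg_const, zero_pow two_ne_zero, zero_add] at h1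

lemma abs_mul_abs_sub (s t : ℝ) : |(s * |s|) - (t * |t|)| ≤ |s - t| * (|s| + |t|) := by
  rcases le_total 0 s with h1 | h1 <;> rcases le_total 0 t with h2 | h2
  · rw [abs_of_nonneg h1, abs_of_nonneg h2, show s * s - t * t = (s - t) * (s + t) by ring, abs_mul,
      abs_of_nonneg (add_nonneg h1 h2)]
  · rw [abs_of_nonneg h1, abs_of_nonpos h2, abs_of_nonneg (by nlinarith), abs_of_nonneg (by linarith)]
    nlinarith
  · rw [abs_of_nonpos h1, abs_of_nonneg h2, abs_of_nonpos (by nlinarith), abs_of_nonpos (by linarith)]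
    nlinarith
  · rw [abs_of_nonpos h1, abs_of_nonpos h2, show s * -s - t * -t = -((s - t) * (s + t)) by ring,
      abs_neg, abs_mul, abs_of_nonpos (add_nonpos h1 h2)]
    apply le_of_eq; ring

namespace Sol

variable {n : ℕ} {T : Sol n} {m : ℝ}

namespace Sg

variable (h : T.Sg m)
include h

lemma pw_sq_le : ‖T.pw m‖ ^ 2 ≤ 1 + 96 * mo n 4 := by
  have hW := h.wwG.pgv
  have h1 : T.th m = Eg (fun z => ‖T.wG m z‖ ^ 2) - ‖T.pw m‖ ^ 2 := by
    unfold th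
    have e : ∀ z, ‖T.wG m z - T.pw m‖ ^ 2
        = ‖T.wG m z‖ ^ 2 - 2 * ⟪T.pw m, T.wG m z⟫ + ‖T.pw m‖ ^ 2 := fun z => by
      rw [norm_sub_sq_real, real_inner_comm]
    have hi := (PGV.const (T.pw m)).inner hW
    rw [Eg_congr e, Eg_add (hW.norm_sq.sub (hi.const_mul 2)) (PG.const _),
      Eg_sub hW.norm_sq (hi.const_mul 2), Eg_const_mul, Eg_const, ← inner_EgV _ hW]
    change _ - 2 * ⟪T.pw m, T.pw m⟫ + _ = _
    rw [real_inner_self_eq_norm_sq]; ring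
  have h2 : 0 ≤ T.th m := Eg_nonneg fun z => sq_nonneg _
  have h3 : Eg (fun z => ‖T.wG m z‖ ^ 2) ≤ 1 + 96 * mo n 4 := by
    rw [Eg_congr h.wG_sq, Eg_add (h.u1G.pgv.norm_sq.const_mul _) (h.v1G.pgv.norm_sq.const_mul _),
      Eg_const_mul, Eg_const_mul]
    have f1 := h.Ef1_le
    have g1 : Eg (fun z => ‖T.g1 m z‖ ^ 2) ≤ Eg (fun z => ‖T.G z‖ ^ 2) + m * (48 * mo n 4) :=
      h.swap.Ef1_le
    have hb : Eg (T.u1 m) ^ 2 ≤ 1 := h.Eu1_sq_le.trans h.st.hU_le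
    have ha : Eg (T.v1 m) ^ 2 ≤ 1 := h.swap.Eu1_sq_le.trans h.st.hV_le
    have hf0 : 0 ≤ Eg (fun z => ‖T.f1 m z‖ ^ 2) := Eg_nonneg fun z => sq_nonneg _
    have hg0 : 0 ≤ Eg (fun z => ‖T.g1 m z‖ ^ 2) := Eg_nonneg fun z => sq_nonneg _
    have k1 := mul_le_of_le_one_left hf0 ha
    have k2 := mul_le_of_le_one_left hg0 hb
    have hd := h.st.d1
    rw [T.dD_eq] at hd
    have hq := T.static_q_nonneg
    have hm : m * (48 * mo n 4) ≤ 48 * mo n 4 :=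
      mul_le_of_le_one_left (by linarith [one_le_mo n 4]) h.le
    linarith
  linarith

lemma flat : Eg (fun z => (T.ww m z - ⟪T.pw m, z⟫) ^ 2) ≤ T.th m := by
  have h1 := poincare (h.wwG.sub (G1.lin (T.pw m)))
  rwa [Eg_sub h.wwG.pg (G1.lin (T.pw m)).pg, h.Eww,
    Eg_odd (fun x => inner_neg_right (T.pw m) x), sub_zero, zero_pow two_ne_zero, zero_add] at h1

lemma Eww_sq : Eg (fun z => T.ww m z ^ 2) = Eg (T.v1 m) ^ 2 * Eg (fun z => T.u1 m z ^ 2)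
    + Eg (T.u1 m) ^ 2 * Eg (fun z => T.v1 m z ^ 2) := by
  rw [Eg_congr h.ww_sq,
    Eg_add ((h.u1G.pg.pow 2).const_mul _) ((h.v1G.pg.pow 2).const_mul _), Eg_const_mul, Eg_const_mul]

lemma Eu1_sq_le' : Eg (fun z => T.u1 m z ^ 2) ≤ T.hU :=
  Eg_mono (h.u1G.pg.pow 2) (T.hu.pg.pow 2) fun z =>
    pow_le_pow_left₀ (h.u1_nonneg z) (h.u1_le z) 2

lemma ww_abs (z : Euc n) : T.ww m z * |T.ww m z|
    = Eg (T.v1 m) ^ 2 * T.u1 m z ^ 2 - Eg (T.u1 m) ^ 2 * T.v1 m z ^ 2 := by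
  unfold ww
  have ha := h.Eu1_nonneg
  have hb : 0 ≤ Eg (T.v1 m) := h.swap.Eu1_nonneg
  rcases h.disj z with ⟨h1, -⟩ | ⟨h1, -⟩ <;> rw [h1]
  · rw [mul_zero, zero_sub, abs_neg, abs_of_nonneg (mul_nonneg ha (h.v1_nonneg z))]; ring
  · rw [mul_zero, sub_zero, abs_of_nonneg (mul_nonneg hb (h.u1_nonneg z))]; ring

/-- Both components carry almost the same weighted mass when `ww` is nearly linear. -/
lemma diff_sq : (Eg (T.v1 m) ^ 2 * Eg (fun z => T.u1 m z ^ 2)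
    - Eg (T.u1 m) ^ 2 * Eg (fun z => T.v1 m z ^ 2)) ^ 2 ≤ 200 * mo n 4 * T.th m := by
  set p := T.pw m
  have hl := (G1.lin p).pg
  have hw := h.wwG.pg
  have e0 : Eg (fun z => ⟪p, z⟫ * |⟪p, z⟫|) = 0 := Eg_odd fun x => by
    rw [inner_neg_right, abs_neg, neg_mul]
  have e1 : Eg (fun z => T.ww m z * |T.ww m z| - ⟪p, z⟫ * |⟪p, z⟫|)
      = Eg (T.v1 m) ^ 2 * Eg (fun z => T.u1 m z ^ 2)
        - Eg (T.u1 m) ^ 2 * Eg (fun z => T.v1 m z ^ 2) := by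
    rw [Eg_sub (hw.mul hw.abs) (hl.mul hl.abs), e0, sub_zero, Eg_congr h.ww_abs,
      Eg_sub ((h.u1G.pg.pow 2).const_mul _) ((h.v1G.pg.pow 2).const_mul _), Eg_const_mul,
      Eg_const_mul]
  have e2 : |Eg (fun z => T.ww m z * |T.ww m z| - ⟪p, z⟫ * |⟪p, z⟫|)|
      ≤ Eg (fun z => |T.ww m z - ⟪p, z⟫| * (|T.ww m z| + |⟪p, z⟫|)) :=
    (abs_Eg_le _).trans (Eg_mono ((hw.mul hw.abs).sub (hl.mul hl.abs)).abs
      ((hw.sub hl).abs.mul (hw.abs.add hl.abs)) fun z => abs_mul_abs_sub _ _)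
  have e3 := Eg_cs (hw.sub hl).abs (hw.abs.add hl.abs)
  have e4 : Eg (fun z => |T.ww m z - ⟪p, z⟫| ^ 2) ≤ T.th m := by
    rw [Eg_congr fun z => sq_abs _]; exact h.flat
  have e5 : Eg (fun z => (|T.ww m z| + |⟪p, z⟫|) ^ 2) ≤ 200 * mo n 4 := by
    have := Eg_mono ((hw.abs.add hl.abs).pow 2) (((hw.pow 2).add (hl.pow 2)).const_mul 2) fun z => by
      show (|T.ww m z| + |⟪p, z⟫|) ^ 2 ≤ 2 * (T.ww m z ^ 2 + ⟪p, z⟫ ^ 2)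
      have := sq_nonneg (|T.ww m z| - |⟪p, z⟫|)
      have := sq_abs (T.ww m z)
      have := sq_abs ⟪p, z⟫
      linarith
    rw [Eg_const_mul, Eg_add (hw.pow 2) (hl.pow 2), h.Eww_sq] at this
    have a1 := Eg_lin_sq_le p
    have a2 := h.pw_sq_le
    have hb : Eg (T.u1 m) ^ 2 ≤ 1 := h.Eu1_sq_le.trans h.st.hU_le
    have ha : Eg (T.v1 m) ^ 2 ≤ 1 := h.swap.Eu1_sq_le.trans h.st.hV_le
    have hf0 : 0 ≤ Eg (fun z => T.u1 m z ^ 2) := Eg_nonneg fun z => sq_nonneg _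
    have hg0 : 0 ≤ Eg (fun z => T.v1 m z ^ 2) := Eg_nonneg fun z => sq_nonneg _
    have k1 := mul_le_of_le_one_left hf0 ha
    have k2 := mul_le_of_le_one_left hg0 hb
    have k3 := h.Eu1_sq_le'
    have k4 : Eg (fun z => T.v1 m z ^ 2) ≤ T.hV := h.swap.Eu1_sq_le'
    have := h.st.h1
    have := one_le_mo n 4
    linarith
  rw [← e1, ← sq_abs]
  have hn : 0 ≤ Eg (fun z => |T.ww m z - ⟪p, z⟫| ^ 2) := Eg_nonneg fun z => sq_nonneg _
  calc _ ≤ _ := pow_le_pow_left₀ (abs_nonneg _) e2 2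
    _ ≤ _ := e3
    _ ≤ T.th m * (200 * mo n 4) := mul_le_mul e4 e5 (Eg_nonneg fun z => sq_nonneg _) (hn.trans e4)
    _ = _ := mul_comm _ _

lemma th_le : T.th m ≤ 2 * T.de0 + 2 * √T.de0 + m * (216 * mo n 4) := by
  have hg := h.gap'
  have hb : Eg (T.u1 m) ^ 2 ≤ 1 := h.Eu1_sq_le.trans h.st.hU_le
  have ha : Eg (T.v1 m) ^ 2 ≤ 1 := h.swap.Eu1_sq_le.trans h.st.hV_le
  have hx : |T.xV| ≤ √T.de0 := by
    rw [← Real.sqrt_sq_eq_abs]; exact Real.sqrt_le_sqrt h.st.xV_sq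
  have hU0 : 0 ≤ T.hU := Eg_nonneg fun x => sq_nonneg _
  have hV0 : 0 ≤ T.hV := Eg_nonneg fun x => sq_nonneg _
  have k1 := mul_le_of_le_one_left hU0 ha
  have k2 := mul_le_of_le_one_left hV0 hb
  have h1 := h.st.h1
  set a := Eg (T.v1 m) ^ 2
  set b := Eg (T.u1 m) ^ 2
  have a0 : 0 ≤ a := sq_nonneg _
  have b0 : 0 ≤ b := sq_nonneg _
  have c1 : (T.al0 - 1) * (a * T.hU + b * T.hV) ≤ T.de0 :=
    (mul_le_mul_of_nonneg_right h.st.al_le (by positivity)).trans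
      (mul_le_of_le_one_right h.st.de_nonneg (by linarith))
  have c2 : (b - a) * T.xV ≤ √T.de0 := by
    refine (le_abs_self _).trans ?_
    rw [abs_mul]
    exact (mul_le_of_le_one_left (abs_nonneg _) (abs_le.2 ⟨by linarith, by linarith⟩)).trans hx
  have c3 : m * (54 * mo n 4) * (a + b) ≤ m * (54 * mo n 4) * 2 := by
    have := one_le_mo n 4
    have := h.pos
    gcongr; linarith
  linarith

/-- The mean gradient is bounded below when the solution is nearly flat. -/
lemma pw_lower {c : ℝ} (hc : 0 < c) (hc1 : c ≤ 1) (hU : c ≤ T.hU) (hV : c ≤ T.hV)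
    (hm : m * (3 * mo n 2) ≤ cE n c) :
    cE n c ^ 2 * (1 - m * (12 * mo n 4)) ≤ 2 * ‖T.pw m‖ ^ 2 + 2 * T.th m := by
  have hb := h.Eu1_lower hc hc1 hU hm
  have ha : cE n c ≤ Eg (T.v1 m) := h.swap.Eu1_lower hc hc1 hV hm
  have hs := cE_pos n hc
  have hw := h.wwG.pg
  have hl := (G1.lin (T.pw m)).pg
  have e := Eg_mono (hw.pow 2) (((hl.pow 2).const_mul 2).add (((hw.sub hl).pow 2).const_mul 2))
    fun z => by
      show T.ww m z ^ 2 ≤ 2 * ⟪T.pw m, z⟫ ^ 2 + 2 * (T.ww m z - ⟪T.pw m, z⟫) ^ 2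
      linarith [sq_nonneg (T.ww m z - 2 * ⟪T.pw m, z⟫)]
  rw [Eg_add ((hl.pow 2).const_mul 2) (((hw.sub hl).pow 2).const_mul 2), Eg_const_mul, Eg_const_mul,
    h.Eww_sq] at e
  have a1 := Eg_lin_sq_le (T.pw m)
  have a2 := h.flat
  have u1 := h.le_Eu1_sq
  have v1 : T.hV - m * (6 * mo n 4) ≤ Eg (fun z => T.v1 m z ^ 2) := h.swap.le_Eu1_sq
  have hf0 : 0 ≤ Eg (fun z => T.u1 m z ^ 2) := Eg_nonneg fun z => sq_nonneg _
  have hg0 : 0 ≤ Eg (fun z => T.v1 m z ^ 2) := Eg_nonneg fun z => sq_nonneg _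
  have k1 := mul_le_mul_of_nonneg_right (pow_le_pow_left₀ hs.le ha 2) hf0
  have k2 := mul_le_mul_of_nonneg_right (pow_le_pow_left₀ hs.le hb 2) hg0
  have h1 := h.st.h1
  have k3 := mul_le_mul_of_nonneg_left (by linarith : 1 - m * (12 * mo n 4)
    ≤ Eg (fun z => T.u1 m z ^ 2) + Eg (fun z => T.v1 m z ^ 2)) (sq_nonneg (cE n c))
  linarith

/-- Lower bound for the growth exponent, up to the logarithmic derivative of `hU * hV`. -/
lemma lemmaU {c : ℝ} (hc : 0 < c) (hc1 : c ≤ 1) (hU : c ≤ T.hU) (hV : c ≤ T.hV)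
    (hm : m * (3 * mo n 2) ≤ cE n c) :
    1 - T.al0 ≤ (T.hU - T.hV) * T.xV / (2 * (T.hU * T.hV))
      + 200 * mo n 4 / (c ^ 4 * cE n c ^ 2) * (T.de0 + m) := by
  have hb := h.Eu1_lower hc hc1 hU hm
  have ha : cE n c ≤ Eg (T.v1 m) := h.swap.Eu1_lower hc hc1 hV hm
  have hs := cE_pos n hc
  have hmo := one_le_mo n 4
  have hmp := h.pos
  have hg := h.gap'
  have hd := h.diff_sq
  have hb1 : Eg (T.u1 m) ^ 2 ≤ 1 := h.Eu1_sq_le.trans h.st.hU_le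
  have ha1 : Eg (T.v1 m) ^ 2 ≤ 1 := h.swap.Eu1_sq_le.trans h.st.hV_le
  have u1 := h.le_Eu1_sq
  have v1 : T.hV - m * (6 * mo n 4) ≤ Eg (fun z => T.v1 m z ^ 2) := h.swap.le_Eu1_sq
  have u2 := h.Eu1_sq_le'
  have v2 : Eg (fun z => T.v1 m z ^ 2) ≤ T.hV := h.swap.Eu1_sq_le'
  have h1 := h.st.h1
  have hde := h.st.de_nonneg
  have hxs := h.st.xV_sq
  have hx2 : |T.xV| ≤ 2 := by
    have p1 : 0 ≤ T.pV := by
      rw [T.pV_eq]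
      exact add_nonneg (Eg_nonneg fun x => sq_nonneg _) T.static_q_nonneg
    have p2 : 0 ≤ T.pU := by
      rw [T.pU_eq]
      exact add_nonneg (Eg_nonneg fun x => sq_nonneg _) T.static_q_nonneg
    have p3 := h.st.al_le_two
    have p4 : T.pV ≤ T.al0 := by unfold al0; linarith
    have p5 := mul_le_of_le_one_right T.al0_nonneg h.st.hV_le
    have p6 : 0 ≤ T.al0 * T.hV := mul_nonneg T.al0_nonneg (hc.le.trans hV)
    unfold xV
    exact abs_le.2 ⟨by linarith, by linarith⟩
  have ha2 := pow_le_pow_left₀ hs.le ha 2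
  have hb2 := pow_le_pow_left₀ hs.le hb 2
  have hP : c ^ 2 ≤ T.hU * T.hV := by
    rw [sq]; exact mul_le_mul hU hV hc.le (hc.le.trans hU)
  have hs2 : 0 < cE n c ^ 2 := by positivity
  generalize Eg (T.v1 m) ^ 2 = a at *
  generalize Eg (T.u1 m) ^ 2 = b at *
  generalize cE n c ^ 2 = s at *
  generalize Eg (fun z => T.u1 m z ^ 2) = U1 at *
  generalize Eg (fun z => T.v1 m z ^ 2) = V1 at *
  generalize T.hU = U at *
  generalize T.hV = V at *
  generalize T.xV = x at *
  generalize T.th m = th at *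
  generalize mo n 4 = K at *
  generalize T.de0 = δ at *
  generalize T.al0 = α at *
  have hP0 : 0 < U * V := (by positivity : 0 < c ^ 2).trans_le hP
  have ha0 : 0 ≤ a := hs2.le.trans ha2
  have hb0 : 0 ≤ b := hs2.le.trans hb2
  have hL : s ≤ a * U + b * V := by
    have k1 := mul_le_mul_of_nonneg_right ha2 (hc.le.trans hU)
    have k2 := mul_le_mul_of_nonneg_right hb2 (hc.le.trans hV)
    have k3 : s * U + s * V = s := by rw [← mul_add, h1, mul_one]
    linarith
  have key : (b - a) * x = (a * U + b * V) * ((U - V) * x / (2 * (U * V)))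
      - (a * U - b * V) * x / (2 * (U * V)) := by
    have hU0 := hc.trans_le hU
    have hV0 := hc.trans_le hV
    field_simp
    linear_combination (-(a * U - b * V) * x) * h1
  have hD : |a * U - b * V| ≤ |a * U1 - b * V1| + 6 * K * m := by
    have k1 := mul_le_mul ha1 (by linarith : U - U1 ≤ m * (6 * K)) (by linarith) (by norm_num)
    have k2 := mul_le_mul hb1 (by linarith : V - V1 ≤ m * (6 * K)) (by linarith) (by norm_num)
    have k3 : 0 ≤ a * (U - U1) := mul_nonneg ha0 (by linarith)
    have k4 : 0 ≤ b * (V - V1) := mul_nonneg hb0 (by linarith)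
    have e : a * U - b * V = (a * U1 - b * V1) + (a * (U - U1) - b * (V - V1)) := by ring
    rw [e]
    refine (abs_add_le _ _).trans (add_le_add_right (abs_le.2 ⟨?_, ?_⟩) _) <;> linarith
  have hxn := abs_nonneg x
  have e1 : -((a * U - b * V) * x / (2 * (U * V)))
      ≤ (|a * U1 - b * V1| * |x| + 6 * K * m * 2) / (2 * c ^ 2) := by
    refine (neg_le_abs _).trans ?_
    rw [abs_div, abs_mul, abs_of_pos (by positivity : 0 < 2 * (U * V))]
    have k1 : |a * U - b * V| * |x| ≤ |a * U1 - b * V1| * |x| + 6 * K * m * 2 := by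
      have := mul_le_mul_of_nonneg_right hD hxn
      have := mul_le_mul_of_nonneg_left hx2 (by positivity : 0 ≤ 6 * K * m)
      linarith
    have k2 : 0 ≤ |a * U1 - b * V1| * |x| + 6 * K * m * 2 := by positivity
    exact div_le_div₀ k2 k1 (by positivity) (by linarith)
  have e2 : |a * U1 - b * V1| * |x| / (2 * c ^ 2) ≤ th / 2 + 25 * K * δ / c ^ 4 := by
    have k1 : |a * U1 - b * V1| * |x| / (2 * c ^ 2)
        ≤ (a * U1 - b * V1) ^ 2 / (400 * K) + 25 * K * x ^ 2 / c ^ 4 := by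
      have := sq_nonneg (|a * U1 - b * V1| / (20 * √K) - 5 * √K * (|x| / c ^ 2))
      have hK : √K ^ 2 = K := Real.sq_sqrt (by linarith)
      have hK0 : 0 < √K := Real.sqrt_pos.2 (by linarith)
      have q1 : (|a * U1 - b * V1| / (20 * √K)) ^ 2 = (a * U1 - b * V1) ^ 2 / (400 * K) := by
        rw [div_pow, sq_abs, mul_pow, hK]; norm_num
      have q2 : (5 * √K * (|x| / c ^ 2)) ^ 2 = 25 * K * x ^ 2 / c ^ 4 := by
        rw [mul_pow, mul_pow, hK, div_pow, sq_abs]; ring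
      have q3 : 2 * (|a * U1 - b * V1| / (20 * √K)) * (5 * √K * (|x| / c ^ 2))
          = |a * U1 - b * V1| * |x| / (2 * c ^ 2) := by field_simp; ring
      rw [sub_sq, q1, q2, q3] at this
      linarith
    have k2 : (a * U1 - b * V1) ^ 2 / (400 * K) ≤ th / 2 := by
      rw [div_le_div_iff₀ (by positivity) (by norm_num)]; linarith
    have k3 : 25 * K * x ^ 2 / c ^ 4 ≤ 25 * K * δ / c ^ 4 := by gcongr
    linarith
  have hc4 : c ^ 4 ≤ 1 := pow_le_one₀ hc.le hc1
  have e3 : 6 * K * m * 2 / (2 * c ^ 2) ≤ 6 * K * m / c ^ 4 := by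
    rw [show 6 * K * m * 2 / (2 * c ^ 2) = 6 * K * m / c ^ 2 by field_simp]
    exact div_le_div_of_nonneg_left (by positivity) (by positivity)
      (pow_le_pow_of_le_one hc.le hc1 (by norm_num))
  have e4 : 108 * K * m ≤ 108 * K * m / c ^ 4 := by
    rw [le_div_iff₀ (by positivity)]
    exact mul_le_of_le_one_right (by positivity) hc4
  have e5 : m * (54 * K) * (a + b) ≤ 108 * K * m := by
    have := mul_le_mul_of_nonneg_left (by linarith : a + b ≤ 2) (by positivity : 0 ≤ m * (54 * K))
    linarith
  rw [add_div] at e1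
  have e6 : (25 * K * δ / c ^ 4 + 6 * K * m / c ^ 4 + 108 * K * m / c ^ 4)
      ≤ 200 * K / c ^ 4 * (δ + m) := by
    rw [← add_div, ← add_div, div_mul_eq_mul_div]
    apply div_le_div_of_nonneg_right _ (by positivity)
    have : 0 ≤ K * δ := by positivity
    have : 0 ≤ K * m := by positivity
    linarith
  have e7 : (a * U + b * V) * (1 - α - (U - V) * x / (2 * (U * V))) ≤ 200 * K / c ^ 4 * (δ + m) := by
    rw [key] at hg
    linarith
  have hr : 0 ≤ 200 * K / c ^ 4 * (δ + m) := by positivity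
  rw [show 200 * K / (c ^ 4 * s) * (δ + m) = 200 * K / c ^ 4 * (δ + m) / s by field_simp]
  rcases le_or_gt (1 - α - (U - V) * x / (2 * (U * V))) 0 with h0 | h0
  · have : 0 ≤ 200 * K / c ^ 4 * (δ + m) / s := by positivity
    linarith
  · have := mul_le_mul_of_nonneg_right hL h0.le
    have : 1 - α - (U - V) * x / (2 * (U * V)) ≤ 200 * K / c ^ 4 * (δ + m) / s := by
      rw [le_div_iff₀ hs2]; linarith
    linarith

end Sg

end Sol

/-! ### Evolution in the scale: persistence of balance and almost monotonicity -/

lemma mono_Icc {f f' : ℝ → ℝ} {a b : ℝ} (ha : 0 < a) (hab : a ≤ b)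
    (hd : ∀ R, 0 < R → HasDerivAt f (f' R) R) (h0 : ∀ R ∈ Ioo a b, 0 ≤ f' R) : f a ≤ f b := by
  refine monotoneOn_of_deriv_nonneg (convex_Icc a b)
    (fun R hR => (hd R (ha.trans_le hR.1)).continuousAt.continuousWithinAt)
    (fun R hR => ?_) (fun R hR => ?_) ⟨le_rfl, hab⟩ ⟨hab, le_rfl⟩ hab
  · rw [interior_Icc] at hR
    exact (hd R (ha.trans hR.1)).differentiableAt.differentiableWithinAt
  · rw [interior_Icc] at hR
    rw [(hd R (ha.trans hR.1)).deriv]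
    exact h0 R hR

/-- The last time a continuous function is above a threshold. -/
lemma last_time {f : ℝ → ℝ} {a b c : ℝ} (hab : a ≤ b) (hf : ContinuousOn f (Icc a b)) :
    ∃ s ∈ Icc a b, min (f a) c ≤ f s ∧ ∀ r ∈ Ioc s b, f r < c := by
  by_cases h : ∃ r ∈ Icc a b, c ≤ f r
  · have hc : IsCompact (Icc a b ∩ f ⁻¹' Ici c) :=
      isCompact_Icc.of_isClosed_subset (hf.preimage_isClosed_of_isClosed isClosed_Icc isClosed_Ici)
        inter_subset_left
    obtain ⟨r, hr, hrc⟩ := h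
    obtain ⟨s, hs, hmax⟩ := hc.exists_isGreatest ⟨r, hr, hrc⟩
    refine ⟨s, hs.1, (min_le_right _ _).trans hs.2, fun t ht => ?_⟩
    by_contra hcon
    exact absurd (hmax ⟨⟨hs.1.1.trans ht.1.le, ht.2⟩, not_lt.1 hcon⟩) (not_le.2 ht.1)
  · push Not at h
    exact ⟨a, ⟨le_rfl, hab⟩, min_le_left _ _, fun r hr => h r ⟨hr.1.le, hr.2⟩⟩

namespace Sol

variable {n : ℕ} {S : Sol n}

section ident

variable (x : Euc n) {R : ℝ} (hR : 0 < R)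

lemma nrm_al0 : (S.nrm x hR).al0 = S.al x R := by
  unfold al0 al PP; rw [nrm_pU, nrm_pV]; ring

lemma nrm_de0 : (S.nrm x hR).de0 = S.de x R := by
  have := S.H_pos x R
  unfold de0 de; rw [nrm_al0, nrm_sR, nrm_q]; unfold al; field_simp

lemma nrm_xV : (S.nrm x hR).xV = S.PV x R / S.H x R - S.al x R * (S.HV x R / S.H x R) := by
  unfold xV; rw [nrm_al0, nrm_pV, nrm_hV]

end ident

/-- The logarithmic derivative of the relative mass of the second component. -/
noncomputable def XV (S : Sol n) (x : Euc n) (R : ℝ) : ℝ :=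
  S.PV x R / S.H x R - S.al x R * (S.HV x R / S.H x R)

lemma fracV_deriv (x : Euc n) {R : ℝ} (hR : 0 < R) :
    HasDerivAt (fun R => S.HV x R / S.H x R) (2 / R * S.XV x R) R := by
  refine ((S.HV_deriv x hR).div (S.H_deriv x hR) (S.H_pos x R).ne').congr_deriv ?_
  have := S.H_pos x R
  unfold XV al
  field_simp

lemma msep_deriv (x : Euc n) {R : ℝ} (hR : 0 < R) :
    HasDerivAt (fun R => msep n (S.ka x R))
      (-(2 / R * (eta n / 8 * (1 + S.al x R) * msep n (S.ka x R)))) R := by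
  have hka : HasDerivAt (S.ka x) (2 / R * ((1 + S.al x R) * S.ka x R)) R := by
    refine ((hasDerivAt_pow 2 R).mul (S.H_deriv x hR)).congr_deriv ?_
    have := S.H_pos x R
    unfold ka al
    simp only [Nat.cast_ofNat, Nat.add_one_sub_one, pow_one]
    field_simp
  have hp := S.ka_pos x hR
  have h2 := (hka.rpow_const (p := -(eta n / 8)) (Or.inl hp.ne')).const_mul (16 * kc n 0)
  refine h2.congr_deriv ?_
  unfold msep
  rw [Real.rpow_sub_one hp.ne']
  field_simp

lemma msep_anti {K1 K2 : ℝ} (h0 : 0 < K1) (h : K1 ≤ K2) : msep n K2 ≤ msep n K1 := by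
  unfold msep
  have := kc_pos n 0
  have := eta_pos n
  gcongr 16 * kc n 0 * ?_
  exact Real.rpow_le_rpow_of_nonpos h0 h (by linarith)

/-- The segregation parameter can be made as small as desired. -/
lemma msep_small (n : ℕ) {ε : ℝ} (hε : 0 < ε) : ∃ K ≥ (1 : ℝ), ∀ k ≥ K, msep n k ≤ ε := by
  have h := (tendsto_rpow_neg_atTop (y := eta n / 8) (by have := eta_pos n; linarith)).const_mul
    (16 * kc n 0)
  rw [mul_zero] at h
  obtain ⟨K, hK⟩ := (h.eventually (gt_mem_nhds hε)).exists_forall_of_atTop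
  exact ⟨max 1 K, le_max_left _ _, fun k hk => (hK k ((le_max_right _ _).trans hk)).le⟩

namespace Nice

variable (h : S.Nice) (x : Euc n)
include h

lemma sg {R : ℝ} (hR : 0 < R) (hka : 1 ≤ S.ka x R) (hm : msep n (S.ka x R) ≤ 1) :
    (S.nrm x hR).Sg (msep n (S.ka x R)) :=
  ⟨h.stat x hR, msep_pos n (S.ka_pos x hR), hm, h.nrm_sep x hR hka⟩

lemma ka_mono' {R1 R2 : ℝ} (h1 : 0 < R1) (h12 : R1 ≤ R2) : S.ka x R1 ≤ S.ka x R2 := by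
  refine le_trans ?_ (h.ka_mono x h1 h12)
  have := S.ka_pos x h1
  have : 1 ≤ R2 / R1 := by rwa [one_le_div h1]
  have : 1 ≤ (R2 / R1) ^ 2 := one_le_pow₀ this
  nlinarith

omit h in
lemma fracs {R : ℝ} : S.HU x R / S.H x R + S.HV x R / S.H x R = 1 := by
  rw [← add_div]; exact div_self (S.H_pos x R).ne'

end Nice

/-- Constant of the persistence estimate. -/
noncomputable def cP (n : ℕ) : ℝ := 200 * mo n 4 / cE n (1 / 2) ^ 2

/-- Threshold below which the persistence estimate acts. -/
noncomputable def cT (n : ℕ) : ℝ := min (1 / 2) ((cE n (1 / 2) / 2) ^ 2)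

lemma cP_pos (n : ℕ) : 0 < cP n := by
  have := cE_pos n (show (0 : ℝ) < 1 / 2 by norm_num)
  have := one_le_mo n 4
  unfold cP; positivity

lemma cT_pos (n : ℕ) : 0 < cT n := by
  have := cE_pos n (show (0 : ℝ) < 1 / 2 by norm_num)
  exact lt_min (by norm_num) (by positivity)

/-- Persistence: a component that carries a fixed share of the mass at one scale keeps a fixed
share at all larger scales. -/
lemma Nice.persistV (h : S.Nice) (x : Euc n) {r R : ℝ} (hr : 0 < r) (hrR : r ≤ R)
    (hka : 1 ≤ S.ka x r) (hm1 : msep n (S.ka x r) ≤ 1)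
    (hm2 : msep n (S.ka x r) * (3 * mo n 2) ≤ cE n (1 / 2)) :
    Real.exp (-cP n) * (min (S.HV x r / S.H x r) (cT n)
      - 8 * cP n * Real.exp (cP n) / eta n * msep n (S.ka x r)) ≤ S.HV x R / S.H x R := by
  have hcP := cP_pos n
  have heta := eta_pos n
  obtain ⟨s, hs, hsm, hlt⟩ := last_time (f := fun R => S.HV x R / S.H x R) (c := cT n) hrR
    (fun t ht => (fracV_deriv x (hr.trans_le ht.1)).continuousAt.continuousWithinAt)
  have hs0 := hr.trans_le hs.1
  set B := 8 * cP n * Real.exp (cP n) / eta n with hB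
  have hB0 : 0 < B := by positivity
  have hmono := mono_Icc (f := fun t => S.HV x t / S.H x t * Real.exp (cP n * S.NN x t)
      - B * msep n (S.ka x t)) hs0 hs.2
    (fun t ht => ((fracV_deriv x ht).mul (((S.NN_deriv x ht).const_mul (cP n)).exp)).sub
      ((msep_deriv x ht).const_mul B)) (fun t ht => ?_)
  · beta_reduce at hmono hsm
    have h0 : 0 ≤ S.NN x s := h.NN_nonneg x
    have hNR := h.nb x R (hs0.trans_le hs.2)
    have hVs : 0 < S.HV x s / S.H x s := div_pos (S.HV_pos x s) (S.H_pos x s)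
    have hVR : 0 < S.HV x R / S.H x R := div_pos (S.HV_pos x R) (S.H_pos x R)
    have e1 : S.HV x s / S.H x s ≤ S.HV x s / S.H x s * Real.exp (cP n * S.NN x s) :=
      le_mul_of_one_le_right hVs.le (Real.one_le_exp (by positivity))
    have e2 : S.HV x R / S.H x R * Real.exp (cP n * S.NN x R)
        ≤ S.HV x R / S.H x R * Real.exp (cP n) := by
      gcongr; nlinarith
    have e3 := msep_pos n (S.ka_pos x (hs0.trans_le hs.2))
    have e4 : msep n (S.ka x s) ≤ msep n (S.ka x r) :=
      msep_anti (S.ka_pos x hr) (h.ka_mono' x hr hs.1)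
    have e5 : B * msep n (S.ka x s) ≤ B * msep n (S.ka x r) := by gcongr
    have e6 : 0 ≤ B * msep n (S.ka x R) := by positivity
    rw [Real.exp_neg, inv_mul_le_iff₀ (Real.exp_pos _)]
    linarith
  · have ht0 := hs0.trans ht.1
    have hkt := h.ka_mono' x hr (hs.1.trans ht.1.le)
    have hmt : msep n (S.ka x t) ≤ msep n (S.ka x r) := msep_anti (S.ka_pos x hr) hkt
    have hmp := msep_pos n (S.ka_pos x ht0)
    have hsg := h.sg x ht0 (hka.trans hkt) (hmt.trans hm1)
    have hfr := hlt t ⟨ht.1, ht.2.le⟩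
    beta_reduce at hfr
    have hadd := fracs (S := S) x (R := t)
    have hlV := hsg.lemmaV (by
        rw [nrm_hU]; have := min_le_left (1 / 2) ((cE n (1 / 2) / 2) ^ 2); unfold cT at hfr; linarith)
      ((mul_le_mul_of_nonneg_right hmt (by have := one_le_mo n 2; positivity)).trans hm2)
      (by rw [nrm_hV]; exact hfr.le.trans (min_le_right _ _))
    rw [nrm_xV, nrm_de0, nrm_hV] at hlV
    change -S.XV x t ≤ cP n * _ at hlV
    have hVt : 0 < S.HV x t / S.H x t := div_pos (S.HV_pos x t) (S.H_pos x t)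
    have hN0 : 0 ≤ S.NN x t := h.NN_nonneg x
    have hN1 := h.nb x t ht0
    have hal := S.al_nonneg x ht0
    have hde := S.de_nonneg x ht0
    have hq : 0 ≤ S.QQ x t * S.PP x t / S.H x t ^ 2 := by
      have := S.PP_nonneg x ht0
      have := S.QQ_nonneg x t
      positivity
    have hE1 : 1 ≤ Real.exp (cP n * S.NN x t) := Real.one_le_exp (by positivity)
    have hE2 : Real.exp (cP n * S.NN x t) ≤ Real.exp (cP n) := by gcongr; nlinarith
    generalize S.HV x t / S.H x t = f at *
    generalize S.QQ x t * S.PP x t / S.H x t ^ 2 = q at *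
    generalize Real.exp (cP n * S.NN x t) = E at *
    generalize msep n (S.ka x t) = m at *
    generalize S.XV x t = X at *
    generalize S.de x t = d at *
    generalize S.al x t = a at *
    have hrw : 2 / t * X * E + f * (E * (cP n * (2 / t * (d + q))))
        - B * (-(2 / t * (eta n / 8 * (1 + a) * m)))
        = 2 / t * (E * (X + cP n * (d * f + m)) + E * f * cP n * q
          + (B * (eta n / 8) * m - E * cP n * m) + B * (eta n / 8) * a * m) := by ring
    rw [hrw]
    have hBe : B * (eta n / 8) = cP n * Real.exp (cP n) := by rw [hB]; field_simp
    rw [hBe]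
    refine mul_nonneg (by positivity) (add_nonneg (add_nonneg (add_nonneg
      (mul_nonneg (by linarith) (by linarith)) (by positivity)) ?_) (by positivity))
    have : E * (cP n * m) ≤ Real.exp (cP n) * (cP n * m) :=
      mul_le_mul_of_nonneg_right hE2 (by positivity)
    linarith

/-- Constant of the almost monotonicity formula. -/
noncomputable def cM (n : ℕ) (c : ℝ) : ℝ := 400 * mo n 4 / (c ^ 4 * cE n c ^ 2)

lemma cM_pos (n : ℕ) {c : ℝ} (hc : 0 < c) : 0 < cM n c := by
  have := cE_pos n hc
  have := one_le_mo n 4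
  unfold cM; positivity

/-- Lower bound on the growth exponent for balanced solutions. -/
lemma Nice.al_lower (h : S.Nice) (x : Euc n) {R : ℝ} (hR : 0 < R) (hka : 1 ≤ S.ka x R)
    (hm1 : msep n (S.ka x R) ≤ 1) {c : ℝ} (hc : 0 < c) (hc1 : c ≤ 1)
    (hm2 : msep n (S.ka x R) * (3 * mo n 2) ≤ cE n c)
    (hU : c ≤ S.HU x R / S.H x R) (hV : c ≤ S.HV x R / S.H x R) :
    2 * (1 - S.al x R) ≤ (S.HU x R / S.H x R - S.HV x R / S.H x R) * S.XV x R
        / (S.HU x R / S.H x R * (S.HV x R / S.H x R))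
      + cM n c * (S.de x R + msep n (S.ka x R)) := by
  have hl := (h.sg x hR hka hm1).lemmaU hc hc1 (by rwa [nrm_hU]) (by rwa [nrm_hV]) hm2
  rw [nrm_al0, nrm_hU, nrm_hV, nrm_xV, nrm_de0] at hl
  change _ ≤ _ * S.XV x R / _ + _ at hl
  have e : cM n c = 2 * (200 * mo n 4 / (c ^ 4 * cE n c ^ 2)) := by unfold cM; ring
  rw [e]
  have e2 : ∀ a b : ℝ, a / (2 * b) = a / b / 2 := fun a b => by rw [mul_comm, div_div]
  rw [e2] at hl
  linarith

/-- Almost monotonicity of `E u² E v² / R⁴` for balanced solutions. -/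
lemma Nice.acf (h : S.Nice) (x : Euc n) {r R : ℝ} (hr : 0 < r) (hrR : r ≤ R)
    (hka : 1 ≤ S.ka x r) (hm1 : msep n (S.ka x r) ≤ 1) {c : ℝ} (hc : 0 < c) (hc1 : c ≤ 1)
    (hm2 : msep n (S.ka x r) * (3 * mo n 2) ≤ cE n c)
    (hU : ∀ t ∈ Icc r R, c ≤ S.HU x t / S.H x t) (hV : ∀ t ∈ Icc r R, c ≤ S.HV x t / S.H x t) :
    Real.log (S.HU x r) + Real.log (S.HV x r) - 4 * Real.log r
      ≤ Real.log (S.HU x R) + Real.log (S.HV x R) - 4 * Real.log R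
        + cM n c * (1 + 8 / eta n) := by
  have hcM := cM_pos n hc
  have heta := eta_pos n
  have hmono := mono_Icc (f := fun t => Real.log (S.HU x t) + Real.log (S.HV x t) - 4 * Real.log t
      + cM n c * S.NN x t - cM n c * (8 / eta n) * msep n (S.ka x t)) hr hrR
    (fun t ht => ((((((S.HU_deriv x ht).log (S.HU_pos x t).ne').add
      ((S.HV_deriv x ht).log (S.HV_pos x t).ne')).sub
      ((Real.hasDerivAt_log ht.ne').const_mul 4)).add
      ((S.NN_deriv x ht).const_mul (cM n c))).sub
      ((msep_deriv x ht).const_mul (cM n c * (8 / eta n))))) (fun t ht => ?_)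
  · beta_reduce at hmono
    have h0 : 0 ≤ S.NN x r := h.NN_nonneg x
    have hNR := h.nb x R (hr.trans_le hrR)
    have hmR := msep_pos n (S.ka_pos x (hr.trans_le hrR))
    have e1 : cM n c * S.NN x R ≤ cM n c * 1 := by gcongr
    have e2 : 0 ≤ cM n c * S.NN x r := by positivity
    have e3 : 0 ≤ cM n c * (8 / eta n) * msep n (S.ka x R) := by positivity
    have e4 : cM n c * (8 / eta n) * msep n (S.ka x r) ≤ cM n c * (8 / eta n) * 1 := by gcongr
    linarith
  · have ht0 := hr.trans ht.1
    have hkt := h.ka_mono' x hr ht.1.le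
    have hmt : msep n (S.ka x t) ≤ msep n (S.ka x r) := msep_anti (S.ka_pos x hr) hkt
    have hmp := msep_pos n (S.ka_pos x ht0)
    have hl := h.al_lower x ht0 (hka.trans hkt) (hmt.trans hm1) hc hc1
      ((mul_le_mul_of_nonneg_right hmt (by have := one_le_mo n 2; positivity)).trans hm2)
      (hU t ⟨ht.1.le, ht.2.le⟩) (hV t ⟨ht.1.le, ht.2.le⟩)
    have hal := S.al_nonneg x ht0
    have hde := S.de_nonneg x ht0
    have hq : 0 ≤ S.QQ x t * S.PP x t / S.H x t ^ 2 := by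
      have := S.PP_nonneg x ht0
      have := S.QQ_nonneg x t
      positivity
    have pU := S.HU_pos x t
    have pV := S.HV_pos x t
    have pH := S.H_pos x t
    have key : S.PU x t / S.HU x t + S.PV x t / S.HV x t - 2 * S.al x t
        = (S.HU x t / S.H x t - S.HV x t / S.H x t) * S.XV x t
        / (S.HU x t / S.H x t * (S.HV x t / S.H x t)) := by
      unfold XV al PP
      have e : S.H x t = S.HU x t + S.HV x t := rfl
      rw [e] at pH ⊢
      generalize S.HU x t = a at *
      generalize S.HV x t = b at *
      field_simp
      ring
    rw [← key] at hl
    have e1 : 2 / t * S.PU x t / S.HU x t = 2 / t * (S.PU x t / S.HU x t) := by ring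
    have e2 : 2 / t * S.PV x t / S.HV x t = 2 / t * (S.PV x t / S.HV x t) := by ring
    rw [e1, e2]
    generalize S.QQ x t * S.PP x t / S.H x t ^ 2 = q at *
    generalize msep n (S.ka x t) = m at *
    generalize S.PU x t / S.HU x t = X at *
    generalize S.PV x t / S.HV x t = Y at *
    generalize S.de x t = d at *
    generalize S.al x t = a at *
    have hrw : 2 / t * X + 2 / t * Y - 4 * t⁻¹ + cM n c * (2 / t * (d + q))
        - cM n c * (8 / eta n) * (-(2 / t * (eta n / 8 * (1 + a) * m)))
        = 2 / t * ((X + Y - 2 + cM n c * (d + m)) + cM n c * q + cM n c * a * m) := by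
      field_simp; ring
    rw [hrw]
    exact mul_nonneg (by positivity) (add_nonneg (add_nonneg (by linarith) (by positivity))
      (by positivity))

end Sol

/-! ### Decay of the minority component away from the interface -/

lemma pow_convex_bound (p : ℕ) {a Y : ℝ} (ha : 0 ≤ a) (ha1 : a ≤ 1) (hY : 0 ≤ Y) :
    (1 + a * Y) ^ p ≤ 1 + a * (1 + Y) ^ p := by
  have h := (convexOn_pow (𝕜 := ℝ) p).2 (show (1 : ℝ) ∈ Ici 0 by simp)
    (show 1 + Y ∈ Ici (0 : ℝ) from add_nonneg zero_le_one hY)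
    (show 0 ≤ 1 - a by linarith) ha (by ring)
  simp only [smul_eq_mul, one_pow, mul_one] at h
  have e : 1 - a + a * (1 + Y) = 1 + a * Y := by ring
  rw [e] at h
  linarith

/-- The barrier `(A b² + |x - y|²)⁹` is almost superharmonic in `x` at scales up to `b`. -/
lemma barrier_fn (n : ℕ) {s : ℝ} (hs : 0 < s) : ∃ A > (0 : ℝ), ∀ (x y : Euc n) (r b : ℝ), 0 < r →
    r ≤ b → Eg (fun z => (A * b ^ 2 + ‖x + r • z - y‖ ^ 2) ^ 9)
      ≤ (1 + s) * (A * b ^ 2 + ‖x - y‖ ^ 2) ^ 9 := by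
  set M : ℝ := Eg fun z : Euc n => (1 + ‖z‖ ^ 2) ^ 9
  have hM : 0 ≤ M := Eg_nonneg fun z => by positivity
  have hcont : Continuous fun e : ℝ => (1 + e) ^ 9 * (1 + e * M) := by fun_prop
  have hev : ∀ᶠ e in nhds (0 : ℝ), (1 + e) ^ 9 * (1 + e * M) < 1 + s :=
    hcont.continuousAt.eventually (gt_mem_nhds (by simpa using hs))
  obtain ⟨d, hd, hdd⟩ := Metric.eventually_nhds_iff.1 hev
  set e := min 1 (d / 2) with he
  have he0 : 0 < e := lt_min one_pos (by linarith)
  have he1 : e ≤ 1 := min_le_left _ _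
  have hes : (1 + e) ^ 9 * (1 + e * M) < 1 + s := hdd (by
    rw [Real.dist_eq, sub_zero, abs_of_pos he0]
    exact (min_le_right _ _).trans_lt (by linarith))
  refine ⟨(1 + 1 / e) / e, by positivity, fun x y r b hr hb => ?_⟩
  set A := (1 + 1 / e) / e with hA
  have hA0 : 0 < A := by positivity
  set P := A * b ^ 2 + ‖x - y‖ ^ 2
  have hb0 : 0 < b := hr.trans_le hb
  have hP0 : 0 ≤ P := by positivity
  have hpt : ∀ z : Euc n, A * b ^ 2 + ‖x + r • z - y‖ ^ 2 ≤ P * (1 + e) * (1 + e * ‖z‖ ^ 2) := by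
    intro z
    have e1 : x + r • z - y = (x - y) + r • z := by abel
    have e2 : ‖x + r • z - y‖ ≤ ‖x - y‖ + r * ‖z‖ := by
      rw [e1]; refine (norm_add_le _ _).trans ?_
      rw [norm_smul, Real.norm_of_nonneg hr.le]
    have e3 : ‖x + r • z - y‖ ^ 2 ≤ (‖x - y‖ + r * ‖z‖) ^ 2 :=
      pow_le_pow_left₀ (norm_nonneg _) e2 2
    have e4 : (‖x - y‖ + r * ‖z‖) ^ 2 ≤ (1 + e) * ‖x - y‖ ^ 2 + (1 + 1 / e) * (r * ‖z‖) ^ 2 := by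
      have : 0 ≤ (e * ‖x - y‖ - r * ‖z‖) ^ 2 / e := by positivity
      have e5 : (e * ‖x - y‖ - r * ‖z‖) ^ 2 / e
          = e * ‖x - y‖ ^ 2 - 2 * ‖x - y‖ * (r * ‖z‖) + (1 / e) * (r * ‖z‖) ^ 2 := by
        field_simp; ring
      rw [e5] at this
      linarith
    have e6 : (1 + 1 / e) * (r * ‖z‖) ^ 2 ≤ (A * b ^ 2) * (e * ‖z‖ ^ 2) := by
      have : (A * b ^ 2) * (e * ‖z‖ ^ 2) = (1 + 1 / e) * (b * ‖z‖) ^ 2 := by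
        rw [hA]; field_simp
      rw [this]; gcongr
    have e7 : 0 ≤ ‖x - y‖ ^ 2 * (e * ‖z‖ ^ 2) := by positivity
    have e8 : 0 ≤ P * e * (e * ‖z‖ ^ 2) := by positivity
    have e9 : 0 ≤ e * (A * b ^ 2) := by positivity
    have hPd : P = A * b ^ 2 + ‖x - y‖ ^ 2 := rfl
    calc _ ≤ (A * b ^ 2) + ((1 + e) * ‖x - y‖ ^ 2 + (A * b ^ 2) * (e * ‖z‖ ^ 2)) := by linarith
      _ ≤ (1 + e) * P + P * (e * ‖z‖ ^ 2) + P * e * (e * ‖z‖ ^ 2) := by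
        rw [hPd] at e8 ⊢; linarith only [e7, e8, e9]
      _ = _ := by ring
  have pgn : PG fun z : Euc n => (1 + ‖z‖ ^ 2) ^ 9 :=
    ((PG.const 1).add (PG.norm_id.pow 2)).pow 9
  calc Eg (fun z => (A * b ^ 2 + ‖x + r • z - y‖ ^ 2) ^ 9)
      ≤ Eg (fun z => P ^ 9 * (1 + e) ^ 9 * (1 + e * (1 + ‖z‖ ^ 2) ^ 9)) := by
        refine Eg_mono ?_ ?_ fun z => ?_
        · have := (PGV.id (n := n)).affine (x - y) r
          have e1 : ∀ z : Euc n, x - y + r • z = x + r • z - y := fun z => by abel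
          simp only [e1] at this
          exact ((PG.const _).add this.norm_sq).pow 9
        · exact ((PG.const 1).add (pgn.const_mul e)).const_mul _
        · calc _ ≤ (P * (1 + e) * (1 + e * ‖z‖ ^ 2)) ^ 9 :=
                pow_le_pow_left₀ (by positivity) (hpt z) 9
            _ = P ^ 9 * (1 + e) ^ 9 * (1 + e * ‖z‖ ^ 2) ^ 9 := by rw [mul_pow, mul_pow]
            _ ≤ _ := by
              gcongr; exact pow_convex_bound 9 he0.le he1 (by positivity)
    _ = P ^ 9 * ((1 + e) ^ 9 * (1 + e * M)) := by
        rw [Eg_const_mul, Eg_add (PG.const 1) (pgn.const_mul e), Eg_const_mul, Eg_const, mul_assoc]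
    _ ≤ P ^ 9 * (1 + s) := by gcongr
    _ = _ := mul_comm _ _

namespace Sol

variable {n : ℕ} {S : Sol n}

/-- Where the first component is not the minority at couplings between `K` and `64 K`, the second
one grows by a definite factor when averaged. -/
lemma Nice.growth_factor (h : S.Nice) {K : ℝ} (hK : 1 ≤ K) (x : Euc n) {r : ℝ} (hr : 0 < r)
    (hka : S.ka x r = 64 * K)
    (hd : ∀ t, 0 < t → K ≤ S.ka x t → S.ka x t ≤ 64 * K → S.H x t / 4 ≤ S.HU x t) :
    (1 + eta n) * S.v x ^ 2 ≤ S.HV x r := by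
  have heta := eta_pos n
  have hr2 : 0 < r / 2 := by linarith
  have hm := mono_Icc (f := fun t => Real.log (S.HV x t) - 2 * eta n * Real.log t) hr2
    (by linarith : r / 2 ≤ r)
    (fun t ht => ((S.HV_deriv x ht).log (S.HV_pos x t).ne').sub
      ((Real.hasDerivAt_log ht.ne').const_mul _)) (fun t ht => by
      have ht0 := hr2.trans ht.1
      have hp := S.HV_pos x t
      have k1 := h.ka_le_pow x ht0 ht.2.le
      have k2 := h.ka_mono' x ht0 ht.2.le
      have k3 : K ≤ S.ka x t := by
        have : (r / t) ^ 6 ≤ 2 ^ 6 := by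
          refine pow_le_pow_left₀ (by positivity) ?_ 6
          rw [div_le_iff₀ ht0]; linarith [ht.1]
        have := mul_le_mul_of_nonneg_right this (S.ka_pos x ht0).le
        linarith
      have hg := h.growthV x ht0 (hK.trans k3) (hd t ht0 k3 (by linarith))
      have e : 2 / t * S.PV x t / S.HV x t - 2 * eta n * t⁻¹
          = 2 / t * ((S.PV x t - eta n * S.HV x t) / S.HV x t) := by field_simp
      rw [e]
      exact mul_nonneg (by positivity) (div_nonneg (by linarith) hp.le))
  beta_reduce at hm
  rw [Real.log_div hr.ne' (by norm_num)] at hm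
  have hl : 1 / 2 ≤ Real.log 2 := by have := Real.log_two_gt_d9; linarith
  have hp1 := S.HV_pos x (r / 2)
  have hv := S.sq_le_HV x hr2.le
  have h2 : (1 + eta n) * S.HV x (r / 2) ≤ S.HV x r := by
    rw [← Real.log_le_log_iff (by positivity) (S.HV_pos x r), Real.log_mul (by positivity) hp1.ne']
    have : Real.log (1 + eta n) ≤ eta n := by
      have := Real.log_le_sub_one_of_pos (show 0 < 1 + eta n by positivity); linarith
    have := mul_le_mul_of_nonneg_left hl (show 0 ≤ 2 * eta n by positivity)
    linarith only [this, hm, ‹Real.log (1 + eta n) ≤ eta n›]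
  exact (mul_le_mul_of_nonneg_left hv (by positivity)).trans h2

/-- Barrier estimate: if the first component is not the minority anywhere near `y` at fixed
couplings, then the second one is small at `y`. -/
lemma barrier (n : ℕ) {K : ℝ} (hK : 1 ≤ K) : ∃ C > (0 : ℝ), ∀ S : Sol n, S.Nice → ∀ (y : Euc n)
    (ρ : ℝ), 0 < ρ → (∀ x, ‖x - y‖ ≤ ρ / 2 → ∀ t, 0 < t → K ≤ S.ka x t → S.ka x t ≤ 64 * K →
      S.H x t / 4 ≤ S.HU x t) → S.v y ^ 2 * S.ka y ρ ^ 3 ≤ C * S.H y ρ := by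
  obtain ⟨A, hA, hbar⟩ := barrier_fn n (half_pos (eta_pos n))
  have heta := eta_pos n
  have hkc := one_le_kc n 0
  set k := kc n 0 with hk
  set L := 1024 * k * K with hL
  have hL0 : 0 < L := by positivity
  refine ⟨16 * k * 81 * 2 ^ 14 * A ^ 9 * L ^ 3 + L ^ 3, by positivity, fun S h y ρ hρ hd => ?_⟩
  have hH := S.H_pos y ρ
  have hka := S.ka_pos y hρ
  set κ := S.ka y ρ with hκ
  by_cases hsm : κ < L
  · have h1 : S.v y ^ 2 ≤ S.H y ρ :=
      (S.sq_le_HV y hρ.le).trans (by unfold H; linarith [S.HU_pos y ρ])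
    calc S.v y ^ 2 * κ ^ 3 ≤ S.H y ρ * L ^ 3 := by gcongr
      _ ≤ _ := by
        have : 0 ≤ 16 * k * 81 * 2 ^ 14 * A ^ 9 * L ^ 3 * S.H y ρ := by positivity
        linarith
  · push Not at hsm
    -- the largest scale at which points near `y` reach coupling `64 K`
    set b := ρ * (L / κ) ^ ((1 : ℝ) / 6) with hb
    have hb0 : 0 < b := mul_pos hρ (Real.rpow_pos_of_pos (by positivity) _)
    have hb6 : b ^ 6 = ρ ^ 6 * (L / κ) := by
      rw [hb, mul_pow, ← Real.rpow_natCast ((L / κ) ^ ((1 : ℝ) / 6)) 6, ← Real.rpow_mul (by positivity)]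
      norm_num
    have hscale : ∀ x, ‖x - y‖ ≤ ρ / 2 → ∀ r, 0 < r → S.ka x r = 64 * K → r ≤ b := by
      intro x hx r hr hxr
      have c1 := S.H_compare x y (ρ := ρ / 2) (by linarith) (by rwa [norm_sub_rev])
      have c2 := h.H_le_pow y (R1 := ρ / 2) (R2 := ρ) (by linarith) (by linarith)
      rw [mul_div_cancel₀ _ (two_ne_zero' ℝ)] at c1
      have c3 : (ρ / (ρ / 2)) ^ 4 = 16 := by field_simp; norm_num
      rw [c3] at c2
      have c4 : κ ≤ 16 * k * S.ka x ρ := by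
        rw [hκ]; unfold ka
        calc ρ ^ 2 * S.H y ρ ≤ ρ ^ 2 * (16 * (k * S.H x ρ)) := by gcongr; linarith
          _ = _ := by ring
      have c5 : 64 * K ≤ S.ka x ρ := by
        have : 16 * k * (64 * K) ≤ 16 * k * S.ka x ρ := by
          calc _ = L := by rw [hL]; ring
            _ ≤ _ := hsm.trans c4
        exact le_of_mul_le_mul_left this (by positivity)
      have hrρ : r ≤ ρ := by
        by_contra! hlt
        have d1 := h.ka_mono x hρ hlt.le
        have d2 : 1 < (r / ρ) ^ 2 := one_lt_pow₀ (by rwa [one_lt_div hρ]) two_ne_zero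
        have d3 := S.ka_pos x hρ
        nlinarith
      have c6 := h.ka_le_pow x hr hrρ
      rw [hxr, div_pow, div_mul_eq_mul_div, le_div_iff₀ (by positivity)] at c6
      refine le_of_pow_le_pow_left₀ (n := 6) (by norm_num) hb0.le ?_
      rw [hb6, ← mul_div_assoc, le_div_iff₀ hka]
      calc r ^ 6 * κ ≤ r ^ 6 * (16 * k * S.ka x ρ) := by gcongr
        _ = 16 * k * (S.ka x ρ * r ^ 6) := by ring
        _ ≤ 16 * k * (ρ ^ 6 * (64 * K)) := by gcongr
        _ = _ := by rw [hL]; ring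
    set ψ : Euc n → ℝ := fun x => (A * b ^ 2 + ‖x - y‖ ^ 2) ^ 9 with hψ
    have hψ0 : ∀ x, 0 < ψ x := fun x => by rw [hψ]; positivity
    have hψc : Continuous ψ := by rw [hψ]; fun_prop
    set Q := 16 * k * 81 * 2 ^ 14 * S.H y ρ / ρ ^ 18 with hQ
    have hQ0 : 0 < Q := by positivity
    have hout : ∀ x, ρ / 2 ≤ ‖x - y‖ → S.v x ^ 2 ≤ Q * ψ x := by
      intro x hx
      have d1 := h.sup_bound y x hρ
      set d := ‖x - y‖
      have hd0 : 0 < d := by linarith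
      have d2 : (1 + d / ρ) ^ 4 ≤ 81 * (d / ρ) ^ 4 := by
        calc (1 + d / ρ) ^ 4 ≤ (3 * (d / ρ)) ^ 4 := by
              gcongr
              have : 1 / 2 ≤ d / ρ := by rw [div_le_div_iff₀ (by norm_num) hρ]; linarith
              linarith
          _ = _ := by ring
      have d3 : (d / ρ) ^ 4 ≤ 2 ^ 14 * (d / ρ) ^ 18 := by
        have : 1 ≤ (2 * (d / ρ)) ^ 14 := by
          refine one_le_pow₀ ?_
          rw [← mul_div_assoc, one_le_div hρ]; linarith
        calc (d / ρ) ^ 4 ≤ (d / ρ) ^ 4 * (2 * (d / ρ)) ^ 14 :=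
              le_mul_of_one_le_right (by positivity) this
          _ = _ := by ring
      have d4 : d ^ 18 ≤ ψ x := by
        calc d ^ 18 = (d ^ 2) ^ 9 := by ring
          _ ≤ _ := by
            rw [hψ]
            refine pow_le_pow_left₀ (by positivity) ?_ 9
            have : 0 ≤ A * b ^ 2 := by positivity
            linarith
      calc S.v x ^ 2 ≤ 16 * k * (1 + d / ρ) ^ 4 * S.H y ρ := by nlinarith [sq_nonneg (S.u x)]
        _ ≤ 16 * k * (81 * (2 ^ 14 * (d / ρ) ^ 18)) * S.H y ρ := by
          gcongr; exact d2.trans (by gcongr)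
        _ = Q * d ^ 18 := by rw [hQ, div_pow]; ring
        _ ≤ _ := by gcongr
    have hvc : Continuous S.v := S.hv.pg.cont
    obtain ⟨z, hz, hmax⟩ := (isCompact_closedBall y (ρ / 2)).exists_isMaxOn
      ⟨y, mem_closedBall_self (by linarith)⟩
      ((hvc.pow 2).div hψc fun x => (hψ0 x).ne').continuousOn
    set m := S.v z ^ 2 / ψ z with hm
    have hin : ∀ x, ‖x - y‖ ≤ ρ / 2 → S.v x ^ 2 ≤ m * ψ x := by
      intro x hx
      have := hmax (show x ∈ closedBall y (ρ / 2) by rwa [mem_closedBall, dist_eq_norm])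
      exact (div_le_iff₀ (hψ0 x)).1 this
    have hz' : ‖z - y‖ ≤ ρ / 2 := by rwa [mem_closedBall, dist_eq_norm] at hz
    have hmQ : m ≤ Q := by
      by_contra! hlt
      have hall : ∀ x, S.v x ^ 2 ≤ m * ψ x := by
        intro x
        rcases le_total ‖x - y‖ (ρ / 2) with hx | hx
        · exact hin x hx
        · exact (hout x hx).trans (mul_le_mul_of_nonneg_right hlt.le (hψ0 x).le)
      obtain ⟨r, hr, hzr⟩ := h.exists_ka z (K := 64 * K) (by linarith)
      have f1 := h.growth_factor hK z hr hzr (hd z hz')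
      have f2 := hbar z y r b hr (hscale z hz' r hr hzr)
      have hpg : PG fun w : Euc n => ψ (z + r • w) := by
        have := (PGV.id (n := n)).affine (z - y) r
        have e1 : ∀ w : Euc n, z - y + r • w = z + r • w - y := fun w => by abel
        simp only [e1] at this
        exact ((PG.const _).add this.norm_sq).pow 9
      have f3 : S.HV z r ≤ m * Eg (fun w => ψ (z + r • w)) := by
        unfold HV
        rw [← Eg_const_mul]
        exact Eg_mono ((S.hv.pg.pow 2).affine z r) (hpg.const_mul m) fun w => hall _
      have f4 : m * Eg (fun w => ψ (z + r • w)) ≤ m * ((1 + eta n / 2) * ψ z) :=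
        mul_le_mul_of_nonneg_left f2 (hQ0.trans hlt).le
      have f5 : m * ψ z = S.v z ^ 2 := by rw [hm, div_mul_cancel₀ _ (hψ0 z).ne']
      have f6 : 0 < S.v z ^ 2 := pow_pos (S.vpos z) 2
      have f7 : m * ((1 + eta n / 2) * ψ z) = (1 + eta n / 2) * S.v z ^ 2 := by rw [← f5]; ring
      have f8 := mul_pos heta f6
      linarith only [f1, f3, f4, f7, f8]
    have hy := hin y (by rw [sub_self, norm_zero]; linarith)
    have hψy : ψ y = A ^ 9 * (b ^ 6) ^ 3 := by
      rw [hψ]; simp only [sub_self, norm_zero]; ring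
    have hfin : Q * ψ y * κ ^ 3 = 16 * k * 81 * 2 ^ 14 * A ^ 9 * L ^ 3 * S.H y ρ := by
      rw [hψy, hb6, hQ]; field_simp
    have hv2 : S.v y ^ 2 ≤ Q * ψ y := hy.trans (mul_le_mul_of_nonneg_right hmQ (hψ0 y).le)
    calc S.v y ^ 2 * κ ^ 3 ≤ Q * ψ y * κ ^ 3 := by gcongr
      _ = _ := hfin
      _ ≤ _ := by
        have : 0 ≤ L ^ 3 * S.H y ρ := by positivity
        linarith

lemma Eu_deriv (x : Euc n) {r : ℝ} (hr : 0 < r) : HasDerivAt (fun r => Eg fun z => S.u (x + r • z))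
    (S.k * r * Eg fun z => S.u (x + r • z) * S.v (x + r • z) ^ 2) r := by
  refine (S.hu.hasDerivAt_av x r).congr_deriv ?_
  have h := (S.aff x hr one_pos).weak (G1.const 1)
  have e1 : Eg (fun z => 1 * ⟪(S.aff x hr one_pos).F z, z⟫) = r * Eg fun z => ⟪S.F (x + r • z), z⟫ := by
    rw [← Eg_const_mul]
    refine Eg_congr fun z => ?_
    change 1 * ⟪(1 * r) • S.F (x + r • z), z⟫ = _
    rw [inner_smul_left, RCLike.conj_to_real]; ring
  rw [e1] at h
  have e2 : Eg (fun z => ⟪(0 : Euc n), (S.aff x hr one_pos).F z⟫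
      + 1 * ((S.aff x hr one_pos).k * (S.aff x hr one_pos).u z * (S.aff x hr one_pos).v z ^ 2))
      = r * (S.k * r * Eg fun z => S.u (x + r • z) * S.v (x + r • z) ^ 2) := by
    rw [← mul_assoc, ← Eg_const_mul]
    refine Eg_congr fun z => ?_
    change ⟪(0 : Euc n), _⟫ + 1 * (S.k * r ^ 2 / 1 ^ 2 * (1 * S.u (x + r • z)) * (1 * S.v (x + r • z)) ^ 2)
      = _
    rw [inner_zero_left]; ring
  exact mul_left_cancel₀ hr.ne' (h.trans e2)

/-- At small coupling, the value at the centre controls the mean. -/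
lemma Stat.Eu_le {T : Sol n} (h : T.Stat) : Eg T.u ≤ T.u 0 + T.k * cA n := by
  have hA := cA_nonneg n
  have hmono : MonotoneOn (fun r => T.k * cA n * r - Eg fun z => T.u (0 + r • z)) (Icc 0 1) := by
    refine monotoneOn_of_deriv_nonneg (convex_Icc 0 1) (fun r _ => ?_) (fun r _ => ?_) (fun r hr => ?_)
    · exact (((hasDerivAt_id r).const_mul (T.k * cA n)).sub
        (T.hu.hasDerivAt_av 0 r)).continuousAt.continuousWithinAt
    · exact (((hasDerivAt_id r).const_mul (T.k * cA n)).sub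
        (T.hu.hasDerivAt_av 0 r)).differentiableAt.differentiableWithinAt
    · rw [interior_Icc] at hr
      have hd : HasDerivAt (fun r => T.k * cA n * r - Eg fun z => T.u (0 + r • z)) _ r :=
        ((hasDerivAt_id r).const_mul (T.k * cA n)).sub (Eu_deriv 0 hr.1)
      rw [hd.deriv, mul_one, sub_nonneg, mul_assoc]
      have hk := T.hk
      gcongr
      calc r * Eg (fun z => T.u (0 + r • z) * T.v (0 + r • z) ^ 2)
          ≤ 1 * Eg (fun z => T.u (0 + r • z) * T.v (0 + r • z) ^ 2) := by
            gcongr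
            · exact Eg_nonneg fun z => mul_nonneg (T.upos _).le (sq_nonneg _)
            · exact hr.2.le
        _ ≤ _ := by
            rw [one_mul]; unfold cA; rw [← Eg_const_mul]
            refine Eg_mono (((T.hu.pg.mul (T.hv.pg.pow 2))).affine 0 r) ((PG.w 8).const_mul _)
              fun z => ?_
            have h1 := h.sup (0 + r • z)
            have h2 : ‖(0 : Euc n) + r • z‖ ≤ ‖z‖ := by
              rw [zero_add, norm_smul, Real.norm_of_nonneg hr.1.le]
              exact mul_le_of_le_one_left (norm_nonneg _) hr.2.le
            have hkc := one_le_kc n 0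
            have h3 : 16 * kc n 0 * (1 + ‖(0 : Euc n) + r • z‖) ^ 4 ≤ 16 * kc n 0 * (1 + ‖z‖) ^ 4 := by
              gcongr
            have h4 : 1 ≤ 16 * kc n 0 * (1 + ‖z‖) ^ 4 := by
              have : 1 ≤ (1 + ‖z‖) ^ 4 := one_le_pow₀ (by linarith [norm_nonneg z])
              nlinarith
            have hu := T.upos (0 + r • z)
            have e : (16 * kc n 0) ^ 2 * (1 + ‖z‖) ^ 8 = (16 * kc n 0 * (1 + ‖z‖) ^ 4) ^ 2 := by ring
            rw [e]
            generalize 16 * kc n 0 * (1 + ‖z‖) ^ 4 = P at *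
            generalize T.u (0 + r • z) = a at *
            generalize T.v (0 + r • z) = c at *
            have h5 : a ^ 2 ≤ P := by nlinarith [sq_nonneg c]
            have h6 : c ^ 2 ≤ P := by nlinarith [sq_nonneg a]
            have h7 : a ≤ P := by nlinarith
            calc a * c ^ 2 ≤ P * P := by gcongr
              _ = _ := by ring
  have h1 := hmono ⟨le_rfl, zero_le_one⟩ ⟨zero_le_one, le_rfl⟩ zero_le_one
  simp only [zero_smul, add_zero, mul_zero, zero_sub, mul_one, one_smul, zero_add, Eg_const] at h1
  linarith

/-- The coupling at which values on the interface are comparable with `√H`. -/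
noncomputable def k0 (n : ℕ) : ℝ := 1 / (32 * (cA n + 1) ^ 2)

lemma k0_pos (n : ℕ) : 0 < k0 n := by have := cA_nonneg n; unfold k0; positivity

lemma Stat.interface_lower {T : Sol n} (h : T.Stat) (hk : T.k = k0 n) (hU : 1 / 2 ≤ T.hU) :
    1 / (32 * (cA n + 1)) ≤ T.u 0 := by
  have h1 := h.Eu_le
  have h2 := h.Eu_lower (by norm_num) (by norm_num) hU
  have hA := cA_nonneg n
  have h3 : k0 n * cA n ≤ 1 / (32 * (cA n + 1)) := by
    unfold k0
    rw [div_mul_eq_mul_div, div_le_div_iff₀ (by positivity) (by positivity)]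
    nlinarith
  have h4 : (1 / 2 : ℝ) ^ 2 / (4 * (cA n + 1)) = 2 * (1 / (32 * (cA n + 1))) := by field_simp; norm_num
  rw [hk] at h1
  linarith

lemma interface_lower_gen {S : Sol n} (h : S.Nice) (y : Euc n) {r : ℝ} (hr : 0 < r)
    (hka : S.ka y r = k0 n) (huv : S.u y = S.v y) :
    1 / (32 * (cA n + 1)) ≤ 1 / √(S.H y r) * S.u y := by
  have hs := h.stat y hr
  have hk := nrm_k y hr h
  rcases le_total (1 / 2) (S.nrm y hr).hU with hc | hc
  · have := hs.interface_lower (hk.trans hka) hc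
    rwa [nrm_u, smul_zero, add_zero] at this
  · have h1 := hs.h1
    have := hs.swap.interface_lower (hk.trans hka) (show 1 / 2 ≤ (S.nrm y hr).hV by linarith)
    change _ ≤ (S.nrm y hr).v 0 at this
    rwa [nrm_v, smul_zero, add_zero, ← huv] at this

/-- Nondegeneracy at interface points. -/
lemma Nice.interface_bound (h : S.Nice) (y : Euc n) (huv : S.u y = S.v y) {R : ℝ} (hR : 0 < R)
    (hka : k0 n ≤ S.ka y R) :
    S.H y R ≤ (32 * (cA n + 1) / k0 n) ^ 2 * (S.v y ^ 2 * S.ka y R ^ 2) := by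
  obtain ⟨r, hr, hkr⟩ := h.exists_ka y (k0_pos n)
  have hk0 := k0_pos n
  have hA := cA_nonneg n
  have hrR : r ≤ R := by
    by_contra! hlt
    have d1 := h.ka_mono y hR hlt.le
    have d2 : 1 < (r / R) ^ 2 := one_lt_pow₀ (by rwa [one_lt_div hR]) two_ne_zero
    have d3 := S.ka_pos y hR
    nlinarith
  have h1 := interface_lower_gen h y hr hkr huv
  have hH := S.H_pos y r
  have hsH := Real.sqrt_pos.2 hH
  have h2 : √(S.H y r) ≤ 32 * (cA n + 1) * S.v y := by
    rw [one_div_mul_eq_div, div_le_div_iff₀ (by positivity) hsH, huv] at h1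
    linarith
  have h3 : S.H y r ≤ (32 * (cA n + 1) * S.v y) ^ 2 := by
    rw [← Real.sq_sqrt hH.le]; exact pow_le_pow_left₀ hsH.le h2 2
  have h4 := h.H_le_pow y hr hrR
  have h5 := h.ka_mono y hr hrR
  rw [hkr] at h5
  have h6 : (R / r) ^ 4 ≤ (S.ka y R / k0 n) ^ 2 := by
    calc (R / r) ^ 4 = ((R / r) ^ 2) ^ 2 := by ring
      _ ≤ _ := by
        refine pow_le_pow_left₀ (by positivity) ?_ 2
        rw [le_div_iff₀ hk0]; exact h5
  calc S.H y R ≤ (S.ka y R / k0 n) ^ 2 * (32 * (cA n + 1) * S.v y) ^ 2 := by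
        refine h4.trans ?_; gcongr
    _ = _ := by field_simp

end Sol

/-! ### Interface points see both components -/

lemma Eg_cont_base {n : ℕ} {f : Euc n → ℝ} (hf : PG f) (r : ℝ) :
    Continuous fun x : Euc n => Eg fun y => f (x + r • y) := by
  obtain ⟨C, k, hC, hk⟩ := hf.two
  rw [continuous_iff_continuousAt]
  intro x0
  refine continuousAt_of_dominated
    (bound := fun y => C * (1 + 1 + |r|) ^ k * ((1 + (‖x0‖ + 1)) ^ k * (1 + ‖y‖) ^ k)) ?_ ?_ ?_ ?_
  · exact Filter.Eventually.of_forall fun x => (hf.affine x r).1.aestronglyMeasurable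
  · filter_upwards [ball_mem_nhds x0 one_pos] with x hx
    refine Filter.Eventually.of_forall fun y => ?_
    have h1 := hk 1 r x y
    rw [one_smul, abs_one] at h1
    have h2 : ‖x‖ ≤ ‖x0‖ + 1 := by
      have h3 : ‖x - x0‖ < 1 := by rwa [mem_ball, dist_eq_norm] at hx
      have := norm_le_norm_add_norm_sub' x x0
      linarith
    rw [Real.norm_eq_abs]
    refine h1.trans ?_
    gcongr
  · exact ((gam_moment n k).const_mul _).const_mul _
  · exact Filter.Eventually.of_forall fun y =>
      (hf.1.comp (by fun_prop : Continuous fun x : Euc n => x + r • y)).continuousAt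

namespace Sol
variable {n : ℕ} {S : Sol n}

lemma HU_cont_base (S : Sol n) (r : ℝ) : Continuous fun x => S.HU x r := Eg_cont_base (S.hu.pg.pow 2) r

lemma HV_cont_base (S : Sol n) (r : ℝ) : Continuous fun x => S.HV x r := Eg_cont_base (S.hv.pg.pow 2) r

lemma ka_cont_base (S : Sol n) (r : ℝ) : Continuous fun x => S.ka x r :=
  continuous_const.mul ((S.HU_cont_base r).add (S.HV_cont_base r))

lemma Nice.fibre (h : S.Nice) (x : Euc n) {K : ℝ} {a b : ℝ} (ha : 0 < a) (hb : 0 < b)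
    (ha1 : K ≤ S.ka x a) (ha2 : S.ka x a ≤ 64 * K) (hb1 : K ≤ S.ka x b) (hb2 : S.ka x b ≤ 64 * K)
    (h1 : S.HU x a ≤ S.HV x a) (h2 : S.HV x b ≤ S.HU x b) :
    ∃ r > 0, K ≤ S.ka x r ∧ S.ka x r ≤ 64 * K ∧ S.HU x r = S.HV x r := by
  have hpos : ∀ t ∈ uIcc a b, 0 < t := fun t ht => (lt_min ha hb).trans_le ht.1
  have hc : ContinuousOn (fun t => S.HU x t - S.HV x t) (uIcc a b) := fun t ht =>
    ((S.HU_deriv x (hpos t ht)).sub (S.HV_deriv x (hpos t ht))).continuousAt.continuousWithinAt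
  have h0 : (0 : ℝ) ∈ uIcc (S.HU x a - S.HV x a) (S.HU x b - S.HV x b) := by
    rw [uIcc_of_le (by linarith)]
    exact ⟨by linarith, by linarith⟩
  obtain ⟨r, hr, hr0⟩ := intermediate_value_uIcc hc h0
  have hr' := hpos r hr
  refine ⟨r, hr', ?_, ?_, sub_eq_zero.1 hr0⟩
  · have := h.ka_mono' x (lt_min ha hb) hr.1
    rcases min_choice a b with e | e <;> rw [e] at this <;> linarith
  · have := h.ka_mono' x hr' hr.2
    rcases max_choice a b with e | e <;> rw [e] at this <;> linarith

/-- Over a ball, either both components balance at some point at coupling of order `K`, or the same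
component dominates everywhere. -/
lemma Nice.dichotomy (h : S.Nice) {K : ℝ} (hK : 0 < K) (y : Euc n) (ρ : ℝ) :
    (∃ x r, ‖x - y‖ ≤ ρ ∧ 0 < r ∧ K ≤ S.ka x r ∧ S.ka x r ≤ 64 * K ∧ S.HU x r = S.HV x r) ∨
    (∀ x, ‖x - y‖ ≤ ρ → ∀ t, 0 < t → K ≤ S.ka x t → S.ka x t ≤ 64 * K → S.HV x t ≤ S.HU x t) ∨
    (∀ x, ‖x - y‖ ≤ ρ → ∀ t, 0 < t → K ≤ S.ka x t → S.ka x t ≤ 64 * K → S.HU x t ≤ S.HV x t) := by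
  by_contra! hcon
  obtain ⟨hne, ⟨x1, hx1, t1, ht1, h11, h12, h13⟩, ⟨x2, hx2, t2, ht2, h21, h22, h23⟩⟩ := hcon
  have hfib : ∀ x, ‖x - y‖ ≤ ρ → ∀ a b, 0 < a → 0 < b → K ≤ S.ka x a → S.ka x a ≤ 64 * K →
      K ≤ S.ka x b → S.ka x b ≤ 64 * K → S.HU x a ≤ S.HV x a → S.HV x b ≤ S.HU x b → False := by
    intro x hx a b ha hb a1 a2 b1 b2 c1 c2
    obtain ⟨r, hr, k1, k2, k3⟩ := h.fibre x ha hb a1 a2 b1 b2 c1 c2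
    exact hne x r hx hr k1 k2 k3
  set U := {x | ∃ t, 0 < t ∧ (K < S.ka x t ∧ S.ka x t < 64 * K) ∧ S.HV x t < S.HU x t} with hU
  set V := {x | ∃ t, 0 < t ∧ (K < S.ka x t ∧ S.ka x t < 64 * K) ∧ S.HU x t < S.HV x t} with hV
  have hUo : IsOpen U := by
    have : U = ⋃ t : ℝ, {x | 0 < t ∧ (K < S.ka x t ∧ S.ka x t < 64 * K) ∧ S.HV x t < S.HU x t} := by
      ext x; simp [hU]
    rw [this]
    exact isOpen_iUnion fun t => isOpen_const.inter
      (((isOpen_lt continuous_const (S.ka_cont_base t)).inter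
        (isOpen_lt (S.ka_cont_base t) continuous_const)).inter
        (isOpen_lt (S.HV_cont_base t) (S.HU_cont_base t)))
  have hVo : IsOpen V := by
    have : V = ⋃ t : ℝ, {x | 0 < t ∧ (K < S.ka x t ∧ S.ka x t < 64 * K) ∧ S.HU x t < S.HV x t} := by
      ext x; simp [hV]
    rw [this]
    exact isOpen_iUnion fun t => isOpen_const.inter
      (((isOpen_lt continuous_const (S.ka_cont_base t)).inter
        (isOpen_lt (S.ka_cont_base t) continuous_const)).inter
        (isOpen_lt (S.HU_cont_base t) (S.HV_cont_base t)))
  have hpre : IsPreconnected (closedBall y ρ) := (convex_closedBall y ρ).isPreconnected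
  have hmem : ∀ x, x ∈ closedBall y ρ ↔ ‖x - y‖ ≤ ρ := fun x => by rw [mem_closedBall, dist_eq_norm]
  have hex : ∀ x, ‖x - y‖ ≤ ρ → ∃ t, 0 < t ∧ K < S.ka x t ∧ S.ka x t < 64 * K ∧
      S.HU x t ≠ S.HV x t := by
    intro x hx
    obtain ⟨t, ht, hk⟩ := h.exists_ka x (K := 8 * K) (by linarith)
    exact ⟨t, ht, by linarith, by linarith, hne x t hx ht (by linarith) (by linarith)⟩
  obtain ⟨x, hx, hxU, hxV⟩ := hpre U V hUo hVo (fun x hx => by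
      obtain ⟨t, ht, k1, k2, k3⟩ := hex x ((hmem x).1 hx)
      rcases lt_or_gt_of_ne k3 with k | k
      · exact Or.inr ⟨t, ht, ⟨k1, k2⟩, k⟩
      · exact Or.inl ⟨t, ht, ⟨k1, k2⟩, k⟩)
    ⟨x2, (hmem _).2 hx2, by
      obtain ⟨t, ht, k1, k2, k3⟩ := hex x2 hx2
      rcases lt_or_gt_of_ne k3 with k | k
      · exact (hfib x2 hx2 t t2 ht ht2 k1.le k2.le h21 h22 k.le h23.le).elim
      · exact ⟨t, ht, ⟨k1, k2⟩, k⟩⟩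
    ⟨x1, (hmem _).2 hx1, by
      obtain ⟨t, ht, k1, k2, k3⟩ := hex x1 hx1
      rcases lt_or_gt_of_ne k3 with k | k
      · exact ⟨t, ht, ⟨k1, k2⟩, k⟩
      · exact (hfib x1 hx1 t1 t ht1 ht h11 h12 k1.le k2.le h13.le k.le).elim⟩
  obtain ⟨a, ha, ⟨a1, a2⟩, a3⟩ := hxU
  obtain ⟨b, hb, ⟨b1, b2⟩, b3⟩ := hxV
  exact hfib x ((hmem x).1 hx) b a hb ha b1.le b2.le a1.le a2.le b3.le a3.le

/-- Two phases: the components meet somewhere. -/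
lemma Nice.exists_interface (h : S.Nice) : ∃ y, S.u y = S.v y := by
  by_contra! hne
  have key : ∀ S : Sol n, S.Nice → (∀ x, S.v x < S.u x) → False := by
    intro S h hlt
    obtain ⟨C, hC, hb⟩ := barrier n le_rfl
    have hHU : ∀ x t, S.HV x t ≤ S.HU x t := fun x t =>
      Eg_mono ((S.hv.pg.pow 2).affine x t) ((S.hu.pg.pow 2).affine x t) fun z =>
        pow_le_pow_left₀ (S.vpos _).le (hlt _).le 2
    have h1 : ∀ ρ > 0, S.v 0 ^ 2 * S.ka 0 ρ ^ 3 ≤ C * S.H 0 ρ := fun ρ hρ =>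
      hb S h 0 ρ hρ fun x _ t _ _ _ => by
        have := hHU x t
        have := S.HV_pos x t
        unfold H; linarith
    have hv := pow_pos (S.vpos 0) 2
    set a := S.v 0 ^ 2 with ha
    have h2 : ∀ ρ > 0, a * ρ ^ 6 * a ^ 2 ≤ C := by
      intro ρ hρ
      have g1 := h1 ρ hρ
      have g2 : a ≤ S.H 0 ρ := (S.sq_le_HV 0 hρ.le).trans (by unfold H; linarith [S.HU_pos 0 ρ])
      have g3 := S.H_pos 0 ρ
      unfold ka at g1
      generalize S.H 0 ρ = b at *
      have g4 : (a * ρ ^ 6 * b ^ 2) * b ≤ C * b := by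
        calc _ = a * (ρ ^ 2 * b) ^ 3 := by ring
          _ ≤ _ := g1
      have g5 := le_of_mul_le_mul_right g4 g3
      refine le_trans ?_ g5
      gcongr
    have h3 := h2 (1 + C / a ^ 3) (by positivity)
    have h4 : 1 + C / a ^ 3 ≤ (1 + C / a ^ 3) ^ 6 :=
      le_self_pow₀ (le_add_of_nonneg_right (by positivity)) (by norm_num)
    have h5 : a * (1 + C / a ^ 3) * a ^ 2 = a ^ 3 + C := by field_simp
    have h6 : a * (1 + C / a ^ 3) * a ^ 2 ≤ a * (1 + C / a ^ 3) ^ 6 * a ^ 2 := by gcongr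
    have h7 := pow_pos hv 3
    linarith
  have hpre : IsPreconnected (univ : Set (Euc n)) := isPreconnected_univ
  have hcu : Continuous S.u := S.hu.pg.cont
  have hcv : Continuous S.v := S.hv.pg.cont
  rcases lt_or_gt_of_ne (hne 0) with h0 | h0
  · refine key S.swap h.swap fun x => ?_
    change S.u x < S.v x
    by_contra! hx
    obtain ⟨z, _, hz⟩ := hpre.intermediate_value₂ (mem_univ 0) (mem_univ x) hcu.continuousOn
      hcv.continuousOn h0.le hx
    exact hne z hz
  · refine key S h fun x => ?_
    by_contra! hx
    obtain ⟨z, _, hz⟩ := hpre.intermediate_value₂ (mem_univ 0) (mem_univ x) hcv.continuousOn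
      hcu.continuousOn h0.le hx
    exact hne z hz.symm

lemma Nice.H_center (h : S.Nice) {x y : Euc n} {R : ℝ} (hR : 0 < R) (hx : ‖x - y‖ ≤ R / 4) :
    S.H y R ≤ 256 * kc n 0 * S.H x (R / 2) := by
  have h1 := H_compare (S := S) x y (ρ := R / 4) (by linarith) (by rwa [norm_sub_rev])
  have h2 := h.H_le_pow y (R1 := R / 4) (R2 := R) (by linarith) (by linarith)
  rw [show 2 * (R / 4) = R / 2 by ring] at h1
  rw [show R / (R / 4) = 4 by field_simp] at h2
  linarith

/-- Both components carry a fixed share of the mass around an interface point. -/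
lemma balanced (n : ℕ) : ∃ K ≥ (1 : ℝ), ∃ c > (0 : ℝ), c ≤ 1 ∧ ∀ S : Sol n, S.Nice → ∀ y, S.u y = S.v y →
    ∀ R > 0, K ≤ S.ka y R → c ≤ S.HU y R / S.H y R ∧ c ≤ S.HV y R / S.H y R := by
  have hcP := cP_pos n
  have hcT := cT_pos n
  have heta := eta_pos n
  have hmo := one_le_mo n 2
  have hcE := cE_pos n (c := 1 / 2) (by norm_num)
  have hkc := one_le_kc n 0
  have hA := cA_nonneg n
  have hk0 := k0_pos n
  set ε := min 1 (min (cE n (1 / 2) / (3 * mo n 2)) (cT n / 2 / (8 * cP n * Real.exp (cP n) / eta n)))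
  have hε : 0 < ε := by
    refine lt_min one_pos (lt_min ?_ ?_) <;> positivity
  obtain ⟨K1, hK1, hms⟩ := msep_small n hε
  obtain ⟨C, hC, hbar⟩ := barrier n hK1
  set C' := (32 * (cA n + 1) / k0 n) ^ 2 with hC'
  have hC'0 : 0 < C' := by positivity
  set Kb := 1 + 64 * 1024 * kc n 0 * K1 + 64 * (C * C') + 64 * k0 n with hKb
  have hK1' : 0 < K1 := one_pos.trans_le hK1
  have p1 : 0 < kc n 0 * K1 := by positivity
  have p2 : 0 < C * C' := by positivity
  set c0 := Real.exp (-cP n) * (cT n / 2) with hc0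
  have hc00 : 0 < c0 := by positivity
  have half : ∀ S : Sol n, S.Nice → ∀ y : Euc n, ∀ R > 0, Kb ≤ S.ka y R → ∀ x r, ‖x - y‖ ≤ R / 4 → 0 < r →
      K1 ≤ S.ka x r → S.ka x r ≤ 64 * K1 → S.HU x r = S.HV x r →
      c0 / (256 * kc n 0 ^ 2) ≤ S.HV y R / S.H y R := by
    intro S h y R hR hka x r hx hr k1 k2 heq
    have hHc := h.H_center hR hx
    have hrR : r ≤ R / 2 := by
      by_contra! hlt
      have g1 := h.ka_mono' x (half_pos hR) hlt.le
      have g2 : S.ka y R ≤ 1024 * kc n 0 * S.ka x (R / 2) := by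
        unfold ka
        calc R ^ 2 * S.H y R ≤ R ^ 2 * (256 * kc n 0 * S.H x (R / 2)) := by gcongr
          _ = _ := by ring
      have g3 : 1024 * kc n 0 * S.ka x (R / 2) ≤ 1024 * kc n 0 * (64 * K1) := by
        gcongr; exact g1.trans k2
      linarith
    have hmsk := hms _ k1
    have hm1 : msep n (S.ka x r) ≤ 1 := hmsk.trans (min_le_left _ _)
    have hm2 : msep n (S.ka x r) * (3 * mo n 2) ≤ cE n (1 / 2) := by
      rw [← le_div_iff₀ (by positivity)]
      exact hmsk.trans ((min_le_right _ _).trans (min_le_left _ _))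
    have hm3 : 8 * cP n * Real.exp (cP n) / eta n * msep n (S.ka x r) ≤ cT n / 2 := by
      rw [mul_comm, ← le_div_iff₀ (by positivity)]
      exact hmsk.trans ((min_le_right _ _).trans (min_le_right _ _))
    have hp := h.persistV x hr hrR (hK1.trans k1) hm1 hm2
    have hh : S.HV x r / S.H x r = 1 / 2 := by
      have := S.HV_pos x r
      unfold H; rw [heq, div_eq_div_iff (by positivity) (by norm_num)]; ring
    have hT : cT n ≤ 1 / 2 := min_le_left _ _
    rw [hh, min_eq_right hT] at hp
    have hp' : c0 ≤ S.HV x (R / 2) / S.H x (R / 2) := by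
      refine le_trans ?_ hp
      rw [hc0]; gcongr; linarith
    have hHx := S.H_pos x (R / 2)
    have hHy := S.H_pos y R
    rw [le_div_iff₀ hHx] at hp'
    have hcomp := HV_compare (S := S) y x (ρ := R / 2) (half_pos hR) (by linarith)
    rw [mul_div_cancel₀ _ (two_ne_zero)] at hcomp
    rw [div_le_div_iff₀ (by positivity) hHy]
    calc c0 * S.H y R ≤ c0 * (256 * kc n 0 * S.H x (R / 2)) := by gcongr
      _ = 256 * kc n 0 * (c0 * S.H x (R / 2)) := by ring
      _ ≤ 256 * kc n 0 * (kc n 0 * S.HV y R) :=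
          mul_le_mul_of_nonneg_left (hp'.trans hcomp) (by positivity)
      _ = _ := by ring
  have nodom : ∀ S : Sol n, S.Nice → ∀ y, S.u y = S.v y → ∀ R > 0, Kb ≤ S.ka y R →
      (∀ x, ‖x - y‖ ≤ R / 4 → ∀ t, 0 < t → K1 ≤ S.ka x t → S.ka x t ≤ 64 * K1 → S.HV x t ≤ S.HU x t) →
      False := by
    intro S h y huv R hR hka hdom
    have hR2 : 0 < R / 2 := half_pos hR
    have g1 := hbar S h y (R / 2) hR2 fun x hx t ht t1 t2 => by
      have := hdom x (by linarith) t ht t1 t2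
      have := S.HV_pos x t
      unfold H; linarith
    have g2 := h.ka_le_pow y hR2 (R2 := R) (by linarith)
    rw [show R / (R / 2) = 2 by field_simp] at g2
    have g3 : k0 n ≤ S.ka y (R / 2) := by linarith
    have g4 := h.interface_bound y huv hR2 g3
    have g5 := S.ka_pos y hR2
    have g6 := pow_pos (S.vpos y) 2
    rw [← hC'] at g4
    have g7 : S.ka y (R / 2) ≤ C * C' := by
      generalize S.ka y (R / 2) = k at *
      generalize S.v y ^ 2 = a at *
      have : (a * k ^ 2) * k ≤ (a * k ^ 2) * (C * C') := by
        calc (a * k ^ 2) * k = a * k ^ 3 := by ring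
          _ ≤ C * S.H y (R / 2) := g1
          _ ≤ C * (C' * (a * k ^ 2)) := by gcongr
          _ = _ := by ring
      exact le_of_mul_le_mul_left this (by positivity)
    linarith
  have hT : cT n ≤ 1 / 2 := min_le_left _ _
  refine ⟨Kb, by linarith, c0 / (256 * kc n 0 ^ 2), by positivity, ?_, ?_⟩
  · rw [div_le_one (by positivity)]
    have e1 : Real.exp (-cP n) ≤ 1 := Real.exp_le_one_iff.2 (by linarith)
    have : c0 ≤ 1 * (cT n / 2) := by rw [hc0]; gcongr
    nlinarith
  intro S h y huv R hR hka
  rcases h.dichotomy hK1' y (R / 4) with ⟨x, r, hx, hr, k1, k2, k3⟩ | hd | hd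
  · refine ⟨?_, half S h y R hR hka x r hx hr k1 k2 k3⟩
    have := half S.swap h.swap y R hR (by rwa [ka_swap]) x r hx hr (by rwa [ka_swap])
      (by rwa [ka_swap]) k3.symm
    rwa [H_swap] at this
  · exact (nodom S h y huv R hR hka hd).elim
  · refine (nodom S.swap h.swap y huv.symm R hR (by rwa [ka_swap]) fun x hx t ht t1 t2 => ?_).elim
    rw [ka_swap] at t1 t2
    exact hd x hx t ht t1 t2

end Sol

/-! ### Quadratic growth of `H` and flatness at large scales -/

namespace Sol
variable {n : ℕ} {S : Sol n}

/-- Large coupling makes the separation parameter as small as needed. -/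
lemma acf_start (n : ℕ) {c : ℝ} (hc : 0 < c) : ∃ K ≥ (1 : ℝ), ∀ k ≥ K, msep n k ≤ 1 ∧
    msep n k * (3 * mo n 2) ≤ cE n c := by
  have hmo := one_le_mo n 2
  have hcE := cE_pos n hc
  obtain ⟨K, hK, h⟩ := msep_small n (ε := min 1 (cE n c / (3 * mo n 2))) (by positivity)
  refine ⟨K, hK, fun k hk => ⟨(h k hk).trans (min_le_left _ _), ?_⟩⟩
  rw [← le_div_iff₀ (by positivity)]
  exact (h k hk).trans (min_le_right _ _)

/-- `H` grows at least quadratically, uniformly in the base point. -/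
lemma Nice.lower (h : S.Nice) : ∃ c > 0, ∀ y : Euc n, ∀ R > 0, c * R ^ 2 ≤ S.H y R := by
  obtain ⟨y1, hy1⟩ := h.exists_interface
  obtain ⟨K, hK, c, hc, hc1, hbal⟩ := balanced n
  obtain ⟨K', hK', hms⟩ := acf_start n hc
  obtain ⟨r1, hr1, hkr⟩ := h.exists_ka y1 (K := max K K') (by positivity)
  have hkc := one_le_kc n 0
  have hb : ∀ t ≥ r1, c ≤ S.HU y1 t / S.H y1 t ∧ c ≤ S.HV y1 t / S.H y1 t := fun t ht =>
    hbal S h y1 hy1 t (hr1.trans_le ht) (by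
      have := h.ka_mono' y1 hr1 ht
      rw [hkr] at this
      exact (le_max_left _ _).trans this)
  obtain ⟨m1, m2⟩ := hms (S.ka y1 r1) (by rw [hkr]; exact le_max_right _ _)
  set L := Real.log (S.HU y1 r1) + Real.log (S.HV y1 r1) - 4 * Real.log r1
    - cM n c * (1 + 8 / eta n) with hL
  have hlow : ∀ R ≥ r1, Real.exp (L / 2) * R ^ 2 ≤ S.H y1 R := by
    intro R hR
    have hR0 := hr1.trans_le hR
    have hk1 : 1 ≤ S.ka y1 r1 := by rw [hkr]; exact hK.trans (le_max_left _ _)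
    have h1 := h.acf y1 hr1 hR hk1 m1 hc hc1 m2
      (fun t ht => (hb t ht.1).1) (fun t ht => (hb t ht.1).2)
    have hUp := S.HU_pos y1 R
    have hVp := S.HV_pos y1 R
    have h2 : Real.log (S.HU y1 R) ≤ Real.log (S.H y1 R) :=
      Real.log_le_log hUp (by unfold H; linarith)
    have h3 : Real.log (S.HV y1 R) ≤ Real.log (S.H y1 R) :=
      Real.log_le_log hVp (by unfold H; linarith)
    have h4 : L / 2 + 2 * Real.log R ≤ Real.log (S.H y1 R) := by linarith
    have h5 := Real.exp_le_exp.2 h4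
    rw [Real.exp_log (S.H_pos y1 R), Real.exp_add, mul_comm 2, Real.exp_mul, Real.exp_log hR0] at h5
    exact_mod_cast h5
  refine ⟨Real.exp (L / 2) / (4 * kc n 0 * Real.exp 1), by positivity, fun y R hR => ?_⟩
  set R' := max R (2 * (r1 + ‖y1 - y‖)) with hR'
  have g1 : R ≤ R' := le_max_left _ _
  have g2 : r1 + ‖y1 - y‖ ≤ R' / 2 := by
    have := le_max_right R (2 * (r1 + ‖y1 - y‖)); linarith
  have hn0 := norm_nonneg (y1 - y)
  have g3 := hlow (R' / 2) (by linarith)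
  have hR'0 : 0 < R' := hR.trans_le g1
  have g4 := H_compare (S := S) y y1 (ρ := R' / 2) (by linarith) (by linarith)
  rw [mul_div_cancel₀ _ (two_ne_zero)] at g4
  have g5 := h.H_div_sq_le y hR g1
  rw [div_mul_eq_mul_div, div_le_iff₀ (by positivity)]
  have g6 : Real.exp (L / 2) / (4 * kc n 0) ≤ S.H y R' / R' ^ 2 := by
    rw [div_le_div_iff₀ (by positivity) (by positivity)]
    nlinarith only [g3, g4]
  have g7 := g6.trans g5
  rw [div_le_iff₀ (by positivity)] at g7
  calc Real.exp (L / 2) * R ^ 2 ≤ Real.exp 1 * (S.H y R / R ^ 2) * (4 * kc n 0) * R ^ 2 := by gcongr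
    _ = _ := by field_simp

/-- Uniform large-scale control: `c1 R² ≤ H` everywhere, and around interface points at scales beyond
`Rb` also `H ≤ C2 R²` and both components have a share `c` of the mass. -/
structure Glob (S : Sol n) (c1 C2 c Rb : ℝ) : Prop where
  nice : S.Nice
  c1pos : 0 < c1
  C2pos : 0 < C2
  cpos : 0 < c
  c_le : c ≤ 1
  Rb1 : 1 ≤ Rb
  lower : ∀ (y : Euc n) (R : ℝ), 0 < R → c1 * R ^ 2 ≤ S.H y R
  upper : ∀ (y : Euc n), S.u y = S.v y → ∀ R, Rb ≤ R → S.H y R ≤ C2 * R ^ 2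
  balU : ∀ (y : Euc n), S.u y = S.v y → ∀ R, Rb ≤ R → c ≤ S.HU y R / S.H y R
  balV : ∀ (y : Euc n), S.u y = S.v y → ∀ R, Rb ≤ R → c ≤ S.HV y R / S.H y R

variable {c1 C2 c Rb : ℝ}

lemma Glob.swap (g : S.Glob c1 C2 c Rb) : S.swap.Glob c1 C2 c Rb where
  nice := g.nice.swap
  c1pos := g.c1pos
  C2pos := g.C2pos
  cpos := g.cpos
  c_le := g.c_le
  Rb1 := g.Rb1
  lower y R hR := by rw [H_swap]; exact g.lower y R hR
  upper y hy R hR := by rw [H_swap]; exact g.upper y hy.symm R hR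
  balU y hy R hR := by rw [H_swap]; exact g.balV y hy.symm R hR
  balV y hy R hR := by rw [H_swap]; exact g.balU y hy.symm R hR

lemma ka_large {c1 : ℝ} (hc1 : 0 < c1)
    (hl : ∀ (y : Euc n) (R : ℝ), 0 < R → c1 * R ^ 2 ≤ S.H y R) {K : ℝ} (hK : 0 < K) (y : Euc n) {R : ℝ}
    (hR : 1 + K / c1 ≤ R) : K ≤ S.ka y R := by
  have hp : 0 < K / c1 := by positivity
  have hR0 : 0 < R := by linarith
  have h1 := hl y R hR0
  have h2 : K ≤ c1 * R := by rw [mul_comm, ← div_le_iff₀ hc1]; linarith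
  have h3 : R ≤ R ^ 4 := le_self_pow₀ (by linarith) (by norm_num)
  unfold ka
  calc K ≤ c1 * R ^ 4 := h2.trans (by gcongr)
    _ = R ^ 2 * (c1 * R ^ 2) := by ring
    _ ≤ _ := by gcongr

lemma Glob.msep_small (g : S.Glob c1 C2 c Rb) {ε : ℝ} (hε : 0 < ε) : ∃ R1 ≥ Rb, ∀ y : Euc n, ∀ R ≥ R1,
    1 ≤ S.ka y R ∧ msep n (S.ka y R) ≤ ε := by
  obtain ⟨K, hK, h⟩ := Sol.msep_small n hε
  refine ⟨max Rb (1 + K / c1), le_max_left _ _, fun y R hR => ?_⟩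
  have := ka_large g.c1pos g.lower (one_pos.trans_le hK) y ((le_max_right _ _).trans hR)
  exact ⟨hK.trans this, h _ this⟩

lemma exists_glob (h : S.Nice) {C : ℝ} (hC : 0 < C) (hup : ∀ R, 1 ≤ R → S.H 0 R ≤ C * R ^ 2) :
    ∃ c1 C2 c Rb, S.Glob c1 C2 c Rb := by
  obtain ⟨c1, hc1, hl⟩ := h.lower
  obtain ⟨K, hK, c, hc, hc1', hbal⟩ := balanced n
  obtain ⟨K', hK', hms⟩ := acf_start n hc
  have hkc := one_le_kc n 0
  have hlarge : ∀ y R, 1 + max K K' / c1 ≤ R → max K K' ≤ S.ka y R := fun y R hR =>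
    ka_large hc1 hl (by positivity) y hR
  have hp : 0 < max K K' / c1 := by positivity
  set Cst := cM n c * (1 + 8 / eta n) with hCst
  refine ⟨c1, 4 * kc n 0 * C * Real.exp (Cst / 2) / c, c, 1 + max K K' / c1, h, hc1, by positivity, hc, hc1',
    by linarith, hl, ?_, fun y hy R hR => ?_, fun y hy R hR => ?_⟩
  · intro y hy R hR
    have hR0 : 0 < R := by linarith
    have hka := hlarge y R hR
    obtain ⟨m1, m2⟩ := hms _ ((le_max_right _ _).trans hka)
    set R' := max R ‖y‖ with hR'
    have hRR : R ≤ R' := le_max_left _ _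
    have hR'0 : 0 < R' := hR0.trans_le hRR
    have hb : ∀ t ≥ R, c ≤ S.HU y t / S.H y t ∧ c ≤ S.HV y t / S.H y t := fun t ht =>
      hbal S h y hy t (hR0.trans_le ht) ((le_max_left _ _).trans (hlarge y t (hR.trans ht)))
    have h1 := h.acf y hR0 hRR (hK.trans ((le_max_left _ _).trans hka)) m1 hc hc1' m2
      (fun t ht => (hb t ht.1).1) (fun t ht => (hb t ht.1).2)
    have hUp := S.HU_pos y R'
    have hVp := S.HV_pos y R'
    have g1 : S.H y R' ≤ 4 * kc n 0 * C * R' ^ 2 := by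
      have a1 := H_compare (S := S) 0 y hR'0 (by rw [sub_zero]; exact le_max_right _ _)
      have a2 := hup (2 * R') (by linarith)
      calc S.H y R' ≤ kc n 0 * (C * (2 * R') ^ 2) := by refine a1.trans ?_; gcongr
        _ = _ := by ring
    have e1 : Real.log (4 * kc n 0 * C * R' ^ 2) = Real.log (4 * kc n 0 * C) + 2 * Real.log R' := by
      rw [Real.log_mul (by positivity) (by positivity), Real.log_pow]; norm_num
    have h2 : Real.log (S.HU y R') ≤ Real.log (4 * kc n 0 * C * R' ^ 2) :=
      Real.log_le_log hUp (le_trans (by unfold H; linarith) g1)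
    have h3 : Real.log (S.HV y R') ≤ Real.log (4 * kc n 0 * C * R' ^ 2) :=
      Real.log_le_log hVp (le_trans (by unfold H; linarith) g1)
    have hH := S.H_pos y R
    obtain ⟨b1, b2⟩ := hb R le_rfl
    rw [le_div_iff₀ hH] at b1 b2
    have h4 := Real.log_le_log (by positivity) b1
    have h5 := Real.log_le_log (by positivity) b2
    rw [Real.log_mul hc.ne' hH.ne'] at h4 h5
    have h6 : Real.log (S.H y R) ≤ Real.log (4 * kc n 0 * C) + Cst / 2 - Real.log c + 2 * Real.log R := by
      linarith
    have h7 : 4 * kc n 0 * C * Real.exp (Cst / 2) / c * R ^ 2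
        = Real.exp (Real.log (4 * kc n 0 * C) + Cst / 2 - Real.log c + 2 * Real.log R) := by
      rw [Real.exp_add, Real.exp_sub, Real.exp_add, Real.exp_log (by positivity), Real.exp_log hc,
        mul_comm 2, Real.exp_mul, Real.exp_log hR0]
      norm_cast
    rw [h7, ← Real.exp_log hH]
    exact Real.exp_le_exp.2 h6
  · exact (hbal S h y hy R (by linarith) ((le_max_left _ _).trans (hlarge y R hR))).1
  · exact (hbal S h y hy R (by linarith) ((le_max_left _ _).trans (hlarge y R hR))).2

/-- Where the frequency hardly changes, some intermediate scale has small defect. -/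
lemma exists_small_de (S : Sol n) (y : Euc n) {a b τ : ℝ} (ha : 0 < a) (hab : a ≤ b)
    (hN : S.NN y b - S.NN y a < 2 * τ * (Real.log b - Real.log a)) : ∃ R ∈ Icc a b, S.de y R ≤ τ := by
  by_contra! hcon
  have hd : ∀ R > 0, HasDerivAt (fun R => S.NN y R - 2 * τ * Real.log R)
      (2 / R * (S.de y R + S.QQ y R * S.PP y R / S.H y R ^ 2) - 2 * τ * R⁻¹) R := fun R hR =>
    (S.NN_deriv y hR).sub ((Real.hasDerivAt_log hR.ne').const_mul _)
  have hm : MonotoneOn (fun R => S.NN y R - 2 * τ * Real.log R) (Icc a b) := by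
    refine monotoneOn_of_deriv_nonneg (convex_Icc a b)
      (fun R hR => (hd R (ha.trans_le hR.1)).continuousAt.continuousWithinAt)
      (fun R hR => ?_) (fun R hR => ?_)
    · rw [interior_Icc] at hR
      exact (hd R (ha.trans hR.1)).differentiableAt.differentiableWithinAt
    · rw [interior_Icc] at hR
      have hR0 := ha.trans hR.1
      rw [(hd R hR0).deriv]
      have h1 := hcon R ⟨hR.1.le, hR.2.le⟩
      have h2 : 0 ≤ S.QQ y R * S.PP y R / S.H y R ^ 2 :=
        div_nonneg (mul_nonneg (S.QQ_nonneg y R) (S.PP_nonneg y hR0)) (sq_nonneg _)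
      have e : 2 / R * (S.de y R + S.QQ y R * S.PP y R / S.H y R ^ 2) - 2 * τ * R⁻¹
          = 2 / R * (S.de y R + S.QQ y R * S.PP y R / S.H y R ^ 2 - τ) := by ring
      rw [e]
      exact mul_nonneg (by positivity) (by linarith)
  have := hm ⟨le_rfl, hab⟩ ⟨hab, le_rfl⟩ hab
  beta_reduce at this
  linarith

/-- At large scales around interface points the solution is nearly scale invariant. -/
lemma Glob.flat (g : S.Glob c1 C2 c Rb) {σ : ℝ} (hσ : 0 < σ) : ∃ Rs ≥ Rb, ∀ y, S.u y = S.v y →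
    ∀ R ≥ Rs, ∃ R' ∈ Icc R (2 * R), S.de y R' ≤ σ ∧ msep n (S.ka y R') ≤ σ ∧ 1 ≤ S.ka y R' := by
  have h := g.nice
  have hc := g.cpos
  have hcM := cM_pos n hc
  have hmo := one_le_mo n 2
  have hcE := cE_pos n hc
  set B := 1 / c ^ 2 + 2 * cM n c + 1 with hB
  have hB0 : 0 < B := by positivity
  set τ := min 1 ((σ / B) ^ 2) with hτ
  have hτ0 : 0 < τ := by positivity
  have hτ1 : τ ≤ 1 := min_le_left _ _
  set ε := min (min 1 σ) (min τ (cE n c / (3 * mo n 2))) with hε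
  have hε0 : 0 < ε := by positivity
  obtain ⟨R1, hR1, hm⟩ := g.msep_small hε0
  have hRb := g.Rb1
  have hR10 : 0 < R1 := by linarith
  have hexp : 1 ≤ Real.exp (1 / τ) := Real.one_le_exp (by positivity)
  have hle : R1 ≤ R1 * Real.exp (1 / τ) := le_mul_of_one_le_right hR10.le hexp
  refine ⟨R1 * Real.exp (1 / τ), hR1.le.trans hle, fun y hy R hR => ?_⟩
  have hRpos : 0 < R := hR10.trans_le (hle.trans hR)
  obtain ⟨Rst, hRst, hde⟩ := S.exists_small_de y (τ := τ) hR10 hle (by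
    have a1 := h.nb y (R1 * Real.exp (1 / τ)) (by positivity)
    have a2 := h.NN_nonneg y (R := R1)
    rw [Real.log_mul hR10.ne' (Real.exp_pos _).ne', Real.log_exp]
    have : 2 * τ * (Real.log R1 + 1 / τ - Real.log R1) = 2 := by field_simp; ring
    linarith)
  have hR0 : 0 < Rst := hR10.trans_le hRst.1
  obtain ⟨k1, k2⟩ := hm y Rst hRst.1
  have m1 : msep n (S.ka y Rst) ≤ 1 := k2.trans ((min_le_left _ _).trans (min_le_left _ _))
  have m2 : msep n (S.ka y Rst) ≤ τ := k2.trans ((min_le_right _ _).trans (min_le_left _ _))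
  have m3 : msep n (S.ka y Rst) * (3 * mo n 2) ≤ cE n c := by
    rw [← le_div_iff₀ (by positivity)]
    exact k2.trans ((min_le_right _ _).trans (min_le_right _ _))
  have hbRst : Rb ≤ Rst := hR1.le.trans hRst.1
  have bU := g.balU y hy Rst hbRst
  have bV := g.balV y hy Rst hbRst
  have hal := h.al_lower y hR0 k1 m1 hc g.c_le m3 bU bV
  have hXV : S.XV y Rst ^ 2 ≤ S.de y Rst := by
    have := (h.stat y hR0).xV_sq
    rwa [nrm_xV, nrm_de0] at this
  have hXa : |S.XV y Rst| ≤ √τ := by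
    rw [← Real.sqrt_sq_eq_abs]; exact Real.sqrt_le_sqrt (hXV.trans hde)
  have hfr := Nice.fracs (S := S) y (R := Rst)
  have hfirst : (S.HU y Rst / S.H y Rst - S.HV y Rst / S.H y Rst) * S.XV y Rst /
      (S.HU y Rst / S.H y Rst * (S.HV y Rst / S.H y Rst)) ≤ √τ / c ^ 2 := by
    generalize S.HU y Rst / S.H y Rst = a at *
    generalize S.HV y Rst / S.H y Rst = b at *
    generalize S.XV y Rst = X at *
    have e1 : (a - b) * X ≤ √τ := by
      refine (le_abs_self _).trans ?_
      rw [abs_mul]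
      have : |a - b| ≤ 1 := by rw [abs_le]; constructor <;> linarith
      calc |a - b| * |X| ≤ 1 * √τ := by gcongr
        _ = _ := one_mul _
    have e2 : c ^ 2 ≤ a * b := by rw [sq]; gcongr; linarith
    have e3 : 0 < a * b := lt_of_lt_of_le (by positivity) e2
    calc (a - b) * X / (a * b) ≤ √τ / (a * b) := by gcongr
      _ ≤ _ := by gcongr
  have hsq : √τ ≤ σ / B := by
    rw [← Real.sqrt_sq (by positivity : 0 ≤ σ / B)]; exact Real.sqrt_le_sqrt (min_le_right _ _)
  have hτs : τ ≤ √τ := by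
    rw [Real.le_sqrt hτ0.le hτ0.le]; nlinarith
  have hN : 1 - σ ≤ S.NN y Rst := by
    have q1 := S.al_eq y hR0
    have q2 := S.QQ_div_le_de y hR0
    have q3 : cM n c * (S.de y Rst + msep n (S.ka y Rst)) ≤ cM n c * (√τ + √τ) := by
      gcongr
      · exact hde.trans hτs
      · exact m2.trans hτs
    have q4 : √τ * B ≤ σ := by rwa [← le_div_iff₀ hB0]
    have q5 : √τ * B = √τ / c ^ 2 + cM n c * (√τ + √τ) + √τ := by rw [hB]; ring
    have q6 := Real.sqrt_nonneg τ
    have q7 : 0 ≤ √τ / c ^ 2 := by positivity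
    have q8 : 0 ≤ cM n c * (√τ + √τ) := by positivity
    linarith
  have hN2 := S.NN_mono y hR0 (hRst.2.trans hR)
  obtain ⟨R', hR', hde'⟩ := S.exists_small_de y (a := R) (b := 2 * R) (τ := σ) hRpos (by linarith) (by
    have a1 := h.nb y (2 * R) (by positivity)
    rw [Real.log_mul two_ne_zero hRpos.ne']
    have := Real.log_two_gt_d9
    nlinarith)
  obtain ⟨k1', k2'⟩ := hm y R' (hle.trans (hR.le.trans hR'.1))
  exact ⟨R', hR', hde', k2'.trans ((min_le_left _ _).trans (min_le_right _ _)), k1'⟩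

end Sol

/-! ### Interior gradient estimate against Gaussian averages -/

/-- Unweighted averages over a ball of radius `1/16` are controlled by Gaussian expectations. -/
lemma Eg_ball (n : ℕ) : ∃ Cb > (0 : ℝ), ∀ f : Euc n → ℝ, PG f → (∀ x, 0 ≤ f x) → ∀ ζ : Euc n, ‖ζ‖ ≤ 2 →
    ∫ y in closedBall (0 : Euc n) 1, f (ζ + (1 / 16 : ℝ) • y) ≤ Cb * Eg f := by
  have hZ := gZ_pos n
  set q := Real.exp (-(1 / 2) * 3 ^ 2) with hq
  have hq0 : 0 < q := Real.exp_pos _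
  refine ⟨q⁻¹ * 16 ^ n * gZ n, by positivity, fun f hf hf0 ζ hζ => ?_⟩
  have hintg : Integrable fun x => gw x / gZ n * f x := integrable_gam_iff.1 hf.integrable
  have hint1 : Integrable fun x => gw (ζ + x) / gZ n * f (ζ + x) := hintg.comp_add_left ζ
  have hint2 : Integrable fun x => gw (ζ + (1 / 16 : ℝ) • x) / gZ n * f (ζ + (1 / 16 : ℝ) • x) :=
    hint1.comp_smul (by norm_num)
  have hc : ∫ x, gw (ζ + (1 / 16 : ℝ) • x) / gZ n * f (ζ + (1 / 16 : ℝ) • x) = 16 ^ n * Eg f := by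
    have e1 := Measure.integral_comp_smul (volume : Measure (Euc n))
      (fun x => gw (ζ + x) / gZ n * f (ζ + x)) (1 / 16)
    rw [e1, integral_add_left_eq_self (fun x => gw x / gZ n * f x) ζ]
    have e2 : Eg f = ∫ x, gw x / gZ n * f x := by
      unfold Eg; rw [integral_gam_smul]; rfl
    rw [e2, smul_eq_mul, finrank_euclideanSpace_fin]
    congr 1
    rw [one_div, inv_pow, inv_inv, abs_of_pos (by positivity)]
  have hle : ∫ y in closedBall (0 : Euc n) 1, f (ζ + (1 / 16 : ℝ) • y)
      ≤ ∫ y in closedBall (0 : Euc n) 1,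
        q⁻¹ * gZ n * (gw (ζ + (1 / 16 : ℝ) • y) / gZ n * f (ζ + (1 / 16 : ℝ) • y)) := by
    refine setIntegral_mono_on ?_ (hint2.const_mul _).integrableOn measurableSet_closedBall fun y hy => ?_
    · exact ((hf.affine ζ (1 / 16)).cont.continuousOn).integrableOn_compact (isCompact_closedBall _ _)
    · rw [mem_closedBall_zero_iff] at hy
      have hn : ‖ζ + (1 / 16 : ℝ) • y‖ ≤ 3 := by
        refine (norm_add_le _ _).trans ?_
        rw [norm_smul, Real.norm_of_nonneg (by norm_num)]
        linarith
      have hg : q ≤ gw (ζ + (1 / 16 : ℝ) • y) := by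
        unfold gw; rw [hq]
        refine Real.exp_le_exp.2 ?_
        have := pow_le_pow_left₀ (norm_nonneg _) hn 2
        linarith
      have hfx := hf0 (ζ + (1 / 16 : ℝ) • y)
      generalize f (ζ + (1 / 16 : ℝ) • y) = a at *
      generalize gw (ζ + (1 / 16 : ℝ) • y) = b at *
      have e : q⁻¹ * gZ n * (b / gZ n * a) = b / q * a := by field_simp
      rw [e]
      exact le_mul_of_one_le_left hfx ((one_le_div hq0).2 hg)
  refine hle.trans ?_
  refine (setIntegral_le_integral (hint2.const_mul _) (Filter.Eventually.of_forall fun y => ?_)).trans ?_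
  · have := hf0 (ζ + (1 / 16 : ℝ) • y)
    have := (gw_pos (ζ + (1 / 16 : ℝ) • y)).le
    show (0 : ℝ) ≤ _
    positivity
  · rw [integral_const_mul, hc]
    exact le_of_eq (by ring)

lemma grad_est_aux (n : ℕ) (i : Fin n) : ∃ Cg > (0 : ℝ), ∀ W : Euc n → ℝ, ContDiff ℝ (⊤ : ℕ∞) W →
    ∀ f : Euc n → ℝ, PG f → (∀ x, 0 ≤ f x) → ∀ ζ : Euc n, ‖ζ‖ ≤ 2 → ∀ s : ℝ,
    (∀ z ∈ closedBall ζ (1 / 16), |lap W z| ≤ s) → (∀ z ∈ closedBall ζ (1 / 16), W z ^ 2 ≤ f z) →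
    ∀ ε > 0, Eg f ≤ ε ^ 2 → |pd i W ζ| ≤ Cg * (ε + s) := by
  obtain ⟨Cb, hCb, hb⟩ := Eg_ball n
  have hcs : HasCompactSupport (pd i (moRho : Euc n → ℝ)) := pd_compactSupport (compact_of_ball moRho_support) i
  obtain ⟨G, hG⟩ := hcs.exists_bound_of_continuous (contDiff_pd moRho_contDiff i).continuous
  have hG0 : 0 ≤ G := (norm_nonneg _).trans (hG 0)
  set I := ∫ y : Euc n, moRho y with hI
  have hI0 : 0 < I := moRho_integral_pos
  set J := ∫ y : Euc n, |pd i moPsi y| with hJ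
  have hJ0 : 0 ≤ J := integral_nonneg fun y => abs_nonneg _
  set vol := volume.real (closedBall (0 : Euc n) 1) with hvol
  have hvol0 : 0 ≤ vol := measureReal_nonneg
  have hsupp : ∀ y : Euc n, 1 < ‖y‖ → pd i moRho y = 0 := by
    intro y hy
    have : (moRho : Euc n → ℝ) =ᶠ[nhds y] fun _ => 0 := by
      filter_upwards [(isOpen_lt continuous_const continuous_norm).mem_nhds hy] with z hz
      exact moRho_support z hz
    unfold pd; rw [this.fderiv_eq]; simp
  refine ⟨1 + (J + 16 * (G * (vol + Cb))) / I, by positivity, ?_⟩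
  intro W hW f hf hf0 ζ hζ s hs hWf ε hε hE
  have hs0 : 0 ≤ s := (abs_nonneg _).trans (hs ζ (mem_closedBall_self (by norm_num)))
  have hm := mollifier_formula hW i ζ (r := 1 / 16) (by norm_num) hs
  rw [← hI, ← hJ] at hm
  set A := ∫ y : Euc n, W (ζ + (1 / 16 : ℝ) • y) * pd i moRho y with hA
  have hAb : |A| ≤ G * (vol + Cb) * ε := by
    have e1 : A = ∫ y in closedBall (0 : Euc n) 1, W (ζ + (1 / 16 : ℝ) • y) * pd i moRho y := by
      rw [hA, setIntegral_eq_integral_of_forall_compl_eq_zero]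
      intro y hy
      rw [mem_closedBall_zero_iff, not_le] at hy
      rw [hsupp y hy, mul_zero]
    have hfi : IntegrableOn (fun y : Euc n => f (ζ + (1 / 16 : ℝ) • y)) (closedBall 0 1) :=
      ((hf.affine ζ (1 / 16)).cont.continuousOn).integrableOn_compact (isCompact_closedBall _ _)
    have hci : IntegrableOn (fun y : Euc n => ε) (closedBall 0 1) :=
      continuousOn_const.integrableOn_compact (isCompact_closedBall _ _)
    have hgi : IntegrableOn (fun y : Euc n => G * (ε + ε⁻¹ * f (ζ + (1 / 16 : ℝ) • y))) (closedBall 0 1) :=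
      (hci.add (hfi.const_mul _)).const_mul _
    have h1 : ‖A‖ ≤ ∫ y in closedBall (0 : Euc n) 1, G * (ε + ε⁻¹ * f (ζ + (1 / 16 : ℝ) • y)) := by
      rw [e1]
      refine norm_integral_le_of_norm_le hgi ?_
      filter_upwards [ae_restrict_mem measurableSet_closedBall] with y hy
      rw [mem_closedBall_zero_iff] at hy
      have hz : ζ + (1 / 16 : ℝ) • y ∈ closedBall ζ (1 / 16) := by
        rw [mem_closedBall, dist_eq_norm, add_sub_cancel_left, norm_smul, Real.norm_of_nonneg (by norm_num)]
        linarith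
      have h2 := hWf _ hz
      rw [norm_mul, mul_comm]
      refine mul_le_mul (hG y) ?_ (norm_nonneg _) hG0
      rw [Real.norm_eq_abs]
      generalize W (ζ + (1 / 16 : ℝ) • y) = w at *
      have h3 : |w| ≤ ε + ε⁻¹ * w ^ 2 := by
        have : 0 ≤ ε⁻¹ * (|w| - ε) ^ 2 := by positivity
        have e : ε⁻¹ * (|w| - ε) ^ 2 = ε⁻¹ * w ^ 2 - 2 * |w| + ε := by
          rw [sub_sq, sq_abs]; field_simp
        linarith [abs_nonneg w]
      exact h3.trans (by gcongr)
    rw [← Real.norm_eq_abs]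
    refine h1.trans ?_
    have hci' : Integrable (fun y : Euc n => ε) (volume.restrict (closedBall 0 1)) := hci
    have hfi' : Integrable (fun y : Euc n => ε⁻¹ * f (ζ + (1 / 16 : ℝ) • y))
      (volume.restrict (closedBall 0 1)) := hfi.const_mul _
    rw [integral_const_mul, integral_add hci' hfi', integral_const_mul, setIntegral_const, smul_eq_mul]
    have h4 := hb f hf hf0 ζ hζ
    have h5 : ε⁻¹ * ∫ y in closedBall (0 : Euc n) 1, f (ζ + (1 / 16 : ℝ) • y) ≤ Cb * ε := by
      calc _ ≤ ε⁻¹ * (Cb * ε ^ 2) := by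
            refine mul_le_mul_of_nonneg_left (h4.trans ?_) (by positivity)
            exact mul_le_mul_of_nonneg_left hE hCb.le
        _ = _ := by field_simp
    calc G * (vol * ε + ε⁻¹ * ∫ y in closedBall (0 : Euc n) 1, f (ζ + (1 / 16 : ℝ) • y))
        ≤ G * (vol * ε + Cb * ε) := by gcongr
      _ = _ := by ring
  have h6 : |pd i W ζ| * I ≤ (J + 16 * (G * (vol + Cb))) * (ε + s) := by
    have t1 : |pd i W ζ * I| ≤ |pd i W ζ * I + (1 / 16 : ℝ)⁻¹ * A| + 16 * |A| := by
      have := abs_sub (pd i W ζ * I + (1 / 16 : ℝ)⁻¹ * A) ((1 / 16 : ℝ)⁻¹ * A)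
      rw [add_sub_cancel_right, abs_mul (1 / 16 : ℝ)⁻¹] at this
      have e : |(1 / 16 : ℝ)⁻¹| = 16 := by norm_num
      rwa [e] at this
    rw [abs_mul, abs_of_pos hI0] at t1
    have t2 : 0 ≤ J * s := by positivity
    have t3 : 0 ≤ J * ε := by positivity
    have t4 : 0 ≤ G * (vol + Cb) * s := by positivity
    linarith only [t1, t2, t3, t4, hm, hAb]
  have h7 : |pd i W ζ| ≤ (J + 16 * (G * (vol + Cb))) / I * (ε + s) := by
    rw [div_mul_eq_mul_div, le_div_iff₀ hI0]; exact h6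
  have : 0 ≤ ε + s := by positivity
  linarith

/-- A function that is small on Gaussian average and nearly harmonic has a small gradient. -/
lemma grad_est (n : ℕ) : ∃ Cg > (0 : ℝ), ∀ W : Euc n → ℝ, ContDiff ℝ (⊤ : ℕ∞) W →
    ∀ f : Euc n → ℝ, PG f → (∀ x, 0 ≤ f x) → ∀ ζ : Euc n, ‖ζ‖ ≤ 2 → ∀ s : ℝ,
    (∀ z ∈ closedBall ζ (1 / 16), |lap W z| ≤ s) → (∀ z ∈ closedBall ζ (1 / 16), W z ^ 2 ≤ f z) →
    ∀ ε > 0, Eg f ≤ ε ^ 2 → ‖gradv W ζ‖ ≤ Cg * (ε + s) := by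
  choose C hC h using grad_est_aux n
  have hsum : 0 ≤ ∑ i, C i := Finset.sum_nonneg fun i _ => (hC i).le
  refine ⟨1 + ∑ i, C i, by linarith, ?_⟩
  intro W hW f hf hf0 ζ hζ s hs hWf ε hε hE
  have hs0 : 0 ≤ s := (abs_nonneg _).trans (hs ζ (mem_closedBall_self (by norm_num)))
  have h1 : ‖gradv W ζ‖ ≤ ∑ i, |pd i W ζ| := by
    rw [EuclideanSpace.norm_eq]
    refine Real.sqrt_le_iff.2 ⟨Finset.sum_nonneg fun i _ => abs_nonneg _, ?_⟩
    exact Finset.sum_sq_le_sq_sum_of_nonneg fun i _ => abs_nonneg _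
  refine h1.trans ?_
  calc ∑ i, |pd i W ζ| ≤ ∑ i, C i * (ε + s) :=
        Finset.sum_le_sum fun i _ => h i W hW f hf hf0 ζ hζ s hs hWf ε hε hE
    _ = (∑ i, C i) * (ε + s) := by rw [Finset.sum_mul]
    _ ≤ _ := by gcongr; linarith

/-! ### The gradient of `u` on its high level sets is nearly constant -/

namespace Sol
variable {n : ℕ} {S : Sol n} {c1 C2 c Rb : ℝ}

/-- On a ball of radius `d` where `u` dominates, `v` is of size at most `d⁻⁵`. -/
lemma Glob.tiny (g : S.Glob c1 C2 c Rb) : ∃ C > (0 : ℝ), ∃ D ≥ Rb, ∀ x0 : Euc n, ∀ d, D ≤ d →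
    (∀ z ∈ ball x0 d, S.v z < S.u z) → ∀ y, ‖y - x0‖ ≤ d / 4 → S.v y ^ 2 * d ^ 10 ≤ C := by
  obtain ⟨C, hC, hb⟩ := barrier n (K := 1) le_rfl
  have hc1 := g.c1pos
  have hkc := one_le_kc n 0
  have hmo := one_le_mo n 6
  have hRb := g.Rb1
  set Q := 16 * kc n 0 * mo n 6 with hQ
  have hQ0 : 0 < Q := by positivity
  refine ⟨C / c1 ^ 2, by positivity, Rb + 32 * Q * (1 + 64 / c1), ?_, ?_⟩
  · have : 0 ≤ 32 * Q * (1 + 64 / c1) := by positivity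
    linarith
  intro x0 d hd hdom y hy
  have hp : 0 ≤ 32 * Q * (1 + 64 / c1) := by positivity
  have hd1 : 1 ≤ d := by linarith
  have hd0 : 0 < d := by linarith
  have hkey : ∀ x, ‖x - y‖ ≤ d / 2 → ∀ t, 0 < t → 1 ≤ S.ka x t → S.ka x t ≤ 64 * 1 →
      S.H x t / 4 ≤ S.HU x t := by
    intro x hx t ht _ hka
    have hHp := S.H_pos x t
    have ht4 : t ^ 4 ≤ 64 / c1 := by
      rw [le_div_iff₀ hc1]
      have := g.lower x t ht
      unfold ka at hka
      calc t ^ 4 * c1 = t ^ 2 * (c1 * t ^ 2) := by ring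
        _ ≤ t ^ 2 * S.H x t := by gcongr
        _ ≤ 64 := by linarith
    have ht2 : t ^ 2 ≤ 1 + 64 / c1 := by nlinarith only [ht4, sq_nonneg (t ^ 2 - 1), sq_nonneg (t ^ 2)]
    set b := 16 * kc n 0 * S.H x t * (16 * t ^ 2 / d ^ 2) with hbdef
    have hb0 : 0 ≤ b := by positivity
    have hpt : ∀ z : Euc n, S.v (x + t • z) ^ 2 ≤ S.u (x + t • z) ^ 2 + b * (1 + ‖z‖) ^ 6 := by
      intro z
      have hz := norm_nonneg z
      by_cases h4 : t * ‖z‖ < d / 4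
      · have hm : x + t • z ∈ ball x0 d := by
          rw [mem_ball, dist_eq_norm]
          have e : x + t • z - x0 = (x - y) + (y - x0) + t • z := by abel
          rw [e]
          refine (norm_add_le _ _).trans_lt ?_
          have := norm_add_le (x - y) (y - x0)
          rw [norm_smul, Real.norm_of_nonneg ht.le]
          linarith
        have := hdom _ hm
        have h0 := S.vpos (x + t • z)
        have : S.v (x + t • z) ^ 2 ≤ S.u (x + t • z) ^ 2 := by gcongr
        have : 0 ≤ b * (1 + ‖z‖) ^ 6 := by positivity
        linarith
      · push Not at h4
        have h1 := g.nice.sup_bound x (x + t • z) ht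
        rw [add_sub_cancel_left, norm_smul, Real.norm_of_nonneg ht.le, mul_div_cancel_left₀ _ ht.ne'] at h1
        have h2 : 1 ≤ 16 * t ^ 2 / d ^ 2 * (1 + ‖z‖) ^ 2 := by
          rw [div_mul_eq_mul_div, one_le_div (by positivity)]
          have : d ≤ 4 * t * (1 + ‖z‖) := by nlinarith only [h4, ht]
          calc d ^ 2 ≤ (4 * t * (1 + ‖z‖)) ^ 2 := by gcongr
            _ = _ := by ring
        calc S.v (x + t • z) ^ 2 ≤ 16 * kc n 0 * (1 + ‖z‖) ^ 4 * S.H x t := by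
              have := sq_nonneg (S.u (x + t • z)); linarith
          _ ≤ 16 * kc n 0 * (1 + ‖z‖) ^ 4 * S.H x t * (16 * t ^ 2 / d ^ 2 * (1 + ‖z‖) ^ 2) :=
              le_mul_of_one_le_right (by positivity) h2
          _ = b * (1 + ‖z‖) ^ 6 := by rw [hbdef]; ring
          _ ≤ _ := by have := sq_nonneg (S.u (x + t • z)); linarith
    have hu2 : PG fun z => S.u (x + t • z) ^ 2 := (S.hu.pg.affine x t).pow 2
    have hv2 : PG fun z => S.v (x + t • z) ^ 2 := (S.hv.pg.affine x t).pow 2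
    have hw : PG fun z : Euc n => b * (1 + ‖z‖) ^ 6 := (PG.w 6).const_mul b
    have hE : S.HV x t ≤ S.HU x t + b * mo n 6 := by
      have := Eg_mono hv2 (hu2.add hw) hpt
      rw [Eg_add hu2 hw, Eg_const_mul] at this
      exact this
    have hbb : b * mo n 6 ≤ S.H x t / 2 := by
      have : 32 * Q * t ^ 2 ≤ d ^ 2 := by
        calc 32 * Q * t ^ 2 ≤ 32 * Q * (1 + 64 / c1) := by gcongr
          _ ≤ d := by linarith
          _ ≤ d ^ 2 := le_self_pow₀ hd1 (by norm_num)
      calc b * mo n 6 = S.H x t / 2 * (32 * Q * t ^ 2 / d ^ 2) := by rw [hbdef, hQ]; ring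
        _ ≤ S.H x t / 2 * 1 := by
          refine mul_le_mul_of_nonneg_left ?_ (by positivity)
          exact div_le_one_of_le₀ this (by positivity)
        _ = _ := mul_one _
    have : S.H x t = S.HU x t + S.HV x t := rfl
    linarith
  have h1 := hb S g.nice y d hd0 hkey
  have hH := S.H_pos y d
  have hl := g.lower y d hd0
  unfold ka at h1
  have h2 : S.v y ^ 2 * d ^ 6 * S.H y d ^ 2 ≤ C := by
    refine le_of_mul_le_mul_right ?_ hH
    calc _ = S.v y ^ 2 * (d ^ 2 * S.H y d) ^ 3 := by ring
      _ ≤ _ := h1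
  rw [le_div_iff₀ (by positivity)]
  calc S.v y ^ 2 * d ^ 10 * c1 ^ 2 = S.v y ^ 2 * d ^ 6 * (c1 * d ^ 2) ^ 2 := by ring
    _ ≤ S.v y ^ 2 * d ^ 6 * S.H y d ^ 2 := by gcongr
    _ ≤ C := h2

end Sol

namespace Sol
variable {n : ℕ} {S : Sol n} {c1 C2 c Rb : ℝ}

/-- At a scale with small defect and small separation, the dominating component is close to a linear
function in Gaussian mean square, wherever it dominates. -/
lemma Sg.approx (n : ℕ) {c : ℝ} (hc : 0 < c) (hc1 : c ≤ 1) : ∃ b1 > (0 : ℝ), ∃ b2 > (0 : ℝ), ∀ ε > (0 : ℝ),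
    ∃ σ > (0 : ℝ), σ ≤ 1 ∧ ∀ (T : Sol n) (m : ℝ), T.Sg m → c ≤ T.hU → c ≤ T.hV → m ≤ σ → T.de0 ≤ σ →
    ∃ (p : Euc n) (f : Euc n → ℝ), PG f ∧ (∀ z, 0 ≤ f z) ∧ Eg f ≤ ε ^ 2 ∧ b1 ≤ ‖p‖ ∧ ‖p‖ ≤ b2 ∧
      ∀ z, T.v z ≤ T.u z → (T.u z - ⟪p, z⟫) ^ 2 ≤ f z := by
  have he := cE_pos n hc
  set e := cE n c with hedef
  have m2 := one_le_mo n 2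
  have m4 := one_le_mo n 4
  set A := 4 + 216 * mo n 4 with hA
  have hA0 : 0 < A := by positivity
  set B := 2 * A / e ^ 2 + 18 * mo n 4 with hB
  have hB0 : 0 < B := by positivity
  refine ⟨e / 2, by positivity, (1 + 96 * mo n 4) / e, by positivity, fun ε hε => ?_⟩
  obtain ⟨τ, hτ0, hτ1, hτB, hτe, hτp⟩ : ∃ τ > (0 : ℝ), τ ≤ 1 ∧ τ * B ≤ ε ^ 2 ∧ τ * (3 * mo n 2) ≤ e ∧
      τ * (e ^ 2 * (12 * mo n 4) + 2 * A) ≤ e ^ 2 / 2 := by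
    refine ⟨min 1 (min (ε ^ 2 / B) (min (e / (3 * mo n 2))
      (e ^ 2 / 2 / (e ^ 2 * (12 * mo n 4) + 2 * A)))), by positivity, min_le_left _ _, ?_, ?_, ?_⟩
    · rw [← le_div_iff₀ (by positivity)]
      exact (min_le_right _ _).trans (min_le_left _ _)
    · rw [← le_div_iff₀ (by positivity)]
      exact (min_le_right _ _).trans ((min_le_right _ _).trans (min_le_left _ _))
    · rw [← le_div_iff₀ (by positivity)]
      exact (min_le_right _ _).trans ((min_le_right _ _).trans (min_le_right _ _))
  have hττ : τ ^ 2 ≤ τ := by nlinarith only [hτ0, hτ1]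
  refine ⟨τ ^ 2, by positivity, by linarith, fun T m h hU hV hm hde => ?_⟩
  have hm0 := h.pos
  have hmτ : m ≤ τ := hm.trans hττ
  have hth : T.th m ≤ A * τ := by
    have h1 := h.th_le
    have h2 : √T.de0 ≤ τ := Real.sqrt_le_iff.2 ⟨hτ0.le, hde⟩
    have h3 : m * (216 * mo n 4) ≤ τ * (216 * mo n 4) := by gcongr
    rw [hA]; linarith
  have hme : m * (3 * mo n 2) ≤ e := le_trans (by gcongr) hτe
  have ha : e ≤ Eg (T.v1 m) := h.swap.Eu1_lower hc hc1 hV hme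
  have ha1 : Eg (T.v1 m) ≤ 1 := h.swap.Eu1_le
  set a := Eg (T.v1 m) with hadef
  have ha0 : 0 < a := he.trans_le ha
  have hp1 := h.pw_lower hc hc1 hU hV hme
  have hp2 := h.pw_sq_le
  have hfl := h.flat
  set p := T.pw m with hp
  have hplow : e / 2 ≤ ‖p‖ := by
    have h3 : m * (e ^ 2 * (12 * mo n 4)) ≤ τ * (e ^ 2 * (12 * mo n 4)) := by gcongr
    refine le_of_sq_le_sq ?_ (norm_nonneg p)
    rw [← hedef] at hp1
    linarith
  have hPwG : PG fun z => (T.ww m z - ⟪p, z⟫) ^ 2 := (h.wwG.pg.sub ((PGV.const p).inner PGV.id)).pow 2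
  have hWt : PG fun z : Euc n => (18 * m ^ 2) * (1 + ‖z‖) ^ 4 := (PG.w 4).const_mul _
  refine ⟨a⁻¹ • p, fun z => (2 / a ^ 2) * (T.ww m z - ⟪p, z⟫) ^ 2 + (18 * m ^ 2) * (1 + ‖z‖) ^ 4,
    (hPwG.const_mul _).add hWt, fun z => by positivity, ?_, ?_, ?_, ?_⟩
  · rw [Eg_add (hPwG.const_mul _) hWt, Eg_const_mul, Eg_const_mul]
    have h1 : 2 / a ^ 2 * (Eg fun z => (T.ww m z - ⟪p, z⟫) ^ 2) ≤ 2 / e ^ 2 * (A * τ) := by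
      refine mul_le_mul (by gcongr) (hfl.trans hth) (Eg_nonneg fun z => sq_nonneg _) (by positivity)
    have h2 : 18 * m ^ 2 * mo n 4 ≤ 18 * τ * mo n 4 := by
      have : m ^ 2 ≤ τ := by
        calc m ^ 2 ≤ τ ^ 2 := by gcongr
          _ ≤ τ := hττ
      gcongr
    have h3 : 2 / e ^ 2 * (A * τ) + 18 * τ * mo n 4 = τ * B := by rw [hB]; ring
    have h4 : (Eg fun z : Euc n => (1 + ‖z‖) ^ 4) = mo n 4 := rfl
    rw [h4]
    linarith
  · rw [norm_smul, Real.norm_of_nonneg (by positivity)]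
    refine hplow.trans (le_mul_of_one_le_left (norm_nonneg p) ((one_le_inv₀ ha0).2 ha1))
  · rw [norm_smul, Real.norm_of_nonneg (by positivity), inv_mul_eq_div]
    refine div_le_div₀ (by positivity) ?_ he ha
    nlinarith only [hp2, norm_nonneg p, m4, sq_nonneg (‖p‖ - 1)]
  · intro z hz
    have hs := h.sep z
    rw [min_eq_right hz] at hs
    have hv1 : T.v1 m z = 0 := (tr_zero (F := T.G) hm0 hs).1
    have hww : T.ww m z = a * T.u1 m z := by unfold ww; rw [hv1, mul_zero, sub_zero]
    have hl := h.le_u1 z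
    have hu := h.u1_le z
    have hz0 := norm_nonneg z
    have e1 : T.u z - ⟪a⁻¹ • p, z⟫ = a⁻¹ * (T.ww m z - ⟪p, z⟫) + (T.u z - T.u1 m z) := by
      rw [hww, real_inner_smul_left]; field_simp; ring
    have e2 : (T.u z - T.u1 m z) ^ 2 ≤ 9 * m ^ 2 * (1 + ‖z‖) ^ 4 := by
      have h1 : T.u z - T.u1 m z ≤ 3 * (m * (1 + ‖z‖) ^ 2) := by nlinarith only [hl, hm0, hz0]
      calc _ ≤ (3 * (m * (1 + ‖z‖) ^ 2)) ^ 2 := by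
            have : 0 ≤ T.u z - T.u1 m z := by linarith
            gcongr
        _ = _ := by ring
    rw [e1]
    have e3 : 2 / a ^ 2 * (T.ww m z - ⟪p, z⟫) ^ 2 = 2 * (a⁻¹ * (T.ww m z - ⟪p, z⟫)) ^ 2 := by
      field_simp
    beta_reduce
    rw [e3]
    nlinarith only [e2, sq_nonneg (a⁻¹ * (T.ww m z - ⟪p, z⟫) - (T.u z - T.u1 m z))]

lemma pd_comb {w : Euc n → ℝ} (hw : ContDiff ℝ (⊤ : ℕ∞) w) (i : Fin n) (z y : Euc n) (l s b : ℝ)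
    (L : Euc n →L[ℝ] ℝ) : pd i (fun y => l * w (z + s • y) - (L y + b)) y
      = l * s * pd i w (z + s • y) - L (EuclideanSpace.single i 1) := by
  have h1 := (hasFDerivAt_of_contDiff (contDiff_affine hw z s) y).const_mul l
  have h2 : HasFDerivAt (fun y => L y + b) L y := L.hasFDerivAt.add_const b
  have h3 := (h1.sub h2).fderiv
  unfold pd
  erw [h3]
  have h4 := pd_affine hw i z y s
  unfold pd at h4
  rw [sub_apply, smul_apply, h4]
  simp only [smul_eq_mul]; ring

lemma lap_comb {w : Euc n → ℝ} (hw : ContDiff ℝ (⊤ : ℕ∞) w) (z y : Euc n) (l s b : ℝ)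
    (L : Euc n →L[ℝ] ℝ) : lap (fun y => l * w (z + s • y) - (L y + b)) y
      = l * s ^ 2 * lap w (z + s • y) := by
  rw [lap_eq_sum, lap_eq_sum, Finset.mul_sum]
  refine Finset.sum_congr rfl fun i _ => ?_
  have e : pd i (fun y => l * w (z + s • y) - (L y + b)) = fun y => l * s * pd i w (z + s • y)
      - ((0 : Euc n →L[ℝ] ℝ) y + L (EuclideanSpace.single i 1)) := by
    funext y; rw [pd_comb hw]; simp
  rw [e, pd_comb (contDiff_pd hw i)]
  simp only [zero_apply]; ring

end Sol

namespace Sol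
variable {n : ℕ} {S : Sol n} {c1 C2 c Rb : ℝ}

/-- Around a point where `u` dominates up to the nearest interface point, `∇u` is nearly constant. -/
lemma Glob.plane (g : S.Glob c1 C2 c Rb) (hs : ContDiff ℝ (⊤ : ℕ∞) S.u)
    (hl : ∀ x, lap S.u x = S.u x * S.v x ^ 2) : ∃ h0 > (0 : ℝ), ∃ h2 > (0 : ℝ), ∃ D ≥ Rb,
    ∀ y0 x0 : Euc n, S.u y0 = S.v y0 → D ≤ ‖x0 - y0‖ → (∀ z ∈ ball x0 ‖x0 - y0‖, S.v z < S.u z) →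
    ∃ P : Euc n, h0 ≤ ‖P‖ ∧ ‖P‖ ≤ h2 ∧ ∀ z, ‖z - x0‖ ≤ ‖x0 - y0‖ / 8 →
      ‖gradv S.u z - P‖ ≤ ‖P‖ / 4 := by
  obtain ⟨b1, hb1, b2, hb2, hap⟩ := Sg.approx n g.cpos g.c_le
  obtain ⟨Cg, hCg, hge⟩ := grad_est n
  obtain ⟨σ, hσ, hσ1, hap⟩ := hap (b1 / (8 * Cg)) (by positivity)
  obtain ⟨Rs, hRs, hflat⟩ := g.flat hσ
  obtain ⟨C', hC', D0, hD0, htiny⟩ := g.tiny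
  have hc1 := g.c1pos
  have hC2 := g.C2pos
  have hRb := g.Rb1
  have hkc := one_le_kc n 0
  set Q := 1296 * kc n 0 * (4 * C') with hQ
  have hQ0 : 0 < Q := by positivity
  refine ⟨√c1 * b1, by positivity, √C2 * b2, by positivity, max Rs D0 + Q / (b1 / (8 * Cg)), ?_, ?_⟩
  · have h1 : 0 ≤ Q / (b1 / (8 * Cg)) := by positivity
    have h2 := le_max_left Rs D0
    linarith
  intro y0 x0 hy0 hd hdom
  set d := ‖x0 - y0‖ with hdd
  have hq0 : 0 ≤ Q / (b1 / (8 * Cg)) := by positivity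
  have hdRs : Rs ≤ d := by have := le_max_left Rs D0; linarith
  have hdD0 : D0 ≤ d := by have := le_max_right Rs D0; linarith
  have hd1 : 1 ≤ d := by linarith
  have hd0 : 0 < d := by linarith
  have hdQ : Q / d ≤ b1 / (8 * Cg) := by
    have h1 : Q / (b1 / (8 * Cg)) ≤ d := by
      have := le_max_left Rs D0; linarith
    rw [div_le_iff₀ (by positivity)] at h1
    rw [div_le_iff₀ hd0]; linarith
  obtain ⟨r, ⟨hdr, hr2⟩, hde, hms, hk1⟩ := hflat y0 hy0 d hdRs
  have hr0 : 0 < r := by linarith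
  have hrb : Rb ≤ r := by linarith
  have hsg := g.nice.sg y0 hr0 hk1 (hms.trans hσ1)
  obtain ⟨p, f, hf, hf0, hEf, hp1, hp2, hpf⟩ := hap _ _ hsg (by rw [nrm_hU]; exact g.balU y0 hy0 r hrb)
    (by rw [nrm_hV]; exact g.balV y0 hy0 r hrb) hms (by rw [nrm_de0]; exact hde)
  have hH := S.H_pos y0 r
  set l := 1 / √(S.H y0 r) with hldef
  have hl0 : 0 < l := by positivity
  have hl2 : l ^ 2 * S.H y0 r = 1 := by
    rw [hldef, div_pow, Real.sq_sqrt hH.le]; field_simp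
  have hlinv : (l * r)⁻¹ = √(S.H y0 r / r ^ 2) := by
    rw [Real.sqrt_div hH.le, Real.sqrt_sq hr0.le, hldef]
    field_simp
  have hlow : √c1 ≤ (l * r)⁻¹ := by
    rw [hlinv]; refine Real.sqrt_le_sqrt ?_
    rw [le_div_iff₀ (by positivity)]; exact g.lower y0 r hr0
  have hup : (l * r)⁻¹ ≤ √C2 := by
    rw [hlinv]; refine Real.sqrt_le_sqrt ?_
    rw [div_le_iff₀ (by positivity)]; exact g.upper y0 hy0 r hrb
  have hlr : 0 < (l * r)⁻¹ := by positivity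
  refine ⟨(l * r)⁻¹ • p, ?_, ?_, fun z hz => ?_⟩
  · rw [norm_smul, Real.norm_of_nonneg hlr.le]; gcongr
  · rw [norm_smul, Real.norm_of_nonneg hlr.le]; gcongr
  set ζ := r⁻¹ • (z - y0) with hζ
  have hζz : y0 + r • ζ = z := by
    rw [hζ, smul_smul, mul_inv_cancel₀ hr0.ne', one_smul, add_sub_cancel]
  have hζn : ‖ζ‖ ≤ 3 / 2 := by
    rw [hζ, norm_smul, norm_inv, Real.norm_of_nonneg hr0.le, inv_mul_le_iff₀ hr0]
    have e : z - y0 = (z - x0) + (x0 - y0) := by abel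
    have := norm_add_le (z - x0) (x0 - y0)
    rw [← e] at this
    linarith
  have hnear : ∀ w ∈ closedBall ζ (1 / 16), ‖y0 + r • w - x0‖ ≤ d / 4 := by
    intro w hw
    rw [mem_closedBall, dist_eq_norm] at hw
    have e : y0 + r • w - x0 = r • (w - ζ) + (z - x0) := by
      have e2 : z - x0 = y0 + r • ζ - x0 := by rw [hζz]
      rw [smul_sub, e2]; abel
    rw [e]
    refine (norm_add_le _ _).trans ?_
    rw [norm_smul, Real.norm_of_nonneg hr0.le]
    nlinarith only [hw, hz, hr2, hr0, hd0]
  have hwn : ∀ w ∈ closedBall ζ (1 / 16), ‖w‖ ≤ 2 := by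
    intro w hw
    rw [mem_closedBall, dist_eq_norm] at hw
    have := norm_add_le (w - ζ) ζ
    rw [sub_add_cancel] at this
    linarith
  have hvu : ∀ w ∈ closedBall ζ (1 / 16), S.v (y0 + r • w) < S.u (y0 + r • w) := fun w hw =>
    hdom _ (by rw [mem_ball, dist_eq_norm]; have := hnear w hw; linarith)
  set L : Euc n →L[ℝ] ℝ := innerSL ℝ p with hL
  set W : Euc n → ℝ := fun y => l * S.u (y0 + r • y) - (L y + 0) with hW
  have hWs : ContDiff ℝ (⊤ : ℕ∞) W :=
    (contDiff_const.mul (contDiff_affine hs y0 r)).sub (L.contDiff.add contDiff_const)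
  have hlapW : ∀ w ∈ closedBall ζ (1 / 16), |lap W w| ≤ Q / d := by
    intro w hw
    rw [hW, lap_comb hs, hl]
    have hup := S.upos (y0 + r • w)
    have hvp := S.vpos (y0 + r • w)
    rw [abs_of_nonneg (by positivity)]
    have h1 := g.nice.sup_bound y0 (y0 + r • w) hr0
    rw [add_sub_cancel_left, norm_smul, Real.norm_of_nonneg hr0.le, mul_div_cancel_left₀ _ hr0.ne'] at h1
    have h2 := htiny x0 d hdD0 hdom (y0 + r • w) (hnear w hw)
    have hw2 := hwn w hw
    have hw0 := norm_nonneg w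
    have h3 : (l * S.u (y0 + r • w)) ^ 2 ≤ 1296 * kc n 0 := by
      have h4 : (1 + ‖w‖) ^ 4 ≤ 81 := by
        calc (1 + ‖w‖) ^ 4 ≤ (1 + 2) ^ 4 := by gcongr
          _ = 81 := by norm_num
      have h5 : S.u (y0 + r • w) ^ 2 ≤ 16 * kc n 0 * 81 * S.H y0 r := by
        have h6 : 16 * kc n 0 * (1 + ‖w‖) ^ 4 * S.H y0 r ≤ 16 * kc n 0 * 81 * S.H y0 r := by gcongr
        have := sq_nonneg (S.v (y0 + r • w))
        linarith
      calc (l * S.u (y0 + r • w)) ^ 2 = l ^ 2 * S.u (y0 + r • w) ^ 2 := mul_pow _ _ _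
        _ ≤ l ^ 2 * (16 * kc n 0 * 81 * S.H y0 r) := by gcongr
        _ = 1296 * kc n 0 * (l ^ 2 * S.H y0 r) := by ring
        _ = _ := by rw [hl2, mul_one]
    have h4 : l * S.u (y0 + r • w) ≤ 1296 * kc n 0 := by
      nlinarith only [h3, hkc, sq_nonneg (l * S.u (y0 + r • w) - 1)]
    have h5 : r ^ 2 * S.v (y0 + r • w) ^ 2 ≤ 4 * C' / d := by
      rw [le_div_iff₀ hd0]
      calc r ^ 2 * S.v (y0 + r • w) ^ 2 * d ≤ (2 * d) ^ 2 * S.v (y0 + r • w) ^ 2 * d := by gcongr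
        _ = 4 * (S.v (y0 + r • w) ^ 2 * d ^ 3) := by ring
        _ ≤ 4 * (S.v (y0 + r • w) ^ 2 * d ^ 10) := by
          refine mul_le_mul_of_nonneg_left (mul_le_mul_of_nonneg_left ?_ (by positivity)) (by norm_num)
          exact pow_le_pow_right₀ hd1 (by norm_num)
        _ ≤ 4 * C' := by linarith
    calc l * r ^ 2 * (S.u (y0 + r • w) * S.v (y0 + r • w) ^ 2)
        = (l * S.u (y0 + r • w)) * (r ^ 2 * S.v (y0 + r • w) ^ 2) := by ring
      _ ≤ (1296 * kc n 0) * (4 * C' / d) := by gcongr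
      _ = Q / d := by rw [hQ]; ring
  have hWf : ∀ w ∈ closedBall ζ (1 / 16), W w ^ 2 ≤ f w := by
    intro w hw
    have h1 := hpf w (by rw [nrm_u, nrm_v]; exact mul_le_mul_of_nonneg_left (hvu w hw).le hl0.le)
    rw [nrm_u] at h1
    have e : W w = 1 / √(S.H y0 r) * S.u (y0 + r • w) - ⟪p, w⟫ := by
      rw [hW]; simp only [hL, innerSL_apply_apply, add_zero, hldef]
    rw [e]; exact h1
  have hgr := hge W hWs f hf hf0 ζ (by linarith) (Q / d) hlapW hWf (b1 / (8 * Cg)) (by positivity) hEf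
  have hgW : gradv W ζ = (l * r) • gradv S.u z - p := by
    ext i
    change pd i W ζ = (l * r) * pd i S.u z - p i
    rw [hW, pd_comb hs, hζz, hL, innerSL_apply_apply]
    simp [EuclideanSpace.inner_single_right]
  have hfin : gradv S.u z - (l * r)⁻¹ • p = (l * r)⁻¹ • gradv W ζ := by
    rw [hgW, smul_sub, smul_smul, inv_mul_cancel₀ (by positivity), one_smul]
  rw [hfin, norm_smul, norm_smul, mul_div_assoc]
  refine mul_le_mul_of_nonneg_left ?_ (norm_nonneg _)
  have : Cg * (b1 / (8 * Cg) + Q / d) ≤ b1 / 4 := by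
    calc Cg * (b1 / (8 * Cg) + Q / d) ≤ Cg * (b1 / (8 * Cg) + b1 / (8 * Cg)) := by gcongr
      _ = _ := by field_simp; norm_num
  linarith

/-- On a large level of `u` the gradient is nearly constant in a ball of comparable radius. -/
lemma Glob.grad (g : S.Glob c1 C2 c Rb) (hs : ContDiff ℝ (⊤ : ℕ∞) S.u)
    (hl : ∀ x, lap S.u x = S.u x * S.v x ^ 2) : ∃ h0 > (0 : ℝ), ∃ h2 > (0 : ℝ), ∃ ρ > (0 : ℝ), ∃ M > (0 : ℝ),
    ∀ x0 : Euc n, M ≤ S.u x0 → ∃ P : Euc n, h0 ≤ ‖P‖ ∧ ‖P‖ ≤ h2 ∧ ∀ z, ‖z - x0‖ ≤ ρ * S.u x0 →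
      ‖gradv S.u z - P‖ ≤ ‖P‖ / 4 := by
  obtain ⟨h0, hh0, h2, hh2, D1, hD1, hpl⟩ := g.plane hs hl
  obtain ⟨C', hC', D2, hD2, hti⟩ := g.swap.tiny
  have hC2 := g.C2pos
  have hRb := g.Rb1
  have hkc := one_le_kc n 0
  set D := max D1 D2 with hD
  have hDb : Rb ≤ D := hD1.le.trans (le_max_left _ _)
  have hD0 : 0 < D := by linarith
  set A := 256 * kc n 0 * C2 with hA
  have hA0 : 0 < A := by positivity
  -- `u ≤ √A d` at distance `d ≥ Rb` from an interface point
  have hub : ∀ y0 x0 : Euc n, S.u y0 = S.v y0 → ∀ r, Rb ≤ r → ‖x0 - y0‖ ≤ r →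
      S.u x0 ^ 2 ≤ A * r ^ 2 := by
    intro y0 x0 hy r hr hn
    have hr0 : 0 < r := by linarith
    have h1 := g.nice.sup_bound y0 x0 hr0
    have h3 := g.upper y0 hy r hr
    have h4 : ‖x0 - y0‖ / r ≤ 1 := div_le_one_of_le₀ hn hr0.le
    have h5 : (1 + ‖x0 - y0‖ / r) ^ 4 ≤ 16 := by
      calc (1 + ‖x0 - y0‖ / r) ^ 4 ≤ (1 + 1) ^ 4 := by gcongr
        _ = 16 := by norm_num
    have h6 : 16 * kc n 0 * (1 + ‖x0 - y0‖ / r) ^ 4 * S.H y0 r ≤ 16 * kc n 0 * 16 * (C2 * r ^ 2) := by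
      have := S.H_pos y0 r
      gcongr
    have := sq_nonneg (S.v x0)
    rw [hA]; linarith
  refine ⟨h0, hh0, h2, hh2, 1 / (8 * √A), by positivity, 1 + √A * D + C', by positivity, ?_⟩
  intro x0 hx0
  obtain ⟨y1, hy1⟩ := g.nice.exists_interface
  have hcl : IsClosed {y : Euc n | S.u y = S.v y} := isClosed_eq S.hu.pg.cont S.hv.pg.cont
  obtain ⟨y0, hy0, hinf⟩ := hcl.exists_infDist_eq_dist ⟨y1, hy1⟩ x0
  have hup0 := S.upos x0
  have hsA : 0 < √A := by positivity
  have hsAA : √A ^ 2 = A := Real.sq_sqrt hA0.le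
  have hd : D ≤ ‖x0 - y0‖ := by
    by_contra! hlt
    have h1 := hub y0 x0 hy0 D hDb hlt.le
    have h3 : S.u x0 ≤ √A * D := by
      refine le_of_sq_le_sq ?_ (by positivity)
      rw [mul_pow, hsAA]; exact h1
    linarith
  set d := ‖x0 - y0‖ with hdd
  have hd1 : 1 ≤ d := by linarith
  have hne : ∀ z ∈ ball x0 d, S.u z ≠ S.v z := by
    intro z hz heq
    have h1 := infDist_le_dist_of_mem (x := x0) (show z ∈ {y : Euc n | S.u y = S.v y} from heq)
    rw [hinf, dist_eq_norm, ← hdd, dist_comm] at h1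
    exact absurd (mem_ball.1 hz) (not_lt.2 h1)
  have hud : S.u x0 ≤ √A * d := by
    refine le_of_sq_le_sq ?_ (by positivity)
    rw [mul_pow, hsAA]; exact hub y0 x0 hy0 d (by linarith) le_rfl
  -- no sign change of `u - v` in the ball
  have hsign : ∀ a ∈ ball x0 d, ∀ b ∈ ball x0 d, S.v a < S.u a → S.v b < S.u b := by
    intro a ha b hb hab
    by_contra! hlt
    obtain ⟨z, hz, hz0⟩ := (convex_ball x0 d).isPreconnected.intermediate_value hb ha
      (f := fun z => S.u z - S.v z) (S.hu.pg.cont.sub S.hv.pg.cont).continuousOn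
      (show (0 : ℝ) ∈ Icc _ _ from ⟨by linarith, by linarith⟩)
    exact hne z hz (sub_eq_zero.1 hz0)
  have hx0b : x0 ∈ ball x0 d := mem_ball_self (by linarith)
  have hdom : S.v x0 < S.u x0 := by
    by_contra! hlt
    have hall : ∀ z ∈ ball x0 d, S.swap.v z < S.swap.u z := by
      intro z hz
      rcases lt_trichotomy (S.u z) (S.v z) with h | h | h
      · exact h
      · exact absurd h (hne z hz)
      · exact absurd (hsign z hz x0 hx0b h) (not_lt.2 hlt)
    have h1 := hti x0 d ((le_max_right _ _).trans hd) hall x0 (by rw [sub_self, norm_zero]; positivity)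
    change S.u x0 ^ 2 * d ^ 10 ≤ C' at h1
    have h3 : (1 : ℝ) ≤ d ^ 10 := one_le_pow₀ hd1
    have h4 : S.u x0 ^ 2 ≤ C' := (le_mul_of_one_le_right (sq_nonneg _) h3).trans h1
    have h5 : 1 + C' ≤ S.u x0 := by
      have : 0 ≤ √A * D := by positivity
      linarith
    nlinarith only [h4, h5, hC']
  obtain ⟨P, hP1, hP2, hP⟩ := hpl y0 x0 hy0 ((le_max_left _ _).trans hd)
    (fun z hz => hsign x0 hx0b z hz hdom)
  refine ⟨P, hP1, hP2, fun z hz => hP z (hz.trans ?_)⟩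
  rw [div_mul_eq_mul_div, one_mul, div_le_div_iff₀ (by positivity) (by norm_num)]
  nlinarith only [hud]

end Sol

/-! ### Measure of a level set where the gradient is nearly constant -/

lemma mean_value {n : ℕ} {u : Euc n → ℝ} {G : Euc n → Euc n}
    (hd : ∀ x, HasFDerivAt u (innerSL ℝ (G x)) x) {x0 P : Euc n} {r : ℝ}
    (hP : ∀ z ∈ closedBall x0 r, ‖G z - P‖ ≤ ‖P‖ / 4) {x y : Euc n} (hx : x ∈ closedBall x0 r)
    (hy : y ∈ closedBall x0 r) : |u y - u x - ⟪P, y - x⟫| ≤ ‖P‖ / 4 * ‖y - x‖ := by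
  have := Convex.norm_image_sub_le_of_norm_hasFDerivWithin_le' (f := u) (φ := innerSL ℝ P)
    (C := ‖P‖ / 4) (fun x _ => (hd x).hasFDerivWithinAt) (fun x hx => by
      rw [← map_sub, innerSL_apply_norm]; exact hP x hx) (convex_closedBall x0 r) hx hy
  simpa only [innerSL_apply_apply, Real.norm_eq_abs] using this

/-- Where the gradient stays within `|P|/4` of a fixed `P ≠ 0`, a level set projects injectively, with
Lipschitz inverse, to the hyperplane orthogonal to `P`; this bounds its measure. -/
lemma graph_measure {k : ℕ} {u : Euc (k + 1) → ℝ} {G : Euc (k + 1) → Euc (k + 1)}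
    (hd : ∀ x, HasFDerivAt u (innerSL ℝ (G x)) x) {x0 P : Euc (k + 1)} {r : ℝ} (hr : 0 ≤ r) (hP0 : 0 < ‖P‖)
    (hP : ∀ z ∈ closedBall x0 r, ‖G z - P‖ ≤ ‖P‖ / 4) (t : ℝ) :
    μH[(k : ℝ)] (closedBall x0 r ∩ {x | u x = t}) ≤ ENNReal.ofReal ((4 * (k + 1)) ^ k * r ^ k) := by
  have : Fact (Module.finrank ℝ (Euc (k + 1)) = k + 1) := ⟨finrank_euclideanSpace_fin⟩
  set b := OrthonormalBasis.fromOrthogonalSpanSingleton (𝕜 := ℝ) k (norm_pos_iff.1 hP0) with hb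
  set s := closedBall x0 r ∩ {x | u x = t} with hs
  set f : Euc (k + 1) → (Fin k → ℝ) := fun x i => ⟪(b i : Euc (k + 1)), x⟫ with hf
  have hbn : ∀ i, ‖(b i : Euc (k + 1))‖ = 1 := fun i => by
    rw [← Submodule.coe_norm]; exact b.orthonormal.1 i
  have hfs : ∀ x y, f x - f y = f (x - y) := fun x y => by
    funext i; simp only [hf, Pi.sub_apply, inner_sub_right]
  have hmain : ∀ x ∈ s, ∀ y ∈ s, dist x y ≤ 2 * (k + 1) * dist (f x) (f y) := by
    intro x hx y hy
    have h1 := mean_value hd hP hy.1 hx.1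
    have e1 : u x = t := hx.2
    have e2 : u y = t := hy.2
    rw [e1, e2, sub_self, zero_sub, abs_neg] at h1
    rw [dist_eq_norm, dist_eq_norm, hfs]
    set w := x - y with hw
    have h2 := Submodule.norm_sq_eq_add_norm_sq_starProjection w (Submodule.span ℝ {P})
    rw [Submodule.starProjection_singleton, norm_smul] at h2
    have h3 : ‖⟪P, w⟫ / ((‖P‖ ^ 2 : ℝ) : ℝ)‖ * ‖P‖ ≤ ‖w‖ / 4 := by
      rw [norm_div, Real.norm_eq_abs, Real.norm_of_nonneg (by positivity), div_mul_eq_mul_div,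
        div_le_iff₀ (by positivity)]
      nlinarith only [h1, hP0]
    have h4 : ‖(Submodule.span ℝ {P})ᗮ.starProjection w‖ ^ 2 = ∑ i, (f w i) ^ 2 := by
      rw [Submodule.starProjection_apply, ← Submodule.coe_norm, ← b.sum_sq_norm_inner_right]
      refine Finset.sum_congr rfl fun i _ => ?_
      rw [Real.norm_eq_abs, sq_abs, hf]
      congr 1
      rw [Submodule.coe_inner, ← Submodule.starProjection_apply,
        ← Submodule.inner_starProjection_left_eq_right, Submodule.starProjection_eq_self_iff.2 (b i).2]
    have h5 : ∑ i, (f w i) ^ 2 ≤ k * ‖f w‖ ^ 2 := by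
      calc ∑ i, (f w i) ^ 2 ≤ ∑ _i : Fin k, ‖f w‖ ^ 2 := by
            refine Finset.sum_le_sum fun i _ => ?_
            rw [← sq_abs]
            have := norm_le_pi_norm (f w) i
            rw [Real.norm_eq_abs] at this
            gcongr
        _ = _ := by simp
    have h6 : 0 ≤ ‖⟪P, w⟫ / ((‖P‖ ^ 2 : ℝ) : ℝ)‖ * ‖P‖ := by positivity
    have h7 : (‖⟪P, w⟫ / ((‖P‖ ^ 2 : ℝ) : ℝ)‖ * ‖P‖) ^ 2 ≤ (‖w‖ / 4) ^ 2 := by gcongr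
    have h8 : ‖w‖ ^ 2 ≤ (‖w‖ / 4) ^ 2 + k * ‖f w‖ ^ 2 := by
      rw [h4] at h2
      exact h2.le.trans (add_le_add h7 h5)
    refine le_of_sq_le_sq ?_ (by positivity)
    have h9 : 0 ≤ (k : ℝ) ^ 2 * ‖f w‖ ^ 2 := by positivity
    have h10 : 0 ≤ (k : ℝ) * ‖f w‖ ^ 2 := by positivity
    nlinarith only [h8, h9, h10, sq_nonneg ‖f w‖, sq_nonneg ‖w‖]
  have hinj : InjOn f s := by
    intro x hx y hy hxy
    have := hmain x hx y hy
    rw [hxy, dist_self, mul_zero] at this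
    exact dist_le_zero.1 this
  have himg : Function.invFunOn f s '' (f '' s) = s :=
    Set.injOn_iff_invFunOn_image_image_eq_self.1 hinj
  set K : NNReal := 2 * (k + 1) with hK
  have hKr : (K : ℝ) = 2 * (k + 1) := by rw [hK]; push_cast; ring
  have hLip : LipschitzOnWith K (Function.invFunOn f s) (f '' s) := by
    refine LipschitzOnWith.of_dist_le_mul fun a ha b hb => ?_
    have h1 := hmain _ (Function.invFunOn_mem ha) _ (Function.invFunOn_mem hb)
    rw [Function.invFunOn_eq ha, Function.invFunOn_eq hb] at h1
    rwa [hKr]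
  have hsub : f '' s ⊆ closedBall (f x0) r := by
    rintro _ ⟨x, hx, rfl⟩
    rw [mem_closedBall, dist_eq_norm, hfs]
    refine (pi_norm_le_iff_of_nonneg hr).2 fun i => ?_
    have h1 := abs_real_inner_le_norm (b i : Euc (k + 1)) (x - x0)
    rw [hbn, one_mul] at h1
    have h2 := hx.1
    rw [mem_closedBall, dist_eq_norm] at h2
    exact h1.trans h2
  have hvol : μH[(k : ℝ)] (f '' s) ≤ ENNReal.ofReal ((2 * r) ^ k) := by
    have h1 := hausdorffMeasure_pi_real (ι := Fin k)
    rw [Fintype.card_fin] at h1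
    rw [h1]
    refine (measure_mono hsub).trans ?_
    rw [Real.volume_pi_closedBall _ hr, Fintype.card_fin]
  have hfin := hLip.hausdorffMeasure_image_le (d := k) (by positivity)
  rw [himg] at hfin
  refine hfin.trans ((mul_le_mul_right hvol _).trans (le_of_eq ?_))
  rw [ENNReal.rpow_natCast, ← ENNReal.coe_pow, ENNReal.ofReal, ← ENNReal.coe_mul, ENNReal.ofReal]
  congr 1
  rw [← Real.toNNReal_coe (r := K ^ k), ← Real.toNNReal_mul (by positivity)]
  congr 1
  rw [NNReal.coe_pow, hKr, ← mul_pow, ← mul_pow]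
  ring

/-! ### Counting balls with the Gaussian measure -/

lemma gam_ball (n : ℕ) : ∃ κ > (0 : ℝ), ∀ ζ : Euc n, ‖ζ‖ ≤ 1 → ∀ s, 0 < s → s ≤ 1 →
    κ * s ^ n ≤ (gam n).real (closedBall ζ s) := by
  have hZ := gZ_pos n
  set q := Real.exp (-(1 / 2) * 2 ^ 2) with hq
  have hq0 : 0 < q := Real.exp_pos _
  set V := (volume : Measure (Euc n)).real (ball 0 1) with hV
  have hV0 : 0 < V := ENNReal.toReal_pos (measure_ball_pos _ _ one_pos).ne' measure_ball_lt_top.ne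
  refine ⟨q / gZ n * V, by positivity, fun ζ hζ s hs hs1 => ?_⟩
  have h1 : ENNReal.ofReal (q / gZ n) * volume (closedBall ζ s) ≤ gam n (closedBall ζ s) := by
    unfold gam
    rw [withDensity_apply _ measurableSet_closedBall]
    rw [← setLIntegral_const]
    refine setLIntegral_mono gam_density_meas fun x hx => ENNReal.ofReal_le_ofReal ?_
    have hx2 : ‖x‖ ≤ 2 := by
      rw [mem_closedBall, dist_eq_norm] at hx
      have := norm_add_le (x - ζ) ζ
      rw [sub_add_cancel] at this
      linarith
    refine div_le_div_of_nonneg_right ?_ hZ.le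
    unfold gw; rw [hq]
    refine Real.exp_le_exp.2 ?_
    have := pow_le_pow_left₀ (norm_nonneg _) hx2 2
    linarith
  have h2 := ENNReal.toReal_mono (measure_ne_top _ _) h1
  rw [ENNReal.toReal_mul, ENNReal.toReal_ofReal (by positivity), Measure.addHaar_closedBall _ _ hs.le,
    ENNReal.toReal_mul, ENNReal.toReal_ofReal (by positivity), finrank_euclideanSpace_fin] at h2
  refine le_trans (le_of_eq ?_) h2
  rw [hV, measureReal_def]; ring

/-- Disjoint balls on which `f ≥ b` contribute at least `b` times their measure to `E f`. -/
lemma count_balls {n : ℕ} {κ : ℝ} (hκ : ∀ ζ : Euc n, ‖ζ‖ ≤ 1 → ∀ s, 0 < s → s ≤ 1 →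
    κ * s ^ n ≤ (gam n).real (closedBall ζ s)) {f : Euc n → ℝ} (hf : PG f) (hf0 : ∀ x, 0 ≤ f x)
    {s b : ℝ} (hs : 0 < s) (hs1 : s ≤ 1) (hb : 0 ≤ b) (A : Finset (Euc n)) (hA : ∀ ζ ∈ A, ‖ζ‖ ≤ 1)
    (hdis : (A : Set (Euc n)).Pairwise fun x y => 2 * s < dist x y)
    (hfb : ∀ ζ ∈ A, ∀ z ∈ closedBall ζ s, b ≤ f z) : A.card * (κ * s ^ n) * b ≤ Eg f := by
  have h1 : ∫ x in ⋃ ζ ∈ A, closedBall ζ s, f x ∂(gam n) = ∑ ζ ∈ A, ∫ x in closedBall ζ s, f x ∂(gam n) :=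
    integral_biUnion_finset A (fun _ _ => measurableSet_closedBall) (fun x hx y hy hxy =>
      closedBall_disjoint_closedBall (by have := hdis hx hy hxy; linarith))
      fun _ _ => hf.integrable.integrableOn
  have h2 : ∫ x in ⋃ ζ ∈ A, closedBall ζ s, f x ∂(gam n) ≤ Eg f :=
    setIntegral_le_integral hf.integrable (Filter.Eventually.of_forall hf0)
  refine le_trans ?_ (h1.symm.le.trans h2)
  rw [mul_assoc, ← nsmul_eq_mul, ← Finset.sum_const]
  refine Finset.sum_le_sum fun ζ hζ => ?_
  have h3 := setIntegral_ge_of_const_le_real (μ := gam n) (f := f) (c := b) measurableSet_closedBall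
    (measure_ne_top _ _) (hfb ζ hζ) hf.integrable.integrableOn
  refine le_trans ?_ h3
  rw [mul_comm b]
  exact mul_le_mul_of_nonneg_right (hκ ζ (hA ζ hζ) s hs hs1) hb

/-- If separated finite subsets have bounded cardinality, a maximal one gives a finite cover. -/
lemma exists_cover {n : ℕ} (A : Set (Euc n)) (δ : ℝ) (hδ : 0 < δ) (N : ℕ)
    (hN : ∀ s : Finset (Euc n), (s : Set (Euc n)) ⊆ A → (s : Set (Euc n)).Pairwise (fun x y => δ < dist x y) →
      s.card ≤ N) : ∃ s : Finset (Euc n), (s : Set (Euc n)) ⊆ A ∧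
      (s : Set (Euc n)).Pairwise (fun x y => δ < dist x y) ∧ A ⊆ ⋃ x ∈ s, closedBall x δ := by
  classical
  let p : ℕ → Prop := fun m => ∃ s : Finset (Euc n), (s : Set (Euc n)) ⊆ A ∧
    (s : Set (Euc n)).Pairwise (fun x y => δ < dist x y) ∧ s.card = m
  have h0 : p 0 := ⟨∅, by simp, by simp, rfl⟩
  obtain ⟨s, hsA, hsp, hsc⟩ := Nat.findGreatest_spec (P := p) (Nat.zero_le N) h0
  refine ⟨s, hsA, hsp, fun x hx => ?_⟩
  by_contra hcon
  simp only [mem_iUnion, mem_closedBall, not_exists, not_le] at hcon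
  have hxs : x ∉ s := fun h => absurd (hcon x h) (by rw [dist_self]; exact not_lt.2 hδ.le)
  have hsub : ((insert x s : Finset (Euc n)) : Set (Euc n)) ⊆ A := by
    rw [Finset.coe_insert]; exact insert_subset hx hsA
  have hpw : ((insert x s : Finset (Euc n)) : Set (Euc n)).Pairwise (fun x y => δ < dist x y) := by
    rw [Finset.coe_insert]
    refine hsp.insert fun y hy _ => ⟨hcon y hy, ?_⟩
    rw [dist_comm]; exact hcon y hy
  have hcard : (insert x s).card = s.card + 1 := Finset.card_insert_of_notMem hxs
  have := Nat.le_findGreatest (P := p) (hN _ hsub hpw) ⟨_, hsub, hpw, rfl⟩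
  omega

/-! ### Energy at low levels and the measure bound -/

namespace Sol
variable {n : ℕ} {S : Sol n}

/-- Testing `Δu ≥ 0` against the bounded function `t arctan (u / t)` shows that the energy of `u` on
`{u ≤ 2 t}` at scale `R` is of order `t R`. -/
lemma Nice.energy (h : S.Nice) {R C t : ℝ} (hR : 0 < R) (hC : 0 < C) (ht : 0 < t)
    (hH : S.H 0 R ≤ C * R ^ 2) :
    PG (fun z => (1 + (S.u (0 + R • z) / t) ^ 2)⁻¹ * ‖R • S.F (0 + R • z)‖ ^ 2) ∧
    Eg (fun z => (1 + (S.u (0 + R • z) / t) ^ 2)⁻¹ * ‖R • S.F (0 + R • z)‖ ^ 2)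
      ≤ 2 * t * (√(C * mo n 2) * R) := by
  set T := S.aff 0 hR one_pos with hT
  have hTu : ∀ z, T.u z = S.u (0 + R • z) := fun z => one_mul _
  have hTF : ∀ z, T.F z = R • S.F (0 + R • z) := fun z => by
    change (1 * R) • S.F (0 + R • z) = _; rw [one_mul]
  have hφ : ∀ s : ℝ, HasDerivAt (fun s => t * Real.arctan (s / t)) ((1 + (s / t) ^ 2)⁻¹) s := by
    intro s
    refine ((((hasDerivAt_id s).div_const t).arctan).const_mul t).congr_deriv ?_
    simp only [id]
    field_simp
  have hc : Continuous fun s : ℝ => (1 + (s / t) ^ 2)⁻¹ :=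
    Continuous.inv₀ (by fun_prop) fun s => by positivity
  have hK : ∀ s : ℝ, |(1 + (s / t) ^ 2)⁻¹| ≤ 1 := fun s => by
    rw [abs_of_nonneg (by positivity)]
    refine inv_le_one_of_one_le₀ ?_
    have := sq_nonneg (s / t); linarith
  have hg := T.hu.comp hφ hc hK
  have hw := T.weak hg
  have hPF : PG fun z => ‖T.F z‖ ^ 2 := T.hu.pgv.norm_sq
  have hPn : PG fun z => ‖T.F z‖ := T.hu.pgv.norm
  have einner : ∀ z, ⟪(1 + (T.u z / t) ^ 2)⁻¹ • T.F z, T.F z⟫ = (1 + (T.u z / t) ^ 2)⁻¹ * ‖T.F z‖ ^ 2 :=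
    fun z => by rw [real_inner_smul_left, real_inner_self_eq_norm_sq]
  have hPf : PG fun z => (1 + (T.u z / t) ^ 2)⁻¹ * ‖T.F z‖ ^ 2 := by
    have h1 := hg.pgv.inner T.hu.pgv
    simpa only [einner] using h1
  have efun : (fun z => (1 + (S.u (0 + R • z) / t) ^ 2)⁻¹ * ‖R • S.F (0 + R • z)‖ ^ 2)
      = fun z => (1 + (T.u z / t) ^ 2)⁻¹ * ‖T.F z‖ ^ 2 := by
    funext z; rw [hTu, hTF]
  rw [efun]
  refine ⟨hPf, ?_⟩
  have hPr : PG fun z => t * Real.arctan (T.u z / t) * (T.k * T.u z * T.v z ^ 2) :=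
    hg.pg.mul ((T.hu.pg.const_mul T.k).mul (T.hv.pg.pow 2))
  have hk := T.hk
  have h1 : Eg (fun z => (1 + (T.u z / t) ^ 2)⁻¹ * ‖T.F z‖ ^ 2)
      ≤ Eg fun z => t * Real.arctan (T.u z / t) * ⟪T.F z, z⟫ := by
    rw [hw]
    simp only [einner]
    refine Eg_mono hPf (hPf.add hPr) fun z => ?_
    have hu := T.upos z
    have hv := T.vpos z
    have : 0 ≤ Real.arctan (T.u z / t) := Real.arctan_nonneg.2 (by positivity)
    have : 0 ≤ t * Real.arctan (T.u z / t) * (T.k * T.u z * T.v z ^ 2) := by positivity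
    linarith
  have hPm : PG fun z => ‖T.F z‖ * ‖z‖ := hPn.mul PG.norm_id
  have h2 : (Eg fun z => t * Real.arctan (T.u z / t) * ⟪T.F z, z⟫)
      ≤ 2 * t * Eg fun z => ‖T.F z‖ * ‖z‖ := by
    rw [← Eg_const_mul]
    refine Eg_mono (hg.pg.mul (T.hu.pgv.inner PGV.id)) (hPm.const_mul _) fun z => ?_
    have hu := T.upos z
    have a0 : 0 ≤ Real.arctan (T.u z / t) := Real.arctan_nonneg.2 (by positivity)
    have a1 : Real.arctan (T.u z / t) ≤ 2 := by
      have := Real.arctan_lt_pi_div_two (T.u z / t)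
      have := Real.pi_le_four
      linarith
    have a2 := real_inner_le_norm (T.F z) z
    have a3 : 0 ≤ ‖T.F z‖ * ‖z‖ := by positivity
    calc t * Real.arctan (T.u z / t) * ⟪T.F z, z⟫ ≤ t * Real.arctan (T.u z / t) * (‖T.F z‖ * ‖z‖) :=
          mul_le_mul_of_nonneg_left a2 (by positivity)
      _ ≤ t * 2 * (‖T.F z‖ * ‖z‖) := by gcongr
      _ = _ := by ring
  have h3 := Eg_cs_sqrt hPn (PG.norm_id (n := n))
  have h4 : (Eg fun z => ‖T.F z‖ ^ 2) ≤ C * R ^ 2 := by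
    have e := T.dD_eq
    rw [hT, aff_dD, ← hT, one_pow, one_mul] at e
    have h5 : 0 ≤ Eg fun y => ‖T.G y‖ ^ 2 := Eg_nonneg fun y => by positivity
    have h6 : 0 ≤ T.q := mul_nonneg T.hk.le (Eg_nonneg fun y => by positivity)
    have h7 := h.DD_le 0 hR
    linarith
  have h5 : (Eg fun z : Euc n => ‖z‖ ^ 2) ≤ mo n 2 :=
    Eg_mono (PG.norm_id.pow 2) (PG.w 2) fun z => by
      have := norm_nonneg z
      gcongr; linarith
  have h6 : (Eg fun z => ‖T.F z‖ * ‖z‖) ≤ √(C * mo n 2) * R := by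
    refine h3.trans ?_
    have e : √(C * mo n 2) * R = √(C * R ^ 2) * √(mo n 2) := by
      rw [Real.sqrt_mul hC.le, Real.sqrt_mul hC.le, Real.sqrt_sq hR.le]; ring
    rw [e]
    gcongr
  calc _ ≤ _ := h1
    _ ≤ _ := h2
    _ ≤ _ := by gcongr

end Sol

/-- Level sets of a component at high levels have measure of order `R ^ (n - 1)` in `B_R`. -/
lemma Sol.level_bound {k : ℕ} {S : Sol (k + 1)} {c1 C2 c Rb : ℝ} (g : S.Glob c1 C2 c Rb)
    (hs : ContDiff ℝ (⊤ : ℕ∞) S.u) (hF : S.F = gradv S.u)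
    (hl : ∀ x, lap S.u x = S.u x * S.v x ^ 2) {C₀ : ℝ} (hC₀ : 0 < C₀)
    (hgr : ∀ x, S.u x ≤ C₀ * (1 + ‖x‖)) {CH : ℝ} (hCH : 0 < CH)
    (hup : ∀ R, 1 ≤ R → S.H 0 R ≤ CH * R ^ 2) :
    ∃ C > (0 : ℝ), ∃ M > (0 : ℝ), ∀ R, C * M < R → ∀ t, M ≤ t →
      μH[(k : ℝ)] (ball (0 : Euc (k + 1)) R ∩ {x | S.u x = t}) ≤ ENNReal.ofReal (C * R ^ k) := by
  obtain ⟨h0, hh0, h2, hh2, ρ, hρ, M, hM, hgrad⟩ := g.grad hs hl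
  obtain ⟨κ, hκ, hball⟩ := gam_ball (k + 1)
  have hmo := one_le_mo (k + 1) 2
  obtain ⟨a, ha0, ha1, ha2, ha3⟩ : ∃ a > (0 : ℝ), 2 * a ≤ ρ ∧ 5 / 4 * h2 * a ≤ 1 ∧ a * (2 * C₀) ≤ 1 := by
    refine ⟨min (ρ / 2) (min (1 / (5 / 4 * h2)) (1 / (2 * C₀))), by positivity, ?_, ?_, ?_⟩
    · have := min_le_left (ρ / 2) (min (1 / (5 / 4 * h2)) (1 / (2 * C₀))); linarith
    · rw [mul_comm, ← le_div_iff₀ (by positivity)]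
      exact (min_le_right _ _).trans (min_le_left _ _)
    · rw [← le_div_iff₀ (by positivity)]
      exact (min_le_right _ _).trans (min_le_right _ _)
  set B := 18 * √(CH * mo (k + 1) 2) / (κ * h0 ^ 2 * a) with hB
  have hB0 : 0 < B := by positivity
  refine ⟨(8 * (k + 1)) ^ k * B + 1 / M, by positivity, M, hM, fun R hR t ht => ?_⟩
  have ht0 : 0 < t := hM.trans_le ht
  have hR1 : 1 ≤ R := by
    have e : ((8 * (k + 1)) ^ k * B + 1 / M) * M = (8 * (k + 1)) ^ k * B * M + 1 := by field_simp
    have : 0 ≤ (8 * ((k : ℝ) + 1)) ^ k * B * M := by positivity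
    linarith
  have hR0 : 0 < R := by linarith
  set A := ball (0 : Euc (k + 1)) R ∩ {x | S.u x = t} with hA
  rcases A.eq_empty_or_nonempty with hemp | ⟨x1, hx1⟩
  · rw [hemp, measure_empty]; exact zero_le
  have htR : t ≤ 2 * C₀ * R := by
    have e : S.u x1 = t := hx1.2
    have e1 := hgr x1
    have e2 := hx1.1
    rw [mem_ball_zero_iff] at e2
    have : C₀ * (1 + ‖x1‖) ≤ C₀ * (R + R) := by gcongr
    linarith
  set r := a * t with hr
  have hr0 : 0 < r := by positivity
  have hrR : r ≤ R := by
    calc r ≤ a * (2 * C₀ * R) := by rw [hr]; gcongr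
      _ = a * (2 * C₀) * R := by ring
      _ ≤ 1 * R := by gcongr
      _ = R := one_mul R
  obtain ⟨hPG, hEn⟩ := g.nice.energy hR0 hCH ht0 (hup R hR1)
  have hd : ∀ x, HasFDerivAt S.u (innerSL ℝ (gradv S.u x)) x := fun x => by
    rw [← hF]; exact S.hu.deriv x
  have hloc : ∀ x ∈ A, ∃ P : Euc (k + 1), h0 ≤ ‖P‖ ∧ ‖P‖ ≤ h2 ∧ ∀ z ∈ closedBall x (2 * r),
      ‖gradv S.u z - P‖ ≤ ‖P‖ / 4 := by
    intro x hx
    have e : S.u x = t := hx.2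
    obtain ⟨P, hP1, hP2, hP⟩ := hgrad x (by rw [e]; exact ht)
    refine ⟨P, hP1, hP2, fun z hz => hP z ?_⟩
    rw [mem_closedBall, dist_eq_norm] at hz
    rw [e]
    refine hz.trans ?_
    rw [hr, ← mul_assoc]
    gcongr
  -- the cardinality of a `2 r`-separated subset of the level set
  have hcount : ∀ s : Finset (Euc (k + 1)), (s : Set (Euc (k + 1))) ⊆ A →
      (s : Set (Euc (k + 1))).Pairwise (fun x y => 2 * r < dist x y) →
      (s.card : ℝ) * r ^ k ≤ B * R ^ k := by
    classical
    intro s hsA hsp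
    have hRinv : 0 < R⁻¹ := by positivity
    have hinj : Function.Injective fun x : Euc (k + 1) => R⁻¹ • x := smul_right_injective _ hRinv.ne'
    have hsc : ∀ x : Euc (k + 1), 0 + R • (R⁻¹ • x) = x := fun x => by
      rw [zero_add, smul_smul, mul_inv_cancel₀ hR0.ne', one_smul]
    have hcb := count_balls hball hPG (fun z => by positivity) (s := R⁻¹ * r) (b := R ^ 2 * h0 ^ 2 / 9)
      (by positivity) (by rw [inv_mul_le_iff₀ hR0]; linarith) (by positivity)
      (s.image fun x => R⁻¹ • x) ?_ ?_ ?_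
    · rw [Finset.card_image_of_injective _ hinj] at hcb
      have h1 := hcb.trans hEn
      have e1 : (s.card : ℝ) * (κ * (R⁻¹ * r) ^ (k + 1)) * (R ^ 2 * h0 ^ 2 / 9)
          = (s.card * r ^ k) * (κ * h0 ^ 2 * a / 9 * t * R / R ^ k) := by
        rw [mul_pow, pow_succ r, hr, pow_succ, inv_pow]
        field_simp
      rw [e1] at h1
      have e2 : 2 * t * (√(CH * mo (k + 1) 2) * R)
          = (B * R ^ k) * (κ * h0 ^ 2 * a / 9 * t * R / R ^ k) := by
        rw [hB]; field_simp; ring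
      rw [e2] at h1
      exact le_of_mul_le_mul_right h1 (by positivity)
    · intro ζ hζ
      obtain ⟨x, hx, rfl⟩ := Finset.mem_image.1 hζ
      have hx' := (hsA hx).1
      rw [mem_ball_zero_iff] at hx'
      rw [norm_smul, Real.norm_of_nonneg hRinv.le, inv_mul_le_iff₀ hR0]
      linarith
    · rw [Finset.coe_image]
      rintro _ ⟨x, hx, rfl⟩ _ ⟨y, hy, rfl⟩ hxy
      have h1 := hsp hx hy fun h => hxy (by rw [h])
      rw [dist_smul₀, Real.norm_of_nonneg hRinv.le]
      nlinarith only [h1, hRinv]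
    · intro ζ hζ z hz
      obtain ⟨x, hx, rfl⟩ := Finset.mem_image.1 hζ
      obtain ⟨P, hP1, hP2, hP⟩ := hloc x (hsA hx)
      set w := (0 : Euc (k + 1)) + R • z with hw
      have hwx : ‖w - x‖ ≤ r := by
        rw [mem_closedBall, dist_eq_norm] at hz
        have e : w - x = R • (z - R⁻¹ • x) := by
          rw [smul_sub, smul_smul, mul_inv_cancel₀ hR0.ne', one_smul, hw, zero_add]
        rw [e, norm_smul, Real.norm_of_nonneg hR0.le]
        calc R * ‖z - R⁻¹ • x‖ ≤ R * (R⁻¹ * r) := by gcongr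
          _ = r := by field_simp
      have hwm : w ∈ closedBall x (2 * r) := by
        rw [mem_closedBall, dist_eq_norm]; linarith
      have hxm : x ∈ closedBall x (2 * r) := mem_closedBall_self (by positivity)
      have hxt : S.u x = t := (hsA hx).2
      have hmv := (abs_le.1 (mean_value hd hP hxm hwm)).2
      have hin := real_inner_le_norm P (w - x)
      have hPn := norm_nonneg P
      have hut : S.u w ≤ 2 * t := by
        have h3 : ‖P‖ * ‖w - x‖ ≤ h2 * (a * t) := by rw [← hr]; gcongr
        have h4 : 5 / 4 * h2 * a * t ≤ 1 * t := by gcongr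
        linarith
      have hG : 3 / 4 * h0 ≤ ‖S.F w‖ := by
        rw [hF]
        have h3 := hP w hwm
        have h4 := norm_sub_norm_le P (gradv S.u w)
        rw [norm_sub_rev] at h4
        linarith
      have hφ : (1 / 5 : ℝ) ≤ (1 + (S.u w / t) ^ 2)⁻¹ := by
        rw [one_div]
        refine inv_anti₀ (by positivity) ?_
        have h3 : S.u w / t ≤ 2 := by rw [div_le_iff₀ ht0]; exact hut
        have h4 : 0 ≤ S.u w / t := by have := S.upos w; positivity
        nlinarith only [h3, h4]
      rw [norm_smul, Real.norm_of_nonneg hR0.le]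
      calc R ^ 2 * h0 ^ 2 / 9 ≤ 1 / 5 * (R * (3 / 4 * h0)) ^ 2 := by
            have : 0 ≤ R ^ 2 * h0 ^ 2 := by positivity
            linarith only [this, show 1 / 5 * (R * (3 / 4 * h0)) ^ 2 = 9 / 80 * (R ^ 2 * h0 ^ 2) by ring]
        _ ≤ _ := by gcongr
  obtain ⟨N, hN⟩ := exists_nat_ge (B * R ^ k / r ^ k)
  obtain ⟨s, hsA, hsp, hcov⟩ := exists_cover A (2 * r) (by positivity) N fun s hsA hsp => by
    have h1 := hcount s hsA hsp
    rw [← le_div_iff₀ (by positivity)] at h1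
    exact_mod_cast h1.trans hN
  have hfin : μH[(k : ℝ)] A ≤ ∑ x ∈ s, μH[(k : ℝ)] (closedBall x (2 * r) ∩ {x | S.u x = t}) := by
    refine (measure_mono ?_).trans (measure_biUnion_finset_le s _)
    intro x hx
    obtain ⟨y, hy, hxy⟩ := mem_iUnion₂.1 (hcov hx)
    exact mem_iUnion₂.2 ⟨y, hy, hxy, hx.2⟩
  refine hfin.trans ?_
  have hone : ∀ x ∈ s, μH[(k : ℝ)] (closedBall x (2 * r) ∩ {x | S.u x = t})
      ≤ ENNReal.ofReal ((4 * (k + 1)) ^ k * (2 * r) ^ k) := by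
    intro x hx
    obtain ⟨P, hP1, _, hP⟩ := hloc x (hsA hx)
    exact graph_measure hd (by positivity) (hh0.trans_le hP1) hP t
  refine (Finset.sum_le_sum hone).trans ?_
  rw [Finset.sum_const, nsmul_eq_mul, ← ENNReal.ofReal_natCast, ← ENNReal.ofReal_mul (by positivity)]
  refine ENNReal.ofReal_le_ofReal ?_
  have h1 := hcount s hsA hsp
  calc (s.card : ℝ) * ((4 * (k + 1)) ^ k * (2 * r) ^ k) = (8 * (k + 1)) ^ k * (s.card * r ^ k) := by
        have e : (8 * ((k : ℝ) + 1)) ^ k = (4 * (k + 1)) ^ k * 2 ^ k := by rw [← mul_pow]; ring_nf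
        rw [mul_pow 2 r, e]; ring
    _ ≤ (8 * (k + 1)) ^ k * (B * R ^ k) := by gcongr
    _ ≤ _ := by
      have : 0 ≤ 1 / M * R ^ k := by positivity
      linarith

theorem level_set_measure_bound (n : ℕ) (hn : 2 ≤ n)
    (u v : Euc n → ℝ)
    (hu : ContDiff ℝ (⊤ : ℕ∞) u) (hv : ContDiff ℝ (⊤ : ℕ∞) v)
    (hupos : ∀ x, 0 < u x) (hvpos : ∀ x, 0 < v x)
    (hequ : ∀ x, lap u x = u x * v x ^ 2)
    (heqv : ∀ x, lap v x = v x * u x ^ 2)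
    (C₀ : ℝ) (hC₀ : 0 < C₀)
    (hgrowth : ∀ x, u x + v x ≤ C₀ * (1 + ‖x‖)) :
    ∃ C > (0 : ℝ), ∃ M > (0 : ℝ), ∀ R, C * M < R → ∀ t, M ≤ t →
      μH[(n : ℝ) - 1] (ball (0 : Euc n) R ∩ {x | u x = t})
        ≤ ENNReal.ofReal (C * R ^ ((n : ℝ) - 1)) := by
  obtain ⟨k, rfl⟩ : ∃ k, n = k + 1 := ⟨n - 1, by omega⟩
  obtain ⟨S, hk, rfl, rfl, hF, -⟩ := exists_sol u v hu hv hupos hvpos hequ heqv C₀ hC₀ hgrowth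
  have hnice : S.Nice := ⟨hk, fun x R hR => S.NN_le_one hC₀ hgrowth x hR⟩
  obtain ⟨CH, hCH, hup⟩ := S.H_le_of_growth hC₀ hgrowth 0
  obtain ⟨c1, C2, c, Rb, g⟩ := Sol.exists_glob hnice hCH hup
  have e : (((k + 1 : ℕ) : ℝ) - 1) = (k : ℝ) := by push_cast; ring
  rw [e]
  simp only [Real.rpow_natCast]
  exact Sol.level_bound g hu hF hequ hC₀ (fun x => by have := hgrowth x; have := hvpos x; linarith) hCH hup
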